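/- For every integer $m \geq 0$, let $K_m$ be the unique subfield of the cyclotomic field $\mathbb{Q}(\zeta_{7^{m+1}})$ with $[K_m : \mathbb{Q}] = 7^m$ (the $m$-th layer of the cyclotomic $\mathbb{Z}_7$-extension of $\mathbb{Q}$). Then there are no $x, y \in K_m$ with $x^3 + y^3 = 3$; that is, $3$ is not a sum of two cubes in the cyclotomic $\mathbb{Z}_7$-extension of $\mathbb{Q}$. -/

import Mathlib

/-!
The curve `x³ + y³ = 3` is `3`-isogenous to, and over any field containing `ω` isomorphic with, the
curve `E : y² = x³ + 9/4` with complex multiplication by `ℤ[ω]`, `ω² + ω + 1 = 0`. In `ℤ[ω]` the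
prime `7` splits as `(2 - ω)(2 - ω²)`. The proof is an explicit `(2 - ω)`-descent over the layers
of the `ℤ₇`-extension.

Put `μ = 1 - ω`, `ρ = 2 + 3ω`, `F = ℚ(ω)` and let `H = F(t)`, `t⁶ = ωμρ⁵`, be the sextic extension
over which `E` becomes isomorphic to its twist `E' : y² = x³ + μ³ρ/4`, which has a rational point
`(μ, 3μ/2)` killed by `2 - ω²`. The structure `Setup` records `F`, `H` and the automorphism `τ : t
↦ -ω² t`. If `K` is a layer of the `ℤ₇`-extension and `N = H K`, the automorphism `τ` extends to
`T` of order `6` on `N`, fixing `K`; points of `E` over the fixed field of `T` correspond to the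
subgroup `M ⊆ E'(N)` of points fixed by a semilinear action of `T` (`Tower`, `Tower.M`).

* Descent (`exists_pimul_eq`): with `f` the function of divisor `7(μ, 3μ/2) - 7(O)`, there is `g`
  with `g⁷ = f ∘ (2 - ω)`, and a point `P` is divisible by `2 - ω` as soon as `f(P)` is a seventh
  power.
* If `M ≠ (2 - ω)M`, the cyclic `7`-group `Gal(N/H)` has a fixed point in the quotient. So there is
  a point `P` outside `(2 - ω)M` on which the group acts trivially modulo `(2 - ω)M`; it may
  moreover be chosen close to the origin at the prime above `ρ` and in the formal group at the
  primes above `3` (`Tower.exists_good`, `Tower.exists_deep`).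
* By Hilbert 90 the class of `f(P)` modulo seventh powers comes from some `a ∈ H`, which satisfies
  eigenvector relations under `τ`, has valuations divisible by `7` everywhere, and is close to a
  seventh power at the totally ramified prime `q` above `ρ`.
* Such an `a` is a seventh power (`Setup.arith`). For the class group, the relations under `τ`
  reduce the claim to a statement about classes of conjugates of an ideal. It is checked on primes
  up to a Minkowski type bound, with explicit generators for those of degree one (`primeTable`).
  For the units, five explicit units show that a unit congruent to a rational integer modulo `q⁶`
  is a seventh power.
* Hence `M = (2 - ω)M` (`Tower.M_le_B`). At a prime above `2 - ω` whose residue field on the fixed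
  field of `T` is `𝔽₇`, multiplication by `2 - ω` moves points strictly towards the origin, so
  points of `M` have abscissa `0`; these do not come from solutions of `x³ + y³ = 3`.
-/
set_option linter.unusedSectionVars false

/-! ### Mordell curves, twists and multiplication by Eisenstein integers -/

section
open WeierstrassCurve Polynomial

/-- The Mordell curve `y² = x³ + b`. -/
def mordell {k : Type*} [Field k] (b : k) : WeierstrassCurve.Affine k := ⟨0, 0, 0, 0, b⟩

section Mordell
variable {k : Type*} [Field k] [CharZero k] {b : k}

lemma mordell_equation {x y : k} : (mordell b).Equation x y ↔ y ^ 2 = x ^ 3 + b := by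
  simp [Affine.equation_iff, mordell]

lemma mordell_nonsingular (hb : b ≠ 0) {x y : k} (h : y ^ 2 = x ^ 3 + b) :
    (mordell b).Nonsingular x y := by
  rw [Affine.nonsingular_iff']
  refine ⟨mordell_equation.2 h, ?_⟩
  simp only [mordell]
  by_contra! hc
  have hx : x = 0 := by simpa using hc.1
  have hy : y = 0 := by simpa using hc.2
  subst hx hy
  exact hb (by simpa using h.symm)

/-- The affine point `(x, y)` of `y² = x³ + b`. -/
def mpt (hb : b ≠ 0) (x y : k) (h : y ^ 2 = x ^ 3 + b) : (mordell b).Point :=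
  .some x y (mordell_nonsingular hb h)

lemma mpt_cases (hb : b ≠ 0) (P : (mordell b).Point) :
    P = 0 ∨ ∃ x y, ∃ h : y ^ 2 = x ^ 3 + b, P = mpt hb x y h := by
  rcases P with _ | ⟨x, y, h⟩
  · exact .inl rfl
  · exact .inr ⟨x, y, mordell_equation.1 h.1, rfl⟩

lemma mpt_ne_zero (hb : b ≠ 0) {x y : k} (h : y ^ 2 = x ^ 3 + b) : mpt hb x y h ≠ 0 :=
  Affine.Point.some_ne_zero _

lemma mpt_inj (hb : b ≠ 0) {x y x' y' : k} {h : y ^ 2 = x ^ 3 + b} {h' : y' ^ 2 = x' ^ 3 + b} :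
    mpt hb x y h = mpt hb x' y' h' ↔ x = x' ∧ y = y' := by
  simp [mpt]

lemma mpt_neg (hb : b ≠ 0) {x y : k} (h : y ^ 2 = x ^ 3 + b) :
    -mpt hb x y h = mpt hb x (-y) (by rw [neg_sq, h]) := by
  rw [mpt, Affine.Point.neg_some, mpt]
  simp only [Affine.Point.some.injEq, true_and]
  simp [Affine.negY, mordell]

lemma tangent_slope {x x' m n y : k} (a1 : y = m * x + n) (a2 : x + x + x' = m ^ 2)
    (a3 : x * x + x * x' + x * x' = -2 * m * n) : 2 * m * y = 3 * x ^ 2 := by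
  linear_combination 2 * m * a1 - 2 * x * a2 + a3

variable [DecidableEq k]

/-- Chord and tangent: if `P₁ + P₂ ≠ 0`, the line `y = m x + n` through `P₁, P₂` meets the curve in
a third point; the elementary symmetric functions of the three abscissae are read off from the
cubic `x³ + b - (m x + n)²`. -/
lemma mpt_add_line (hb : b ≠ 0) {x₁ y₁ x₂ y₂ : k} (h₁ : y₁ ^ 2 = x₁ ^ 3 + b)
    (h₂ : y₂ ^ 2 = x₂ ^ 3 + b) (hne : ¬ (x₁ = x₂ ∧ y₁ = -y₂)) :
    ∃ (m n x₃ : k) (h₃ : (-(m * x₃ + n)) ^ 2 = x₃ ^ 3 + b),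
      mpt hb x₁ y₁ h₁ + mpt hb x₂ y₂ h₂ = mpt hb x₃ (-(m * x₃ + n)) h₃ ∧
      y₁ = m * x₁ + n ∧ y₂ = m * x₂ + n ∧ x₁ + x₂ + x₃ = m ^ 2 ∧
      x₁ * x₂ + x₁ * x₃ + x₂ * x₃ = -2 * m * n ∧ x₁ * x₂ * x₃ = n ^ 2 - b ∧
      (x₁ ≠ x₂ → m = (y₁ - y₂) / (x₁ - x₂)) := by
  have e₁ := (mordell_equation (b := b)).2 h₁
  have e₂ := (mordell_equation (b := b)).2 h₂
  have hxy : ¬ (x₁ = x₂ ∧ y₁ = (mordell b).negY x₂ y₂) := by simpa [Affine.negY, mordell] using hne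
  have key := Affine.addPolynomial_slope e₁ e₂ hxy
  set m := (mordell b).slope x₁ x₂ y₁ y₂ with hm
  set x₃ := (mordell b).addX x₁ x₂ m with hx₃
  have hx₃' : x₃ = m ^ 2 - x₁ - x₂ := by simp [hx₃, Affine.addX, mordell]
  set n := y₁ - m * x₁ with hn
  rw [Affine.addPolynomial_eq] at key
  have hy₂ : y₂ = m * x₂ + n := by
    by_cases hx : x₁ = x₂
    · have : y₁ = y₂ := by
        have : (y₁ - y₂) * (y₁ + y₂) = 0 := by subst hx; linear_combination h₁ - h₂
        rcases mul_eq_zero.1 this with h | h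
        · linear_combination h
        · exact absurd ⟨hx, by linear_combination h⟩ hne
      rw [← this, ← hx, hn]; ring
    · rw [hn, hm, Affine.slope_of_X_ne hx]
      have := sub_ne_zero.2 hx
      field_simp; ring
  have c₁ := congrArg (fun p => p.coeff 1) key
  have c₀ := congrArg (fun p => p.coeff 0) key
  have hexp : -((X - C x₁) * (X - C x₂) * (X - C x₃)) = -Cubic.toPoly
      ⟨1, -(x₁ + x₂ + x₃), x₁ * x₂ + x₁ * x₃ + x₂ * x₃, -(x₁ * x₂ * x₃)⟩ := by
    simp only [Cubic.toPoly, map_neg, map_add, map_mul, map_one]; ring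
  rw [hexp] at c₁ c₀
  simp only [mordell, coeff_neg, Cubic.coeff_eq_c, Cubic.coeff_eq_d, neg_inj] at c₁ c₀
  have s₁ : x₁ + x₂ + x₃ = m ^ 2 := by rw [hx₃']; ring
  have s₂ : x₁ * x₂ + x₁ * x₃ + x₂ * x₃ = -2 * m * n := by
    rw [← c₁, hn]; ring
  have s₃ : x₁ * x₂ * x₃ = n ^ 2 - b := by
    have : y₁ = m * x₁ + n := by rw [hn]; ring
    rw [hn]; linear_combination c₀
  have h₃ : (-(m * x₃ + n)) ^ 2 = x₃ ^ 3 + b := by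
    linear_combination (-x₃ ^ 2) * s₁ + x₃ * s₂ - s₃
  refine ⟨m, n, x₃, h₃, ?_, by rw [hn]; ring, hy₂, s₁, s₂, s₃, fun hx => ?_⟩
  · rw [mpt, mpt, Affine.Point.add_some hxy, mpt]
    simp only [Affine.Point.some.injEq]
    refine ⟨rfl, ?_⟩
    simp only [Affine.addY, Affine.negAddY, Affine.negY, ← hm, ← hx₃]
    simp only [mordell, hn]; ring
  · rw [hm, Affine.slope_of_X_ne hx]

lemma mpt_add_chord (hb : b ≠ 0) {x₁ y₁ x₂ y₂ m x₃ y₃ : k} (h₁ : y₁ ^ 2 = x₁ ^ 3 + b)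
    (h₂ : y₂ ^ 2 = x₂ ^ 3 + b) (h₃ : y₃ ^ 2 = x₃ ^ 3 + b) (hne : x₁ ≠ x₂)
    (hm : m * (x₁ - x₂) = y₁ - y₂) (hx₃ : x₃ = m ^ 2 - x₁ - x₂) (hy₃ : y₃ = m * (x₁ - x₃) - y₁) :
    mpt hb x₁ y₁ h₁ + mpt hb x₂ y₂ h₂ = mpt hb x₃ y₃ h₃ := by
  obtain ⟨m', n, x, h, hadd, e₁, e₂, s₁, -, -, hm'⟩ := mpt_add_line hb h₁ h₂ (fun h => hne h.1)
  have : m = m' := by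
    rw [hm' hne, eq_div_iff (sub_ne_zero.2 hne), hm]
  subst this
  have hx : x = x₃ := by rw [hx₃, ← s₁]; ring
  subst hx
  rw [hadd, mpt_inj]
  refine ⟨rfl, ?_⟩
  rw [hy₃]; linear_combination e₁

lemma mpt_add_neg (hb : b ≠ 0) {x y y' : k} (h : y ^ 2 = x ^ 3 + b) (h' : y' ^ 2 = x ^ 3 + b)
    (hy : y' = -y) : mpt hb x y h + mpt hb x y' h' = 0 := by
  subst hy
  rw [← mpt_neg hb h, add_neg_cancel]

end Mordell

section Twist
variable {k kk : Type*} [Field k] [CharZero k] [Field kk] [CharZero kk]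
  [DecidableEq k] [DecidableEq kk]

/-- The map `(x, y) ↦ (u² σ(x), u³ σ(y))` from `y² = x³ + b` to `y² = x³ + u⁶ σ(b)`. Galois
conjugation, multiplication by a sixth root of unity and passage to a sextic twist are all of this
form. -/
def twistFun {b : k} {b' : kk} (hb : b ≠ 0) (σ : k →+* kk) (u : kk) (hu : u ≠ 0)
    (h : b' = u ^ 6 * σ b) : (mordell b).Point → (mordell b').Point
  | 0 => 0
  | .some x y hp => mpt (b := b') (by rw [h]; simp [hu, hb]) (u ^ 2 * σ x) (u ^ 3 * σ y) (by
      have := congrArg σ (mordell_equation.1 hp.1)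
      simp only [map_pow, map_add] at this
      rw [h]; linear_combination u ^ 6 * this)

lemma twistFun_mpt {b : k} {b' : kk} (hb : b ≠ 0) (hb' : b' ≠ 0) (σ : k →+* kk) (u : kk)
    (hu : u ≠ 0) (h : b' = u ^ 6 * σ b) {x y : k} (hp : y ^ 2 = x ^ 3 + b)
    (hp' : (u ^ 3 * σ y) ^ 2 = (u ^ 2 * σ x) ^ 3 + b') :
    twistFun hb σ u hu h (mpt hb x y hp) = mpt hb' (u ^ 2 * σ x) (u ^ 3 * σ y) hp' := rfl

/-- `twistFun` is a homomorphism. -/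
def twist {b : k} {b' : kk} (hb : b ≠ 0) (σ : k →+* kk) (u : kk) (hu : u ≠ 0)
    (h : b' = u ^ 6 * σ b) : (mordell b).Point →+ (mordell b').Point where
  toFun := twistFun hb σ u hu h
  map_zero' := rfl
  map_add' P Q := by
    have hb' : b' ≠ 0 := by rw [h]; simp [hu, hb]
    have hpt : ∀ x y : k, y ^ 2 = x ^ 3 + b → (u ^ 3 * σ y) ^ 2 = (u ^ 2 * σ x) ^ 3 + b' := by
      intro x y hxy
      have := congrArg σ hxy
      simp only [map_pow, map_add] at this
      rw [h]; linear_combination u ^ 6 * this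
    rcases mpt_cases hb P with rfl | ⟨x₁, y₁, h₁, rfl⟩
    · rw [zero_add]; exact (zero_add _).symm
    rcases mpt_cases hb Q with rfl | ⟨x₂, y₂, h₂, rfl⟩
    · rw [add_zero]; exact (add_zero _).symm
    rw [twistFun_mpt hb hb' σ u hu h h₁ (hpt _ _ h₁), twistFun_mpt hb hb' σ u hu h h₂ (hpt _ _ h₂)]
    by_cases hne : x₁ = x₂ ∧ y₁ = -y₂
    · obtain ⟨rfl, rfl⟩ := hne
      rw [mpt_add_neg hb h₁ h₂ (by ring)]
      exact (mpt_add_neg hb' _ _ (by simp)).symm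
    · have hne' : ¬ (u ^ 2 * σ x₁ = u ^ 2 * σ x₂ ∧ u ^ 3 * σ y₁ = -(u ^ 3 * σ y₂)) := by
        rintro ⟨ha, hc⟩
        refine hne ⟨σ.injective (mul_left_cancel₀ (pow_ne_zero 2 hu) ha), σ.injective ?_⟩
        rw [map_neg]
        exact mul_left_cancel₀ (pow_ne_zero 3 hu) (by rw [hc]; ring)
      obtain ⟨m, n, x₃, h₃, hadd, e₁, e₂, s₁, s₂, s₃, hm⟩ := mpt_add_line hb h₁ h₂ hne
      obtain ⟨m', n', x₃', h₃', hadd', e₁', e₂', s₁', s₂', s₃', hm'⟩ :=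
        mpt_add_line hb' (hpt _ _ h₁) (hpt _ _ h₂) hne'
      rw [hadd, hadd', twistFun_mpt hb hb' σ u hu h h₃ (hpt _ _ h₃), mpt_inj]
      have f₁ := congrArg σ e₁
      have f₂ := congrArg σ e₂
      have t₁ := congrArg σ s₁
      have t₂ := congrArg σ s₂
      have t₃ := congrArg σ s₃
      simp only [map_pow, map_add, map_mul, map_sub, map_neg, map_ofNat] at f₁ f₂ t₁ t₂ t₃
      have hmm : m' = u * σ m := by
        by_cases hx : x₁ = x₂
        · -- a tangent: the slope is determined by the symmetric functions, as `y ≠ 0`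
          subst hx
          have hy : y₁ = y₂ := by rw [e₁, e₂]
          have hy0 : y₁ ≠ 0 := fun h0 => hne ⟨rfl, by rw [← hy, h0, neg_zero]⟩
          have d1 := congrArg σ (tangent_slope e₁ s₁ s₂)
          have d2 := tangent_slope e₁' s₁' s₂'
          simp only [map_pow, map_mul, map_ofNat] at d1
          have hs : σ y₁ ≠ 0 := by simpa using hy0
          have : 2 * (u ^ 3 * σ y₁) * (m' - u * σ m) = 0 := by
            linear_combination d2 - u ^ 4 * d1
          have h2 : 2 * (u ^ 3 * σ y₁) ≠ 0 := by
            simp [hu, hs]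
          rcases mul_eq_zero.1 this with h | h
          · exact absurd h h2
          · linear_combination h
        · have hs : σ x₁ - σ x₂ ≠ 0 := sub_ne_zero.2 fun h => hx (σ.injective h)
          have : u ^ 2 * (σ x₁ - σ x₂) * (m' - u * σ m) = 0 := by
            linear_combination -e₁' + e₂' + u ^ 3 * f₁ - u ^ 3 * f₂
          rcases mul_eq_zero.1 this with h | h
          · exact absurd h (mul_ne_zero (pow_ne_zero 2 hu) hs)
          · linear_combination h
      subst hmm
      have hx : u ^ 2 * σ x₃ = x₃' := by linear_combination u ^ 2 * t₁ - s₁'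
      refine ⟨hx, ?_⟩
      rw [← hx]
      simp only [map_neg, map_add, map_mul]
      linear_combination u ^ 3 * f₁ - e₁'

@[simp] lemma twist_mpt {b : k} {b' : kk} (hb : b ≠ 0) (hb' : b' ≠ 0) (σ : k →+* kk) (u : kk)
    (hu : u ≠ 0) (h : b' = u ^ 6 * σ b) {x y : k} (hp : y ^ 2 = x ^ 3 + b)
    (hp' : (u ^ 3 * σ y) ^ 2 = (u ^ 2 * σ x) ^ 3 + b') :
    twist hb σ u hu h (mpt hb x y hp) = mpt hb' (u ^ 2 * σ x) (u ^ 3 * σ y) hp' := rfl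

end Twist

end

section
open WeierstrassCurve Polynomial

section CM
variable {k : Type*} [Field k] [CharZero k] {b : k}

lemma omega_ne_zero {w : k} (hw : w ^ 2 + w + 1 = 0) : w ≠ 0 := by
  rintro rfl; simp at hw

lemma omega_cube {w : k} (hw : w ^ 2 + w + 1 = 0) : w ^ 3 = 1 := by
  linear_combination (w - 1) * hw

lemma omega_ne_one {w : k} (hw : w ^ 2 + w + 1 = 0) : 1 - w ≠ 0 := by
  intro h
  have : w = 1 := by linear_combination -h
  subst this; norm_num at hw

variable [DecidableEq k]

/-- Complex multiplication `[ω] (x, y) = (ω x, y)` on `y² = x³ + b`. -/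
def omul (hb : b ≠ 0) {w : k} (hw : w ^ 2 + w + 1 = 0) : (mordell b).Point →+ (mordell b).Point :=
  twist hb (RingHom.id k) (w ^ 2) (pow_ne_zero 2 (omega_ne_zero hw))
    (by rw [RingHom.id_apply]; linear_combination (-b * (w ^ 9 + w ^ 6 + w ^ 3 + 1)) * (omega_cube hw))

lemma omul_mpt (hb : b ≠ 0) {w : k} (hw : w ^ 2 + w + 1 = 0) {x y : k} (h : y ^ 2 = x ^ 3 + b)
    (h' : y ^ 2 = (w * x) ^ 3 + b) : omul hb hw (mpt hb x y h) = mpt hb (w * x) y h' := by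
  have h3 := omega_cube hw
  rw [omul, twist_mpt hb hb _ _ _ _ h (by
    simp only [RingHom.id_apply]; linear_combination (h + (w ^ 9 + w ^ 6 + w ^ 3 + 1) * (y ^ 2 - x ^ 3) * h3)), mpt_inj]
  simp only [RingHom.id_apply]
  exact ⟨by linear_combination (w * x) * h3, by linear_combination (w ^ 3 + 1) * y * h3⟩

lemma omul_cube (hb : b ≠ 0) {w : k} (hw : w ^ 2 + w + 1 = 0) (P : (mordell b).Point) :
    P + omul hb hw P + omul hb hw (omul hb hw P) = 0 := by
  have h3 := omega_cube hw
  have h1 := omega_ne_one hw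
  rcases mpt_cases hb P with rfl | ⟨x, y, h, rfl⟩
  · simp
  have h' : y ^ 2 = (w * x) ^ 3 + b := by rw [mul_pow, h3, one_mul, h]
  have h'' : y ^ 2 = (w * (w * x)) ^ 3 + b := by rw [mul_pow, h3, one_mul, h']
  rw [omul_mpt hb hw h h', omul_mpt hb hw h' h'']
  by_cases hx : x = 0
  · subst hx
    simp only [mul_zero]
    by_cases hy : y = 0
    · exfalso; subst hy; apply hb; simpa using h.symm
    have hne : ¬ ((0 : k) = 0 ∧ y = -y) := fun ⟨_, h2⟩ => hy (by
      have : 2 * y = 0 := by linear_combination h2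
      simpa using this)
    obtain ⟨m, n, x₃, h₃, hadd, e₁, e₂, s₁, s₂, s₃, hm⟩ := mpt_add_line hb h h hne
    rw [hadd]
    have hn : n = y := by linear_combination -e₁
    have hm0 : m = 0 := by
      have : m * n = 0 := by linear_combination (1 / 2 : k) * s₂
      rcases mul_eq_zero.1 this with h | h
      · exact h
      · exact absurd (hn ▸ h) hy
    have hx3 : x₃ = 0 := by subst hm0; linear_combination s₁
    subst hx3
    exact mpt_add_neg hb _ _ (by rw [hm0, hn]; ring)
  · have hne : x ≠ w * x := fun h0 => by
      have : (1 - w) * x = 0 := by linear_combination h0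
      exact (mul_ne_zero h1 hx) this
    rw [mpt_add_chord hb h h' (m := 0) (x₃ := w * (w * x)) (y₃ := -y) (by rw [neg_sq, h'']) hne
      (by ring) (by linear_combination x * hw) (by ring)]
    exact mpt_add_neg hb _ _ (by ring)

/-- `[1 - ω]` -/
def mumul (hb : b ≠ 0) {w : k} (hw : w ^ 2 + w + 1 = 0) : (mordell b).Point →+ (mordell b).Point :=
  AddMonoidHom.id _ - omul hb hw

/-- `[2 - ω]` -/
def pimul (hb : b ≠ 0) {w : k} (hw : w ^ 2 + w + 1 = 0) : (mordell b).Point →+ (mordell b).Point :=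
  AddMonoidHom.id _ + mumul hb hw

lemma mumul_apply (hb : b ≠ 0) {w : k} (hw : w ^ 2 + w + 1 = 0) (P : (mordell b).Point) :
    mumul hb hw P = P - omul hb hw P := rfl

lemma pimul_apply (hb : b ≠ 0) {w : k} (hw : w ^ 2 + w + 1 = 0) (P : (mordell b).Point) :
    pimul hb hw P = P + mumul hb hw P := rfl

lemma mumul_mpt_zero (hb : b ≠ 0) {w : k} (hw : w ^ 2 + w + 1 = 0) {y : k}
    (h : y ^ 2 = 0 ^ 3 + b) : mumul hb hw (mpt hb 0 y h) = 0 := by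
  rw [mumul_apply, omul_mpt hb hw h (by rw [mul_zero, h]), sub_eq_zero, mpt_inj]
  simp

lemma mumul_mpt (hb : b ≠ 0) {w : k} (hw : w ^ 2 + w + 1 = 0) {x y : k} (h : y ^ 2 = x ^ 3 + b)
    (hx : x ≠ 0) : ∃ (x' y' : k) (h' : y' ^ 2 = x' ^ 3 + b),
      mumul hb hw (mpt hb x y h) = mpt hb x' y' h' ∧
      3 * x ^ 2 * x' = -w ^ 2 * (x ^ 3 + 4 * b) ∧ (1 - w) * x * (y' + y) = 2 * y * (x - x') := by
  have h3 := omega_cube hw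
  have h1 := omega_ne_one hw
  have h' : y ^ 2 = (w * x) ^ 3 + b := by rw [mul_pow, h3, one_mul, h]
  have hne : x ≠ w * x := fun h0 => by
    have : (1 - w) * x = 0 := by linear_combination h0
    exact (mul_ne_zero h1 hx) this
  rw [mumul_apply, omul_mpt hb hw h h', sub_eq_add_neg, mpt_neg]
  obtain ⟨m, n, x₃, h₃, hadd, e₁, e₂, s₁, s₂, s₃, hm⟩ := mpt_add_line hb h
    (by rw [neg_sq, h'] : (-y) ^ 2 = (w * x) ^ 3 + b) (fun h => hne h.1)
  have hmm : m * ((1 - w) * x) = 2 * y := by linear_combination e₂ - e₁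
  refine ⟨x₃, _, h₃, hadd, ?_, ?_⟩
  · have : m ^ 2 * ((1 - w) * x) ^ 2 = 4 * (x ^ 3 + b) := by
      rw [← mul_pow, hmm, mul_pow, h]; norm_num
    have hw2 : w ^ 2 = -w - 1 := by linear_combination hw
    have hx3 : x₃ = m ^ 2 - x - w * x := by linear_combination s₁
    -- `(1 - ω)² = -3ω`
    have e : -3 * w * x ^ 2 * m ^ 2 = 4 * (x ^ 3 + b) := by
      rw [← this]; linear_combination (-x ^ 2 * m ^ 2) * hw
    rw [hx3]
    grind
  · linear_combination (1 - w) * x * e₁ + (x - x₃) * hmm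

lemma pi_aux1 {k : Type*} [Field k] {w : k} (hw : w ^ 2 + w + 1 = 0) (x b : k) :
   4 * (x^3+b) * (3*x^3*(1-w) - ((2 - w) * x ^ 3 + 4 * w ^ 2 * b))^2 + 6 * w * x^3 * ((2 - w) * x ^ 3 + 4 * w ^ 2 * b)^2 - w *  ((2 - w) * x ^ 3 + 4 * w ^ 2 * b)^3
   = -3 * w * x^2 * (x ^ 7 + (44 + 48 * w) * b * x ^ 4 + (16 + 48 * w) * b ^ 2 * x) := by
  grind

lemma pi_aux2 {k : Type*} [Field k] {w : k} (hw : w ^ 2 + w + 1 = 0) (x b : k) :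
    2 * (3 * x ^ 3 * (1 - w) - ((2 - w) * x ^ 3 + 4 * w ^ 2 * b)) *
      (x * ((2 - w) * x ^ 3 + 4 * w ^ 2 * b) ^ 2 -
        (x ^ 7 + (44 + 48 * w) * b * x ^ 4 + (16 + 48 * w) * b ^ 2 * x)) -
      x * (1 - w) * ((2 - w) * x ^ 3 + 4 * w ^ 2 * b) ^ 3 = (1 - w) * x *
      (x ^ 9 - (96 + 108 * w) * b * x ^ 6 + (48 - 432 * w) * b ^ 2 * x ^ 3 + 64 * b ^ 3) := by
  grind

/-- The multiplication by `π = 2 - ω` in coordinates; the kernel is cut out by the cubic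
`π x³ + 4 ω² b`. -/
lemma pimul_mpt (hb : b ≠ 0) {w : k} (hw : w ^ 2 + w + 1 = 0) {x y : k} (h : y ^ 2 = x ^ 3 + b) :
    ((2 - w) * x ^ 3 + 4 * w ^ 2 * b = 0 ∧ pimul hb hw (mpt hb x y h) = 0) ∨
    ((2 - w) * x ^ 3 + 4 * w ^ 2 * b ≠ 0 ∧ ∃ (X Y : k) (H : Y ^ 2 = X ^ 3 + b),
      pimul hb hw (mpt hb x y h) = mpt hb X Y H ∧
      X * ((2 - w) * x ^ 3 + 4 * w ^ 2 * b) ^ 2 =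
        x ^ 7 + (44 + 48 * w) * b * x ^ 4 + (16 + 48 * w) * b ^ 2 * x ∧
      Y * ((2 - w) * x ^ 3 + 4 * w ^ 2 * b) ^ 3 =
        y * (x ^ 9 - (96 + 108 * w) * b * x ^ 6 + (48 - 432 * w) * b ^ 2 * x ^ 3 + 64 * b ^ 3)) := by
  have h3 := omega_cube hw
  have h1 := omega_ne_one hw
  have hw0 := omega_ne_zero hw
  by_cases hx : x = 0
  · subst hx
    right
    refine ⟨by simp [hw0, hb], 0, y, h, ?_, by ring, ?_⟩
    · rw [pimul_apply, mumul_mpt_zero, add_zero]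
    · linear_combination (64 * b ^ 3 * y) * (w ^ 3 + 1) * h3
  obtain ⟨x', y', h', hmu, hX, hY⟩ := mumul_mpt hb hw h hx
  have hd : 3 * x ^ 2 * (x - x') = (2 - w) * x ^ 3 + 4 * w ^ 2 * b := by
    linear_combination -hX + x ^ 3 * hw
  have hw2 : w ^ 2 ≠ 0 := pow_ne_zero 2 hw0
  by_cases hΨ : (2 - w) * x ^ 3 + 4 * w ^ 2 * b = 0
  · left
    refine ⟨hΨ, ?_⟩
    have hxx : x' = x := by
      rw [hΨ] at hd
      have := (mul_eq_zero.1 hd).resolve_left (by simp [hx])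
      linear_combination -this
    subst hxx
    have hyy : y' = -y := by
      have : (1 - w) * x' * (y' + y) = 0 := by rw [hY]; ring
      have := (mul_eq_zero.1 this).resolve_left (mul_ne_zero h1 hx)
      linear_combination this
    rw [pimul_apply, hmu]
    exact mpt_add_neg hb _ _ hyy
  · right
    refine ⟨hΨ, ?_⟩
    have hxx : x ≠ x' := by
      rintro rfl
      rw [sub_self, mul_zero] at hd
      exact hΨ hd.symm
    obtain ⟨m, n, X, H, hadd, e₁, e₂, s₁, s₂, s₃, -⟩ := mpt_add_line hb h h' (fun h => hxx h.1)
    have hmm : m * (x * (1 - w) * ((2 - w) * x ^ 3 + 4 * w ^ 2 * b)) =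
        2 * y * (3 * x ^ 3 * (1 - w) - ((2 - w) * x ^ 3 + 4 * w ^ 2 * b)) := by
      rw [← hd]
      linear_combination (-3 * x ^ 3 * (1 - w)) * (e₁ - e₂) - 3 * x ^ 2 * hY
    have hXX : X * ((2 - w) * x ^ 3 + 4 * w ^ 2 * b) ^ 2 =
        x ^ 7 + (44 + 48 * w) * b * x ^ 4 + (16 + 48 * w) * b ^ 2 * x := by
      set Ψ := (2 - w) * x ^ 3 + 4 * w ^ 2 * b with hΨd
      have hc : -3 * w * x ^ 2 ≠ 0 := by simp [hw0, hx]
      refine mul_left_cancel₀ hc ?_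
      rw [← pi_aux1 hw x b, ← hΨd]
      have hm2 := congrArg (· ^ 2) hmm
      simp only [mul_pow] at hm2
      have hX' : X = m ^ 2 - x - x' := by linear_combination s₁
      rw [hX']
      linear_combination hm2 + 4 * (3 * x ^ 3 * (1 - w) - Ψ) ^ 2 * h -
        m ^ 2 * x ^ 2 * Ψ ^ 2 * hw - w * Ψ ^ 2 * hd
    refine ⟨X, _, H, by rw [pimul_apply, hmu, hadd], hXX, ?_⟩
    refine mul_left_cancel₀ (mul_ne_zero h1 hx) ?_
    have haux := pi_aux2 hw x b
    rw [← hXX] at haux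
    generalize (2 - w) * x ^ 3 + 4 * w ^ 2 * b = Ψ at *
    linear_combination y * haux + (1 - w) * x * Ψ ^ 3 * e₁ + Ψ ^ 2 * (x - X) * hmm
end CM

end

/-! ### The descent function for division by `2 - ω` -/

section
open WeierstrassCurve Polynomial

section Funct
variable {k : Type*} [Field k] [CharZero k]

/-- The constant `μ³ρ/4` of the sextic twist `E' : ϑ² = ξ³ + μ³ρ/4`, where `μ = 1 - ω` and
`ρ = 2 + 3ω`. -/
def bE (w : k) : k := (12 - 3 * w) / 4

/-- The function on `E'` with divisor `7 (T) - 7 (O)`, where `T = (μ, 3μ/2)`. -/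
def fE (w x y : k) : k :=
  ((-27 - 36 * w) + (-9 + 18 * w) * x + (-3 - 15 * w) * x ^ 2 + (-8 + 2 * w) * x ^ 3) / 2 +
    y * ((6 + 9 * w) + (4 - w) * x + x ^ 2)

/-- Denominator of the function `g` with `g⁷ = f ∘ π`, vanishing on the kernel of `π`. -/
def psiE (w x : k) : k := (2 - w) * x ^ 3 + 4 * w ^ 2 * bE w

/-- Numerator of the function `g` with `g⁷ = f ∘ π`. -/
def uE (w x y : k) : k :=
  (-1 + w) * x ^ 3 + (3 + 15 * w) / 2 * x ^ 2 + (18 + 27 * w) / 2 * x + (-27 - 9 * w) / 2 +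
    y * (x ^ 2 + (1 + 5 * w) * x + (3 - 6 * w))

lemma fE_neg {w x y : k} (hw : w ^ 2 + w + 1 = 0) (h : y ^ 2 = x ^ 3 + bE w) :
    fE w x y * fE w x (-y) = -(x - (1 - w)) ^ 7 := by
  have : fE w x y * fE w x (-y) = (((-27 - 36 * w) + (-9 + 18 * w) * x + (-3 - 15 * w) * x ^ 2 +
      (-8 + 2 * w) * x ^ 3) / 2) ^ 2 - (x ^ 3 + bE w) * ((6 + 9 * w) + (4 - w) * x + x ^ 2) ^ 2 := by
    rw [← h, fE, fE]; ring
  rw [this, bE]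
  grind

lemma prod_quadratic (x₁ x₂ x₃ a b c : k) :
    (a + b * x₁ + c * x₁ ^ 2) * (a + b * x₂ + c * x₂ ^ 2) * (a + b * x₃ + c * x₃ ^ 2) =
    a ^ 3 + a ^ 2 * b * (x₁ + x₂ + x₃) +
      a ^ 2 * c * ((x₁ + x₂ + x₃) ^ 2 - 2 * (x₁ * x₂ + x₁ * x₃ + x₂ * x₃)) +
      a * b ^ 2 * (x₁ * x₂ + x₁ * x₃ + x₂ * x₃) +
      a * b * c * ((x₁ + x₂ + x₃) * (x₁ * x₂ + x₁ * x₃ + x₂ * x₃) - 3 * (x₁ * x₂ * x₃)) +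
      a * c ^ 2 * ((x₁ * x₂ + x₁ * x₃ + x₂ * x₃) ^ 2 - 2 * (x₁ + x₂ + x₃) * (x₁ * x₂ * x₃)) +
      b ^ 3 * (x₁ * x₂ * x₃) + b ^ 2 * c * (x₁ + x₂ + x₃) * (x₁ * x₂ * x₃) +
      b * c ^ 2 * (x₁ * x₂ + x₁ * x₃ + x₂ * x₃) * (x₁ * x₂ * x₃) +
      c ^ 3 * (x₁ * x₂ * x₃) ^ 2 := by
  ring

/-- The product of `f` over three collinear points is a seventh power up to sign. -/
lemma fE_line {w x₁ x₂ x₃ m n : k} (hw : w ^ 2 + w + 1 = 0)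
    (s₁ : x₁ + x₂ + x₃ = m ^ 2) (s₂ : x₁ * x₂ + x₁ * x₃ + x₂ * x₃ = -2 * m * n)
    (s₃ : x₁ * x₂ * x₃ = n ^ 2 - bE w) :
    fE w x₁ (m * x₁ + n) * fE w x₂ (m * x₂ + n) * fE w x₃ (m * x₃ + n) =
      -(3 * (1 - w) / 2 - m * (1 - w) - n) ^ 7 := by
  have hc : ∀ x, x ^ 3 - m ^ 2 * x ^ 2 + (-2 * m * n) * x - (n ^ 2 - bE w) = 0 →
      fE w x (m * x + n) = ((-27 - 36 * w) / 2 + n * (6 + 9 * w) +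
        (-4 + w + m) * (n ^ 2 - bE w)) + ((-9 + 18 * w) / 2 + m * (6 + 9 * w) + n * (4 - w) +
        (-4 + w + m) * (2 * m * n)) * x + ((-3 - 15 * w) / 2 + m * (4 - w) + n +
        (-4 + w + m) * m ^ 2) * x ^ 2 := by
    intro x hx
    rw [fE]; linear_combination (-4 + w + m) * hx
  rw [hc x₁ (by rw [← s₁, ← s₂, ← s₃]; ring), hc x₂ (by rw [← s₁, ← s₂, ← s₃]; ring),
    hc x₃ (by rw [← s₁, ← s₂, ← s₃]; ring), prod_quadratic, s₁, s₂, s₃, bE]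
  linear_combination (w ^ 5 * m ^ 7 - 21 / 2 * w ^ 5 * m ^ 6 + 189 / 4 * w ^ 5 * m ^ 5 - 945 / 8
    * w ^ 5 * m ^ 4 + 2835 / 16 * w ^ 5 * m ^ 3 - 5103 / 32 * w ^ 5 * m ^ 2 + 5103 / 64 * w ^ 5
    * m - 2187 / 128 * w ^ 5 - 8 * w ^ 4 * m ^ 7 - 7 * w ^ 4 * m ^ 6 * n + 84 * w ^ 4 * m ^ 6 +
    63 * w ^ 4 * m ^ 5 * n - 378 * w ^ 4 * m ^ 5 - 945 / 4 * w ^ 4 * m ^ 4 * n + 945 * w ^ 4 * m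
    ^ 4 + 945 / 2 * w ^ 4 * m ^ 3 * n - 2835 / 2 * w ^ 4 * m ^ 3 - 8505 / 16 * w ^ 4 * m ^ 2 * n
    + 5103 / 4 * w ^ 4 * m ^ 2 + 5103 / 16 * w ^ 4 * m * n - 5103 / 8 * w ^ 4 * m - 5103 / 64 *
    w ^ 4 * n + 8775 / 64 * w ^ 4 + 28 * w ^ 3 * m ^ 7 + 49 * w ^ 3 * m ^ 6 * n - 294 * w ^ 3 *
    m ^ 6 + 21 * w ^ 3 * m ^ 5 * n ^ 2 - 441 * w ^ 3 * m ^ 5 * n + 1323 * w ^ 3 * m ^ 5 - 315 /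
    2 * w ^ 3 * m ^ 4 * n ^ 2 + 6615 / 4 * w ^ 3 * m ^ 4 * n - 52911 / 16 * w ^ 3 * m ^ 4 + 945
    / 2 * w ^ 3 * m ^ 3 * n ^ 2 - 6615 / 2 * w ^ 3 * m ^ 3 * n + 4959 * w ^ 3 * m ^ 3 - 2835 / 4
    * w ^ 3 * m ^ 2 * n ^ 2 + 59571 / 16 * w ^ 3 * m ^ 2 * n - 284229 / 64 * w ^ 3 * m ^ 2 +
    8505 / 16 * w ^ 3 * m * n ^ 2 - 35613 / 16 * w ^ 3 * m * n + 2268 * w ^ 3 * m - 5049 / 32 *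
    w ^ 3 * n ^ 2 + 35883 / 64 * w ^ 3 * n - 82269 / 128 * w ^ 3 - 55 * w ^ 2 * m ^ 7 - 147 * w
    ^ 2 * m ^ 6 * n + 2553 / 4 * w ^ 2 * m ^ 6 - 126 * w ^ 2 * m ^ 5 * n ^ 2 + 2673 / 2 * w ^ 2
    * m ^ 5 * n - 41031 / 16 * w ^ 2 * m ^ 5 - 35 * w ^ 2 * m ^ 4 * n ^ 3 + 3783 / 4 * w ^ 2 * m
    ^ 4 * n ^ 2 - 19089 / 4 * w ^ 2 * m ^ 4 * n + 46251 / 8 * w ^ 2 * m ^ 4 + 210 * w ^ 2 * m ^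
    3 * n ^ 3 - 2784 * w ^ 2 * m ^ 3 * n ^ 2 + 78597 / 8 * w ^ 2 * m ^ 3 * n - 613251 / 64 * w ^
    2 * m ^ 3 - 939 / 2 * w ^ 2 * m ^ 2 * n ^ 3 + 17199 / 4 * w ^ 2 * m ^ 2 * n ^ 2 - 99063 / 8
    * w ^ 2 * m ^ 2 * n + 355347 / 32 * w ^ 2 * m ^ 2 + 987 / 2 * w ^ 2 * m * n ^ 3 - 50643 / 16
    * w ^ 2 * m * n ^ 2 + 240975 / 32 * w ^ 2 * m * n - 401193 / 64 * w ^ 2 * m + 9 / 4 * w ^ 2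
    * n ^ 4 - 2739 / 16 * w ^ 2 * n ^ 3 + 4509 / 8 * w ^ 2 * n ^ 2 - 3483 / 4 * w ^ 2 * n +
    72333 / 128 * w ^ 2 + 491 / 4 * w * m ^ 7 + 503 / 2 * w * m ^ 6 * n - 2793 / 4 * w * m ^ 6 +
    1263 / 4 * w * m ^ 5 * n ^ 2 - 1782 * w * m ^ 5 * n + 34677 / 16 * w * m ^ 5 + 175 * w * m ^
    4 * n ^ 3 - 1959 * w * m ^ 4 * n ^ 2 + 51507 / 8 * w * m ^ 4 * n - 24219 / 4 * w * m ^ 4 +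
    35 * w * m ^ 3 * n ^ 4 - 1587 / 2 * w * m ^ 3 * n ^ 3 + 45687 / 8 * w * m ^ 3 * n ^ 2 -
    59913 / 4 * w * m ^ 3 * n + 202257 / 16 * w * m ^ 3 - 261 / 4 * w * m ^ 2 * n ^ 4 + 7647 / 4
    * w * m ^ 2 * n ^ 3 - 43875 / 4 * w * m ^ 2 * n ^ 2 + 22761 * w * m ^ 2 * n - 506331 / 32 *
    w * m ^ 2 + 16 * w * m * n ^ 5 + 753 / 4 * w * m * n ^ 4 - 13659 / 4 * w * m * n ^ 3 + 55521
    / 4 * w * m * n ^ 2 - 172611 / 8 * w * m * n + 183465 / 16 * w * m + w * n ^ 6 + 7 / 2 * w *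
    n ^ 5 - 1431 / 4 * w * n ^ 4 + 44889 / 16 * w * n ^ 3 - 8154 * w * n ^ 2 + 636093 / 64 * w *
    n - 68877 / 16 * w + 293 / 4 * m ^ 7 + 31 / 2 * m ^ 6 * n - 897 / 2 * m ^ 6 - 177 / 4 * m ^
    5 * n ^ 2 + 27 * m ^ 5 * n + 1989 / 2 * m ^ 5 - 193 / 2 * m ^ 4 * n ^ 3 + 897 / 2 * m ^ 4 *
    n ^ 2 - 522 * m ^ 4 * n - 3465 / 4 * m ^ 4 - 191 / 4 * m ^ 3 * n ^ 4 + 561 * m ^ 3 * n ^ 3 -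
    6645 / 4 * m ^ 3 * n ^ 2 + 7047 / 4 * m ^ 3 * n - 1827 / 16 * m ^ 3 - 5 * m ^ 2 * n ^ 5 + 93
    * m ^ 2 * n ^ 4 - 3807 / 4 * m ^ 2 * n ^ 3 + 21357 / 8 * m ^ 2 * n ^ 2 - 44829 / 16 * m ^ 2
    * n + 29079 / 32 * m ^ 2 + m * n ^ 6 - 89 / 2 * m * n ^ 5 + 435 / 2 * m * n ^ 4 + 327 / 4 *
    m * n ^ 3 - 22293 / 16 * m * n ^ 2 + 30591 / 16 * m * n - 49167 / 64 * m - 10 * n ^ 6 + 215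
    / 2 * n ^ 5 - 1737 / 4 * n ^ 4 + 11193 / 16 * n ^ 3 - 10449 / 32 * n ^ 2 - 12879 / 64 * n +
    21195 / 128) * hw

lemma psiE_eq {w : k} (hw : w ^ 2 + w + 1 = 0) (x : k) :
    psiE w x = -w * x ^ 3 - 12 * w + 2 * x ^ 3 - 15 := by
  rw [psiE, bE]; grind

lemma phiE_eq {w : k} (hw : w ^ 2 + w + 1 = 0) (x : k) :
    x ^ 7 + (44 + 48 * w) * bE w * x ^ 4 + (16 + 48 * w) * bE w ^ 2 * x =
      147 * w * x ^ 4 + 567 * w * x + x ^ 7 + 168 * x ^ 4 + 378 * x := by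
  rw [bE]; grind

lemma thetaE_eq {w : k} (hw : w ^ 2 + w + 1 = 0) (x : k) :
    x ^ 9 - (96 + 108 * w) * bE w * x ^ 6 + (48 - 432 * w) * bE w ^ 2 * x ^ 3 + 64 * bE w ^ 3 =
      -333 * w * x ^ 6 - 6075 * w * x ^ 3 - 1620 * w + x ^ 9 - 369 * x ^ 6 - 1782 * x ^ 3 + 1377 := by
  rw [bE]; grind

lemma uE_sq {w x y : k} (hw : w ^ 2 + w + 1 = 0) (h : y ^ 2 = x ^ 3 + (12 - 3 * w) / 4) :
    uE w x y ^ 2 =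
      7 * w * x ^ 6 + 2 * w * x ^ 5 * y - 54 * w * x ^ 5 - 3 * w * x ^ 4 * y + 15 / 2 * w *
        x ^ 4 + 12 * w * x ^ 3 * y - 72 * w * x ^ 3 + 90 * w * x ^ 2 * y - 351 / 2 * w * x ^
        2 + 36 * w * x * y - 81 * w * x + 81 * w * y - 297 / 2 * w + x ^ 7 + 2 * x ^ 6 - 2 *
        x ^ 5 * y - 36 * x ^ 5 - 9 * x ^ 4 * y - 30 * x ^ 4 - 48 * x ^ 3 * y - 153 * x ^ 3 -
        45 * x ^ 2 * y - 297 / 2 * x ^ 2 + 234 * x * y + 135 * x - 135 * y + 27 := by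
  rw [uE]
  linear_combination (-75 / 4 * w * x ^ 2 + 45 * w * x - 27 * w + x ^ 6 + 40 * x ^ 5 + 10 * x ^
    4 * y + 93 / 4 * x ^ 4 + 63 * x ^ 3 * y + 222 * x ^ 3 + 45 * x ^ 2 * y + 210 * x ^ 2 - 207 *
    x * y - 360 * x + 54 * y + 729 / 4) * hw + (25 * w ^ 2 * x ^ 2 - 60 * w ^ 2 * x + 36 * w ^ 2
    + 10 * w * x ^ 3 - 2 * w * x ^ 2 + 18 * w * x - 36 * w + x ^ 4 + 2 * x ^ 3 + 7 * x ^ 2 + 6 *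
    x + 9) * h

lemma uE_cube {w x y : k} (hw : w ^ 2 + w + 1 = 0) (h : y ^ 2 = x ^ 3 + (12 - 3 * w) / 4) :
    uE w x y ^ 3 =
      3 * w * x ^ 10 - 51 / 2 * w * x ^ 9 + 6 * w * x ^ 8 * y + 135 / 2 * w * x ^ 8 - 108 *
        w * x ^ 7 * y - 162 * w * x ^ 7 - 63 * w * x ^ 6 * y - 810 * w * x ^ 6 - 1296 * w *
        x ^ 5 * y + 1944 * w * x ^ 5 - 1755 * w * x ^ 4 * y - 8019 / 2 * w * x ^ 4 + 486 * w
        * x ^ 3 * y + 3159 * w * x ^ 3 + 1053 * w * x ^ 2 * y + 26973 / 2 * w * x ^ 2 - 4374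
        * w * x * y - 13851 / 2 * w * x - 1620 * w * y + 13851 / 2 * w - 3 * x ^ 10 + x ^ 9
        * y - 57 / 2 * x ^ 9 + 3 * x ^ 8 * y + 27 / 2 * x ^ 8 - 72 * x ^ 7 * y + 81 * x ^ 7
        + 252 * x ^ 6 * y + 243 / 2 * x ^ 6 - 864 * x ^ 5 * y + 729 * x ^ 5 - 1485 * x ^ 4 *
        y + 729 * x ^ 4 - 810 * x ^ 3 * y + 2673 * x ^ 3 + 891 * x ^ 2 * y + 7290 * x ^ 2 -
        4617 * x * y - 729 / 2 * x + 1377 * y + 729 / 2 := by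
  rw [pow_succ, uE_sq hw h, uE]
  linear_combination (-15 / 2 * w * x ^ 6 + 81 / 4 * w * x ^ 5 - 117 / 2 * w * x ^ 4 - 567 / 2 *
    w * x ^ 3 + 270 * w * x ^ 2 - 567 / 4 * w * x + 729 / 2 * w + 17 * x ^ 9 + 2 * x ^ 8 * y -
    57 / 2 * x ^ 8 + 47 * x ^ 7 * y - 453 / 2 * x ^ 7 - 591 / 2 * x ^ 6 * y - 705 / 2 * x ^ 6 +
    492 * x ^ 5 * y - 819 * x ^ 5 + 963 / 2 * x ^ 4 * y - 7407 / 4 * x ^ 4 + 2133 / 2 * x ^ 3 *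
    y - 4077 / 2 * x ^ 3 + 2673 / 2 * x ^ 2 * y - 16551 / 4 * x ^ 2 + 675 * x * y + 486 * x +
    1053 / 2 * y - 1944) * hw + (10 * w ^ 2 * x ^ 6 - 27 * w ^ 2 * x ^ 5 + 78 * w ^ 2 * x ^ 4 +
    378 * w ^ 2 * x ^ 3 - 360 * w ^ 2 * x ^ 2 + 189 * w ^ 2 * x - 486 * w ^ 2 + 2 * w * x ^ 7 -
    11 * w * x ^ 6 - 18 * w * x ^ 5 - 93 * w * x ^ 4 + 225 * w * x ^ 3 + 1827 * w * x ^ 2 - 1890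
    * w * x + 1053 * w - 2 * x ^ 7 - 11 * x ^ 6 - 63 * x ^ 5 - 120 * x ^ 4 + 45 * x ^ 3 - 36 * x
    ^ 2 + 567 * x - 405) * h

lemma uE_pow_four {w x y : k} (hw : w ^ 2 + w + 1 = 0) (h : y ^ 2 = x ^ 3 + (12 - 3 * w) / 4) :
    uE w x y ^ 4 =
      2 * w * x ^ 13 + 4 * w * x ^ 12 * y - 141 * w * x ^ 12 - 54 * w * x ^ 11 * y - 192 * w
        * x ^ 11 + 216 * w * x ^ 10 * y - 468 * w * x ^ 10 + 72 * w * x ^ 9 * y + 198 * w *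
        x ^ 9 + 4212 * w * x ^ 8 * y - 6075 / 2 * w * x ^ 8 + 12150 * w * x ^ 7 * y - 3240 *
        w * x ^ 7 - 24948 * w * x ^ 6 * y + 24300 * w * x ^ 6 + 29160 * w * x ^ 5 * y -
        35640 * w * x ^ 5 - 12393 * w * x ^ 4 * y + 24543 / 2 * w * x ^ 4 - 9234 * w * x ^ 3
        * y + 25272 * w * x ^ 3 + 74358 * w * x ^ 2 * y - 199017 * w * x ^ 2 + 67068 * w * x
        + 68526 * w * y - 290871 / 2 * w + x ^ 14 + 4 * x ^ 13 - 4 * x ^ 12 * y - 69 * x ^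
        12 - 54 * x ^ 11 * y + 768 * x ^ 11 + 270 * x ^ 10 * y - 1404 * x ^ 10 - 36 * x ^ 9
        * y + 5634 * x ^ 9 + 5265 * x ^ 8 * y + 10125 / 2 * x ^ 8 + 19440 * x ^ 7 * y -
        21060 * x ^ 7 + 4536 * x ^ 6 * y + 3159 * x ^ 6 + 46656 * x ^ 5 * y + 30294 * x ^ 5
        - 26973 * x ^ 4 * y - 220887 * x ^ 4 - 486 * x ^ 3 * y - 121500 * x ^ 3 + 161838 * x
        ^ 2 * y + 81648 * x ^ 2 - 207036 * x + 16767 * y - 15309 / 2 := by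
  rw [show uE w x y ^ 4 = (uE w x y ^ 2) ^ 2 by ring, uE_sq hw h]
  linear_combination (-3 * w * x ^ 10 + 9 * w * x ^ 9 - 171 / 4 * w * x ^ 8 - 216 * w * x ^ 7 +
    189 * w * x ^ 6 - 1701 * w * x ^ 5 - 12717 / 2 * w * x ^ 4 - 6318 * w * x ^ 3 - 11907 * w *
    x ^ 2 - 4374 * w * x - 19683 / 4 * w + 4 * x ^ 13 + 37 * x ^ 12 + 28 * x ^ 11 * y - 699 * x
    ^ 11 - 258 * x ^ 10 * y + 3330 * x ^ 10 + 522 * x ^ 9 * y - 2097 * x ^ 9 - 369 * x ^ 8 * y +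
    15993 / 2 * x ^ 8 - 9306 * x ^ 7 * y + 26649 * x ^ 7 - 2403 * x ^ 6 * y + 17982 * x ^ 6 -
    25488 * x ^ 5 * y + 73953 * x ^ 5 - 36612 * x ^ 4 * y + 331209 / 4 * x ^ 4 - 42444 * x ^ 3 *
    y + 67068 * x ^ 3 - 60993 * x ^ 2 * y + 129276 * x ^ 2 - 23814 * x * y + 24786 * x - 24057 *
    y + 126117 / 2) * hw + (4 * w ^ 2 * x ^ 10 - 12 * w ^ 2 * x ^ 9 + 57 * w ^ 2 * x ^ 8 + 288 *
    w ^ 2 * x ^ 7 - 252 * w ^ 2 * x ^ 6 + 2268 * w ^ 2 * x ^ 5 + 8478 * w ^ 2 * x ^ 4 + 8424 * w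
    ^ 2 * x ^ 3 + 15876 * w ^ 2 * x ^ 2 + 5832 * w ^ 2 * x + 6561 * w ^ 2 - 8 * w * x ^ 10 - 24
    * w * x ^ 9 - 186 * w * x ^ 8 - 468 * w * x ^ 7 - 1710 * w * x ^ 6 - 12636 * w * x ^ 5 -
    6588 * w * x ^ 4 + 27864 * w * x ^ 3 - 14742 * w * x ^ 2 + 28188 * w * x - 21870 * w + 4 * x
    ^ 10 + 36 * x ^ 9 + 273 * x ^ 8 + 1044 * x ^ 7 + 2178 * x ^ 6 + 648 * x ^ 5 - 18009 * x ^ 4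
    - 8100 * x ^ 3 + 66906 * x ^ 2 - 63180 * x + 18225) * h

/-- `g(Q)⁷ = f(πQ)` with `g = uE / psiE`. -/
lemma uE_pow_seven {w x y X Y : k} (hw : w ^ 2 + w + 1 = 0) (h : y ^ 2 = x ^ 3 + bE w)
    (hX : X * psiE w x ^ 2 = x ^ 7 + (44 + 48 * w) * bE w * x ^ 4 + (16 + 48 * w) * bE w ^ 2 * x)
    (hY : Y * psiE w x ^ 3 = y * (x ^ 9 - (96 + 108 * w) * bE w * x ^ 6 + (48 - 432 * w) * bE w ^ 2 * x ^ 3 + 64 * bE w ^ 3)) :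
    uE w x y ^ 7 = fE w X Y * psiE w x ^ 7 := by
  rw [bE] at h
  rw [phiE_eq hw] at hX
  rw [thetaE_eq hw] at hY
  have e : fE w X Y * psiE w x ^ 7 = ((-27 - 36 * w) * psiE w x ^ 7 +
      (-9 + 18 * w) * (X * psiE w x ^ 2) * psiE w x ^ 5 +
      (-3 - 15 * w) * (X * psiE w x ^ 2) ^ 2 * psiE w x ^ 3 +
      (-8 + 2 * w) * (X * psiE w x ^ 2) ^ 3 * psiE w x) / 2 + (Y * psiE w x ^ 3) *
      ((6 + 9 * w) * psiE w x ^ 4 + (4 - w) * (X * psiE w x ^ 2) * psiE w x ^ 2 +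
        (X * psiE w x ^ 2) ^ 2) := by
    rw [fE]; ring
  rw [e, hX, hY, psiE_eq hw, show uE w x y ^ 7 = uE w x y ^ 3 * uE w x y ^ 4 by ring,
    uE_cube hw h, uE_pow_four hw h]
  linear_combination (-18 * w ^ 6 * x ^ 21 - 1512 * w ^ 6 * x ^ 18 - 54432 * w ^ 6 * x ^ 15 -
    1088640 * w ^ 6 * x ^ 12 - 13063680 * w ^ 6 * x ^ 9 - 94058496 * w ^ 6 * x ^ 6 - 376233984 *
    w ^ 6 * x ^ 3 - 644972544 * w ^ 6 + 513 / 2 * w ^ 5 * x ^ 21 + 1323 * w ^ 5 * x ^ 19 + 16632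
    * w ^ 5 * x ^ 18 + 84483 * w ^ 5 * x ^ 16 + 421848 * w ^ 5 * x ^ 15 + 2211300 * w ^ 5 * x ^
    13 + 4898880 * w ^ 5 * x ^ 12 + 30209760 * w ^ 5 * x ^ 10 + 16329600 * w ^ 5 * x ^ 9 +
    225348480 * w ^ 5 * x ^ 7 - 188116992 * w ^ 5 * x ^ 6 + 858283776 * w ^ 5 * x ^ 4 -
    1975228416 * w ^ 5 * x ^ 3 + 1269789696 * w ^ 5 * x - 5482266624 * w ^ 5 + 9 * w ^ 4 * x ^
    22 - 3123 / 2 * w ^ 4 * x ^ 21 - 26325 / 2 * w ^ 4 * x ^ 19 + 2997 * w ^ 4 * x ^ 18 * y -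
    141939 / 2 * w ^ 4 * x ^ 18 - 324135 / 2 * w ^ 4 * x ^ 17 - 1212975 / 2 * w ^ 4 * x ^ 16 +
    198531 * w ^ 4 * x ^ 15 * y - 962766 * w ^ 4 * x ^ 15 - 7084665 * w ^ 4 * x ^ 14 - 9514665 *
    w ^ 4 * x ^ 13 + 5228388 * w ^ 4 * x ^ 12 * y + 1088640 * w ^ 4 * x ^ 12 - 234865575 / 2 * w
    ^ 4 * x ^ 11 - 44789760 * w ^ 4 * x ^ 10 + 68654304 * w ^ 4 * x ^ 9 * y + 119206080 * w ^ 4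
    * x ^ 9 - 906956190 * w ^ 4 * x ^ 8 + 269228448 * w ^ 4 * x ^ 7 + 452656512 * w ^ 4 * x ^ 6
    * y + 629016192 * w ^ 4 * x ^ 6 - 3202030440 * w ^ 4 * x ^ 5 + 3086294400 * w ^ 4 * x ^ 4 +
    1234517760 * w ^ 4 * x ^ 3 * y - 2374977024 * w ^ 4 * x ^ 3 - 4166497440 * w ^ 4 * x ^ 2 +
    6878027520 * w ^ 4 * x + 302330880 * w ^ 4 * y - 19268554752 * w ^ 4 - 207 / 2 * w ^ 3 * x ^
    22 - 9 * w ^ 3 * x ^ 21 * y + 5211 * w ^ 3 * x ^ 21 - 2205 * w ^ 3 * x ^ 20 + 103167 / 2 * w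
    ^ 3 * x ^ 19 - 22086 * w ^ 3 * x ^ 18 * y + 263655 / 2 * w ^ 3 * x ^ 18 + 643734 * w ^ 3 * x
    ^ 17 - 48951 * w ^ 3 * x ^ 16 * y + 1385586 * w ^ 3 * x ^ 16 - 1019223 * w ^ 3 * x ^ 15 * y
    + 5606307 / 2 * w ^ 3 * x ^ 15 + 24713829 / 2 * w ^ 3 * x ^ 14 - 2256660 * w ^ 3 * x ^ 13 *
    y + 5825925 / 2 * w ^ 3 * x ^ 13 - 14644881 * w ^ 3 * x ^ 12 * y + 45515925 * w ^ 3 * x ^ 12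
    - 54993330 * w ^ 3 * x ^ 11 - 36695673 * w ^ 3 * x ^ 10 * y - 161437050 * w ^ 3 * x ^ 10 -
    24786000 * w ^ 3 * x ^ 9 * y + 485290197 * w ^ 3 * x ^ 9 - 4207714371 / 2 * w ^ 3 * x ^ 8 -
    245086884 * w ^ 3 * x ^ 7 * y - 970975512 * w ^ 3 * x ^ 7 + 971307936 * w ^ 3 * x ^ 6 * y +
    3511991763 * w ^ 3 * x ^ 6 - 11358849348 * w ^ 3 * x ^ 5 - 552348720 * w ^ 3 * x ^ 4 * y +
    2091331872 * w ^ 3 * x ^ 4 + 5680461312 * w ^ 3 * x ^ 3 * y + 7096088916 * w ^ 3 * x ^ 3 -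
    17846497368 * w ^ 3 * x ^ 2 - 132269760 * w ^ 3 * x * y + 12592081152 * w ^ 3 * x +
    1153896192 * w ^ 3 * y - 35211469824 * w ^ 3 - 15 / 2 * w ^ 2 * x ^ 23 + 999 / 2 * w ^ 2 * x
    ^ 22 + 75 * w ^ 2 * x ^ 21 * y - 19899 / 2 * w ^ 2 * x ^ 21 + 12204 * w ^ 2 * x ^ 20 - 186 *
    w ^ 2 * x ^ 19 * y - 186597 / 2 * w ^ 2 * x ^ 19 + 52443 * w ^ 2 * x ^ 18 * y + 39879 * w ^
    2 * x ^ 18 - 286011 / 2 * w ^ 2 * x ^ 17 + 320400 * w ^ 2 * x ^ 16 * y - 540837 / 2 * w ^ 2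
    * x ^ 16 + 1271052 * w ^ 2 * x ^ 15 * y - 11558673 / 2 * w ^ 2 * x ^ 15 + 27631692 * w ^ 2 *
    x ^ 14 + 12069027 * w ^ 2 * x ^ 13 * y + 65064465 / 2 * w ^ 2 * x ^ 13 - 6486075 * w ^ 2 * x
    ^ 12 * y - 272740041 / 2 * w ^ 2 * x ^ 12 + 412888833 * w ^ 2 * x ^ 11 + 141160644 * w ^ 2 *
    x ^ 10 * y + 173243205 * w ^ 2 * x ^ 10 - 288594090 * w ^ 2 * x ^ 9 * y - 1404804870 * w ^ 2
    * x ^ 9 - 376034967 * w ^ 2 * x ^ 8 + 591893325 * w ^ 2 * x ^ 7 * y - 1304672346 * w ^ 2 * x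
    ^ 7 - 657622152 * w ^ 2 * x ^ 6 * y - 3746908368 * w ^ 2 * x ^ 6 - 24465634389 / 2 * w ^ 2 *
    x ^ 5 + 970345656 * w ^ 2 * x ^ 4 * y - 2987826912 * w ^ 2 * x ^ 4 + 9004631328 * w ^ 2 * x
    ^ 3 * y + 11458005741 * w ^ 2 * x ^ 3 - 24437664846 * w ^ 2 * x ^ 2 + 354923856 * w ^ 2 * x
    * y + 5991820128 * w ^ 2 * x + 929667456 * w ^ 2 * y - 33699815424 * w ^ 2 + 51 * w * x ^ 23
    + w * x ^ 22 * y - 1296 * w * x ^ 22 - 234 * w * x ^ 21 * y + 19431 / 2 * w * x ^ 21 - 37053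
    / 2 * w * x ^ 20 + 1497 * w * x ^ 19 * y + 44982 * w * x ^ 19 - 16893 * w * x ^ 18 * y -
    1238625 / 2 * w * x ^ 18 - 2054511 * w * x ^ 17 - 371781 * w * x ^ 16 * y - 6724863 / 2 * w
    * x ^ 16 + 866133 * w * x ^ 15 * y - 53025489 / 2 * w * x ^ 15 + 7195797 * w * x ^ 14 * y -
    69541659 / 2 * w * x ^ 14 - 7840854 * w * x ^ 13 * y - 26879445 * w * x ^ 13 + 34487046 * w
    * x ^ 12 * y - 501980409 * w * x ^ 12 + 186785109 * w * x ^ 11 * y + 325596186 * w * x ^ 11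
    + 84903228 * w * x ^ 10 * y + 1123047099 / 4 * w * x ^ 10 + 48897918 * w * x ^ 9 * y -
    9223216875 / 2 * w * x ^ 9 + 1154752767 * w * x ^ 8 * y + 6208989957 / 4 * w * x ^ 8 +
    1565305155 * w * x ^ 7 * y + 681722892 * w * x ^ 7 - 2192279418 * w * x ^ 6 * y -
    78465026349 / 4 * w * x ^ 6 + 2223096435 * w * x ^ 5 * y - 2087972640 * w * x ^ 5 +
    4704348537 * w * x ^ 4 * y - 1734072300 * w * x ^ 4 + 4688543088 * w * x ^ 3 * y -
    6019094205 * w * x ^ 3 + 520812180 * w * x ^ 2 * y - 7245017055 * w * x ^ 2 + 931950684 * w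
    * x * y - 5338797237 * w * x - 1097839008 * w * y - 13674055662 * w + x ^ 24 - 189 / 2 * x ^
    23 + 3 * x ^ 22 * y + 1293 / 2 * x ^ 22 + 51 * x ^ 21 * y + 18279 / 2 * x ^ 21 + 1233 * x ^
    20 * y - 39033 * x ^ 20 + 828 * x ^ 19 * y + 207549 * x ^ 19 - 53883 * x ^ 18 * y - 35937 *
    x ^ 18 + 269775 * x ^ 17 * y - 906849 / 4 * x ^ 17 - 872532 * x ^ 16 * y + 4469823 / 4 * x ^
    16 + 760671 * x ^ 15 * y + 20120049 / 2 * x ^ 15 + 23072445 / 2 * x ^ 14 * y - 111255687 / 4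
    * x ^ 14 - 32046057 / 2 * x ^ 13 * y - 77242167 / 2 * x ^ 13 + 29301345 * x ^ 12 * y -
    225111150 * x ^ 12 + 188197911 * x ^ 11 * y - 118775727 / 2 * x ^ 11 + 1611576 * x ^ 10 * y
    - 358974180 * x ^ 10 + 252247365 * x ^ 9 * y - 2147406552 * x ^ 9 + 942564924 * x ^ 8 * y -
    266384619 / 2 * x ^ 8 + 892289439 * x ^ 7 * y - 824750505 / 2 * x ^ 7 - 985385655 / 2 * x ^
    6 * y - 35821229481 / 4 * x ^ 6 + 3498121809 / 2 * x ^ 5 * y - 719977896 * x ^ 5 +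
    2213941653 * x ^ 4 * y + 462832623 * x ^ 4 + 27464346 * x ^ 3 * y - 9905725629 / 2 * x ^ 3 +
    2091928923 / 2 * x ^ 2 * y + 39444732 * x ^ 2 - 724314717 * x * y - 6386444595 / 4 * x -
    422692425 * y - 8960508603 / 4) * hw + (24 * w ^ 2 * x ^ 20 - 756 * w ^ 2 * x ^ 19 + 6876 *
    w ^ 2 * x ^ 18 - 24678 * w ^ 2 * x ^ 17 + 66852 * w ^ 2 * x ^ 16 - 569754 * w ^ 2 * x ^ 15 -
    2221668 * w ^ 2 * x ^ 14 - 3450600 * w ^ 2 * x ^ 13 - 24298218 * w ^ 2 * x ^ 12 + 11720862 *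
    w ^ 2 * x ^ 11 + 17891847 * w ^ 2 * x ^ 10 - 60434100 * w ^ 2 * x ^ 9 - 42622443 * w ^ 2 * x
    ^ 8 + 26558928 * w ^ 2 * x ^ 7 - 239483061 * w ^ 2 * x ^ 6 - 55427328 * w ^ 2 * x ^ 5 +
    18502020 * w ^ 2 * x ^ 4 - 276979176 * w ^ 2 * x ^ 3 - 48302082 * w ^ 2 * x ^ 2 - 299732724
    * w ^ 2 * x - 111012120 * w ^ 2 + 4 * w * x ^ 21 - 66 * w * x ^ 20 - 126 * w * x ^ 19 +
    13320 * w * x ^ 18 - 48978 * w * x ^ 17 + 210222 * w * x ^ 16 - 1090098 * w * x ^ 15 -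
    3056373 * w * x ^ 14 - 7157565 * w * x ^ 13 - 64207566 * w * x ^ 12 - 31217238 * w * x ^ 11
    - 47497266 * w * x ^ 10 - 93189528 * w * x ^ 9 - 79055676 * w * x ^ 8 - 113544666 * w * x ^
    7 - 790843257 * w * x ^ 6 + 68516523 * w * x ^ 5 + 176871438 * w * x ^ 4 - 1110475494 * w *
    x ^ 3 - 81074277 * w * x ^ 2 - 389723400 * w * x + 67197762 * w - 4 * x ^ 21 - 66 * x ^ 20 +
    396 * x ^ 19 + 3654 * x ^ 18 - 24435 * x ^ 17 + 158463 * x ^ 16 - 475146 * x ^ 15 - 342306 *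
    x ^ 14 - 58563 * x ^ 13 - 26398710 * x ^ 12 - 24545430 * x ^ 11 - 63840717 * x ^ 10 -
    68448726 * x ^ 9 - 34946073 * x ^ 8 - 71068752 * x ^ 7 - 468908109 * x ^ 6 + 42771159 * x ^
    5 + 84400704 * x ^ 4 - 761456538 * x ^ 3 + 237790323 * x ^ 2 - 77413239 * x + 23088159) * h

/-- `g(Q)² g(-ωQ)` is a function of `πQ`. -/
lemma uE_sq_mul {w x y X Y : k} (hw : w ^ 2 + w + 1 = 0) (h : y ^ 2 = x ^ 3 + bE w)
    (hX : X * psiE w x ^ 2 = x ^ 7 + (44 + 48 * w) * bE w * x ^ 4 + (16 + 48 * w) * bE w ^ 2 * x)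
    (hY : Y * psiE w x ^ 3 = y * (x ^ 9 - (96 + 108 * w) * bE w * x ^ 6 + (48 - 432 * w) * bE w ^ 2 * x ^ 3 + 64 * bE w ^ 3)) :
    uE w x y ^ 2 * uE w (w * x) (-y) =
      (1 + w) * (Y - 3 * (1 - w) / 2 - (1 - w) * (X - (1 - w))) * psiE w x ^ 3 := by
  rw [bE] at h
  rw [phiE_eq hw] at hX
  rw [thetaE_eq hw] at hY
  have e : (1 + w) * (Y - 3 * (1 - w) / 2 - (1 - w) * (X - (1 - w))) * psiE w x ^ 3 =
      (1 + w) * (Y * psiE w x ^ 3 - 3 * (1 - w) / 2 * psiE w x ^ 3 -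
        (1 - w) * (X * psiE w x ^ 2 * psiE w x - (1 - w) * psiE w x ^ 3)) := by ring
  rw [e, hX, hY, psiE_eq hw, uE_sq hw h, uE]
  linear_combination (w ^ 4 * x ^ 9 + 36 * w ^ 4 * x ^ 6 + 432 * w ^ 4 * x ^ 3 + 1728 * w ^ 4 +
    1 / 2 * w ^ 3 * x ^ 9 + 2 * w ^ 3 * x ^ 8 * y - 54 * w ^ 3 * x ^ 8 - 3 * w ^ 3 * x ^ 7 * y +
    15 / 2 * w ^ 3 * x ^ 7 + 12 * w ^ 3 * x ^ 6 * y - 189 * w ^ 3 * x ^ 6 + 90 * w ^ 3 * x ^ 5 *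
    y - 351 / 2 * w ^ 3 * x ^ 5 + 36 * w ^ 3 * x ^ 4 * y - 81 * w ^ 3 * x ^ 4 + 81 * w ^ 3 * x ^
    3 * y - 297 / 2 * w ^ 3 * x ^ 3 + 5616 * w ^ 3 + w ^ 2 * x ^ 10 + 3 / 2 * w ^ 2 * x ^ 9 - 6
    * w ^ 2 * x ^ 8 * y + 249 / 2 * w ^ 2 * x ^ 8 + 12 * w ^ 2 * x ^ 7 * y - 603 / 2 * w ^ 2 * x
    ^ 7 - 189 / 2 * w ^ 2 * x ^ 6 * y + 12 * w ^ 2 * x ^ 6 - 135 * w ^ 2 * x ^ 5 * y - 1359 / 4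
    * w ^ 2 * x ^ 5 + 837 * w ^ 2 * x ^ 4 * y + 5697 / 4 * w ^ 2 * x ^ 4 - 27 * w ^ 2 * x ^ 3 *
    y - 2160 * w ^ 2 * x ^ 3 + 1215 / 2 * w ^ 2 * x ^ 2 * y - 918 * w ^ 2 * x ^ 2 + 28431 / 4 *
    w ^ 2 * x + 2268 * w ^ 2 - 3 * w * x ^ 10 - w * x ^ 8 * y - 6 * w * x ^ 8 + 7 * w * x ^ 7 *
    y - 204 * w * x ^ 7 + 348 * w * x ^ 6 * y - 1779 / 2 * w * x ^ 6 - 258 * w * x ^ 5 * y -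
    1647 / 2 * w * x ^ 5 - 612 * w * x ^ 4 * y - 2817 / 2 * w * x ^ 4 + 8127 / 2 * w * x ^ 3 * y
    - 3159 * w * x ^ 3 - 459 * w * x ^ 2 * y - 1161 / 2 * w * x ^ 2 + 1836 * w * x * y + 2106 *
    w * x - 16335 / 2 * w + 2 * x ^ 10 - x ^ 9 * y + 4 * x ^ 9 + 6 * x ^ 8 - 3 * x ^ 7 * y + 669
    / 2 * x ^ 7 + 363 * x ^ 6 * y + 27 * x ^ 6 + 135 * x ^ 5 * y + 639 * x ^ 5 + 423 / 2 * x ^ 4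
    * y - 1980 * x ^ 4 + 2889 * x ^ 3 * y + 7155 / 2 * x ^ 3 + 1053 * x ^ 2 * y + 9639 / 4 * x ^
    2 - 3564 * x * y - 19197 / 2 * x + 729 / 2 * y - 837) * hw + (-2 * w ^ 3 * x ^ 7 - 7 * w ^ 3
    * x ^ 6 + 3 * w ^ 3 * x ^ 5 - 150 * w ^ 3 * x ^ 4 - 486 * w ^ 3 * x ^ 3 - 261 * w ^ 3 * x ^
    2 - 405 * w ^ 3 * x + 2 * w ^ 2 * x ^ 7 + 17 * w ^ 2 * x ^ 6 + 108 * w ^ 2 * x ^ 5 + 255 * w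
    ^ 2 * x ^ 4 - 27 * w ^ 2 * x ^ 3 - 531 * w ^ 2 * x ^ 2 + 810 * w ^ 2 * x + 486 * w ^ 2 + 2 *
    w * x ^ 6 - 9 * w * x ^ 5 + 3 * w * x ^ 4 - 279 * w * x ^ 3 - 774 * w * x ^ 2 + 1431 * w * x
    - 1053 * w + 6 * x ^ 5 + 27 * x ^ 4 + 144 * x ^ 3 + 135 * x ^ 2 - 702 * x + 405) * h

/-- `-psiE² · g · sl` where `sl` is the slope of the line through `πQ` and `-T`. -/
def sE (w x y : k) : k :=
  16 * w * x ^ 6 - 2 * w * x ^ 5 * y - 9 * w * x ^ 5 + 48 * w * x ^ 4 * y + 111 * w * x ^ 4 + 78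
    * w * x ^ 3 * y + 171 * w * x ^ 3 - 144 * w * x ^ 2 * y - 243 * w * x ^ 2 - 36 * w * x * y -
    81 * w * x + 162 * w * y + 297 * w - 2 * x ^ 7 + 2 * x ^ 6 + 2 * x ^ 5 * y + 36 * x ^ 5 + 18
    * x ^ 4 * y + 123 * x ^ 4 + 66 * x ^ 3 * y - 180 * x ^ 3 - 306 * x ^ 2 * y + 405 * x ^ 2 -
    234 * x * y + 135 * x - 270 * y - 54

lemma uE_mul_neg {w x y X : k} (hw : w ^ 2 + w + 1 = 0) (h : y ^ 2 = x ^ 3 + bE w)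
    (hX : X * psiE w x ^ 2 = x ^ 7 + (44 + 48 * w) * bE w * x ^ 4 + (16 + 48 * w) * bE w ^ 2 * x) :
    uE w x y * uE w x (-y) = -(X - (1 - w)) * psiE w x ^ 2 := by
  rw [bE] at h
  rw [phiE_eq hw] at hX
  rw [show -(X - (1 - w)) * psiE w x ^ 2 = -(X * psiE w x ^ 2 - (1 - w) * psiE w x ^ 2) by ring, hX,
    psiE_eq hw, uE, uE]
  linear_combination (w * x ^ 6 + 24 * w * x ^ 3 + 75 / 4 * w * x ^ 2 - 45 * w * x + 171 * w - 5
    * x ^ 6 - 10 * x ^ 5 + 573 / 4 * x ^ 4 + 99 * x ^ 3 + 39 / 2 * x ^ 2 + 117 * x - 279 / 4) *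
    hw + (-25 * w ^ 2 * x ^ 2 + 60 * w ^ 2 * x - 36 * w ^ 2 - 10 * w * x ^ 3 + 2 * w * x ^ 2 -
    18 * w * x + 36 * w - x ^ 4 - 2 * x ^ 3 - 7 * x ^ 2 - 6 * x - 9) * h

lemma sE_mul {w x y Y : k} (hw : w ^ 2 + w + 1 = 0) (h : y ^ 2 = x ^ 3 + bE w)
    (hY : Y * psiE w x ^ 3 = y * (x ^ 9 - (96 + 108 * w) * bE w * x ^ 6 + (48 - 432 * w) * bE w ^ 2 * x ^ 3 + 64 * bE w ^ 3)) :
    sE w x y * uE w x (-y) = (2 * Y + 3 * (1 - w)) * psiE w x ^ 3 := by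
  rw [bE] at h
  rw [thetaE_eq hw] at hY
  rw [show (2 * Y + 3 * (1 - w)) * psiE w x ^ 3 = 2 * (Y * psiE w x ^ 3) +
    3 * (1 - w) * psiE w x ^ 3 by ring, hY, psiE_eq hw, uE, sE]
  linear_combination (-3 * w ^ 2 * x ^ 9 - 108 * w ^ 2 * x ^ 6 - 1296 * w ^ 2 * x ^ 3 - 5184 * w
    ^ 2 + 24 * w * x ^ 9 + 1011 / 2 * w * x ^ 6 + 189 * w * x ^ 5 + 153 / 2 * w * x ^ 4 + 1053 *
    w * x ^ 3 + 513 * w * x ^ 2 + 1539 / 2 * w * x - 9801 * w - 49 * x ^ 9 - 2 * x ^ 8 * y - 141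
    * x ^ 8 - 47 * x ^ 7 * y + 156 * x ^ 7 + 552 * x ^ 6 * y + 2967 / 2 * x ^ 6 + 489 * x ^ 5 *
    y + 1098 * x ^ 5 - 468 * x ^ 4 * y - 1278 * x ^ 4 - 162 * x ^ 3 * y + 8235 / 2 * x ^ 3 + 324
    * x ^ 2 * y - 135 / 2 * x ^ 2 + 378 * x * y + 1215 / 2 * x + 1053 * y + 13284) * hw + (10 *
    w ^ 2 * x ^ 6 - 252 * w ^ 2 * x ^ 5 - 102 * w ^ 2 * x ^ 4 + 1188 * w ^ 2 * x ^ 3 - 684 * w ^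
    2 * x ^ 2 - 1026 * w ^ 2 * x + 972 * w ^ 2 + 2 * w * x ^ 7 - 56 * w * x ^ 6 - 198 * w * x ^
    5 - 300 * w * x ^ 4 + 1872 * w * x ^ 3 - 360 * w * x ^ 2 - 108 * w * x - 2106 * w - 2 * x ^
    7 - 20 * x ^ 6 - 90 * x ^ 5 + 186 * x ^ 4 + 342 * x ^ 3 + 1422 * x ^ 2 + 972 * x + 810) * h

/-- The abscissa of `Q` is recovered from `πQ` and the values of `g` at the six points `ζQ`, `ζ⁶ = 1`. -/
lemma recon {w x y X : k} (hw : w ^ 2 + w + 1 = 0)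
    (hX : X * psiE w x ^ 2 = x ^ 7 + (44 + 48 * w) * bE w * x ^ 4 + (16 + 48 * w) * bE w ^ 2 * x) :
    x * psiE w x ^ 2 = (3 - 5 * w) / 7 * (X * psiE w x ^ 2) + (
      1 * ((1 - 4 * w) / 7 * uE w x y * psiE w x - (3 - 5 * w) / 14 * sE w x y) +
      w ^ 2 * ((1 - 4 * w) / 7 * uE w (w * x) (-y) * psiE w x - (3 - 5 * w) / 14 * sE w (w * x) (-y)) +
      w * ((1 - 4 * w) / 7 * uE w (w ^ 2 * x) y * psiE w x - (3 - 5 * w) / 14 * sE w (w ^ 2 * x) y) +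
      1 * ((1 - 4 * w) / 7 * uE w x (-y) * psiE w x - (3 - 5 * w) / 14 * sE w x (-y)) +
      w ^ 2 * ((1 - 4 * w) / 7 * uE w (w * x) y * psiE w x - (3 - 5 * w) / 14 * sE w (w * x) y) +
      w * ((1 - 4 * w) / 7 * uE w (w ^ 2 * x) (-y) * psiE w x - (3 - 5 * w) / 14 * sE w (w ^ 2 * x) (-y))) := by
  rw [hX, phiE_eq hw, psiE_eq hw]
  simp only [uE, sE]
  linear_combination (10 / 7 * w ^ 14 * x ^ 7 - 16 / 7 * w ^ 13 * x ^ 7 - 80 / 7 * w ^ 13 * x ^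
    6 + 6 / 7 * w ^ 12 * x ^ 7 + 118 / 7 * w ^ 12 * x ^ 6 + 10 / 7 * w ^ 11 * x ^ 7 - 32 / 7 * w
    ^ 11 * x ^ 6 + 45 / 7 * w ^ 11 * x ^ 5 - 16 / 7 * w ^ 10 * x ^ 7 - 86 / 7 * w ^ 10 * x ^ 6 -
    36 * w ^ 10 * x ^ 5 + 6 / 7 * w ^ 9 * x ^ 7 + 118 / 7 * w ^ 9 * x ^ 6 + 45 * w ^ 9 * x ^ 5 -
    555 / 7 * w ^ 9 * x ^ 4 + 20 / 7 * w ^ 8 * x ^ 7 - 120 / 7 * w ^ 8 * x ^ 6 - 9 * w ^ 8 * x ^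
    5 + 39 * w ^ 8 * x ^ 4 - 96 / 7 * w ^ 8 * x ^ 3 - 32 / 7 * w ^ 7 * x ^ 7 + 66 / 7 * w ^ 7 *
    x ^ 6 - 207 / 7 * w ^ 7 * x ^ 5 + 93 * w ^ 7 * x ^ 4 - 759 / 7 * w ^ 7 * x ^ 3 + 12 / 7 * w
    ^ 6 * x ^ 7 + 30 / 7 * w ^ 6 * x ^ 6 + 3 / 7 * w ^ 6 * x ^ 5 - 1479 / 7 * w ^ 6 * x ^ 4 +
    2298 / 7 * w ^ 6 * x ^ 3 - 720 / 7 * w ^ 6 * x ^ 2 + 20 / 7 * w ^ 5 * x ^ 7 - 66 / 7 * w ^ 5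
    * x ^ 6 + 375 / 7 * w ^ 5 * x ^ 5 + 78 * w ^ 5 * x ^ 4 - 2964 / 7 * w ^ 5 * x ^ 3 + 351 / 7
    * w ^ 5 * x ^ 2 - 32 / 7 * w ^ 4 * x ^ 7 + 2 * w ^ 4 * x ^ 6 - 258 / 7 * w ^ 4 * x ^ 5 +
    1086 / 7 * w ^ 4 * x ^ 4 + 315 * w ^ 4 * x ^ 3 - 279 * w ^ 4 * x ^ 2 - 2592 / 7 * w ^ 4 * x
    + 12 / 7 * w ^ 3 * x ^ 7 + 8 * w ^ 3 * x ^ 6 - 18 * w ^ 3 * x ^ 5 - 1290 / 7 * w ^ 3 * x ^ 4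
    + 225 / 7 * w ^ 3 * x ^ 3 + 27 * w ^ 3 * x ^ 2 - 918 / 7 * w ^ 3 * x + 432 / 7 * w ^ 3 + 20
    / 7 * w ^ 2 * x ^ 7 - 10 * w ^ 2 * x ^ 6 + 54 * w ^ 2 * x ^ 5 + 60 * w ^ 2 * x ^ 4 - 2367 /
    7 * w ^ 2 * x ^ 3 + 432 * w ^ 2 * x ^ 2 + 108 * w ^ 2 * x + 243 / 7 * w ^ 2 - 32 / 7 * w * x
    ^ 7 + 6 / 7 * w * x ^ 6 - 312 / 7 * w * x ^ 5 + 690 / 7 * w * x ^ 4 + 1884 / 7 * w * x ^ 3 -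
    3933 / 7 * w * x ^ 2 + 216 / 7 * w * x + 2322 / 7 * w + 19 / 7 * x ^ 7 + 10 / 7 * x ^ 6 +
    102 / 7 * x ^ 5 - 591 / 7 * x ^ 4 - 516 / 7 * x ^ 3 + 180 * x ^ 2 + 1116 / 7 * x - 81) * hw

end Funct

end

section
open WeierstrassCurve Polynomial

section Fibre
variable {k : Type*} [Field k] [CharZero k]

lemma bE_ne_zero {w : k} (hw : w ^ 2 + w + 1 = 0) : bE w ≠ 0 := by
  intro h
  have h4 : w = 4 := by
    have : (3 : k) * w = 3 * 4 := by rw [bE] at h; linear_combination -4 * h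
    exact mul_left_cancel₀ (by norm_num) this
  subst h4
  norm_num at hw

/-- Coordinate form of `π (x, y) = (X, Y)` on `E'`. -/
structure OnFibre (w x y X Y : k) : Prop where
  eq : y ^ 2 = x ^ 3 + bE w
  psi : psiE w x ≠ 0
  hX : X * psiE w x ^ 2 = x ^ 7 + (44 + 48 * w) * bE w * x ^ 4 + (16 + 48 * w) * bE w ^ 2 * x
  hY : Y * psiE w x ^ 3 = y * (x ^ 9 - (96 + 108 * w) * bE w * x ^ 6 +
    (48 - 432 * w) * bE w ^ 2 * x ^ 3 + 64 * bE w ^ 3)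

lemma psiE_rot {w : k} (hw : w ^ 2 + w + 1 = 0) (x : k) : psiE w (w * x) = psiE w x := by
  have h3 := omega_cube hw
  rw [psiE, psiE]; linear_combination ((2 - w) * x ^ 3) * h3

lemma OnFibre.rot {w x y X Y : k} (hw : w ^ 2 + w + 1 = 0) (h : OnFibre w x y X Y) :
    OnFibre w (w * x) (-y) (w * X) (-Y) := by
  have h3 := omega_cube hw
  obtain ⟨h1, h2, hX, hY⟩ := h
  constructor
  · rw [mul_pow, h3, neg_sq, h1, one_mul]
  · rwa [psiE_rot hw]
  · rw [psiE_rot hw]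
    linear_combination w * hX - w * x ^ 4 * ((44 + 48 * w) * bE w + x ^ 3 * (w ^ 3 + 1)) * h3
  · rw [psiE_rot hw]
    linear_combination -hY + y * (-(96 + 108 * w) * bE w * x ^ 6 * (w ^ 3 + 1)
      + (48 - 432 * w) * bE w ^ 2 * x ^ 3 + x ^ 9 * (w ^ 6 + w ^ 3 + 1)) * h3

lemma OnFibre.rot2 {w x y X Y : k} (hw : w ^ 2 + w + 1 = 0) (h : OnFibre w x y X Y) :
    OnFibre w (w ^ 2 * x) y (w ^ 2 * X) Y := by
  have := (h.rot hw).rot hw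
  rwa [neg_neg, neg_neg, ← mul_assoc, ← mul_assoc, ← sq] at this

/-- `g = uE / psiE`, the function with `g⁷ = f ∘ π`. -/
def gE (w x y : k) : k := uE w x y / psiE w x

/-- The function of `πQ` that equals `g(Q)² g(-ωQ)`. -/
def cE (w X Y : k) : k := (1 + w) * (Y - 3 * (1 - w) / 2 - (1 - w) * (X - (1 - w)))

lemma OnFibre.gE_pow {w x y X Y : k} (hw : w ^ 2 + w + 1 = 0) (h : OnFibre w x y X Y) :
    gE w x y ^ 7 = fE w X Y := by
  rw [gE, div_pow, div_eq_iff (pow_ne_zero _ h.psi)]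
  exact uE_pow_seven hw h.eq h.hX h.hY

lemma OnFibre.gE_sq {w x y X Y : k} (hw : w ^ 2 + w + 1 = 0) (h : OnFibre w x y X Y) :
    gE w x y ^ 2 * gE w (w * x) (-y) = cE w X Y := by
  have h0 := h.psi
  rw [gE, gE, psiE_rot hw, div_pow, div_mul_div_comm, div_eq_iff (by positivity), uE_sq_mul hw h.eq h.hX h.hY,
    cE]
  ring

lemma OnFibre.gE_ne {w x y X Y : k} (hw : w ^ 2 + w + 1 = 0) (h : OnFibre w x y X Y)
    (hX : X ≠ 1 - w) : gE w x y ≠ 0 := by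
  have h0 := h.psi
  have := uE_mul_neg hw h.eq h.hX
  intro h1
  rw [gE, div_eq_zero_iff, or_iff_left h0] at h1
  rw [h1, zero_mul] at this
  have h2 : X - (1 - w) ≠ 0 := sub_ne_zero.2 hX
  exact (mul_ne_zero (neg_ne_zero.2 h2) (pow_ne_zero 2 h0)) this.symm

lemma OnFibre.sE_eq {w x y X Y : k} (hw : w ^ 2 + w + 1 = 0) (h : OnFibre w x y X Y)
    (hX : X ≠ 1 - w) :
    sE w x y = -(2 * Y + 3 * (1 - w)) * gE w x y / (X - (1 - w)) * psiE w x ^ 2 := by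
  have h0 := h.psi
  have h2 : X - (1 - w) ≠ 0 := sub_ne_zero.2 hX
  have a := uE_mul_neg hw h.eq h.hX
  have b := sE_mul hw h.eq h.hY
  have h3 : uE w x (-y) ≠ 0 := by
    intro h1
    rw [h1, mul_zero] at a
    exact (mul_ne_zero (neg_ne_zero.2 h2) (pow_ne_zero 2 h0)) a.symm
  refine mul_right_cancel₀ h3 ?_
  rw [b, gE]
  field_simp
  linear_combination (2 * Y + 3 * (1 - w)) * a

/-- One summand in the recovery of the abscissa of `Q` from `X`, `Y` and `g(Q)`. -/
def rE (w X Y g : k) : k :=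
  (1 - 4 * w) / 7 * g + (3 - 5 * w) / 14 * ((2 * Y + 3 * (1 - w)) * g / (X - (1 - w)))

/-- The abscissa of `Q` as a rational function of `πQ = (X, Y)` and `g = g(Q)`. -/
def recX (w X Y g : k) : k :=
  let g₁ := cE w X Y / g ^ 2
  let g₂ := cE w (w * X) (-Y) / g₁ ^ 2
  let g₃ := cE w (w ^ 2 * X) Y / g₂ ^ 2
  let g₄ := cE w X (-Y) / g₃ ^ 2
  let g₅ := cE w (w * X) Y / g₄ ^ 2
  (3 - 5 * w) / 7 * X + (1 * rE w X Y g + w ^ 2 * rE w (w * X) (-Y) g₁ +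
    w * rE w (w ^ 2 * X) Y g₂ + 1 * rE w X (-Y) g₃ + w ^ 2 * rE w (w * X) Y g₄ +
    w * rE w (w ^ 2 * X) (-Y) g₅)

/-- The ordinate of `Q`, see `recX`. -/
def recY (w X Y g : k) : k :=
  Y * psiE w (recX w X Y g) ^ 3 / ((recX w X Y g) ^ 9 - (96 + 108 * w) * bE w * (recX w X Y g) ^ 6 +
    (48 - 432 * w) * bE w ^ 2 * (recX w X Y g) ^ 3 + 64 * bE w ^ 3)

lemma OnFibre.x_eq {w x y X Y : k} (hw : w ^ 2 + w + 1 = 0) (h : OnFibre w x y X Y)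
    (hX : X ^ 3 ≠ (1 - w) ^ 3) : x = recX w X Y (gE w x y) := by
  have h3 := omega_cube hw
  have hX0 : X ≠ 1 - w := fun e => hX (by rw [e])
  have hX1 : w * X ≠ 1 - w := fun e => hX (by rw [← e, mul_pow, h3, one_mul])
  have hX2 : w ^ 2 * X ≠ 1 - w := fun e => hX (by
    rw [← e, mul_pow, ← pow_mul, mul_comm 2 3, pow_mul, h3, one_pow, one_mul])
  have f1 := h.rot hw
  have f2 := h.rot2 hw
  have f3 : OnFibre w x (-y) X (-Y) := by
    have := f2.rot hw
    rwa [← mul_assoc, ← mul_assoc, show w * w ^ 2 = 1 by rw [← h3]; ring, one_mul, one_mul] at this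
  have f4 : OnFibre w (w * x) y (w * X) Y := by simpa using f3.rot hw
  have f5 := f3.rot2 hw
  have g1 : cE w X Y / gE w x y ^ 2 = gE w (w * x) (-y) := by
    rw [← h.gE_sq hw]; exact mul_div_cancel_left₀ _ (pow_ne_zero 2 (h.gE_ne hw hX0))
  have g2 : cE w (w * X) (-Y) / gE w (w * x) (-y) ^ 2 = gE w (w ^ 2 * x) y := by
    rw [← f1.gE_sq hw, neg_neg, ← mul_assoc, ← sq]
    exact mul_div_cancel_left₀ _ (pow_ne_zero 2 (f1.gE_ne hw hX1))
  have g3 : cE w (w ^ 2 * X) Y / gE w (w ^ 2 * x) y ^ 2 = gE w x (-y) := by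
    rw [← f2.gE_sq hw, ← mul_assoc, show w * w ^ 2 = 1 by rw [← h3]; ring, one_mul]
    exact mul_div_cancel_left₀ _ (pow_ne_zero 2 (f2.gE_ne hw hX2))
  have g4 : cE w X (-Y) / gE w x (-y) ^ 2 = gE w (w * x) y := by
    rw [← f3.gE_sq hw, neg_neg]
    exact mul_div_cancel_left₀ _ (pow_ne_zero 2 (f3.gE_ne hw hX0))
  have g5 : cE w (w * X) Y / gE w (w * x) y ^ 2 = gE w (w ^ 2 * x) (-y) := by
    rw [← f4.gE_sq hw, ← mul_assoc, ← sq]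
    exact mul_div_cancel_left₀ _ (pow_ne_zero 2 (f4.gE_ne hw hX1))
  have key : ∀ {x' y' X' Y' : k}, OnFibre w x' y' X' Y' → X' ≠ 1 - w → psiE w x' = psiE w x →
      (1 - 4 * w) / 7 * uE w x' y' * psiE w x - (3 - 5 * w) / 14 * sE w x' y' =
      rE w X' Y' (gE w x' y') * psiE w x ^ 2 := by
    intro x' y' X' Y' hf hn hp
    have hu : uE w x' y' = gE w x' y' * psiE w x := by
      rw [gE, hp, div_mul_cancel₀ _ h.psi]
    rw [hf.sE_eq hw hn, hp, hu, rE]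
    ring
  have hp1 := psiE_rot hw x
  have hp2 : psiE w (w ^ 2 * x) = psiE w x := by
    rw [sq, mul_assoc, psiE_rot hw, psiE_rot hw]
  have := recon (y := y) hw h.hX
  rw [key h hX0 rfl, key f1 hX1 hp1, key f2 hX2 hp2, key f3 hX0 rfl, key f4 hX1 hp1,
    key f5 hX2 hp2] at this
  simp only [recX]
  rw [g1, g2, g3, g4, g5]
  refine mul_right_cancel₀ (pow_ne_zero 2 h.psi) ?_
  rw [this]; ring

lemma OnFibre.y_eq {w x y X Y : k} (hw : w ^ 2 + w + 1 = 0) (h : OnFibre w x y X Y)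
    (hX : X ^ 3 ≠ (1 - w) ^ 3) (hY : Y ≠ 0) : y = recY w X Y (gE w x y) := by
  rw [recY, ← h.x_eq hw hX, h.hY]
  refine (mul_div_cancel_right₀ _ fun h0 => ?_).symm
  have := h.hY
  rw [h0, mul_zero] at this
  exact (mul_ne_zero hY (pow_ne_zero 3 h.psi)) this

lemma map_recX {k' : Type*} [Field k'] (φ : k →+* k') (w X Y g : k) :
    φ (recX w X Y g) = recX (φ w) (φ X) (φ Y) (φ g) := by
  simp only [recX, rE, cE, map_add, map_sub, map_mul, map_div₀, map_pow, map_neg, map_one, map_ofNat]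

lemma map_bE {k' : Type*} [Field k'] (φ : k →+* k') (w : k) :
    φ (bE w) = bE (φ w) := by
  simp [bE, map_ofNat]

lemma map_psiE {k' : Type*} [Field k'] (φ : k →+* k') (w x : k) :
    φ (psiE w x) = psiE (φ w) (φ x) := by
  simp [psiE, map_bE, map_ofNat]

lemma map_fE {k' : Type*} [Field k'] (φ : k →+* k') (w x y : k) :
    φ (fE w x y) = fE (φ w) (φ x) (φ y) := by
  simp [fE, map_ofNat]

lemma map_recY {k' : Type*} [Field k'] (φ : k →+* k') (w X Y g : k) :
    φ (recY w X Y g) = recY (φ w) (φ X) (φ Y) (φ g) := by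
  simp [recY, map_recX, map_psiE, map_bE, map_ofNat]

variable [DecidableEq k]

lemma onFibre_of_pimul {w x y X Y : k} (hw : w ^ 2 + w + 1 = 0) (hb : bE w ≠ 0)
    (h : y ^ 2 = x ^ 3 + bE w)
    (H : Y ^ 2 = X ^ 3 + bE w) (hp : pimul hb hw (mpt hb x y h) = mpt hb X Y H) :
    OnFibre w x y X Y := by
  rcases pimul_mpt hb hw h with ⟨-, h0⟩ | ⟨h0, X', Y', H', e, eX, eY⟩
  · rw [h0] at hp; exact absurd hp.symm (mpt_ne_zero hb H)
  · rw [e, mpt_inj] at hp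
    obtain ⟨rfl, rfl⟩ := hp
    exact ⟨h, h0, eX, eY⟩

lemma pimul_of_onFibre {w x y X Y : k} (hw : w ^ 2 + w + 1 = 0) (hb : bE w ≠ 0)
    (h : OnFibre w x y X Y) (H : Y ^ 2 = X ^ 3 + bE w) :
    pimul hb hw (mpt hb x y h.eq) = mpt hb X Y H := by
  rcases pimul_mpt hb hw h.eq with ⟨h0, -⟩ | ⟨h0, X', Y', H', e, eX, eY⟩
  · exact absurd h0 h.psi
  · rw [e, mpt_inj]
    exact ⟨mul_right_cancel₀ (pow_ne_zero 2 h.psi) (eX.trans h.hX.symm),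
      mul_right_cancel₀ (pow_ne_zero 3 h.psi) (eY.trans h.hY.symm)⟩

end Fibre

end

section
open WeierstrassCurve Polynomial

section Seven
variable {k : Type*} [Field k] [CharZero k] [DecidableEq k] {b : k}

lemma omega_sq {w : k} (hw : w ^ 2 + w + 1 = 0) : (w ^ 2) ^ 2 + w ^ 2 + 1 = 0 := by
  linear_combination (w ^ 2 - w + 1) * hw

lemma omul_sq (hb : b ≠ 0) {w : k} (hw : w ^ 2 + w + 1 = 0) (P : (mordell b).Point) :
    omul hb (omega_sq hw) P = omul hb hw (omul hb hw P) := by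
  have h3 := omega_cube hw
  rcases mpt_cases hb P with rfl | ⟨x, y, h, rfl⟩
  · simp
  have h' : y ^ 2 = (w * x) ^ 3 + b := by rw [mul_pow, h3, one_mul, h]
  have h'' : y ^ 2 = (w * (w * x)) ^ 3 + b := by rw [mul_pow, h3, one_mul, h']
  have h3w : y ^ 2 = (w ^ 2 * x) ^ 3 + b := by rw [h'']; ring
  rw [omul_mpt hb hw h h', omul_mpt hb hw h' h'', omul_mpt hb _ h h3w, mpt_inj]
  exact ⟨by ring, rfl⟩

/-- `(2 - ω²) (2 - ω) = 7`. -/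
lemma pimul_pimul (hb : b ≠ 0) {w : k} (hw : w ^ 2 + w + 1 = 0) (P : (mordell b).Point) :
    pimul hb (omega_sq hw) (pimul hb hw P) = 7 • P := by
  have h := omul_cube hb hw P
  have h' := omul_cube hb hw (omul hb hw P)
  simp only [pimul_apply, mumul_apply, omul_sq hb hw, map_add, map_sub]
  have e : omul hb hw (omul hb hw P) = -P - omul hb hw P := by
    rw [eq_sub_iff_add_eq, eq_neg_iff_add_eq_zero, ← h]; abel
  have e' : omul hb hw (omul hb hw (omul hb hw P)) = P := by
    rw [e, map_sub, map_neg, e]; abel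
  rw [e', e]
  abel

/-- `(2 - ω²) + (2 - ω) = 5`. -/
lemma pimul_add_pimul (hb : b ≠ 0) {w : k} (hw : w ^ 2 + w + 1 = 0) (P : (mordell b).Point) :
    pimul hb (omega_sq hw) P + pimul hb hw P = 5 • P := by
  have h := omul_cube hb hw P
  simp only [pimul_apply, mumul_apply, omul_sq hb hw]
  have e : omul hb hw (omul hb hw P) = -P - omul hb hw P := by
    rw [eq_sub_iff_add_eq, eq_neg_iff_add_eq_zero, ← h]; abel
  rw [e]
  abel

end Seven

section Lift

/-- Over an algebraically closed field `π` is surjective on `E'` (away from `O`). -/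
lemma exists_onFibre {k : Type*} [Field k] [CharZero k] [IsAlgClosed k] {w X Y : k}
    (hw : w ^ 2 + w + 1 = 0) (H : Y ^ 2 = X ^ 3 + bE w) : ∃ x y, OnFibre w x y X Y := by
  classical
  have hb := bE_ne_zero hw
  have h3 := omega_cube hw
  have hw0 := omega_ne_zero hw
  obtain ⟨x, hx⟩ : ∃ x : k, x ^ 7 + (44 + 48 * w) * bE w * x ^ 4 + (16 + 48 * w) * bE w ^ 2 * x
      - X * ((2 - w) * x ^ 3 + 4 * w ^ 2 * bE w) ^ 2 = 0 := by
    set p : k[X] := Polynomial.X ^ 7 + (C ((44 + 48 * w) * bE w) * Polynomial.X ^ 4 +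
      C ((16 + 48 * w) * bE w ^ 2) * Polynomial.X
      - C X * (C (2 - w) * Polynomial.X ^ 3 + C (4 * w ^ 2 * bE w)) ^ 2) with hp
    have hd : p.natDegree = 7 := by
      rw [hp, natDegree_add_eq_left_of_natDegree_lt]
      · exact natDegree_X_pow 7
      · rw [natDegree_X_pow]
        refine lt_of_le_of_lt (b := 6) ?_ (by norm_num)
        compute_degree
    obtain ⟨x, hx⟩ := IsAlgClosed.exists_root p (by
      rw [degree_eq_natDegree (by intro h0; rw [h0] at hd; simp at hd), hd]; norm_num)
    refine ⟨x, ?_⟩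
    simp only [hp, IsRoot.def, eval_add, eval_sub, eval_mul, eval_pow, eval_X, eval_C] at hx
    rw [← hx]; ring
  have hpsi : psiE w x ≠ 0 := by
    intro h0
    have h1 : (2 - w) * x ^ 3 + 4 * w ^ 2 * bE w = 0 := h0
    rw [h1] at hx
    have hx0 : x ≠ 0 := by
      rintro rfl
      have : 4 * w ^ 2 * bE w = 0 := by simpa using h1
      simp [hw0, hb] at this
    have : x * bE w ^ 2 * (432 * (1 + 2 * w)) = 0 := by
      grind
    have h12 : 1 + 2 * w ≠ 0 := by
      intro h
      have : (3 : k) = 0 := by linear_combination 4 * hw - (2 * w + 1) * h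
      norm_num at this
    simp [hx0, hb, h12] at this
  obtain ⟨y, hy⟩ := IsAlgClosed.exists_pow_nat_eq (x ^ 3 + bE w) (n := 2) (by norm_num)
  rcases pimul_mpt hb hw hy with ⟨h0, -⟩ | ⟨-, X', Y', H', -, eX, eY⟩
  · exact absurd h0 hpsi
  have hXX : X' = X := by
    refine mul_right_cancel₀ (pow_ne_zero 2 hpsi) ?_
    rw [psiE, eX]; linear_combination hx
  subst hXX
  have : (Y - Y') * (Y + Y') = 0 := by linear_combination H - H'
  rcases mul_eq_zero.1 this with h | h
  · rw [sub_eq_zero.1 h]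
    exact ⟨x, y, hy, hpsi, eX, eY⟩
  · refine ⟨x, -y, by rw [neg_sq, hy], hpsi, eX, ?_⟩
    rw [psiE, eq_neg_of_add_eq_zero_left h]
    linear_combination -eY

/-- `P = (X, Y)` is divisible by `π` as soon as `f(P)` is a seventh power. -/
theorem exists_pimul_eq {k : Type*} [Field k] [CharZero k] [DecidableEq k] {w X Y g : k}
    (hw : w ^ 2 + w + 1 = 0) (hb : bE w ≠ 0) (H : Y ^ 2 = X ^ 3 + bE w)
    (hX : X ^ 3 ≠ (1 - w) ^ 3) (hY : Y ≠ 0) (hg : g ^ 7 = fE w X Y) :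
    ∃ Q, pimul hb hw Q = mpt hb X Y H := by
  classical
  let Ω := AlgebraicClosure k
  let φ : k →+* Ω := algebraMap k Ω
  have hφ : Function.Injective φ := φ.injective
  have hw' : φ w ^ 2 + φ w + 1 = 0 := by simpa using congrArg φ hw
  have hb' := bE_ne_zero hw'
  have Hφ : φ Y ^ 2 = φ X ^ 3 + bE (φ w) := by simpa [map_bE] using congrArg φ H
  have hX' : φ X ^ 3 ≠ (1 - φ w) ^ 3 := fun e => hX (hφ (by simpa using e))
  have hY' : φ Y ≠ 0 := by simpa using hY
  obtain ⟨x₀, y₀, h₀⟩ := exists_onFibre hw' Hφ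
  have hQ₀ := pimul_of_onFibre hw' hb' h₀ Hφ
  -- a point `T₀` of order seven in the kernel of `π`
  obtain ⟨T₀, hT₀, hT₀'⟩ : ∃ T : (mordell (bE (φ w))).Point, T ≠ 0 ∧ pimul hb' hw' T = 0 := by
    have h2 : (2 - φ w) ≠ 0 := by
      intro h
      have : φ w = 2 := by linear_combination -h
      rw [this] at hw'; norm_num at hw'
    obtain ⟨x, hx⟩ := IsAlgClosed.exists_pow_nat_eq (-(4 * φ w ^ 2 * bE (φ w)) / (2 - φ w)) (n := 3)
      (by norm_num)
    obtain ⟨y, hy⟩ := IsAlgClosed.exists_pow_nat_eq (x ^ 3 + bE (φ w)) (n := 2) (by norm_num)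
    refine ⟨mpt hb' x y hy, mpt_ne_zero hb' hy, ?_⟩
    rcases pimul_mpt hb' hw' hy with ⟨-, h⟩ | ⟨h, -⟩
    · exact h
    · exact absurd (by rw [hx, mul_div_cancel₀ _ h2]; ring) h
  have hord : addOrderOf T₀ = 7 := by
    haveI : Fact (Nat.Prime 7) := ⟨by norm_num⟩
    refine addOrderOf_eq_prime (by rw [← pimul_pimul hb' hw', hT₀', map_zero]) hT₀
  have hpt : ∀ j : Fin 7, ∃ x y, ∃ h : y ^ 2 = x ^ 3 + bE (φ w),
      mpt hb' x₀ y₀ h₀.eq + (j : ℕ) • T₀ = mpt hb' x y h ∧ OnFibre (φ w) x y (φ X) (φ Y) := by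
    intro j
    have hp : pimul hb' hw' (mpt hb' x₀ y₀ h₀.eq + (j : ℕ) • T₀) = mpt hb' (φ X) (φ Y) Hφ := by
      rw [map_add, map_nsmul, hT₀', smul_zero, add_zero, hQ₀]
    rcases mpt_cases hb' (mpt hb' x₀ y₀ h₀.eq + (j : ℕ) • T₀) with h | ⟨x, y, h, e⟩
    · rw [h, map_zero] at hp
      exact absurd hp.symm (mpt_ne_zero hb' Hφ)
    · rw [e] at hp
      exact ⟨x, y, h, e, onFibre_of_pimul hw' hb' h Hφ hp⟩
  choose x y hxy e hf using hpt
  have hinj : Function.Injective fun j => gE (φ w) (x j) (y j) := by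
    intro i j hij
    simp only at hij
    have ex : x i = x j := by rw [(hf i).x_eq hw' hX', (hf j).x_eq hw' hX', hij]
    have ey : y i = y j := by rw [(hf i).y_eq hw' hX' hY', (hf j).y_eq hw' hX' hY', hij]
    have : (i : ℕ) • T₀ = (j : ℕ) • T₀ := by
      refine add_left_cancel (a := mpt hb' x₀ y₀ h₀.eq) ?_
      rw [e i, e j, mpt_inj]; exact ⟨ex, ey⟩
    have := nsmul_injOn_Iio_addOrderOf (x := T₀) (by simp [hord]) (by simp [hord]) this
    exact Fin.ext this
  have himg : Finset.univ.image (fun j => gE (φ w) (x j) (y j)) =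
      (nthRoots 7 (φ (fE w X Y))).toFinset := by
    refine Finset.eq_of_subset_of_card_le ?_ ?_
    · intro z hz
      obtain ⟨j, -, rfl⟩ := Finset.mem_image.1 hz
      rw [Multiset.mem_toFinset, mem_nthRoots (by norm_num), (hf j).gE_pow hw', map_fE]
    · rw [Finset.card_image_of_injective _ hinj]
      exact (Multiset.toFinset_card_le _).trans ((card_nthRoots 7 _).trans (by simp))
  have hmem : φ g ∈ Finset.univ.image (fun j => gE (φ w) (x j) (y j)) := by
    rw [himg, Multiset.mem_toFinset, mem_nthRoots (by norm_num), ← map_pow, hg]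
  obtain ⟨j, -, hj⟩ := Finset.mem_image.1 hmem
  have ex : x j = φ (recX w X Y g) := by rw [map_recX, ← hj]; exact (hf j).x_eq hw' hX'
  have ey : y j = φ (recY w X Y g) := by rw [map_recY, ← hj]; exact (hf j).y_eq hw' hX' hY'
  have hfj := hf j
  rw [ex, ey] at hfj
  have hfk : OnFibre w (recX w X Y g) (recY w X Y g) X Y := by
    obtain ⟨h1, h2, h3, h4⟩ := hfj
    refine ⟨hφ ?_, fun h0 => h2 ?_, hφ ?_, hφ ?_⟩
    · simpa [map_bE] using h1
    · rw [← map_psiE, h0, map_zero]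
    · simpa only [map_bE, map_psiE, map_mul, map_add, map_sub, map_pow, map_ofNat] using h3
    · simpa only [map_bE, map_psiE, map_mul, map_add, map_sub, map_pow, map_ofNat] using h4
  exact ⟨_, pimul_of_onFibre hw hb hfk H⟩

end Lift

end

/-! ### Local behaviour of points on the twist -/

section
open WeierstrassCurve Polynomial WithZero

section Local
variable {k : Type*} [Field k] [CharZero k] (v : Valuation k ℤᵐ⁰)

lemma exists_exp {a : ℤᵐ⁰} (h : a ≠ 0) : ∃ n : ℤ, a = exp n := ⟨log a, (exp_log h).symm⟩

lemma val_exp {x : k} (hx : x ≠ 0) : ∃ n : ℤ, v x = exp n :=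
  exists_exp ((Valuation.ne_zero_iff v).2 hx)

lemma le_exp_neg_one {a : ℤᵐ⁰} (h : a < 1) : a ≤ exp (-1) := by
  rcases eq_or_ne a 0 with rfl | h0
  · simp
  obtain ⟨n, rfl⟩ := exists_exp h0
  rw [← exp_zero, exp_lt_exp] at h
  rw [exp_le_exp]; omega

lemma val_int (n : ℤ) : v (n : k) ≤ 1 := by
  have : (n : k) ∈ v.integer := intCast_mem _ n
  exact this

lemma val_ofNat (n : ℕ) [n.AtLeastTwo] : v (OfNat.ofNat n : k) ≤ 1 := by
  have : (OfNat.ofNat n : k) ∈ v.integer := ofNat_mem _ n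
  exact this

lemma val_omega {w : k} (hw : w ^ 2 + w + 1 = 0) : v w = 1 := by
  have h := congrArg v (omega_cube hw)
  rw [map_pow, map_one] at h
  exact (pow_eq_one_iff.1 h).resolve_right (by norm_num)

lemma val_unit_of_coprime {p : ℤ} (hp : v (p : k) < 1) {n : ℤ} (hn : IsCoprime n p) :
    v (n : k) = 1 := by
  refine le_antisymm (val_int v n) ?_
  by_contra! h
  obtain ⟨a, b, e⟩ := hn
  have : v ((a * n + b * p : ℤ) : k) < 1 := by
    push_cast
    refine Valuation.map_add_lt v ?_ ?_
    · rw [map_mul]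
      exact lt_of_le_of_lt (mul_le_of_le_one_left' (val_int v a)) h
    · rw [map_mul]
      exact lt_of_le_of_lt (mul_le_of_le_one_left' (val_int v b)) hp
  rw [e] at this
  simp at this

lemma dvd_of_val_lt {n : ℤ} (h7 : v (7 : k) < 1) (hn : v (n : k) < 1) : (7 : ℤ) ∣ n := by
  by_contra h
  have hc : IsCoprime n 7 := by
    have : Prime (7 : ℤ) := by norm_num
    exact ((Prime.coprime_iff_not_dvd this).2 h).symm
  exact hn.ne (val_unit_of_coprime v (by exact_mod_cast h7) hc)

lemma val_lt_of_dvd {n : ℤ} (h7 : v (7 : k) < 1) (hn : (7 : ℤ) ∣ n) : v (n : k) < 1 := by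
  obtain ⟨c, rfl⟩ := hn
  push_cast
  rw [map_mul]
  exact lt_of_le_of_lt (mul_le_of_le_one_right' (val_int v c)) h7

lemma val_small {n : ℤ} (h7 : v (7 : k) < 1) (hn : ¬ (7 : ℤ) ∣ n) : v (n : k) = 1 :=
  le_antisymm (val_int v n) (not_lt.1 fun h => hn (dvd_of_val_lt v h7 h))

/-- At a place with residue field `𝔽₇`, the reduction of `y² = x³ + 9/4` only has the points
`(0, ±2)` and `O`. -/
lemma red_seven (h7 : v (7 : k) < 1) {x y : k} (h : y ^ 2 = x ^ 3 + 9 / 4)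
    (hx : v x ≤ 1 → ∃ n : ℤ, v (x - n) < 1) (hy : v y ≤ 1 → ∃ n : ℤ, v (y - n) < 1) :
    v x ≠ 1 := by
  intro hx1
  have h4 : v (4 : k) = 1 := by exact_mod_cast val_small v h7 (n := 4) (by norm_num)
  have h9 : v (9 : k) = 1 := by exact_mod_cast val_small v h7 (n := 9) (by norm_num)
  have hy1 : v y ≤ 1 := by
    have : v y ^ 2 ≤ 1 := by
      rw [← map_pow, h]
      refine (v.map_add _ _).trans ?_
      rw [map_pow, map_div₀, hx1, h4, h9]; simp
    exact (pow_le_one_iff (by norm_num)).1 this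
  obtain ⟨n, hn⟩ := hx hx1.le
  obtain ⟨l, hl⟩ := hy hy1
  have hd : v ((4 * l ^ 2 - 4 * n ^ 3 - 9 : ℤ) : k) < 1 := by
    have e : ((4 * l ^ 2 - 4 * n ^ 3 - 9 : ℤ) : k) =
        4 * (x ^ 2 + x * n + n ^ 2) * (x - n) - 4 * (y + l) * (y - l) := by
      push_cast; linear_combination 4 * h
    rw [e]
    refine Valuation.map_sub_lt v ?_ ?_
    · rw [map_mul]
      refine lt_of_le_of_lt (mul_le_of_le_one_left' ?_) hn
      have : 4 * (x ^ 2 + x * n + n ^ 2) ∈ v.integer := by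
        have hx' : x ∈ v.integer := hx1.le
        have hn' : (n : k) ∈ v.integer := intCast_mem _ n
        exact mul_mem (ofNat_mem _ 4) (add_mem (add_mem (pow_mem hx' 2) (mul_mem hx' hn'))
          (pow_mem hn' 2))
      exact this
    · rw [map_mul]
      refine lt_of_le_of_lt (mul_le_of_le_one_left' ?_) hl
      have : 4 * (y + l) ∈ v.integer := by
        have hy' : y ∈ v.integer := hy1
        exact mul_mem (ofNat_mem _ 4) (add_mem hy' (intCast_mem _ l))
      exact this
  have hd' := dvd_of_val_lt v h7 hd
  have hn7 : (7 : ℤ) ∣ n := by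
    have e : ((4 * l ^ 2 - 4 * n ^ 3 - 9 : ℤ) : ZMod 7) = 0 := (ZMod.intCast_zmod_eq_zero_iff_dvd _ 7).2 hd'
    have : ∀ a b : ZMod 7, 4 * a ^ 2 - 4 * b ^ 3 - 9 = 0 → b = 0 := by decide
    push_cast at e
    exact (ZMod.intCast_zmod_eq_zero_iff_dvd _ 7).1 (this _ _ e)
  have := v.map_add (x - n) n
  rw [sub_add_cancel, hx1] at this
  exact absurd (lt_of_le_of_lt this (max_lt hn (val_lt_of_dvd v h7 hn7))) (lt_irrefl _)

/-- `x([μ]P)` is not integral if `x(P)` is not a unit (places above `7`). -/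
lemma mu_seven (h7 : v (7 : k) < 1) {w x x' : k} (hw : w ^ 2 + w + 1 = 0) (hx0 : x ≠ 0)
    (hx : v x ≠ 1) (h : 3 * x ^ 2 * x' = -w ^ 2 * (x ^ 3 + 9)) : 1 < v x' := by
  have h3 : v (3 : k) = 1 := by exact_mod_cast val_small v h7 (n := 3) (by norm_num)
  have h9 : v (9 : k) = 1 := by exact_mod_cast val_small v h7 (n := 9) (by norm_num)
  have e := congrArg v h
  rw [map_mul, map_mul, map_mul, h3, one_mul, map_pow, Valuation.map_neg, map_pow, val_omega v hw, one_pow,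
    one_mul] at e
  obtain ⟨n, hn⟩ := val_exp v hx0
  rcases lt_or_gt_of_ne hx with hlt | hgt
  · have : v (x ^ 3 + 9) = 1 := by
      rw [Valuation.map_add_eq_of_lt_right, h9]
      rw [h9, map_pow]; exact pow_lt_one₀ zero_le hlt (by norm_num)
    rw [this] at e
    by_contra! hc
    have : v x ^ 2 * v x' < 1 :=
      lt_of_le_of_lt (mul_le_of_le_one_right' hc) (pow_lt_one₀ zero_le hlt (by norm_num))
    exact this.ne e
  · have : v (x ^ 3 + 9) = v x ^ 3 := by
      rw [Valuation.map_add_eq_of_lt_left, map_pow]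
      rw [h9, map_pow]; exact one_lt_pow₀ hgt (by norm_num)
    rw [this, pow_succ (v x) 2] at e
    have h0 : v x ^ 2 ≠ 0 := pow_ne_zero 2 ((Valuation.ne_zero_iff v).2 hx0)
    rwa [mul_left_cancel₀ h0 e]

/-- Multiplication by `π` moves points of the formal group strictly towards the origin at the
places above `π`. -/
lemma pi_growth (h7 : v (7 : k) < 1) {w x X : k} (hpi : v (2 - w) < 1)
    (hw : w ^ 2 + w + 1 = 0)
    (hx : 1 < v x) (h0 : (2 - w) * x ^ 3 + 9 * w ^ 2 ≠ 0)
    (h : X * ((2 - w) * x ^ 3 + 9 * w ^ 2) ^ 2 = x ^ 7 + (99 + 108 * w) * x ^ 4 + (81 + 243 * w) * x) :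
    v x * exp 1 ≤ v X := by
  have hx0 : x ≠ 0 := by rintro rfl; simp at hx
  have hw' : w ∈ v.integer := (val_omega v hw).le
  obtain ⟨n, hn⟩ := val_exp v hx0
  obtain ⟨l, hl⟩ := val_exp v h0
  have hn1 : 1 ≤ n := by rw [hn, ← exp_zero, exp_lt_exp] at hx; omega
  have h1 : v ((2 - w) * x ^ 3 + 9 * w ^ 2) ≤ exp (3 * n - 1) := by
    refine (v.map_add _ _).trans (max_le ?_ ?_)
    · rw [map_mul, map_pow, hn, show 3 * n - 1 = -1 + (n + n + n) by ring, exp_add, exp_add, exp_add]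
      refine mul_le_mul' (le_exp_neg_one hpi) (le_of_eq (by rw [pow_succ, pow_two]))
    · have : 9 * w ^ 2 ∈ v.integer := mul_mem (ofNat_mem _ 9) (pow_mem hw' 2)
      refine le_trans this ?_
      rw [← exp_zero, exp_le_exp]; omega
  rw [hl, exp_le_exp] at h1
  have h2 : v (x ^ 7 + (99 + 108 * w) * x ^ 4 + (81 + 243 * w) * x) = exp (7 * n) := by
    have e7 : v (x ^ 7) = exp (7 * n) := by
      rw [map_pow, hn, ← exp_nsmul]; simp
    rw [add_assoc, Valuation.map_add_eq_of_lt_left, e7]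
    rw [e7]
    refine lt_of_le_of_lt (v.map_add _ _) (max_lt ?_ ?_)
    · have : (99 + 108 * w) ∈ v.integer := add_mem (ofNat_mem _ 99) (mul_mem (ofNat_mem _ 108) hw')
      rw [map_mul, map_pow, hn, ← exp_nsmul]
      refine lt_of_le_of_lt (mul_le_of_le_one_left' this) ?_
      rw [exp_lt_exp]; simp; omega
    · have : (81 + 243 * w) ∈ v.integer := add_mem (ofNat_mem _ 81) (mul_mem (ofNat_mem _ 243) hw')
      rw [map_mul, hn]
      refine lt_of_le_of_lt (mul_le_of_le_one_left' this) ?_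
      rw [exp_lt_exp]; omega
  have e := congrArg v h
  rw [h2, map_mul, map_pow, hl] at e
  have hX0 : X ≠ 0 := by
    rintro rfl
    rw [map_zero, zero_mul] at e
    exact exp_ne_zero e.symm
  obtain ⟨r, hr⟩ := val_exp v hX0
  rw [hr, ← exp_nsmul, ← exp_add, exp_inj] at e
  rw [hr, hn, ← exp_add, exp_le_exp]
  simp at e; omega

end Local

end

section
open WeierstrassCurve Polynomial WithZero

section Local2
variable {k : Type*} [Field k] [CharZero k] (v : Valuation k ℤᵐ⁰)

lemma four_bE {w : k} (hw : w ^ 2 + w + 1 = 0) : 4 * bE w = (1 - w) ^ 3 * (2 + 3 * w) := by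
  rw [bE]; grind

/-- `x([μ]P)` is not integral at the places above `3`, provided `v(ξ) ≠ v(μ)`. -/
lemma mu_three {w x x' : k} (hw : w ^ 2 + w + 1 = 0) (hmu : v (1 - w) < 1) (hx0 : x ≠ 0)
    (hx : v x ≠ v (1 - w)) (h : 3 * x ^ 2 * x' = -w ^ 2 * (x ^ 3 + 4 * bE w)) : 1 < v x' := by
  have hw1 := val_omega v hw
  have h3 : v (3 : k) = v (1 - w) ^ 2 := by
    have : (3 : k) = -w ^ 2 * (1 - w) ^ 2 := by
      linear_combination (-2 + (1 - w) ^ 2) * 0 - (-w ^ 2 + 3 * w - 3) * hw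
    rw [this, map_mul, Valuation.map_neg, map_pow, hw1, map_pow, one_pow, one_mul]
  have hrho : v (2 + 3 * w) = 1 := by
    have h3' : v ((3 : ℤ) : k) < 1 := by
      push_cast; rw [h3]; exact pow_lt_one₀ zero_le hmu (by norm_num)
    have h2 : v (2 : k) = 1 := by
      exact_mod_cast val_unit_of_coprime v h3' (n := 2) (by decide)
    rw [Valuation.map_add_eq_of_lt_left, h2]
    rw [h2, map_mul, hw1, mul_one]; exact_mod_cast h3'
  obtain ⟨n, hn⟩ := val_exp v hx0
  obtain ⟨l, hl⟩ := val_exp v (omega_ne_one hw)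
  have hl0 : l < 0 := by rwa [hl, ← exp_zero, exp_lt_exp] at hmu
  have hnl : n ≠ l := by rintro rfl; exact hx (hn.trans hl.symm)
  rw [four_bE hw] at h
  have e := congrArg v h
  rw [map_mul, map_mul, map_mul, h3, map_pow, Valuation.map_neg, map_pow, hw1, one_pow,
    one_mul, hn, hl] at e
  have e3 : v (x ^ 3) = exp (3 * n) := by rw [map_pow, hn, ← exp_nsmul]; simp
  have e3' : v ((1 - w) ^ 3 * (2 + 3 * w)) = exp (3 * l) := by
    rw [map_mul, hrho, mul_one, map_pow, hl, ← exp_nsmul]; simp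
  have hx'0 : x' ≠ 0 := by
    rintro rfl
    rw [mul_zero] at h
    have : x ^ 3 + (1 - w) ^ 3 * (2 + 3 * w) = 0 := by
      rcases mul_eq_zero.1 h.symm with h | h
      · exact absurd h (by simpa using omega_ne_zero hw)
      · exact h
    have : v (x ^ 3) = v ((1 - w) ^ 3 * (2 + 3 * w)) := by
      rw [eq_neg_of_add_eq_zero_left this, Valuation.map_neg]
    rw [e3, e3', exp_inj] at this
    omega
  obtain ⟨r, hr⟩ := val_exp v hx'0
  rw [hr, ← exp_nsmul, ← exp_nsmul, ← exp_add, ← exp_add] at e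
  rw [hr, ← exp_zero, exp_lt_exp]
  rcases lt_or_gt_of_ne hnl with hlt | hgt
  · rw [Valuation.map_add_eq_of_lt_right _ (by rw [e3, e3', exp_lt_exp]; omega), e3', exp_inj] at e
    simp at e; omega
  · rw [Valuation.map_add_eq_of_lt_left _ (by rw [e3, e3', exp_lt_exp]; omega), e3, exp_inj] at e
    simp at e; omega

/-- Multiplication by `2 - w` preserves the formal group at a place where `2 - w` is a unit. -/
lemma pi_keep {w b x X : k} (hw : w ^ 2 + w + 1 = 0) (hpi : v (2 - w) = 1) (hb : v b ≤ 1)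
    (hx : 1 < v x)
    (h : X * ((2 - w) * x ^ 3 + 4 * w ^ 2 * b) ^ 2 =
        x ^ 7 + (44 + 48 * w) * b * x ^ 4 + (16 + 48 * w) * b ^ 2 * x) : 1 < v X := by
  have hx0 : x ≠ 0 := by rintro rfl; simp at hx
  have hw' : w ∈ v.integer := (val_omega v hw).le
  have hb' : b ∈ v.integer := hb
  obtain ⟨n, hn⟩ := val_exp v hx0
  have hn1 : 1 ≤ n := by rw [hn, ← exp_zero, exp_lt_exp] at hx; omega
  have h1 : v ((2 - w) * x ^ 3 + 4 * w ^ 2 * b) = exp (3 * n) := by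
    have e3 : v ((2 - w) * x ^ 3) = exp (3 * n) := by
      rw [map_mul, hpi, one_mul, map_pow, hn, ← exp_nsmul]; simp
    rw [Valuation.map_add_eq_of_lt_left, e3]
    have : 4 * w ^ 2 * b ∈ v.integer := mul_mem (mul_mem (ofNat_mem _ 4) (pow_mem hw' 2)) hb'
    refine lt_of_le_of_lt this ?_
    rw [e3, ← exp_zero, exp_lt_exp]; omega
  have h2 : v (x ^ 7 + (44 + 48 * w) * b * x ^ 4 + (16 + 48 * w) * b ^ 2 * x) = exp (7 * n) := by
    have e7 : v (x ^ 7) = exp (7 * n) := by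
      rw [map_pow, hn, ← exp_nsmul]; simp
    rw [add_assoc, Valuation.map_add_eq_of_lt_left, e7]
    rw [e7]
    refine lt_of_le_of_lt (v.map_add _ _) (max_lt ?_ ?_)
    · have : (44 + 48 * w) * b ∈ v.integer :=
        mul_mem (add_mem (ofNat_mem _ 44) (mul_mem (ofNat_mem _ 48) hw')) hb'
      rw [map_mul, map_pow, hn, ← exp_nsmul]
      refine lt_of_le_of_lt (mul_le_of_le_one_left' this) ?_
      rw [exp_lt_exp]; simp; omega
    · have : (16 + 48 * w) * b ^ 2 ∈ v.integer :=
        mul_mem (add_mem (ofNat_mem _ 16) (mul_mem (ofNat_mem _ 48) hw')) (pow_mem hb' 2)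
      rw [map_mul, hn]
      refine lt_of_le_of_lt (mul_le_of_le_one_left' this) ?_
      rw [exp_lt_exp]; omega
  have e := congrArg v h
  rw [h2, map_mul, map_pow, h1] at e
  have hX0 : X ≠ 0 := by
    rintro rfl
    rw [map_zero, zero_mul] at e
    exact exp_ne_zero e.symm
  obtain ⟨r, hr⟩ := val_exp v hX0
  rw [hr, ← exp_nsmul, ← exp_add, exp_inj] at e
  rw [hr, ← exp_zero, exp_lt_exp]
  simp at e; omega

lemma kappa_int {w κ : k} (hw : w ^ 2 + w + 1 = 0) (hκ : κ ^ 2 = (1 - w) * (2 + 3 * w)) :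
    v κ ≤ 1 ∧ v ((1 + κ) / 2) ≤ 1 := by
  have hw' : w ∈ v.integer := (val_omega v hw).le
  constructor
  · have : v (κ ^ 2) ≤ 1 := by
      rw [hκ]
      exact (mul_mem (sub_mem (one_mem _) hw')
        (add_mem (ofNat_mem _ 2) (mul_mem (ofNat_mem _ 3) hw')) : _ ∈ v.integer)
    rw [map_pow] at this
    exact (pow_le_one_iff (by norm_num)).1 this
  · set h := (1 + κ) / 2 with hh
    have e : h ^ 2 = h + (1 + w) := by
      rw [hh]; linear_combination (hκ - 3 * hw) / 4
    by_contra! hc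
    have h1 : v (h + (1 + w)) = v h := by
      rw [Valuation.map_add_eq_of_lt_left]
      exact lt_of_le_of_lt (add_mem (one_mem _) hw' : _ ∈ v.integer) hc
    have := congrArg v e
    rw [h1, map_pow, sq] at this
    have h0 : v h ≠ 0 := fun h0 => by rw [h0] at hc; simp at hc
    have := mul_left_cancel₀ h0 (this.trans (mul_one _).symm)
    exact hc.ne' this

lemma fE_shift (w x y κ : k) : fE w x y = (y - (1 - w) * κ / 2) * ((6 + 9 * w) + (4 - w) * x + x ^ 2) +
    (((-21 - 24 * w) + (-6 + 12 * w) * x + (-2 - 7 * w) * x ^ 2 + (-4 + w) * x ^ 3) +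
    (1 - w) * ((1 + κ) / 2) * ((6 + 9 * w) + (4 - w) * x + x ^ 2)) + (w ^ 2 + w + 1) * (9 - x) / 2 := by
  rw [fE]; ring

/-- Places where `P` reduces to the origin. The shift of the ordinate makes the equation integral
at `2`. -/
lemma f_val_big {w κ x y : k} (hw : w ^ 2 + w + 1 = 0) (hκ : κ ^ 2 = (1 - w) * (2 + 3 * w))
    (h : y ^ 2 = x ^ 3 + bE w) (hx : 1 < v x) : ∃ s, v (fE w x y) = v s ^ 7 := by
  have hw' : w ∈ v.integer := (val_omega v hw).le
  obtain ⟨hκ1, hh1⟩ := kappa_int v hw hκ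
  have hx0 : x ≠ 0 := by rintro rfl; simp at hx
  have hf := fE_shift w x y κ
  rw [hw, zero_mul, zero_div, add_zero] at hf
  set η := (1 + κ) / 2 with hη
  set z := y - (1 - w) * κ / 2 with hz
  have e : z ^ 2 + (1 - w) * κ * z = x ^ 3 := by
    have : z ^ 2 + (1 - w) * κ * z = y ^ 2 - (1 - w) ^ 2 * κ ^ 2 / 4 := by rw [hz]; ring
    rw [this, h, hκ]; linear_combination four_bE hw / 4
  have hx3 : x ^ 3 ≠ 0 := pow_ne_zero 3 hx0
  have hz0 : z ≠ 0 := by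
    intro h0; rw [h0] at e; exact hx3 (by rw [← e]; ring)
  obtain ⟨n, hn⟩ := val_exp v hx0
  obtain ⟨l, hl⟩ := val_exp v hz0
  have hn1 : 1 ≤ n := by rw [hn, ← exp_zero, exp_lt_exp] at hx; omega
  have hmk : v ((1 - w) * κ) ≤ 1 := (mul_mem (sub_mem (one_mem _) hw') hκ1 : _ ∈ v.integer)
  have e3 : v (x ^ 3) = exp (3 * n) := by rw [map_pow, hn, ← exp_nsmul]; simp
  have ez : v ((1 - w) * κ * z) ≤ exp l := by
    rw [map_mul, hl]; exact mul_le_of_le_one_left' hmk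
  have ez2 : v (z ^ 2) = exp (2 * l) := by rw [map_pow, hl, ← exp_nsmul]; simp
  have hl1 : 0 < l := by
    by_contra! hl0
    have : v (x ^ 3) ≤ 1 := by
      rw [← e]
      refine (v.map_add _ _).trans (max_le ?_ (ez.trans ?_))
      · rw [ez2, ← exp_zero, exp_le_exp]; omega
      · rw [← exp_zero, exp_le_exp]; omega
    rw [e3, ← exp_zero, exp_le_exp] at this
    omega
  have h23 : 2 * l = 3 * n := by
    rw [← e, Valuation.map_add_eq_of_lt_left, ez2, exp_inj] at e3
    · exact e3
    · refine lt_of_le_of_lt ez ?_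
      rw [ez2, exp_lt_exp]; omega
  refine ⟨z / x, ?_⟩
  have hzx : v (z * x ^ 2) = exp (l + 2 * n) := by
    rw [map_mul, map_pow, hl, hn, ← exp_nsmul, ← exp_add]; simp
  have hxi : ∀ j : ℕ, ∀ c ∈ v.integer, v (c * x ^ j) ≤ exp (j * n) := by
    intro j c hc
    rw [map_mul, map_pow, hn, ← exp_nsmul, nsmul_eq_mul]
    exact mul_le_of_le_one_left' hc
  have hη' : η ∈ v.integer := hh1
  have hrest : v (z * ((6 + 9 * w) * x ^ 0 + (4 - w) * x ^ 1) +
      (((-21 - 24 * w) * x ^ 0 + (-6 + 12 * w) * x ^ 1 + (-2 - 7 * w) * x ^ 2 + (-4 + w) * x ^ 3) +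
    ((1 - w) * η * (6 + 9 * w) * x ^ 0 + (1 - w) * η * (4 - w) * x ^ 1 + (1 - w) * η * x ^ 2))) <
      exp (l + 2 * n) := by
    have c9 : ∀ j : ℕ, ∀ c ∈ v.integer, j ≤ 3 → v (c * x ^ j) < exp (l + 2 * n) := by
      intro j c hc hj
      refine lt_of_le_of_lt (hxi j c hc) ?_
      rw [exp_lt_exp]
      interval_cases j <;> push_cast <;> omega
    have cz : ∀ j : ℕ, ∀ c ∈ v.integer, j ≤ 1 → v (c * x ^ j) < exp (2 * n) := by
      intro j c hc hj
      refine lt_of_le_of_lt (hxi j c hc) ?_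
      rw [exp_lt_exp]
      interval_cases j <;> push_cast <;> omega
    have m1 : 6 + 9 * w ∈ v.integer := add_mem (ofNat_mem _ 6) (mul_mem (ofNat_mem _ 9) hw')
    have m2 : 4 - w ∈ v.integer := sub_mem (ofNat_mem _ 4) hw'
    have m3 : -21 - 24 * w ∈ v.integer :=
      sub_mem (neg_mem (ofNat_mem _ 21)) (mul_mem (ofNat_mem _ 24) hw')
    have m4 : -6 + 12 * w ∈ v.integer :=
      add_mem (neg_mem (ofNat_mem _ 6)) (mul_mem (ofNat_mem _ 12) hw')
    have m5 : -2 - 7 * w ∈ v.integer :=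
      sub_mem (neg_mem (ofNat_mem _ 2)) (mul_mem (ofNat_mem _ 7) hw')
    have m6 : -4 + w ∈ v.integer := add_mem (neg_mem (ofNat_mem _ 4)) hw'
    have m7 : (1 - w) * η ∈ v.integer := mul_mem (sub_mem (one_mem _) hw') hη'
    refine v.map_add_lt ?_ (v.map_add_lt (v.map_add_lt (v.map_add_lt (v.map_add_lt
      (c9 0 _ m3 (by norm_num)) (c9 1 _ m4 (by norm_num))) (c9 2 _ m5 (by norm_num)))
      (c9 3 _ m6 (by norm_num))) (v.map_add_lt (v.map_add_lt (c9 0 _ (mul_mem m7 m1) (by norm_num))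
        (c9 1 _ (mul_mem m7 m2) (by norm_num))) (c9 2 _ m7 (by norm_num))))
    rw [map_mul, hl, exp_add]
    exact mul_lt_mul_of_pos_left (v.map_add_lt (cz 0 _ m1 (by norm_num)) (cz 1 _ m2 (by norm_num)))
      exp_pos
  have : fE w x y = z * x ^ 2 + (z * ((6 + 9 * w) * x ^ 0 + (4 - w) * x ^ 1) +
      (((-21 - 24 * w) * x ^ 0 + (-6 + 12 * w) * x ^ 1 + (-2 - 7 * w) * x ^ 2 + (-4 + w) * x ^ 3) +
    ((1 - w) * η * (6 + 9 * w) * x ^ 0 + (1 - w) * η * (4 - w) * x ^ 1 + (1 - w) * η * x ^ 2))) := by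
    rw [hf]; ring
  rw [this, Valuation.map_add_eq_of_lt_left _ (by rw [hzx]; exact hrest), hzx, map_div₀, hl, hn,
    ← exp_sub, ← exp_nsmul, exp_inj]
  simp; omega

lemma f_int {w κ x y : k} (hw : w ^ 2 + w + 1 = 0) (hκ : κ ^ 2 = (1 - w) * (2 + 3 * w))
    (h : y ^ 2 = x ^ 3 + bE w) (hx : v x ≤ 1) : v (fE w x y) ≤ 1 := by
  have hw' : w ∈ v.integer := (val_omega v hw).le
  have hx' : x ∈ v.integer := hx
  obtain ⟨hκ1, hh1⟩ := kappa_int v hw hκ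
  have hf := fE_shift w x y κ
  rw [hw, zero_mul, zero_div, add_zero] at hf
  set η := (1 + κ) / 2 with hη
  set z := y - (1 - w) * κ / 2 with hz
  have e : z ^ 2 + (1 - w) * κ * z = x ^ 3 := by
    have : z ^ 2 + (1 - w) * κ * z = y ^ 2 - (1 - w) ^ 2 * κ ^ 2 / 4 := by rw [hz]; ring
    rw [this, h, hκ]; linear_combination four_bE hw / 4
  have hmk : v ((1 - w) * κ) ≤ 1 := (mul_mem (sub_mem (one_mem _) hw') hκ1 : _ ∈ v.integer)
  have hz1 : z ∈ v.integer := by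
    change v z ≤ 1
    by_contra! hc
    have hlt : v ((1 - w) * κ * z) < v (z ^ 2) := by
      rw [map_mul v _ z, sq, map_mul v z z]
      exact mul_lt_mul_of_pos_right (lt_of_le_of_lt hmk hc) (lt_trans zero_lt_one hc)
    have h1 := congrArg v e
    rw [Valuation.map_add_eq_of_lt_left _ hlt] at h1
    have h2 : v (x ^ 3) ≤ 1 := (pow_mem hx' 3 : _ ∈ v.integer)
    rw [← h1, map_pow] at h2
    exact absurd ((pow_le_one_iff (by norm_num)).1 h2) (not_le.2 hc)
  have m1 : 6 + 9 * w ∈ v.integer := add_mem (ofNat_mem _ 6) (mul_mem (ofNat_mem _ 9) hw')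
  have m2 : 4 - w ∈ v.integer := sub_mem (ofNat_mem _ 4) hw'
  have m3 : -21 - 24 * w ∈ v.integer :=
    sub_mem (neg_mem (ofNat_mem _ 21)) (mul_mem (ofNat_mem _ 24) hw')
  have m4 : -6 + 12 * w ∈ v.integer :=
    add_mem (neg_mem (ofNat_mem _ 6)) (mul_mem (ofNat_mem _ 12) hw')
  have m5 : -2 - 7 * w ∈ v.integer :=
    sub_mem (neg_mem (ofNat_mem _ 2)) (mul_mem (ofNat_mem _ 7) hw')
  have m6 : -4 + w ∈ v.integer := add_mem (neg_mem (ofNat_mem _ 4)) hw'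
  have m7 : (1 - w) * η ∈ v.integer := mul_mem (sub_mem (one_mem _) hw') hh1
  have m8 : 6 + 9 * w + (4 - w) * x + x ^ 2 ∈ v.integer :=
    add_mem (add_mem m1 (mul_mem m2 hx')) (pow_mem hx' 2)
  rw [hf]
  exact (add_mem (mul_mem hz1 m8) (add_mem (add_mem (add_mem (add_mem m3 (mul_mem m4 hx'))
    (mul_mem m5 (pow_mem hx' 2))) (mul_mem m6 (pow_mem hx' 3))) (mul_mem m7 m8)) : _ ∈ v.integer)

/-- Places away from `3` where `P` does not reduce to the origin. -/
lemma f_val_small {w κ x y : k} (hw : w ^ 2 + w + 1 = 0) (hκ : κ ^ 2 = (1 - w) * (2 + 3 * w))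
    (h : y ^ 2 = x ^ 3 + bE w) (hx : v x ≤ 1) (h3 : v (1 - w) = 1) :
    ∃ s, v (fE w x y) = v s ^ 7 := by
  have hw' : w ∈ v.integer := (val_omega v hw).le
  have hx' : x ∈ v.integer := hx
  have h' : (-y) ^ 2 = x ^ 3 + bE w := by rw [neg_sq, h]
  have i1 := f_int v hw hκ h hx
  have i2 := f_int v hw hκ h' hx
  have hp := congrArg v (fE_neg hw h)
  rw [map_mul, Valuation.map_neg, map_pow] at hp
  have hs : fE w x y + fE w x (-y) = -(27 * (1 - w)) + (x - (1 - w)) *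
      ((-21 + 21 * w) + (-9 - 3 * w) * x + (-8 + 2 * w) * x ^ 2) := by
    rw [fE, fE]; grind
  have h3' : v (3 : k) = 1 := by
    have : (3 : k) = -w ^ 2 * (1 - w) ^ 2 := by grind
    rw [this, map_mul, Valuation.map_neg, map_pow, val_omega v hw, map_pow, h3]; simp
  have h27 : v (-(27 * (1 - w))) = 1 := by
    rw [Valuation.map_neg, map_mul, h3, show (27 : k) = 3 ^ 3 by norm_num, map_pow, h3']; simp
  have hxm : v (x - (1 - w)) ≤ 1 := (sub_mem hx' (sub_mem (one_mem _) hw') : _ ∈ v.integer)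
  rcases eq_or_lt_of_le hxm with h1 | hlt
  · refine ⟨1, ?_⟩
    rw [h1, one_pow] at hp
    rw [map_one, one_pow]
    refine le_antisymm i1 ?_
    calc (1 : ℤᵐ⁰) = _ := hp.symm
      _ ≤ _ := mul_le_of_le_one_right' i2
  · have hA : v (fE w x y + fE w x (-y)) = 1 := by
      rw [hs, Valuation.map_add_eq_of_lt_left, h27]
      rw [h27, map_mul]
      refine lt_of_le_of_lt (mul_le_of_le_one_right' ?_) hlt
      exact (add_mem (add_mem (add_mem (neg_mem (ofNat_mem _ 21)) (mul_mem (ofNat_mem _ 21) hw'))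
        (mul_mem (sub_mem (neg_mem (ofNat_mem _ 9)) (mul_mem (ofNat_mem _ 3) hw')) hx'))
        (mul_mem (add_mem (neg_mem (ofNat_mem _ 8)) (mul_mem (ofNat_mem _ 2) hw')) (pow_mem hx' 2)) :
          _ ∈ v.integer)
    rcases eq_or_lt_of_le i1 with e1 | l1
    · exact ⟨1, by rw [e1]; simp⟩
    · rcases eq_or_lt_of_le i2 with e2 | l2
      · exact ⟨x - (1 - w), by rw [← hp, e2, mul_one]⟩
      · exact absurd hA (v.map_add_lt l1 l2).ne

/-- Near the origin `f` is a seventh power up to principal units. -/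
lemma f_near {w x y : k} (hw : w ^ 2 + w + 1 = 0) (h2 : v (2 : k) = 1)
    (h : y ^ 2 = x ^ 3 + bE w) (hx : 1 < v x) : v (fE w x y * (x / y) ^ 7 - 1) ≤ v (x / y) ∧
      v (x / y) ^ 2 * v x = 1 := by
  have hw' : w ∈ v.integer := (val_omega v hw).le
  have hx0 : x ≠ 0 := by rintro rfl; simp at hx
  have hb : bE w ∈ v.integer := by
    have h4 : v (4 : k) = 1 := by rw [show (4 : k) = 2 ^ 2 by norm_num, map_pow, h2, one_pow]
    change v (bE w) ≤ 1
    rw [bE, map_div₀, h4, div_one]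
    exact (sub_mem (ofNat_mem _ 12) (mul_mem (ofNat_mem _ 3) hw') : _ ∈ v.integer)
  have h2' : v (1 / 2 : k) ≤ 1 := by rw [map_div₀, h2]; simp
  have hh : (1 / 2 : k) ∈ v.integer := h2'
  obtain ⟨n, hn⟩ := val_exp v hx0
  have hn1 : 1 ≤ n := by rw [hn, ← exp_zero, exp_lt_exp] at hx; omega
  have e3 : v (x ^ 3) = exp (3 * n) := by rw [map_pow, hn, ← exp_nsmul]; simp
  have ey : v (y ^ 2) = exp (3 * n) := by
    rw [h, Valuation.map_add_eq_of_lt_left, e3]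
    rw [e3]; refine lt_of_le_of_lt hb ?_
    rw [← exp_zero, exp_lt_exp]; omega
  have hy0 : y ≠ 0 := by
    rintro rfl
    rw [sq, zero_mul, map_zero] at ey
    exact exp_ne_zero ey.symm
  obtain ⟨l, hl⟩ := val_exp v hy0
  have hnl : 2 * l = 3 * n := by
    rw [map_pow, hl, ← exp_nsmul, exp_inj] at ey; simpa using ey
  have hz : v (x / y) = exp (n - l) := by rw [map_div₀, hn, hl, exp_sub]
  refine ⟨?_, ?_⟩
  swap
  · rw [hz, hn, ← exp_nsmul, ← exp_add, ← exp_zero, exp_inj]; simp; omega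
  have hxi : ∀ j : ℕ, ∀ c ∈ v.integer, j ≤ 3 → v (c * x ^ j) ≤ exp (3 * n) := by
    intro j c hc hj
    rw [map_mul, map_pow, hn, ← exp_nsmul, nsmul_eq_mul]
    refine (mul_le_of_le_one_left' hc).trans ?_
    rw [exp_le_exp]; interval_cases j <;> push_cast <;> omega
  have hyi : ∀ j : ℕ, ∀ c ∈ v.integer, j ≤ 1 → v (c * x ^ j * y) ≤ exp (3 * n) := by
    intro j c hc hj
    rw [map_mul, map_mul, map_pow, hn, hl, ← exp_nsmul, nsmul_eq_mul]
    refine (mul_le_mul_left (mul_le_of_le_one_left' hc) _).trans ?_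
    rw [← exp_add, exp_le_exp]; interval_cases j <;> push_cast <;> omega
  obtain ⟨g, hg, hgv⟩ : ∃ g, fE w x y = x ^ 2 * y + g ∧ v g ≤ exp (3 * n) := by
    refine ⟨(6 + 9 * w) * x ^ 0 * y + (4 - w) * x ^ 1 * y + (fE w x y - y * ((6 + 9 * w) + (4 - w) * x + x ^ 2)), by ring, ?_⟩
    have m1 : 6 + 9 * w ∈ v.integer := add_mem (ofNat_mem _ 6) (mul_mem (ofNat_mem _ 9) hw')
    have m2 : 4 - w ∈ v.integer := sub_mem (ofNat_mem _ 4) hw'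
    refine v.map_add_le (v.map_add_le (hyi 0 _ m1 (by norm_num)) (hyi 1 _ m2 (by norm_num))) ?_
    have : fE w x y - y * ((6 + 9 * w) + (4 - w) * x + x ^ 2) =
        (-27 - 36 * w) * (1 / 2) * x ^ 0 + (-9 + 18 * w) * (1 / 2) * x ^ 1 +
          (-3 - 15 * w) * (1 / 2) * x ^ 2 + (-4 + w) * x ^ 3 := by rw [fE]; ring
    rw [this]
    exact v.map_add_le (v.map_add_le (v.map_add_le
      (hxi 0 _ (mul_mem (sub_mem (neg_mem (ofNat_mem _ 27)) (mul_mem (ofNat_mem _ 36) hw')) hh) (by norm_num))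
      (hxi 1 _ (mul_mem (add_mem (neg_mem (ofNat_mem _ 9)) (mul_mem (ofNat_mem _ 18) hw')) hh) (by norm_num)))
      (hxi 2 _ (mul_mem (sub_mem (neg_mem (ofNat_mem _ 3)) (mul_mem (ofNat_mem _ 15) hw')) hh) (by norm_num)))
      (hxi 3 _ (add_mem (neg_mem (ofNat_mem _ 4)) hw') (by norm_num))
  have e : fE w x y * (x / y) ^ 7 - 1 = g * (x / y) ^ 7 + ((x ^ 3 / y ^ 2) ^ 3 - 1) := by
    rw [hg]; field_simp; ring
  rw [e]
  refine v.map_add_le ?_ ?_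
  · rw [map_mul, map_pow, hz, ← exp_nsmul]
    refine (mul_le_mul_left hgv _).trans ?_
    rw [← exp_add, exp_le_exp]; simp; omega
  · set u := x ^ 3 / y ^ 2 with hu
    have hu1 : u - 1 = -bE w / y ^ 2 := by rw [hu]; field_simp; linear_combination -h
    have hu' : u ∈ v.integer := by
      change v u ≤ 1
      rw [hu, map_div₀, e3, ey, div_self exp_ne_zero]
    rw [show u ^ 3 - 1 = (u ^ 2 + u + 1) * (u - 1) by ring, map_mul]
    have : u ^ 2 + u + 1 ∈ v.integer := add_mem (add_mem (pow_mem hu' 2) hu') (one_mem _)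
    refine (mul_le_of_le_one_left' this).trans ?_
    rw [hu1, map_div₀, ey, Valuation.map_neg, hz, div_le_iff₀ exp_pos, ← exp_add]
    refine le_trans hb ?_
    rw [← exp_zero, exp_le_exp]; omega

/-- A seventh-root estimate at a place of ramification index divisible by `6` over `7`, where the
residue class of `e⁶/7` is not `-1`. In particular there are no nontrivial seventh roots of
unity. -/
lemma seventh_root {w e ε : k} (hw : w ^ 2 + w + 1 = 0) (hr : v (2 + 3 * w) < 1)
    (hres : ∀ x, v x ≤ 1 → ∃ n : ℤ, v (x - n) < 1) (he : e ^ 6 = w ^ 2 * (1 - w) ^ 5 * (2 + 3 * w))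
    (hε : v (ε ^ 7 - 1) < 1) : v (ε - 1) * v 7 ≤ v (ε ^ 7 - 1) := by
  have hw' : w ∈ v.integer := (val_omega v hw).le
  have h7e : (7 : k) = (2 + 3 * w) * (-1 - 3 * w) := by grind
  have hr' : v (-1 - 3 * w) = 1 := by
    rw [show -1 - 3 * w = 1 - (2 + 3 * w) by ring, Valuation.map_sub_eq_of_lt_left, map_one]
    rwa [map_one]
  have h7v : v (7 : k) = v (2 + 3 * w) := by rw [h7e, map_mul, hr', mul_one]
  have h7 : v (7 : k) < 1 := by rwa [h7v]
  have hεv : v ε = 1 := by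
    have : v (ε ^ 7) = 1 := by
      rw [show ε ^ 7 = 1 + (ε ^ 7 - 1) by ring, Valuation.map_add_eq_of_lt_left, map_one]
      rwa [map_one]
    rw [map_pow] at this
    exact (pow_eq_one_iff.1 this).resolve_right (by norm_num)
  have hcong : ∀ {a b c d : k}, v (a - b) < 1 → v (c - d) < 1 → v a ≤ 1 → v d ≤ 1 →
      v (a * c - b * d) < 1 := by
    intro a b c d h1 h2 h3 h4
    rw [show a * c - b * d = a * (c - d) + (a - b) * d by ring]
    refine v.map_add_lt ?_ ?_
    · rw [map_mul]; exact lt_of_le_of_lt (mul_le_of_le_one_left' h3) h2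
    · rw [map_mul]; exact lt_of_le_of_lt (mul_le_of_le_one_right' h4) h1
  have hpow : ∀ {a b : k}, v (a - b) < 1 → v a ≤ 1 → v b ≤ 1 → ∀ n : ℕ, v (a ^ n - b ^ n) < 1 := by
    intro a b h1 h2 h3 n
    obtain ⟨c, hc⟩ := sub_dvd_pow_sub_pow (⟨a, h2⟩ : v.integer) ⟨b, h3⟩ n
    have := congrArg Subtype.val hc
    simp only [Subring.coe_mul, AddSubgroupClass.coe_sub, SubmonoidClass.coe_pow] at this
    rw [this, map_mul]
    exact lt_of_le_of_lt (mul_le_of_le_one_right' c.2) h1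
  have hpow6 : ∀ s : k, v s = 1 → v (s ^ 6 - 1) < 1 := by
    intro s hs
    obtain ⟨n, hn⟩ := hres s hs.le
    have h1 := hpow hn hs.le (val_int v n) 6
    have hn7 : ¬ (7 : ℤ) ∣ n := by
      intro hd
      have := v.map_add_lt hn (val_lt_of_dvd v h7 hd)
      rw [sub_add_cancel, hs] at this
      exact lt_irrefl _ this
    have h6 : (7 : ℤ) ∣ n ^ 6 - 1 := by
      refine (ZMod.intCast_zmod_eq_zero_iff_dvd _ 7).1 ?_
      have : (n : ZMod 7) ≠ 0 := by rwa [Ne, ZMod.intCast_zmod_eq_zero_iff_dvd n 7]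
      push_cast
      generalize (n : ZMod 7) = a at this
      revert a; decide
    have h6' := val_lt_of_dvd v h7 h6
    push_cast at h6'
    have := v.map_add_lt h1 h6'
    rwa [sub_add_sub_cancel] at this
  set θ := ε - 1 with hθ
  have hθ1 : v θ < 1 := by
    have h1 := hpow6 ε hεv
    have h2 : v (ε * (ε ^ 6 - 1)) < 1 := by rw [map_mul, hεv, one_mul]; exact h1
    have := v.map_sub_lt hε h2
    rwa [show ε ^ 7 - 1 - ε * (ε ^ 6 - 1) = θ by rw [hθ]; ring] at this
  have hθ' : θ ∈ v.integer := hθ1.le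
  obtain ⟨u, hu⟩ : ∃ u, u = 1 + θ * (3 + 5 * θ + 5 * θ ^ 2 + 3 * θ ^ 3 + θ ^ 4) := ⟨_, rfl⟩
  have hfac : ε ^ 7 - 1 = θ * (θ ^ 6 + 7 * u) := by
    rw [hu, show ε = 1 + θ by rw [hθ]; ring]; ring
  have hu1 : v (u - 1) < 1 := by
    rw [hu, add_sub_cancel_left, map_mul]
    refine lt_of_le_of_lt (mul_le_of_le_one_right' ?_) hθ1
    exact (add_mem (add_mem (add_mem (add_mem (ofNat_mem _ 3) (mul_mem (ofNat_mem _ 5) hθ'))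
      (mul_mem (ofNat_mem _ 5) (pow_mem hθ' 2))) (mul_mem (ofNat_mem _ 3) (pow_mem hθ' 3)))
      (pow_mem hθ' 4) : _ ∈ v.integer)
  have huv : v u = 1 := by
    rw [show u = 1 + (u - 1) by ring, Valuation.map_add_eq_of_lt_left, map_one]
    rwa [map_one]
  rw [hfac, map_mul]
  refine mul_le_mul_right ?_ _
  have h7u : v (7 * u) = v 7 := by rw [map_mul, huv, mul_one]
  rcases lt_trichotomy (v (θ ^ 6)) (v (7 * u)) with hlt | heq | hgt
  · rw [Valuation.map_add_eq_of_lt_right _ hlt, h7u]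
  · have hμ : v (1 - w) = 1 := by
      have h3 : v (3 : k) = 1 := by exact_mod_cast val_small v h7 (n := 3) (by norm_num)
      have : (3 : k) = -w ^ 2 * (1 - w) ^ 2 := by grind
      rw [this, map_mul, Valuation.map_neg, map_pow, val_omega v hw, one_pow, one_mul, map_pow] at h3
      exact (pow_eq_one_iff.1 h3).resolve_right (by norm_num)
    have hev : v e ^ 6 = v 7 := by
      rw [← map_pow, he, map_mul, map_mul, map_pow, map_pow, hμ, val_omega v hw, h7v]; simp
    have he0 : e ≠ 0 := by
      rintro rfl
      rw [map_zero, zero_pow (by norm_num)] at hev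
      exact (by norm_num : (7 : k) ≠ 0) ((Valuation.zero_iff v).1 hev.symm)
    set s := θ / e with hs
    have hsv : v s = 1 := by
      have : v s ^ 6 = 1 := by
        rw [hs, map_div₀, div_pow, hev, ← map_pow, heq, h7u, div_self]
        exact (Valuation.ne_zero_iff v).2 (by norm_num)
      exact (pow_eq_one_iff.1 this).resolve_right (by norm_num)
    have hθs : θ ^ 6 + 7 * u = (2 + 3 * w) * (w ^ 2 * (1 - w) ^ 5 * s ^ 6 + (-1 - 3 * w) * u) := by
      have : θ ^ 6 = e ^ 6 * s ^ 6 := by rw [hs]; field_simp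
      rw [this, he]; linear_combination u * h7e
    have hw4 : v (w - 4) < 1 := by
      have h3 : v (3 : k) = 1 := by exact_mod_cast val_small v h7 (n := 3) (by norm_num)
      have : v (3 * (w - 4)) < 1 := by
        rw [show 3 * (w - 4) = (2 + 3 * w) - 7 * 2 by ring]
        refine v.map_sub_lt hr ?_
        rw [map_mul]; exact lt_of_le_of_lt (mul_le_of_le_one_right' (val_ofNat v 2)) h7
      rwa [map_mul, h3, one_mul] at this
    have hd : v (w ^ 2 * (1 - w) ^ 5 - 4) < 1 := by
      have : w ^ 2 * (1 - w) ^ 5 - 4 = 18 * (w - 4) + 11 * 7 := by grind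
      rw [this]
      refine v.map_add_lt ?_ ?_
      · rw [map_mul]; exact lt_of_le_of_lt (mul_le_of_le_one_left' (val_ofNat v 18)) hw4
      · rw [map_mul]; exact lt_of_le_of_lt (mul_le_of_le_one_left' (val_ofNat v 11)) h7
    have hd' : w ^ 2 * (1 - w) ^ 5 ∈ v.integer :=
      mul_mem (pow_mem hw' 2) (pow_mem (sub_mem (one_mem _) hw') 5)
    have h1 : v (w ^ 2 * (1 - w) ^ 5 * s ^ 6 - 4 * 1) < 1 :=
      hcong hd (hpow6 s hsv) hd' (by simp)
    have h2 : v ((-1 - 3 * w) * u - 1 * 1) < 1 := by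
      refine hcong ?_ hu1 hr'.le (by simp)
      rw [show -1 - 3 * w - 1 = -(2 + 3 * w) by ring, Valuation.map_neg]; exact hr
    have h5 : v (5 : k) = 1 := by exact_mod_cast val_small v h7 (n := 5) (by norm_num)
    have := v.map_add_lt h1 h2
    have h5' : v (w ^ 2 * (1 - w) ^ 5 * s ^ 6 + (-1 - 3 * w) * u) = 1 := by
      rw [show w ^ 2 * (1 - w) ^ 5 * s ^ 6 + (-1 - 3 * w) * u = 5 +
        (w ^ 2 * (1 - w) ^ 5 * s ^ 6 - 4 * 1 + ((-1 - 3 * w) * u - 1 * 1)) by ring,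
        v.map_add_eq_of_lt_left (by rwa [h5]), h5]
    rw [hθs, map_mul, h7v, h5', mul_one]
  · rw [Valuation.map_add_eq_of_lt_left _ hgt, ← h7u]; exact hgt.le

end Local2

end

/-! ### The sextic field and its integers -/

section
open WeierstrassCurve Polynomial WithZero NumberField

section SexticElements
variable {k : Type*} [Field k] [CharZero k]

/-- The elements `e₁, …, e₅` of the sextic Kummer extension generated by `t`, where
`t ^ 6 = ω (1 - ω) ρ ^ 5` and `ρ = 2 + 3 ω`. Each `eⱼ` is `t ^ j` divided by an element of
`ℚ(ω)`. -/
structure Sextic (w e₁ e₂ e₃ e₄ e₅ : k) : Prop where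
  hw : w ^ 2 + w + 1 = 0
  h11 : e₁ * e₁ = w * (2 + 3 * w) * e₂
  h12 : e₁ * e₂ = w * (2 + 3 * w) * e₃
  h13 : e₁ * e₃ = (2 + 3 * w) * e₄
  h14 : e₁ * e₄ = w * (2 + 3 * w) * e₅
  h15 : e₁ * e₅ = w * (1 - w) * (2 + 3 * w)
  h22 : e₂ * e₂ = (2 + 3 * w) * e₄
  h23 : e₂ * e₃ = (2 + 3 * w) * e₅
  h24 : e₂ * e₄ = w * (1 - w) * (2 + 3 * w)
  h25 : e₂ * e₅ = (1 - w) * e₁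
  h33 : e₃ * e₃ = (1 - w) * (2 + 3 * w)
  h34 : e₃ * e₄ = (1 - w) * e₁
  h35 : e₃ * e₅ = (1 - w) * e₂
  h44 : e₄ * e₄ = w * (1 - w) * e₂
  h45 : e₄ * e₅ = w * (1 - w) * e₃
  h55 : e₅ * e₅ = (1 - w) * e₄

lemma rho_ne_zero {w : k} (hw : w ^ 2 + w + 1 = 0) : 2 + 3 * w ≠ 0 := by
  intro h
  have : (7 : k) = 0 := by grind
  norm_num at this

lemma sextic_of_root {w t : k} (hw : w ^ 2 + w + 1 = 0)
    (ht : t ^ 6 = w * (1 - w) * (2 + 3 * w) ^ 5) :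
    Sextic w t (t ^ 2 / (w * (2 + 3 * w))) (t ^ 3 / (w ^ 2 * (2 + 3 * w) ^ 2))
      (t ^ 4 / (w ^ 2 * (2 + 3 * w) ^ 3)) (t ^ 5 / (w ^ 3 * (2 + 3 * w) ^ 4)) := by
  have hr := rho_ne_zero hw
  have h0 := omega_ne_zero hw
  have h3 := omega_cube hw
  have h8 : t ^ 8 = t ^ 6 * t ^ 2 := by ring
  have h9 : t ^ 9 = t ^ 6 * t ^ 3 := by ring
  have h7 : t ^ 7 = t ^ 6 * t := by ring
  have h10 : t ^ 10 = t ^ 6 * t ^ 4 := by ring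
  generalize hρ : 2 + 3 * w = r at hr ht ⊢
  refine ⟨hw, ?_, ?_, ?_, ?_, ?_, ?_, ?_, ?_, ?_, ?_, ?_, ?_, ?_, ?_, ?_⟩
  all_goals field_simp
  all_goals grind

/-- The conjugate of a sextic system under `t ↦ -ω² t`. -/
lemma Sextic.rot {w e₁ e₂ e₃ e₄ e₅ : k} (h : Sextic w e₁ e₂ e₃ e₄ e₅) :
    Sextic w (-w ^ 2 * e₁) (w * e₂) (-e₃) (w ^ 2 * e₄) (-w * e₅) := by
  obtain ⟨hw, h11, h12, h13, h14, h15, h22, h23, h24, h25, h33, h34, h35, h44, h45, h55⟩ := h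
  have h3 := omega_cube hw
  refine ⟨hw, ?_, ?_, ?_, ?_, ?_, ?_, ?_, ?_, ?_, ?_, ?_, ?_, ?_, ?_, ?_⟩
  all_goals grind

/-- Twice the element with coordinates `c` in the basis
`1, e₂, e₄, (1 + e₃)/2, (ω e₄ + e₁)/2, (ω² e₂ + e₅)/2`. -/
def dbl {R : Type*} [CommRing R] (w e₁ e₂ e₃ e₄ e₅ c₀ c₁ c₂ c₃ c₄ c₅ : R) : R :=
  (2 * c₀ + c₃) + c₄ * e₁ + (2 * c₁ + w ^ 2 * c₅) * e₂ + c₃ * e₃ + (2 * c₂ + w * c₄) * e₄ + c₅ * e₅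

/-- The coordinate at `1` of `(2α) · τ³(2α)` with respect to `1, e₂, e₄`. -/
def nfX {R : Type*} [CommRing R] (w c₀ c₁ c₂ c₃ c₄ c₅ : R) : R :=
  (2 * c₀ + c₃) ^ 2 + 2 * w * (1 - w) * (2 + 3 * w) * (2 * c₁ + w ^ 2 * c₅) * (2 * c₂ + w * c₄)
    - ((1 - w) * (2 + 3 * w) * c₃ ^ 2 + 2 * w * (1 - w) * (2 + 3 * w) * c₄ * c₅)

/-- The coordinate at `e₂`; see `nfX`. -/
def nfY {R : Type*} [CommRing R] (w c₀ c₁ c₂ c₃ c₄ c₅ : R) : R :=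
  2 * (2 * c₀ + c₃) * (2 * c₁ + w ^ 2 * c₅) + w * (1 - w) * (2 * c₂ + w * c₄) ^ 2
    - (w * (2 + 3 * w) * c₄ ^ 2 + 2 * (1 - w) * c₃ * c₅)

/-- The coordinate at `e₄`; see `nfX`. -/
def nfZ {R : Type*} [CommRing R] (w c₀ c₁ c₂ c₃ c₄ c₅ : R) : R :=
  2 * (2 * c₀ + c₃) * (2 * c₂ + w * c₄) + (2 + 3 * w) * (2 * c₁ + w ^ 2 * c₅) ^ 2
    - ((1 - w) * c₅ ^ 2 + 2 * (2 + 3 * w) * c₄ * c₃)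

/-- The norm to `ℚ(ω)` of an element of the cubic subfield with coordinates `X, Y, Z` with respect
to `1, e₂, e₄`. -/
def cubicForm {R : Type*} [CommRing R] (w X Y Z : R) : R :=
  X ^ 3 + w * (1 - w) * (2 + 3 * w) ^ 2 * Y ^ 3 + w ^ 2 * (1 - w) ^ 2 * (2 + 3 * w) * Z ^ 3
    - 3 * w * (1 - w) * (2 + 3 * w) * X * Y * Z

/-- The relative norm of twice an element, as a polynomial in its coordinates. -/
def nf {R : Type*} [CommRing R] (w c₀ c₁ c₂ c₃ c₄ c₅ : R) : R :=
  cubicForm w (nfX w c₀ c₁ c₂ c₃ c₄ c₅) (nfY w c₀ c₁ c₂ c₃ c₄ c₅) (nfZ w c₀ c₁ c₂ c₃ c₄ c₅)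

lemma Sextic.dbl_mul {w e₁ e₂ e₃ e₄ e₅ : k} (h : Sextic w e₁ e₂ e₃ e₄ e₅)
    (c₀ c₁ c₂ c₃ c₄ c₅ : k) :
    dbl w e₁ e₂ e₃ e₄ e₅ c₀ c₁ c₂ c₃ c₄ c₅ * dbl w (-e₁) e₂ (-e₃) e₄ (-e₅) c₀ c₁ c₂ c₃ c₄ c₅ =
      nfX w c₀ c₁ c₂ c₃ c₄ c₅ + nfY w c₀ c₁ c₂ c₃ c₄ c₅ * e₂ + nfZ w c₀ c₁ c₂ c₃ c₄ c₅ * e₄ := by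
  have key : ∀ A B C D E G : k, (A + E * e₁ + B * e₂ + D * e₃ + C * e₄ + G * e₅) *
      (A + E * -e₁ + B * e₂ + D * -e₃ + C * e₄ + G * -e₅) =
      (A ^ 2 + 2 * w * (1 - w) * (2 + 3 * w) * B * C -
        ((1 - w) * (2 + 3 * w) * D ^ 2 + 2 * w * (1 - w) * (2 + 3 * w) * E * G)) +
      (2 * A * B + w * (1 - w) * C ^ 2 - (w * (2 + 3 * w) * E ^ 2 + 2 * (1 - w) * D * G)) * e₂ +
      (2 * A * C + (2 + 3 * w) * B ^ 2 - ((1 - w) * G ^ 2 + 2 * (2 + 3 * w) * E * D)) * e₄ := by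
    intro A B C D E G
    linear_combination B ^ 2 * h.h22 + 2 * B * C * h.h24 + C ^ 2 * h.h44 - E ^ 2 * h.h11 -
      D ^ 2 * h.h33 - G ^ 2 * h.h55 - 2 * E * D * h.h13 - 2 * E * G * h.h15 - 2 * D * G * h.h35
  exact key _ _ _ _ _ _

lemma Sextic.cubicForm_eq {w e₁ e₂ e₃ e₄ e₅ : k} (h : Sextic w e₁ e₂ e₃ e₄ e₅) (X Y Z : k) :
    (X + Y * e₂ + Z * e₄) * (X + Y * (w * e₂) + Z * (w ^ 2 * e₄)) *
      (X + Y * (w ^ 2 * e₂) + Z * (w * e₄)) = cubicForm w X Y Z := by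
  have h2 : e₂ ^ 3 = w * (1 - w) * (2 + 3 * w) ^ 2 := by
    linear_combination e₂ * h.h22 + (2 + 3 * w) * h.h24
  have h4 : e₄ ^ 3 = w ^ 2 * (1 - w) ^ 2 * (2 + 3 * w) := by
    linear_combination e₄ * h.h44 + w * (1 - w) * h.h24
  have hw := h.hw
  have h3 := omega_cube hw
  have e : (X + Y * e₂ + Z * e₄) * (X + Y * (w * e₂) + Z * (w ^ 2 * e₄)) *
      (X + Y * (w ^ 2 * e₂) + Z * (w * e₄)) = X ^ 3 + Y ^ 3 * e₂ ^ 3 + Z ^ 3 * e₄ ^ 3 -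
        3 * X * Y * Z * (e₂ * e₄) := by
    have key : ∀ a b : k, (X + a + b) * (X + w * a + w ^ 2 * b) * (X + w ^ 2 * a + w * b) =
        X ^ 3 + a ^ 3 + b ^ 3 - 3 * X * a * b := by
      intro a b; grind
    linear_combination key (Y * e₂) (Z * e₄)
  rw [e, h2, h4, h.h24, cubicForm]; ring

/-- The product of the six conjugates of twice an element. -/
lemma Sextic.nf_eq {w e₁ e₂ e₃ e₄ e₅ : k} (h : Sextic w e₁ e₂ e₃ e₄ e₅)
    (c₀ c₁ c₂ c₃ c₄ c₅ : k) :
    dbl w e₁ e₂ e₃ e₄ e₅ c₀ c₁ c₂ c₃ c₄ c₅ * dbl w (-e₁) e₂ (-e₃) e₄ (-e₅) c₀ c₁ c₂ c₃ c₄ c₅ *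
    (dbl w (-w ^ 2 * e₁) (w * e₂) (-e₃) (w ^ 2 * e₄) (-w * e₅) c₀ c₁ c₂ c₃ c₄ c₅ *
      dbl w (-(-w ^ 2 * e₁)) (w * e₂) (-(-e₃)) (w ^ 2 * e₄) (-(-w * e₅)) c₀ c₁ c₂ c₃ c₄ c₅) *
    (dbl w (w * e₁) (w ^ 2 * e₂) e₃ (w * e₄) (w ^ 2 * e₅) c₀ c₁ c₂ c₃ c₄ c₅ *
      dbl w (-(w * e₁)) (w ^ 2 * e₂) (-e₃) (w * e₄) (-(w ^ 2 * e₅)) c₀ c₁ c₂ c₃ c₄ c₅) =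
      nf w c₀ c₁ c₂ c₃ c₄ c₅ := by
  have h2 := h.rot.rot
  have h3 := omega_cube h.hw
  have e1 : -w ^ 2 * (-w ^ 2 * e₁) = w * e₁ := by linear_combination w * e₁ * h3
  have e2 : w * (w * e₂) = w ^ 2 * e₂ := by ring
  have e4 : w ^ 2 * (w ^ 2 * e₄) = w * e₄ := by linear_combination w * e₄ * h3
  have e5 : -w * (-w * e₅) = w ^ 2 * e₅ := by ring
  rw [e1, e2, e4, e5, neg_neg] at h2
  rw [h.dbl_mul, h.rot.dbl_mul, h2.dbl_mul, h.cubicForm_eq, nf]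

end SexticElements

end

section
open WeierstrassCurve Polynomial WithZero NumberField

/-- A quadratic field `F = ℚ(ω)` with `ω² + ω + 1 = 0`, a sextic Kummer extension `H = F(t)` with
`t⁶ = ω (1 - ω) (2 + 3ω)⁵`, and the generator `τ : t ↦ -ω² t` of its Galois group. -/
structure Setup (F H : Type*) [Field F] [NumberField F] [Field H] [NumberField H] [Algebra F H] where
  w : F
  t : H
  τ : H ≃ₐ[F] H
  hw : w ^ 2 + w + 1 = 0
  ht : t ^ 6 = algebraMap F H (w * (1 - w) * (2 + 3 * w) ^ 5)
  hτ : τ t = -algebraMap F H w ^ 2 * t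
  hF : Module.finrank ℚ F = 2
  hH : Module.finrank F H = 6
  hInt : ∀ x : 𝓞 F, ∃ a b : ℤ, (x : F) = a + b * w

namespace Setup
variable {F H : Type*} [Field F] [NumberField F] [Field H] [NumberField H] [Algebra F H]
  (S : Setup F H)

/-- The cube root of unity `ω` in `H`. -/
def ω : H := algebraMap F H S.w

/-- `t²/(ωρ)` -/
def e₂ : H := S.t ^ 2 / (S.ω * (2 + 3 * S.ω))
/-- `t³/(ω²ρ²)` -/
def e₃ : H := S.t ^ 3 / (S.ω ^ 2 * (2 + 3 * S.ω) ^ 2)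
/-- `t⁴/(ω²ρ³)` -/
def e₄ : H := S.t ^ 4 / (S.ω ^ 2 * (2 + 3 * S.ω) ^ 3)
/-- `t⁵/(ω³ρ⁴)` -/
def e₅ : H := S.t ^ 5 / (S.ω ^ 3 * (2 + 3 * S.ω) ^ 4)

lemma hω : S.ω ^ 2 + S.ω + 1 = 0 := by
  have := congrArg (algebraMap F H) S.hw
  simpa [ω] using this

lemma ht' : S.t ^ 6 = S.ω * (1 - S.ω) * (2 + 3 * S.ω) ^ 5 := by
  rw [S.ht]; simp only [ω, map_mul, map_sub, map_add, map_pow, map_one, map_ofNat]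

lemma sextic : Sextic S.ω S.t S.e₂ S.e₃ S.e₄ S.e₅ := sextic_of_root S.hω S.ht'

lemma ω_ne_zero : S.ω ≠ 0 := omega_ne_zero S.hω
lemma ρ_ne_zero : 2 + 3 * S.ω ≠ 0 := rho_ne_zero S.hω
lemma μ_ne_zero : 1 - S.ω ≠ 0 := omega_ne_one S.hω

lemma t_ne_zero : S.t ≠ 0 := by
  intro h
  have := S.ht'
  rw [h, zero_pow (by norm_num)] at this
  exact mul_ne_zero (mul_ne_zero S.ω_ne_zero S.μ_ne_zero) (pow_ne_zero 5 S.ρ_ne_zero) this.symm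

@[simp] lemma τ_ω : S.τ S.ω = S.ω := S.τ.commutes S.w

lemma τ_t : S.τ S.t = -S.ω ^ 2 * S.t := S.hτ

lemma τ_e₂ : S.τ S.e₂ = S.ω * S.e₂ := by
  have h3 := omega_cube S.hω
  simp only [e₂, map_div₀, map_mul, map_add, map_pow, τ_ω, map_ofNat, τ_t]
  linear_combination S.t ^ 2 / (S.ω * (2 + 3 * S.ω)) * S.ω * h3

lemma τ_e₃ : S.τ S.e₃ = -S.e₃ := by
  have h3 := omega_cube S.hω
  simp only [e₃, map_div₀, map_mul, map_add, map_pow, τ_ω, map_ofNat, τ_t]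
  linear_combination -S.t ^ 3 / (S.ω ^ 2 * (2 + 3 * S.ω) ^ 2) * (S.ω ^ 3 + 1) * h3

lemma τ_e₄ : S.τ S.e₄ = S.ω ^ 2 * S.e₄ := by
  have h3 := omega_cube S.hω
  simp only [e₄, map_div₀, map_mul, map_add, map_pow, τ_ω, map_ofNat, τ_t]
  linear_combination S.t ^ 4 / (S.ω ^ 2 * (2 + 3 * S.ω) ^ 3) * S.ω ^ 2 * (S.ω ^ 3 + 1) * h3

lemma τ_e₅ : S.τ S.e₅ = -S.ω * S.e₅ := by
  have h3 := omega_cube S.hω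
  simp only [e₅, map_div₀, map_mul, map_add, map_pow, τ_ω, map_ofNat, τ_t]
  linear_combination -S.t ^ 5 / (S.ω ^ 3 * (2 + 3 * S.ω) ^ 4) * S.ω * (S.ω ^ 6 + S.ω ^ 3 + 1) * h3

lemma τ_pow_t (i : ℕ) : (S.τ ^ i) S.t = (-S.ω ^ 2) ^ i * S.t := by
  induction i with
  | zero => simp
  | succ n ih =>
    rw [pow_succ', AlgEquiv.mul_apply, ih, map_mul, map_pow, map_neg, map_pow, τ_ω, τ_t]; ring

lemma ω_ne_one : S.ω ≠ 1 := fun h => S.μ_ne_zero (by rw [h, sub_self])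

lemma orderOf_τ [IsGalois F H] : orderOf S.τ = 6 := by
  have hd : orderOf S.τ ∣ 6 := by
    rw [← S.hH, ← IsGalois.card_aut_eq_finrank]; exact orderOf_dvd_natCard _
  have hne : ∀ i, (-S.ω ^ 2) ^ i ≠ 1 → S.τ ^ i ≠ 1 := by
    intro i hi h
    have := S.τ_pow_t i
    rw [h, AlgEquiv.one_apply] at this
    exact hi (mul_right_cancel₀ S.t_ne_zero (this.symm.trans (one_mul _).symm))
  have h3 := omega_cube S.hω
  have h2' : S.τ ^ 2 ≠ 1 := hne 2 (by
    intro h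
    exact S.ω_ne_one (by linear_combination h - S.ω * h3))
  have h3' : S.τ ^ 3 ≠ 1 := hne 3 (by
    intro h
    have : (2 : H) = 0 := by linear_combination -h - (S.ω ^ 3 + 1) * h3
    norm_num at this)
  have hle : orderOf S.τ ≤ 6 := Nat.le_of_dvd (by norm_num) hd
  have h2 : ¬ orderOf S.τ ∣ 2 := fun h => h2' (orderOf_dvd_iff_pow_eq_one.1 h)
  have h3 : ¬ orderOf S.τ ∣ 3 := fun h => h3' (orderOf_dvd_iff_pow_eq_one.1 h)
  interval_cases orderOf S.τ <;> simp_all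

lemma τ_pow_six [IsGalois F H] : S.τ ^ 6 = 1 := by rw [← S.orderOf_τ]; exact pow_orderOf_eq_one _

lemma exists_pow_τ [IsGalois F H] (g : H ≃ₐ[F] H) : ∃ i < 6, g = S.τ ^ i := by
  classical
  have hz : Subgroup.zpowers S.τ = ⊤ := by
    apply Subgroup.eq_top_of_card_eq
    rw [Nat.card_zpowers, orderOf_τ, IsGalois.card_aut_eq_finrank, S.hH]
  have : g ∈ Subgroup.zpowers S.τ := by rw [hz]; trivial
  obtain ⟨i, hi, h⟩ := (isOfFinOrder_of_finite S.τ).mem_zpowers_iff_mem_range_orderOf.1 this |>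
    Finset.mem_image.1
  rw [S.orderOf_τ, Finset.mem_range] at hi
  exact ⟨i, hi, h.symm⟩

lemma linearIndependent_w : LinearIndependent ℚ ![(1 : F), S.w] := by
  rw [LinearIndependent.pair_iff]
  intro a b h
  have hb : b = 0 := by
    by_contra hb
    have hwr : S.w = ((-a / b : ℚ) : F) := by
      rw [Algebra.smul_def, Algebra.smul_def, mul_one] at h
      have hb' : ((b : ℚ) : F) ≠ 0 := by exact_mod_cast hb
      simp only [eq_ratCast] at h
      push_cast
      rw [eq_div_iff hb']; linear_combination h
    have := S.hw
    rw [hwr] at this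
    have h' : (-a / b : ℚ) ^ 2 + (-a / b) + 1 = 0 := by exact_mod_cast this
    nlinarith [sq_nonneg (2 * (-a / b) + 1)]
  subst hb
  simpa using h

/-- The basis `1, ω` of `F`. -/
noncomputable def basisF : Module.Basis (Fin 2) ℚ F :=
  basisOfLinearIndependentOfCardEqFinrank S.linearIndependent_w (by simp [S.hF])

lemma basisF_apply (i : Fin 2) : S.basisF i = ![(1 : F), S.w] i := by
  simp [basisF]

lemma leftMul (x y : ℚ) : Algebra.leftMulMatrix S.basisF (x + y * S.w) = !![x, -y; y, x - y] := by
  have h0 : S.basisF.repr (x + y * S.w) = Finsupp.equivFunOnFinite.symm ![x, y] := by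
    rw [← S.basisF.repr.apply_symm_apply (Finsupp.equivFunOnFinite.symm ![x, y])]
    congr 1
    rw [Module.Basis.repr_symm_apply, Finsupp.linearCombination_apply, Finsupp.sum_fintype _ _ (by simp)]
    simp [basisF_apply, Algebra.smul_def]
  have h1 : S.basisF.repr ((x + y * S.w) * S.w) = Finsupp.equivFunOnFinite.symm ![-y, x - y] := by
    rw [← S.basisF.repr.apply_symm_apply (Finsupp.equivFunOnFinite.symm ![-y, x - y])]
    congr 1
    rw [Module.Basis.repr_symm_apply, Finsupp.linearCombination_apply, Finsupp.sum_fintype _ _ (by simp)]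
    simp [basisF_apply, Algebra.smul_def]
    linear_combination y * S.hw
  ext i j
  rw [Algebra.leftMulMatrix_eq_repr_mul]
  fin_cases j <;> simp [basisF_apply, h0, h1] <;> fin_cases i <;> simp

lemma norm_F (x y : ℚ) : Algebra.norm ℚ (x + y * S.w : F) = x ^ 2 - x * y + y ^ 2 := by
  rw [Algebra.norm_eq_matrix_det S.basisF, leftMul, Matrix.det_fin_two_of]; ring

lemma trace_F (x y : ℚ) : Algebra.trace ℚ F (x + y * S.w : F) = 2 * x - y := by
  rw [Algebra.trace_eq_matrix_trace S.basisF, leftMul, Matrix.trace_fin_two_of]; ring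

lemma finrank_H (S : Setup F H) : Module.finrank ℚ H = 12 := by
  rw [← Module.finrank_mul_finrank ℚ F H, S.hF, S.hH]

lemma trace_eig {c : F} (hc : c ≠ 1) {e : H} (h : S.τ e = algebraMap F H c * e) (a : F) :
    Algebra.trace F H (algebraMap F H a * e) = 0 := by
  have h1 := Algebra.trace_eq_of_algEquiv S.τ e
  rw [h, ← Algebra.smul_def, map_smul, smul_eq_mul] at h1
  have : Algebra.trace F H e = 0 := by
    have h2 : (c - 1) * Algebra.trace F H e = 0 := by linear_combination h1
    exact (mul_eq_zero.1 h2).resolve_left (sub_ne_zero.2 hc)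
  rw [← Algebra.smul_def, map_smul, this, smul_zero]

end Setup

end

section
open Polynomial WithZero NumberField

lemma isIntegral_of_quadratic {H : Type*} [Field H] [NumberField H] {a b x : H}
    (ha : IsIntegral ℤ a) (hb : IsIntegral ℤ b) (h : x ^ 2 = a * x + b) : IsIntegral ℤ x := by
  have h1 : IsIntegral (𝓞 H) x := by
    let a' : 𝓞 H := ⟨a, ha⟩
    let b' : 𝓞 H := ⟨b, hb⟩
    have e1 : algebraMap (𝓞 H) H a' = a := rfl
    have e2 : algebraMap (𝓞 H) H b' = b := rfl
    clear_value a' b'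
    refine ⟨X ^ 2 - C a' * X - C b', by monicity!, ?_⟩
    simp only [eval₂_sub, eval₂_mul, eval₂_pow, eval₂_X, eval₂_C, e1, e2]
    rw [h]; ring
  exact isIntegral_trans x h1

namespace Setup
variable {F H : Type*} [Field F] [NumberField F] [Field H] [NumberField H] [Algebra F H]
  (S : Setup F H)

lemma isIntegral_ω : IsIntegral ℤ S.ω := by
  refine isIntegral_of_quadratic (a := -1) (b := -1) isIntegral_one.neg isIntegral_one.neg ?_
  linear_combination S.hω

lemma isIntegral_int (n : ℤ) : IsIntegral ℤ (n : H) := isIntegral_algebraMap (x := n)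

lemma isIntegral_lin (a b : ℤ) : IsIntegral ℤ (a + b * S.ω) :=
  (isIntegral_int a).add ((isIntegral_int b).mul S.isIntegral_ω)

lemma isIntegral_μ : IsIntegral ℤ (1 - S.ω) := isIntegral_one.sub S.isIntegral_ω

lemma isIntegral_ρ : IsIntegral ℤ (2 + 3 * S.ω) := by
  have := S.isIntegral_lin 2 3
  push_cast at this; exact this

lemma algebraMap_w : algebraMap F H S.w = S.ω := rfl

lemma isIntegral_t : IsIntegral ℤ S.t := by
  refine IsIntegral.of_pow (n := 6) (by norm_num) ?_
  rw [S.ht']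
  exact (S.isIntegral_ω.mul S.isIntegral_μ).mul (S.isIntegral_ρ.pow 5)

lemma isIntegral_e₂ : IsIntegral ℤ S.e₂ := by
  refine IsIntegral.of_pow (n := 3) (by norm_num) ?_
  have : S.e₂ ^ 3 = S.ω * (1 - S.ω) * (2 + 3 * S.ω) ^ 2 := by
    linear_combination S.e₂ * S.sextic.h22 + (2 + 3 * S.ω) * S.sextic.h24
  rw [this]
  exact (S.isIntegral_ω.mul S.isIntegral_μ).mul (S.isIntegral_ρ.pow 2)

lemma isIntegral_e₄ : IsIntegral ℤ S.e₄ := by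
  refine IsIntegral.of_pow (n := 3) (by norm_num) ?_
  have : S.e₄ ^ 3 = S.ω ^ 2 * (1 - S.ω) ^ 2 * (2 + 3 * S.ω) := by
    linear_combination S.e₄ * S.sextic.h44 + S.ω * (1 - S.ω) * S.sextic.h24
  rw [this]
  exact ((S.isIntegral_ω.pow 2).mul (S.isIntegral_μ.pow 2)).mul S.isIntegral_ρ

/-- `(1 + e₃)/2` -/
def h₃ : H := (1 + S.e₃) / 2
/-- `(ω e₄ + e₁)/2` -/
def h₁ : H := (S.ω * S.e₄ + S.t) / 2
/-- `(ω² e₂ + e₅)/2` -/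
def h₅ : H := (S.ω ^ 2 * S.e₂ + S.e₅) / 2

lemma isIntegral_h₃ : IsIntegral ℤ S.h₃ := by
  refine isIntegral_of_quadratic (a := 1) (b := (1 : ℤ) + (1 : ℤ) * S.ω) isIntegral_one
    (S.isIntegral_lin 1 1) ?_
  rw [h₃]; push_cast; have := S.hω; have := S.sextic.h33; grind

lemma isIntegral_h₁ : IsIntegral ℤ S.h₁ := by
  refine isIntegral_of_quadratic (a := S.ω * S.e₄) (b := -S.e₂)
    (S.isIntegral_ω.mul S.isIntegral_e₄) S.isIntegral_e₂.neg ?_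
  rw [h₁]; have := S.hω; have := S.sextic.h44; have := S.sextic.h11; grind

lemma isIntegral_h₅ : IsIntegral ℤ S.h₅ := by
  refine isIntegral_of_quadratic (a := S.ω ^ 2 * S.e₂) (b := S.e₄)
    ((S.isIntegral_ω.pow 2).mul S.isIntegral_e₂) S.isIntegral_e₄ ?_
  rw [h₅]; have := S.hω; have := S.sextic.h22; have := S.sextic.h55; grind

lemma isIntegral_e₃ : IsIntegral ℤ S.e₃ := by
  have := (isIntegral_int 2).mul S.isIntegral_h₃ |>.sub isIntegral_one
  rwa [h₃, show ((2 : ℤ) : H) * ((1 + S.e₃) / 2) - 1 = S.e₃ by push_cast; ring] at this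

lemma isIntegral_e₅ : IsIntegral ℤ S.e₅ := by
  have := (isIntegral_int 2).mul S.isIntegral_h₅ |>.sub ((S.isIntegral_ω.pow 2).mul S.isIntegral_e₂)
  rwa [h₅, show ((2 : ℤ) : H) * ((S.ω ^ 2 * S.e₂ + S.e₅) / 2) - S.ω ^ 2 * S.e₂ = S.e₅ by
    push_cast; ring] at this

/-- `1, e₁, …, e₅`, the eigenvectors of `τ`. -/
def e : Fin 6 → H := ![1, S.t, S.e₂, S.e₃, S.e₄, S.e₅]

/-- The eigenvalues of `τ`. -/
def eig (i : Fin 6) : F := (-S.w ^ 2) ^ (i : ℕ)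

lemma w_cube : S.w ^ 3 = 1 := omega_cube S.hw

lemma τ_e (i : Fin 6) : S.τ (S.e i) = algebraMap F H (S.eig i) * S.e i := by
  have h3 := omega_cube S.hω
  fin_cases i <;> simp only [e, eig, map_pow, map_neg, algebraMap_w, Fin.reduceFinMk] <;>
    simp [τ_t, τ_e₂, τ_e₃, τ_e₄, τ_e₅, -mul_eq_mul_right_iff] <;> grind

lemma orderOf_eig : orderOf (-S.w ^ 2) = 6 := by
  have h3 := S.w_cube
  have hw := S.hw
  refine orderOf_eq_of_pow_and_pow_div_prime (by norm_num) (by linear_combination (S.w^9+S.w^6+S.w^3+1)*h3) ?_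
  intro p hp hd
  have : p = 2 ∨ p = 3 := by
    have := Nat.le_of_dvd (by norm_num) hd
    interval_cases p <;> revert hp hd <;> decide
  have h20 : (2 : F) ≠ 0 := two_ne_zero
  have h1 : 1 - S.w ≠ 0 := omega_ne_one hw
  rcases this with rfl | rfl
  · intro h
    exact h20 (by norm_num at h; grind)
  · intro h
    exact h1 (by rw [show 6 / 3 = 2 by norm_num] at h; grind)

lemma eig_mul_ne_one {i j : Fin 6} (h : i + j ≠ 0) : S.eig i * S.eig j ≠ 1 := by
  rw [eig, eig, ← pow_add]
  intro h1
  have := orderOf_dvd_of_pow_eq_one h1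
  rw [orderOf_eig] at this
  clear h1
  revert i j
  decide

/-- The coordinate of `eᵢ e₋ᵢ` at `1` in the basis `1, ω`. -/
def cx : Fin 6 → ℚ := ![1, -4, -4, 5, -4, -4]
/-- The coordinate of `eᵢ e₋ᵢ` at `ω`; see `cx`. -/
def cy : Fin 6 → ℚ := ![0, 1, 1, 4, 1, 1]

lemma e_mul_e (i : Fin 6) : S.e i * S.e (-i) = algebraMap F H (cx i + cy i * S.w) := by
  have h3 := omega_cube S.hω
  have hw := S.hω
  have h15 := S.sextic.h15
  have h24 := S.sextic.h24
  have h33 := S.sextic.h33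
  have h4 : algebraMap F H 4 = 4 := map_ofNat _ 4
  have h5 : algebraMap F H 5 = 5 := map_ofNat _ 5
  fin_cases i <;>
    simp [e, cx, cy, algebraMap_w, -neg_add_rev] <;> grind

lemma trace_block (x y : ℚ) (a b : Fin 2) :
    Algebra.trace ℚ F ((x + y * S.w) * S.w ^ (a : ℕ) * S.w ^ (b : ℕ)) =
      !![2 * x - y, -x - y; -x - y, 2 * y - x] a b := by
  have hw := S.hw
  have h0 := S.trace_F x y
  have h1 : Algebra.trace ℚ F ((x + y * S.w) * S.w) = -x - y := by
    rw [show (x + y * S.w) * S.w = ((-y : ℚ) : F) + ((x - y : ℚ) : F) * S.w by push_cast; grind,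
      trace_F]; ring
  have h2 : Algebra.trace ℚ F ((x + y * S.w) * S.w * S.w) = 2 * y - x := by
    rw [show (x + y * S.w) * S.w * S.w = ((y - x : ℚ) : F) + ((- x : ℚ) : F) * S.w by
      push_cast; grind, trace_F]; ring
  fin_cases a <;> fin_cases b <;> simp [h0, h1, h2]

/-- The family `ωᵃ eᵢ`. -/
def efam (p : Fin 2 × Fin 6) : H := S.ω ^ (p.1 : ℕ) * S.e p.2

lemma trace_efam (p q : Fin 2 × Fin 6) : Algebra.trace ℚ H (S.efam p * S.efam q) =
    Matrix.blockDiagonal (fun i => (6 : ℚ) • !![2 * cx i - cy i, -cx i - cy i;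
      -cx i - cy i, 2 * cy i - cx i]) p (q.1, -q.2) := by
  obtain ⟨a, i⟩ := p
  obtain ⟨b, j⟩ := q
  rw [Matrix.blockDiagonal_apply, ← Algebra.trace_trace (S := F)]
  simp only [efam]
  have e1 : S.ω ^ (a : ℕ) * S.e i * (S.ω ^ (b : ℕ) * S.e j) =
      algebraMap F H (S.w ^ (a : ℕ) * S.w ^ (b : ℕ)) * (S.e i * S.e j) := by
    rw [map_mul, map_pow, map_pow, ← ω]; ring
  split_ifs with h
  · have hj : j = -i := by rw [h, neg_neg]
    rw [e1, hj, e_mul_e, ← map_mul, Algebra.trace_algebraMap, S.hH, map_nsmul,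
      Matrix.smul_apply, ← S.trace_block, nsmul_eq_mul, smul_eq_mul]
    congr 2; ring
  · have hij : i + j ≠ 0 := fun h' => h (eq_neg_of_add_eq_zero_left h')
    rw [e1, S.trace_eig (S.eig_mul_ne_one hij), map_zero]
    rw [map_mul, τ_e, τ_e, map_mul]; ring

lemma discr_efam : |Algebra.discr ℚ S.efam| = 2 ^ 12 * 3 ^ 23 * 7 ^ 5 := by
  have : Algebra.traceMatrix ℚ S.efam = (Matrix.blockDiagonal (fun i => (6 : ℚ) •
      !![2 * cx i - cy i, -cx i - cy i; -cx i - cy i, 2 * cy i - cx i])).submatrix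
      (Equiv.refl _) (Equiv.prodCongr (Equiv.refl _) (Equiv.neg (Fin 6))) := by
    ext p q
    rw [Algebra.traceMatrix_apply, Algebra.traceForm_apply, trace_efam]; rfl
  rw [Algebra.discr_def, this, Matrix.abs_det_submatrix_equiv_equiv, Matrix.det_blockDiagonal]
  simp only [Matrix.det_smul, Matrix.det_fin_two_of, Fintype.card_fin, Fin.prod_univ_six]
  simp [cx, cy]
  norm_num

/-- The order `1, e₂, e₄, e₃, e₁, e₅` in which the transition to the family `hfam` is
triangular. -/
def ord (n : Fin 12) : Fin 2 × Fin 6 :=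
  ![(0, 0), (1, 0), (0, 2), (1, 2), (0, 4), (1, 4), (0, 3), (1, 3), (0, 1), (1, 1), (0, 5), (1, 5)] n

/-- The twelve integers `ωᵃ hᵢ`. -/
def hfam : Fin 12 → H := ![1, S.ω, S.e₂, S.ω * S.e₂, S.e₄, S.ω * S.e₄, S.h₃, S.ω * S.h₃, S.h₁,
  S.ω * S.h₁, S.h₅, S.ω * S.h₅]

/-- The entries of the transition matrix from `hfam` to `efam`. -/
def Qent : Fin 12 → Fin 12 → ℤ :=
  ![![1,0,0,0,0,0,0,0,0,0,0,0], ![0,1,0,0,0,0,0,0,0,0,0,0],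
    ![0,0,1,0,0,0,0,0,0,0,0,0], ![0,0,0,1,0,0,0,0,0,0,0,0],
    ![0,0,0,0,1,0,0,0,0,0,0,0], ![0,0,0,0,0,1,0,0,0,0,0,0],
    ![-1,0,0,0,0,0,2,0,0,0,0,0], ![0,-1,0,0,0,0,0,2,0,0,0,0],
    ![0,0,0,0,0,-1,0,0,2,0,0,0], ![0,0,0,0,1,1,0,0,0,2,0,0],
    ![0,0,1,1,0,0,0,0,0,0,2,0], ![0,0,-1,0,0,0,0,0,0,0,0,2]]

/-- The transition matrix from `hfam` to `efam`. -/
def Q : Matrix (Fin 12) (Fin 12) ℤ := Matrix.of Qent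

lemma det_Q : Q.det = 2 ^ 6 := by
  rw [Matrix.det_of_isLowerTriangular Q (by
    intro i j h
    have h' : i < j := h
    have key : ∀ i j : Fin 12, Qent i j = (0 : ℤ) ∨ j.val ≤ i.val := by decide
    exact (key i j).resolve_right (not_le.2 h'))]
  change ∏ i, Qent i i = 2 ^ 6
  decide

lemma efam_eq (n : Fin 12) : S.efam (ord n) = ∑ j, (Q n j : H) * S.hfam j := by
  have hw := S.hω
  rw [Fin.sum_univ_castSucc]
  simp only [Fin.sum_univ_succ]
  fin_cases n <;> simp [ord, efam, e, Q, Qent, hfam, h₃, h₁, h₅, -neg_add_rev] <;> grind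

lemma isIntegral_hfam (n : Fin 12) : IsIntegral ℤ (S.hfam n) := by
  have h := S.isIntegral_ω
  fin_cases n
  exacts [isIntegral_one, h, S.isIntegral_e₂, h.mul S.isIntegral_e₂, S.isIntegral_e₄,
    h.mul S.isIntegral_e₄, S.isIntegral_h₃, h.mul S.isIntegral_h₃, S.isIntegral_h₁,
    h.mul S.isIntegral_h₁, S.isIntegral_h₅, h.mul S.isIntegral_h₅]

lemma ord_bijective : Function.Bijective ord := by decide

lemma discr_reindex' {ι ι' : Type*} [Fintype ι] [DecidableEq ι] [Fintype ι'] [DecidableEq ι']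
    (b : ι → H) (f : ι' ≃ ι) : Algebra.discr ℚ (b ∘ f) = Algebra.discr ℚ b := by
  rw [Algebra.discr_def, Algebra.discr_def, ← Matrix.det_submatrix_equiv_self f]
  rfl

lemma discr_le (S : Setup F H) : |discr H| ≤ 3 ^ 23 * 7 ^ 5 := by
  have h1 := S.discr_efam
  rw [← discr_reindex' S.efam (Equiv.ofBijective ord ord_bijective)] at h1
  have h2 : S.efam ∘ (Equiv.ofBijective ord ord_bijective) =
      ((Q.map (Int.cast : ℤ → ℚ)).map (algebraMap ℚ H)).mulVec S.hfam := by
    ext n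
    simp only [Function.comp, Equiv.ofBijective_apply, efam_eq, Matrix.mulVec, dotProduct]
    simp
  have hcard : Fintype.card (Module.Free.ChooseBasisIndex ℤ (𝓞 H)) = Fintype.card (Fin 12) := by
    rw [← Module.finrank_eq_card_chooseBasisIndex, RingOfIntegers.rank, S.finrank_H,
      Fintype.card_fin]
  let f := Fintype.equivOfCardEq hcard
  let b := (integralBasis H).reindex f
  have hb : (discr H : ℚ) = Algebra.discr ℚ b := by
    rw [coe_discr, ← Algebra.discr_reindex ℚ (integralBasis H) f]
    simp [b]
  let P : Matrix (Fin 12) (Fin 12) ℤ := fun i j =>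
    (RingOfIntegers.basis H).repr ⟨S.hfam i, S.isIntegral_hfam i⟩ (f.symm j)
  have h3 : S.hfam = ((P.map (Int.cast : ℤ → ℚ)).map (algebraMap ℚ H)).mulVec b := by
    ext n
    simp only [Matrix.mulVec, dotProduct]
    have := congrArg (algebraMap (𝓞 H) H)
      ((RingOfIntegers.basis H).sum_repr ⟨S.hfam n, S.isIntegral_hfam n⟩)
    rw [map_sum] at this
    rw [← Equiv.sum_comp f]
    refine this.symm.trans (Finset.sum_congr rfl fun i _ => ?_)
    have e1 : (P.map (Int.cast : ℤ → ℚ)).map (algebraMap ℚ H) n (f i) =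
        ((RingOfIntegers.basis H).repr ⟨S.hfam n, S.isIntegral_hfam n⟩ i : H) := by
      have : P n (f i) = (RingOfIntegers.basis H).repr ⟨S.hfam n, S.isIntegral_hfam n⟩ i := by
        simp only [P, Equiv.symm_apply_apply]
      rw [Matrix.map_apply, Matrix.map_apply, this]; simp
    rw [e1]
    simp [b, integralBasis_apply]
  rw [h2, Algebra.discr_of_matrix_mulVec, h3, Algebra.discr_of_matrix_mulVec, ← hb,
    show (Q.map (Int.cast : ℤ → ℚ)).det = ((Q.det : ℤ) : ℚ) from
      (RingHom.map_det (Int.castRingHom ℚ) Q).symm,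
    show (P.map (Int.cast : ℤ → ℚ)).det = ((P.det : ℤ) : ℚ) from
      (RingHom.map_det (Int.castRingHom ℚ) P).symm, det_Q] at h1
  have h4 : |(2 ^ 6) ^ 2 * (P.det ^ 2 * discr H)| = 2 ^ 12 * 3 ^ 23 * 7 ^ 5 := by exact_mod_cast h1
  rw [abs_mul, abs_mul, abs_of_nonneg (sq_nonneg P.det)] at h4
  have h5 : P.det ^ 2 * |discr H| = 3 ^ 23 * 7 ^ 5 := by norm_num at h4 ⊢; linarith
  have h6 : P.det ≠ 0 := by
    intro h; rw [h] at h5; norm_num at h5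
  have h7 : 1 ≤ P.det ^ 2 := by have := pow_pos (abs_pos.2 h6) 2; rw [sq_abs] at this; omega
  nlinarith [abs_nonneg (discr H)]

end Setup

end

/-! ### Relations in the class group -/

section
open Polynomial WithZero NumberField
open scoped Pointwise nonZeroDivisors

section IdealClass
variable {R : Type*} [CommRing R] [IsDedekindDomain R]

open scoped Classical in
/-- The class of a nonzero ideal (and `1` for the zero ideal). -/
noncomputable def cl (I : Ideal R) : ClassGroup R :=
  if h : I = ⊥ then 1 else ClassGroup.mk0 ⟨I, mem_nonZeroDivisors_iff_ne_zero.2 h⟩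

lemma cl_of_ne {I : Ideal R} (h : I ≠ ⊥) :
    cl I = ClassGroup.mk0 ⟨I, mem_nonZeroDivisors_iff_ne_zero.2 h⟩ := dif_neg h

lemma cl_mul {I J : Ideal R} (hI : I ≠ ⊥) (hJ : J ≠ ⊥) : cl (I * J) = cl I * cl J := by
  have h : I * J ≠ ⊥ := mul_ne_zero hI hJ
  rw [cl_of_ne hI, cl_of_ne hJ, cl_of_ne h, ← map_mul]; rfl

lemma cl_span (x : R) : cl (Ideal.span {x}) = 1 := by
  by_cases h : Ideal.span {x} = ⊥
  · rw [cl, dif_pos h]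
  · rw [cl_of_ne h, ClassGroup.mk0_eq_one_iff]
    exact ⟨⟨x, rfl⟩⟩

lemma cl_eq_one_iff {I : Ideal R} (h : I ≠ ⊥) : cl I = 1 ↔ ∃ x, I = Ideal.span {x} := by
  refine ⟨fun h1 => ?_, ?_⟩
  · rw [cl_of_ne h, ClassGroup.mk0_eq_one_iff] at h1
    obtain ⟨⟨x, hx⟩⟩ := h1
    exact ⟨x, hx⟩
  · rintro ⟨x, rfl⟩; exact cl_span x

lemma cl_pow {I : Ideal R} (hI : I ≠ ⊥) (n : ℕ) : cl (I ^ n) = cl I ^ n := by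
  induction n with
  | zero => rw [pow_zero, pow_zero, Ideal.one_eq_top, ← Ideal.span_singleton_one, cl_span]
  | succ n ih => rw [pow_succ, pow_succ, cl_mul (pow_ne_zero n hI) hI, ih]

end IdealClass

section Gal
variable {F H : Type*} [Field F] [NumberField F] [Field H] [NumberField H] [Algebra F H]

lemma smul_span (g : H ≃ₐ[F] H) (x : 𝓞 H) : g • Ideal.span {x} = Ideal.span {g • x} := by
  rw [Ideal.pointwise_smul_def, Ideal.map_span, Set.image_singleton]; rfl

lemma smul_mul_ideal (g : H ≃ₐ[F] H) (I J : Ideal (𝓞 H)) : g • (I * J) = g • I * g • J := by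
  simp only [Ideal.pointwise_smul_def, Ideal.map_mul]

lemma smul_pow_ideal (g : H ≃ₐ[F] H) (I : Ideal (𝓞 H)) (n : ℕ) : g • (I ^ n) = (g • I) ^ n := by
  simp only [Ideal.pointwise_smul_def, Ideal.map_pow]

lemma smul_bot_ideal (g : H ≃ₐ[F] H) : g • (⊥ : Ideal (𝓞 H)) = ⊥ := by
  simp only [Ideal.pointwise_smul_def, Ideal.map_bot]

lemma smul_ne_bot (g : H ≃ₐ[F] H) {I : Ideal (𝓞 H)} (h : I ≠ ⊥) : g • I ≠ ⊥ := by
  intro h'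
  exact h (smul_left_cancel g (h'.trans (smul_bot_ideal g).symm))

lemma cl_smul_eq (g : H ≃ₐ[F] H) {I J : Ideal (𝓞 H)} (hI : I ≠ ⊥) (hJ : J ≠ ⊥) (h : cl I = cl J) :
    cl (g • I) = cl (g • J) := by
  rw [cl_of_ne hI, cl_of_ne hJ, ClassGroup.mk0_eq_mk0_iff] at h
  obtain ⟨x, y, hx, hy, h⟩ := h
  have h' := congrArg (g • ·) h
  simp only [smul_mul_ideal, smul_span] at h'
  have hs : ∀ z : 𝓞 H, z ≠ 0 → Ideal.span {g • z} ≠ ⊥ := by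
    intro z hz
    rw [← smul_span]
    exact smul_ne_bot g (by simpa using hz)
  have := congrArg cl h'
  rwa [cl_mul (hs x hx) (smul_ne_bot g hI), cl_mul (hs y hy) (smul_ne_bot g hJ), cl_span, cl_span,
    one_mul, one_mul] at this

end Gal

namespace Setup
variable {F H : Type*} [Field F] [NumberField F] [Field H] [NumberField H] [Algebra F H]
  (S : Setup F H)

lemma nrRealPlaces (S : Setup F H) : InfinitePlace.nrRealPlaces H = 0 := by
  rw [nrRealPlaces_eq_zero_iff, isTotallyComplex_iff]
  intro v
  rw [← InfinitePlace.not_isReal_iff_isComplex]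
  intro hv
  have h := congrArg (InfinitePlace.embedding_of_isReal hv) S.hω
  simp only [map_add, map_pow, map_one, map_zero] at h
  nlinarith [sq_nonneg (2 * (InfinitePlace.embedding_of_isReal hv) S.ω + 1)]

lemma nrComplexPlaces (S : Setup F H) : InfinitePlace.nrComplexPlaces H = 6 := by
  have := InfinitePlace.card_add_two_mul_card_eq_rank H
  rw [S.nrRealPlaces, S.finrank_H] at this
  omega

lemma minkowski (S : Setup F H) (C : ClassGroup (𝓞 H)) :
    ∃ I : Ideal (𝓞 H), I ≠ ⊥ ∧ cl I = C ∧ Ideal.absNorm I ≤ 9107 := by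
  obtain ⟨I, hI, hle⟩ := exists_ideal_in_class_of_norm_le C
  have hne : (I : Ideal (𝓞 H)) ≠ ⊥ := nonZeroDivisors.coe_ne_zero I
  refine ⟨I, hne, by rw [cl_of_ne hne, ← hI], ?_⟩
  rw [S.nrComplexPlaces, S.finrank_H] at hle
  have h1 : 4 / Real.pi ≤ 1.2733 := by
    rw [div_le_iff₀ Real.pi_pos]
    nlinarith [Real.pi_gt_d4]
  have h2 : √(|(discr H : ℤ)| : ℝ) ≤ 39779000 := by
    apply Real.sqrt_le_iff.2 ⟨by norm_num, ?_⟩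
    have := S.discr_le
    have h3 : ((|discr H| : ℤ) : ℝ) ≤ 3 ^ 23 * 7 ^ 5 := by exact_mod_cast this
    push_cast at h3
    exact h3.trans (by norm_num)
  have h4 : (4 / Real.pi) ^ 6 ≤ 1.2733 ^ 6 :=
    pow_le_pow_left₀ (div_nonneg (by norm_num) Real.pi_pos.le) h1 6
  have h5 : ((Nat.factorial 12 : ℕ) : ℝ) / ((12 : ℕ) : ℝ) ^ 12 = 479001600 / 8916100448256 := by
    norm_num [Nat.factorial]
  rw [h5] at hle
  have h6 : (4 / Real.pi) ^ 6 * ((479001600 : ℝ) / 8916100448256 * √|(discr H : ℝ)|) ≤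
      1.2733 ^ 6 * ((479001600 : ℝ) / 8916100448256 * 39779000) := by
    gcongr
  have h7 : (Ideal.absNorm (I : Ideal (𝓞 H)) : ℝ) < 9108 := by
    refine lt_of_le_of_lt (hle.trans h6) ?_
    norm_num
  have : Ideal.absNorm (I : Ideal (𝓞 H)) < 9108 := by exact_mod_cast h7
  omega

/-- A relation between the classes of the conjugates of an ideal which holds for every ideal once
it holds for prime ideals of small norm. -/
def Rel (I : Ideal (𝓞 H)) : Prop :=
  cl I ^ 2 * cl (S.τ • I) * cl (S.τ ^ 5 • I) =
    cl (S.τ ^ 2 • I) * cl (S.τ ^ 3 • I) ^ 2 * cl (S.τ ^ 4 • I)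

lemma Rel.mul {I J : Ideal (𝓞 H)} (hI : I ≠ ⊥) (hJ : J ≠ ⊥) (h1 : S.Rel I) (h2 : S.Rel J) :
    S.Rel (I * J) := by
  have hs : ∀ g : H ≃ₐ[F] H, cl (g • (I * J)) = cl (g • I) * cl (g • J) := fun g => by
    rw [smul_mul_ideal, cl_mul (smul_ne_bot g hI) (smul_ne_bot g hJ)]
  rw [Rel] at h1 h2 ⊢
  rw [hs, hs, hs, hs, hs, cl_mul hI hJ]
  calc _ = (cl I ^ 2 * cl (S.τ • I) * cl (S.τ ^ 5 • I)) *
      (cl J ^ 2 * cl (S.τ • J) * cl (S.τ ^ 5 • J)) := by simp only [mul_pow]; ac_rfl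
    _ = _ := by rw [h1, h2]; simp only [mul_pow]; ac_rfl

lemma Rel.span (x : 𝓞 H) : S.Rel (Ideal.span {x}) := by
  simp only [Rel, smul_span, cl_span, one_pow, one_mul]

lemma Rel.of_two [IsGalois F H] {I : Ideal (𝓞 H)} (h : S.τ ^ 2 • I = I) : S.Rel I := by
  have h3 : S.τ ^ 3 • I = S.τ • I := by rw [pow_succ', mul_smul, h]
  have h4 : S.τ ^ 4 • I = I := by rw [show S.τ ^ 4 = S.τ ^ 2 * S.τ ^ 2 from pow_add _ 2 2, mul_smul, h, h]
  have h5 : S.τ ^ 5 • I = S.τ • I := by rw [pow_succ', mul_smul, h4]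
  rw [Rel, h, h3, h4, h5, sq, sq]; ac_rfl

lemma Rel.of_three [IsGalois F H] {I : Ideal (𝓞 H)} (h : S.τ ^ 3 • I = I) : S.Rel I := by
  have h4 : S.τ ^ 4 • I = S.τ • I := by rw [pow_succ', mul_smul, h]
  have h5 : S.τ ^ 5 • I = S.τ ^ 2 • I := by
    rw [show S.τ ^ 5 = S.τ ^ 2 * S.τ ^ 3 from pow_add _ 2 3, mul_smul, h]
  rw [Rel, h, h4, h5]; ac_rfl

lemma rel_all [IsGalois F H] (hQ : ∀ Q : Ideal (𝓞 H), Q.IsPrime → Q ≠ ⊥ → Ideal.absNorm Q ≤ 9107 →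
    S.τ ^ 2 • Q = Q ∨ S.τ ^ 3 • Q = Q ∨ ∃ α, Q = Ideal.span {α}) (I : Ideal (𝓞 H)) (hI : I ≠ ⊥) :
    S.Rel I := by
  obtain ⟨J, hJ, hc, hn⟩ := S.minkowski (cl I)
  have hsm : ∀ J : Ideal (𝓞 H), J ≠ ⊥ → Ideal.absNorm J ≤ 9107 → S.Rel J := by
    intro J
    refine UniqueFactorizationMonoid.induction_on_prime J (fun h => absurd rfl h) ?_ ?_
    · intro u hu _ _
      rw [Ideal.isUnit_iff.1 hu, ← Ideal.span_singleton_one]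
      exact Rel.span S 1
    · intro a p ha hp ih h0 hn
      have hp0 : p ≠ ⊥ := hp.ne_zero
      have hpos : ∀ K : Ideal (𝓞 H), K ≠ ⊥ → 1 ≤ Ideal.absNorm K := fun K hK =>
        Nat.one_le_iff_ne_zero.2 (by rwa [Ne, Ideal.absNorm_eq_zero_iff])
      rw [map_mul] at hn
      have h1 := hpos a ha
      have h2 := hpos p hp0
      refine Rel.mul S hp0 ha ?_ (ih ha (by nlinarith))
      rcases hQ p (Ideal.isPrime_of_prime hp) hp0 (by nlinarith) with h | h | ⟨α, rfl⟩
      · exact Rel.of_two S h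
      · exact Rel.of_three S h
      · exact Rel.span S α
  have h := hsm J hJ hn
  have hs : ∀ g : H ≃ₐ[F] H, cl (g • J) = cl (g • I) := fun g => cl_smul_eq g hJ hI hc
  rw [Rel] at h ⊢
  rwa [hs, hs, hs, hs, hs, hc] at h

lemma principal_of_rel [IsGalois F H] {I : Ideal (𝓞 H)} (hI : I ≠ ⊥) (hr : S.Rel I)
    (h7 : cl I ^ 7 = 1) (h2 : cl (I * S.τ ^ 3 • I) = 1)
    (h3 : cl (I * S.τ ^ 2 • I * S.τ ^ 4 • I) = 1) : ∃ x, I = Ideal.span {x} := by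
  rw [← cl_eq_one_iff hI]
  have hn := fun g : H ≃ₐ[F] H => smul_ne_bot g hI
  have h3' : cl (S.τ • (I * S.τ ^ 2 • I * S.τ ^ 4 • I)) = 1 := by
    rw [cl_smul_eq S.τ (J := Ideal.span {1}) _ _ (by rw [h3, cl_span]), smul_span, cl_span]
    · exact mul_ne_zero (mul_ne_zero hI (hn _)) (hn _)
    · simp
  rw [smul_mul_ideal, smul_mul_ideal, ← mul_smul, ← mul_smul, ← pow_succ', ← pow_succ',
    cl_mul (mul_ne_zero (hn _) (hn _)) (hn _), cl_mul (hn _) (hn _)] at h3'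
  rw [cl_mul (mul_ne_zero hI (hn _)) (hn _), cl_mul hI (hn _)] at h3
  rw [cl_mul hI (hn _)] at h2
  rw [Rel] at hr
  norm_num at h3'
  generalize cl I = a at *
  generalize cl (S.τ • I) = b at *
  generalize cl (S.τ ^ 2 • I) = c at *
  generalize cl (S.τ ^ 3 • I) = d at *
  generalize cl (S.τ ^ 4 • I) = e at *
  generalize cl (S.τ ^ 5 • I) = f at *
  have hd : d = a⁻¹ := eq_inv_of_mul_eq_one_right h2
  have hce : c * e = a⁻¹ := eq_inv_of_mul_eq_one_right (by rw [← mul_assoc, h3])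
  have hbf : b * f = a := by
    have : b * f * d = 1 := by rw [← h3']; ac_rfl
    rw [eq_inv_of_mul_eq_one_left this, hd, inv_inv]
  have h6 : a ^ 6 = 1 := by
    have e1 : a ^ 2 * (b * f) = c * e * d ^ 2 := by rw [← mul_assoc, hr]; ac_rfl
    rw [hbf, hce, hd] at e1
    calc a ^ 6 = a ^ 2 * a * a ^ 3 := by group
      _ = 1 := by rw [e1]; group
  calc a = a ^ 7 * (a ^ 6)⁻¹ := by group
    _ = 1 := by rw [h6, h7]; group

end Setup

end

section
open Polynomial WithZero NumberField
open scoped Pointwise nonZeroDivisors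

/-- Product of Eisenstein integers `a + bω`, represented by pairs `(a, b)`. -/
def pmul (x y : ℤ × ℤ) : ℤ × ℤ := (x.1 * y.1 - x.2 * y.2, x.1 * y.2 + x.2 * y.1 - x.2 * y.2)

/-- Sum of Eisenstein integers represented by pairs. -/
def padd (x y : ℤ × ℤ) : ℤ × ℤ := (x.1 + y.1, x.2 + y.2)

/-- Integer multiple of an Eisenstein integer represented by a pair. -/
def psc (n : ℤ) (x : ℤ × ℤ) : ℤ × ℤ := (n * x.1, n * x.2)

/-- The coordinates `nfX`, `nfY`, `nfZ` computed with pairs from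
`A = 2c₀ + c₃, E = c₄, B = 2c₁ + ω²c₅, D = c₃, C = 2c₂ + ωc₄, G = c₅`. -/
def quadP (A B C D E G : ℤ × ℤ) : (ℤ × ℤ) × (ℤ × ℤ) × (ℤ × ℤ) :=
  (padd (pmul A A) (padd (pmul (-8, 2) (pmul B C))
      (psc (-1) (padd (pmul (5, 4) (pmul D D)) (pmul (-8, 2) (pmul E G))))),
   padd (psc 2 (pmul A B)) (padd (pmul (1, 2) (pmul C C))
      (psc (-1) (padd (pmul (-3, -1) (pmul E E)) (pmul (2, -2) (pmul D G))))),
   padd (psc 2 (pmul A C)) (padd (pmul (2, 3) (pmul B B))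
      (psc (-1) (padd (pmul (1, -1) (pmul G G)) (pmul (4, 6) (pmul E D))))))

/-- `cubicForm` computed with pairs. -/
def cubicP (X Y Z : ℤ × ℤ) : ℤ × ℤ :=
  padd (pmul X (padd (pmul X X) (pmul (12, -3) (pmul Y Z))))
    (padd (pmul (-11, -13) (pmul Y (pmul Y Y))) (pmul (-6, -9) (pmul Z (pmul Z Z))))

/-- `nf` computed with pairs, for an element given by its twelve integral coordinates. -/
def nfP (v : List ℤ) : ℤ × ℤ :=
  match v with
  | [a₀, b₀, a₁, b₁, a₂, b₂, a₃, b₃, a₄, b₄, a₅, b₅] =>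
    match quadP (2 * a₀ + a₃, 2 * b₀ + b₃) (2 * a₁ - a₅ + b₅, 2 * b₁ - a₅) (2 * a₂ - b₄, 2 * b₂ + a₄ - b₄)
      (a₃, b₃) (a₄, b₄) (a₅, b₅) with
    | (X, Y, Z) => cubicP X Y Z
  | _ => (0, 0)

section Pairs
variable {k : Type*} [CommRing k] (w : k)

/-- The Eisenstein integer represented by a pair. -/
def ev (x : ℤ × ℤ) : k := x.1 + x.2 * w

variable {w} (hw : w ^ 2 + w + 1 = 0)

lemma ev_padd (x y : ℤ × ℤ) : ev w (padd x y) = ev w x + ev w y := by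
  simp only [ev, padd]; push_cast; ring

lemma ev_psc (n : ℤ) (x : ℤ × ℤ) : ev w (psc n x) = n * ev w x := by
  simp only [ev, psc]; push_cast; ring

lemma ev_pmul (hw : w ^ 2 + w + 1 = 0) (x y : ℤ × ℤ) : ev w (pmul x y) = ev w x * ev w y := by
  simp only [ev, pmul]; push_cast; linear_combination -((x.2 : k) * y.2) * hw

lemma ev_nfP (hw : w ^ 2 + w + 1 = 0) (a₀ b₀ a₁ b₁ a₂ b₂ a₃ b₃ a₄ b₄ a₅ b₅ : ℤ) :
    ev w (nfP [a₀, b₀, a₁, b₁, a₂, b₂, a₃, b₃, a₄, b₄, a₅, b₅]) =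
      nf w (ev w (a₀, b₀)) (ev w (a₁, b₁)) (ev w (a₂, b₂)) (ev w (a₃, b₃)) (ev w (a₄, b₄))
        (ev w (a₅, b₅)) := by
  have hw2 : w ^ 2 = -1 - w := by linear_combination hw
  have hA : ev w (2 * a₀ + a₃, 2 * b₀ + b₃) = 2 * ev w (a₀, b₀) + ev w (a₃, b₃) := by
    simp only [ev]; push_cast; ring
  have hB : ev w (2 * a₁ - a₅ + b₅, 2 * b₁ - a₅) = 2 * ev w (a₁, b₁) + w ^ 2 * ev w (a₅, b₅) := by
    simp only [ev]; push_cast; linear_combination (-(a₅ : k) - b₅ * w + b₅) * hw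
  have hC : ev w (2 * a₂ - b₄, 2 * b₂ + a₄ - b₄) = 2 * ev w (a₂, b₂) + w * ev w (a₄, b₄) := by
    simp only [ev]; push_cast; linear_combination -(b₄ : k) * hw
  have hq : ∀ A B C D E G : ℤ × ℤ,
      ev w (quadP A B C D E G).1 = ev w A ^ 2 + 2 * w * (1 - w) * (2 + 3 * w) * ev w B * ev w C
        - ((1 - w) * (2 + 3 * w) * ev w D ^ 2 + 2 * w * (1 - w) * (2 + 3 * w) * ev w E * ev w G) ∧
      ev w (quadP A B C D E G).2.1 = 2 * ev w A * ev w B + w * (1 - w) * ev w C ^ 2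
        - (w * (2 + 3 * w) * ev w E ^ 2 + 2 * (1 - w) * ev w D * ev w G) ∧
      ev w (quadP A B C D E G).2.2 = 2 * ev w A * ev w C + (2 + 3 * w) * ev w B ^ 2
        - ((1 - w) * ev w G ^ 2 + 2 * (2 + 3 * w) * ev w E * ev w D) := by
    intro A B C D E G
    simp only [quadP, ev_padd, ev_psc, ev_pmul hw]
    generalize ev w A = A
    generalize ev w B = B
    generalize ev w C = C
    generalize ev w D = D
    generalize ev w E = E
    generalize ev w G = G
    simp only [ev]
    push_cast
    refine ⟨?_, ?_, ?_⟩ <;> grind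
  have hc : ∀ X Y Z : ℤ × ℤ, ev w (cubicP X Y Z) = cubicForm w (ev w X) (ev w Y) (ev w Z) := by
    intro X Y Z
    simp only [cubicP, cubicForm, ev_padd, ev_pmul hw]
    generalize ev w X = X
    generalize ev w Y = Y
    generalize ev w Z = Z
    simp only [ev]
    push_cast
    grind
  have := hq (2 * a₀ + a₃, 2 * b₀ + b₃) (2 * a₁ - a₅ + b₅, 2 * b₁ - a₅) (2 * a₂ - b₄, 2 * b₂ + a₄ - b₄)
      (a₃, b₃) (a₄, b₄) (a₅, b₅)
  rw [hA, hB, hC] at this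
  rw [nfP, nf, hc, this.1, this.2.1, this.2.2, nfX, nfY, nfZ]

end Pairs

namespace Setup
variable {F H : Type*} [Field F] [NumberField F] [Field H] [NumberField H] [Algebra F H]
  (S : Setup F H)

/-- The element of `H` with given coordinates with respect to the integral elements
`1, e₂, e₄, h₃, h₁, h₅`. -/
def elt (v : List ℤ) : H :=
  match v with
  | [a₀, b₀, a₁, b₁, a₂, b₂, a₃, b₃, a₄, b₄, a₅, b₅] =>
    ev S.ω (a₀, b₀) + ev S.ω (a₁, b₁) * S.e₂ + ev S.ω (a₂, b₂) * S.e₄ + ev S.ω (a₃, b₃) * S.h₃ +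
      ev S.ω (a₄, b₄) * S.h₁ + ev S.ω (a₅, b₅) * S.h₅
  | _ => 0

lemma prod_conj (x : H) [IsGalois F H] : algebraMap F H (Algebra.norm F x) =
    x * S.τ x * (S.τ ^ 2) x * (S.τ ^ 3) x * (S.τ ^ 4) x * (S.τ ^ 5) x := by
  rw [Algebra.norm_eq_prod_automorphisms]
  have hb : Function.Bijective (fun i : Fin 6 => S.τ ^ (i : ℕ)) := by
    refine ⟨fun i j h => ?_, fun g => ?_⟩
    · have := pow_injOn_Iio_orderOf (x := S.τ) (x₁ := (i : ℕ)) (x₂ := (j : ℕ))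
        (by simp [S.orderOf_τ]) (by simp [S.orderOf_τ]) h
      exact Fin.ext this
    · obtain ⟨i, hi, h⟩ := S.exists_pow_τ g
      exact ⟨⟨i, hi⟩, h.symm⟩
  rw [← Fintype.prod_bijective _ hb (fun i : Fin 6 => (S.τ ^ (i : ℕ)) x) _ (fun _ => rfl)]
  simp [Fin.prod_univ_succ]
  ring

lemma norm_elt [IsGalois F H] (v : List ℤ) :
    64 * algebraMap F H (Algebra.norm F (S.elt v)) = ev S.ω (nfP v) := by
  unfold elt
  split
  · rename_i a₀ b₀ a₁ b₁ a₂ b₂ a₃ b₃ a₄ b₄ a₅ b₅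
    rw [S.prod_conj, ev_nfP S.hω, ← S.sextic.nf_eq]
    have hev : ∀ x, S.τ (ev S.ω x) = ev S.ω x := fun x => by simp [ev]
    have h3 := omega_cube S.hω
    generalize hc₀ : ev S.ω (a₀, b₀) = c₀
    generalize hc₁ : ev S.ω (a₁, b₁) = c₁
    generalize hc₂ : ev S.ω (a₂, b₂) = c₂
    generalize hc₃ : ev S.ω (a₃, b₃) = c₃
    generalize hc₄ : ev S.ω (a₄, b₄) = c₄
    generalize hc₅ : ev S.ω (a₅, b₅) = c₅
    have hs : ∀ e₁ e₂ e₃ e₄ e₅ x : H, 2 * x = dbl S.ω e₁ e₂ e₃ e₄ e₅ c₀ c₁ c₂ c₃ c₄ c₅ →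
        2 * S.τ x = dbl S.ω (S.τ e₁) (S.τ e₂) (S.τ e₃) (S.τ e₄) (S.τ e₅) c₀ c₁ c₂ c₃ c₄ c₅ := by
      intro e₁ e₂ e₃ e₄ e₅ x hx
      have h := congrArg S.τ hx
      rw [map_mul, map_ofNat] at h
      rw [h, dbl, dbl]
      simp only [map_add, map_mul, map_pow, map_ofNat, τ_ω, ← hc₀, ← hc₁, ← hc₂, ← hc₃, ← hc₄,
        ← hc₅, hev]
    generalize hx : c₀ + c₁ * S.e₂ + c₂ * S.e₄ + c₃ * S.h₃ + c₄ * S.h₁ + c₅ * S.h₅ = x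
    have q0 : 2 * x = dbl S.ω S.t S.e₂ S.e₃ S.e₄ S.e₅ c₀ c₁ c₂ c₃ c₄ c₅ := by
      rw [← hx, dbl, h₁, h₃, h₅]; ring
    have q1 : 2 * S.τ x = dbl S.ω (-S.ω ^ 2 * S.t) (S.ω * S.e₂) (-S.e₃) (S.ω ^ 2 * S.e₄)
        (-S.ω * S.e₅) c₀ c₁ c₂ c₃ c₄ c₅ := by
      rw [hs _ _ _ _ _ _ q0, τ_t, τ_e₂, τ_e₃, τ_e₄, τ_e₅]
    have q2 : 2 * (S.τ ^ 2) x = dbl S.ω (S.ω * S.t) (S.ω ^ 2 * S.e₂) S.e₃ (S.ω * S.e₄)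
        (S.ω ^ 2 * S.e₅) c₀ c₁ c₂ c₃ c₄ c₅ := by
      rw [show (S.τ ^ 2) x = S.τ (S.τ x) from rfl, hs _ _ _ _ _ _ q1]
      simp only [map_mul, map_neg, map_pow, τ_ω, τ_t, τ_e₂, τ_e₃, τ_e₄, τ_e₅]
      congr 1
      · linear_combination S.ω * S.t * h3
      · ring
      · ring
      · linear_combination S.ω * S.e₄ * h3
      · ring
    have q3 : 2 * (S.τ ^ 3) x = dbl S.ω (-S.t) S.e₂ (-S.e₃) S.e₄ (-S.e₅) c₀ c₁ c₂ c₃ c₄ c₅ := by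
      rw [show (S.τ ^ 3) x = S.τ ((S.τ ^ 2) x) from rfl, hs _ _ _ _ _ _ q2]
      simp only [map_mul, map_neg, map_pow, τ_ω, τ_t, τ_e₂, τ_e₃, τ_e₄, τ_e₅]
      congr 1
      · linear_combination -S.t * h3
      · linear_combination S.e₂ * h3
      · linear_combination S.e₄ * h3
      · linear_combination -S.e₅ * h3
    have q4 : 2 * (S.τ ^ 4) x = dbl S.ω (-(-S.ω ^ 2 * S.t)) (S.ω * S.e₂) (-(-S.e₃)) (S.ω ^ 2 * S.e₄)
        (-(-S.ω * S.e₅)) c₀ c₁ c₂ c₃ c₄ c₅ := by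
      rw [show (S.τ ^ 4) x = S.τ ((S.τ ^ 3) x) from rfl, hs _ _ _ _ _ _ q3]
      simp only [map_neg, τ_t, τ_e₂, τ_e₃, τ_e₄, τ_e₅]
    have q5 : 2 * (S.τ ^ 5) x = dbl S.ω (-(S.ω * S.t)) (S.ω ^ 2 * S.e₂) (-S.e₃) (S.ω * S.e₄)
        (-(S.ω ^ 2 * S.e₅)) c₀ c₁ c₂ c₃ c₄ c₅ := by
      rw [show (S.τ ^ 5) x = S.τ ((S.τ ^ 4) x) from rfl, hs _ _ _ _ _ _ q4]
      simp only [map_mul, map_neg, map_pow, τ_ω, τ_t, τ_e₂, τ_e₃, τ_e₄, τ_e₅]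
      congr 1
      · linear_combination -S.ω * S.t * h3
      · ring
      · ring
      · linear_combination S.ω * S.e₄ * h3
      · ring
    rw [← q0, ← q1, ← q2, ← q3, ← q4, ← q5]
    ring
  · simp [ev, nfP, Algebra.norm_zero]

lemma isIntegral_ev (x : ℤ × ℤ) : IsIntegral ℤ (ev S.ω x) := S.isIntegral_lin _ _

lemma isIntegral_elt (v : List ℤ) : IsIntegral ℤ (S.elt v) := by
  have h := S.isIntegral_ev
  unfold elt
  split
  · exact ((((((h _).add ((h _).mul S.isIntegral_e₂)).add ((h _).mul S.isIntegral_e₄)).add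
      ((h _).mul S.isIntegral_h₃)).add ((h _).mul S.isIntegral_h₁)).add ((h _).mul S.isIntegral_h₅))
  · exact isIntegral_zero

lemma norm_elt_rat [IsGalois F H] (v : List ℤ) : 4096 * Algebra.norm ℚ (S.elt v) =
    ((nfP v).1 ^ 2 - (nfP v).1 * (nfP v).2 + (nfP v).2 ^ 2 : ℤ) := by
  have h := S.norm_elt v
  have h' : 64 * Algebra.norm F (S.elt v) = ((nfP v).1 : ℚ) + ((nfP v).2 : ℚ) * S.w := by
    apply (algebraMap F H).injective
    rw [map_mul, map_ofNat, h]
    simp [ev, ω]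
  have h2 := congrArg (Algebra.norm ℚ) h'
  rw [S.norm_F, map_mul, Algebra.norm_norm] at h2
  have h64 : Algebra.norm ℚ (64 : F) = 4096 := by
    have := S.norm_F 64 0
    norm_num at this
    exact this
  rw [h64] at h2
  rw [h2]; push_cast; ring

/-- `ω` as an algebraic integer. -/
def ωi : 𝓞 H := ⟨S.ω, S.isIntegral_ω⟩

lemma ωi_sq : S.ωi ^ 2 + S.ωi + 1 = 0 := RingOfIntegers.ext S.hω

/-- An element whose norm is that of the prime `Q`, and whose relative norm lies in `Q`, has a
conjugate generating `Q`. -/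
lemma principal_of_cert [IsGalois F H] {Q : Ideal (𝓞 H)} (hQ : Q.IsPrime) (h2 : (2 : 𝓞 H) ∉ Q)
    (hQ0 : Q ≠ ⊥) (v : List ℤ)
    (hn : (nfP v).1 ^ 2 - (nfP v).1 * (nfP v).2 + (nfP v).2 ^ 2 = 4096 * (Ideal.absNorm Q : ℤ))
    (hm : ev S.ωi (nfP v) ∈ Q) : ∃ α, Q = Ideal.span {α} := by
  let α : 𝓞 H := ⟨S.elt v, S.isIntegral_elt v⟩
  have key : ∃ g : H ≃ₐ[F] H, g • α ∈ Q := by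
    have hp : 64 * (α * S.τ • α * S.τ ^ 2 • α * S.τ ^ 3 • α * S.τ ^ 4 • α * S.τ ^ 5 • α) =
        ev S.ωi (nfP v) := by
      apply RingOfIntegers.ext
      have := S.norm_elt v
      rw [S.prod_conj] at this
      exact this
    rw [← hp] at hm
    have h64 : (64 : 𝓞 H) ∉ Q := by
      intro h
      rw [show (64 : 𝓞 H) = 2 ^ 6 by norm_num] at h
      exact h2 (hQ.mem_of_pow_mem _ h)
    rcases hQ.mem_or_mem ((hQ.mem_or_mem hm).resolve_left h64) with h | h
    rcases hQ.mem_or_mem h with h | h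
    rcases hQ.mem_or_mem h with h | h
    rcases hQ.mem_or_mem h with h | h
    rcases hQ.mem_or_mem h with h | h
    · exact ⟨1, by rwa [one_smul]⟩
    all_goals exact ⟨_, h⟩
  obtain ⟨g, hg⟩ := key
  refine ⟨g • α, ?_⟩
  have hle : Ideal.span {g • α} ≤ Q := (Ideal.span_singleton_le_iff_mem _).2 hg
  have hnorm : Ideal.absNorm (Ideal.span {g • α}) = Ideal.absNorm Q := by
    rw [Ideal.absNorm_span_singleton]
    have e1 : (Algebra.norm ℤ (g • α) : ℚ) = Algebra.norm ℚ (S.elt v) := by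
      rw [Algebra.coe_norm_int]
      exact Algebra.norm_eq_of_algEquiv (g.restrictScalars ℚ) (S.elt v)
    have e2 := S.norm_elt_rat v
    rw [← e1, hn] at e2
    have e3 : 4096 * Algebra.norm ℤ (g • α) = 4096 * (Ideal.absNorm Q : ℤ) := by exact_mod_cast e2
    have e4 : Algebra.norm ℤ (g • α) = (Ideal.absNorm Q : ℤ) := by linarith
    rw [e4, Int.natAbs_natCast]
  obtain ⟨J, hJ⟩ := Ideal.dvd_iff_le.2 hle
  have hpos : Ideal.absNorm Q ≠ 0 := by rwa [Ne, Ideal.absNorm_eq_zero_iff]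
  rw [hJ, map_mul] at hnorm
  have hJ1 : Ideal.absNorm J = 1 := by
    exact Nat.eq_of_mul_eq_mul_left (Nat.pos_of_ne_zero hpos) (by rw [hnorm, mul_one])
  rw [Ideal.absNorm_eq_one_iff] at hJ1
  rw [hJ, hJ1, Ideal.mul_top]

end Setup

end

section
open Polynomial WithZero NumberField
open scoped Pointwise nonZeroDivisors

section PrimeTable

/-- A certificate for the degree one primes of `H` above `p` at which `ω ≡ r`. Either the list is
empty and `δ` is not a sixth power modulo `p`, or it gives the coordinates of an element of
norm `p`. -/
def chkR (p r : ℕ) (v : List ℤ) : Bool :=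
  match v with
  | [] => (r * (p + 1 - r) * (2 + 3 * r) ^ 5) % p != 0 &&
      ((r * (p + 1 - r) * (2 + 3 * r) ^ 5) % p) ^ ((p - 1) / 6) % p != 1
  | _ => (nfP v).1 ^ 2 - (nfP v).1 * (nfP v).2 + (nfP v).2 ^ 2 == 4096 * p &&
      ((nfP v).1 + (nfP v).2 * r) % p == 0

/-- Checks an entry `(p, r, v, v')`: `r` and `p - 1 - r` are the roots of `X² + X + 1` modulo `p`,
and `v`, `v'` are certificates for them. -/
def chkE (e : ℕ × ℕ × List ℤ × List ℤ) : Bool :=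
  (e.2.1 ^ 2 + e.2.1 + 1) % e.1 == 0 && e.2.1 < e.1 && e.1 % 6 == 1 && chkR e.1 e.2.1 e.2.2.1 &&
    chkR e.1 (e.1 - 1 - e.2.1) e.2.2.2

/-- Checks that each of the numbers `n, n + 3, …, n + 3(fuel - 1)` either comes next in the list or
exceeds `b` and has a common factor with `M`. -/
def cover (b M : ℕ) : ℕ → ℕ → List (ℕ × ℕ × List ℤ × List ℤ) → Bool
  | 0, _, _ => true
  | fuel + 1, n, [] => b < n && Nat.gcd n M != 1 && cover b M fuel (n + 3) []
  | fuel + 1, n, e :: L => bif e.1 == n then cover b M fuel (n + 3) L else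
      b < n && Nat.gcd n M != 1 && cover b M fuel (n + 3) (e :: L)

lemma cover_spec {b M : ℕ} (hM : ∀ p, p.Prime → p ∣ M → p ≤ b) {p : ℕ} (hp : p.Prime) :
    ∀ (fuel n : ℕ) (L : List (ℕ × ℕ × List ℤ × List ℤ)), cover b M fuel n L = true →
      n ≤ p → p % 3 = n % 3 → p < n + 3 * fuel → ∃ e ∈ L, e.1 = p := by
  have key : ∀ n, b < n → Nat.gcd n M ≠ 1 → n ≠ p := by
    rintro n h1 h2 rfl
    have := hM n hp ((hp.coprime_iff_not_dvd.not_left.1 h2))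
    omega
  intro fuel
  induction fuel with
  | zero => intro n L _ h1 _ h2; omega
  | succ fuel ih =>
    intro n L h hn hm hlt
    have step : ∀ L', n ≠ p → cover b M fuel (n + 3) L' = true → ∃ e ∈ L', e.1 = p := by
      intro L' hne h'
      exact ih (n + 3) L' h' (by omega) (by omega) (by omega)
    cases L with
    | nil =>
      simp only [cover, Bool.and_eq_true, decide_eq_true_eq, bne_iff_ne] at h
      exact step _ (key n h.1.1 h.1.2) h.2
    | cons e L =>
      simp only [cover] at h
      cases hc : (e.1 == n) with
      | true =>
        rw [hc, cond_true] at h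
        rw [beq_iff_eq] at hc
        by_cases hnp : n = p
        · exact ⟨e, List.mem_cons_self, by omega⟩
        · obtain ⟨e', he', hp'⟩ := step L hnp h
          exact ⟨e', List.mem_cons_of_mem _ he', hp'⟩
      | false =>
        rw [hc, cond_false] at h
        simp only [Bool.and_eq_true, decide_eq_true_eq, bne_iff_ne] at h
        exact step _ (key n h.1.1 h.1.2) h.2

set_option maxHeartbeats 1000000 in
set_option maxRecDepth 10000 in
/-- A part of `primeTable`. -/
def primeTable0 : List (ℕ × ℕ × List ℤ × List ℤ) :=
  [(7, 2, [], [0,-1,0,0,0,0,1,0,0,1,-1,-1]), (13, 3, [], []), (19, 7, [], []), (31, 5, [], []),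
   (37, 10, [], []), (43, 6, [], []), (61, 13, [-1,0,-1,-1,0,0,0,0,-1,-1,-1,0], []),
   (67, 29, [0,0,0,1,0,1,1,0,-1,0,1,1], []), (73, 8, [], []),
   (79, 23, [], [-1,0,0,0,0,0,0,0,0,0,-1,-1]), (97, 35, [1,0,0,-1,0,0,-1,0,0,0,-1,-1], []),
   (103, 46, [], []), (109, 45, [], []),
   (127, 19, [1,1,1,0,1,0,-1,-1,1,1,0,-1], [-1,0,0,0,-1,0,0,0,-1,-1,0,0]),
   (139, 42, [0,0,1,0,-1,0,0,-1,-1,-1,0,-2], []), (151, 32, [], []),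
   (157, 12, [], [0,0,0,0,0,0,0,-1,0,-1,-1,-1]), (163, 58, [], [0,0,0,-1,0,0,1,0,-1,0,-1,-1]),
   (181, 48, [], []), (193, 84, [], []), (199, 92, [], []), (211, 14, [], []), (223, 39, [], []),
   (229, 94, [], []), (241, 15, [], [0,-1,0,0,0,0,0,1,0,0,-1,-1]), (271, 28, [], []),
   (277, 116, [], [0,0,0,0,0,0,-1,0,0,1,0,0]), (283, 44, [], []), (307, 17, [], []),
   (313, 98, [], []), (331, 31, [], []), (337, 128, [], []), (349, 122, [], []),
   (367, 83, [], []), (373, 88, [], [0,-1,0,0,0,0,0,1,-1,-1,0,0]), (379, 51, [], []),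
   (397, 34, [], []), (409, 53, [], []), (421, 20, [], []), (433, 198, [], [])]

set_option maxHeartbeats 1000000 in
set_option maxRecDepth 10000 in
/-- A part of `primeTable`. -/
def primeTable1 : List (ℕ × ℕ × List ℤ × List ℤ) :=
  [(439, 171, [], []), (457, 133, [], []), (463, 21, [], []), (487, 232, [], []),
   (499, 139, [], []), (523, 60, [], [1,1,0,0,0,-1,-1,-1,1,0,0,-1]),
   (541, 129, [], [0,1,1,0,0,0,1,-1,-1,-1,0,-2]), (547, 40, [], []),
   (571, 109, [], [1,1,0,-1,0,0,0,0,-1,0,-1,-1]), (577, 213, [1,0,0,0,0,1,-1,0,-1,0,-1,-1], []),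
   (601, 24, [1,0,0,0,0,0,-2,-1,0,0,0,-1], []), (607, 210, [], []),
   (613, 65, [0,0,1,0,0,0,-1,-1,0,0,0,-2], []), (619, 252, [], []), (631, 43, [], []),
   (643, 177, [], []), (661, 296, [], []), (673, 255, [], []),
   (691, 253, [0,0,1,0,0,0,1,0,0,0,0,-1], []), (709, 227, [], []), (727, 281, [], []),
   (733, 307, [], []), (739, 320, [], []), (751, 72, [], []), (757, 27, [], []),
   (769, 360, [], []), (787, 379, [1,2,1,0,1,1,1,0,0,1,0,-1], []), (811, 130, [], []),
   (823, 174, [], []), (829, 125, [], []), (853, 220, [], [-1,1,0,0,0,0,2,0,-1,-1,1,1]),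
   (859, 260, [-1,-1,0,0,0,0,1,2,-1,-1,0,1], []), (877, 282, [], [0,-1,0,0,-1,0,0,1,-1,-1,-1,-1]),
   (883, 337, [], []), (907, 384, [], []), (919, 52, [], []),
   (937, 322, [-1,0,0,1,-1,0,0,0,-1,-1,2,2], []), (967, 142, [], []), (991, 113, [], []),
   (997, 304, [-1,-2,1,1,0,0,1,1,0,1,1,0], [])]

set_option maxHeartbeats 1000000 in
set_option maxRecDepth 10000 in
/-- A part of `primeTable`. -/
def primeTable2 : List (ℕ × ℕ × List ℤ × List ℤ) :=
  [(1009, 374, [], []), (1021, 368, [-1,0,-1,0,0,0,1,0,-1,0,0,1], []),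
   (1033, 195, [], [0,0,0,1,1,0,-1,0,1,1,1,1]), (1039, 140, [0,0,0,0,-1,-1,-1,-1,0,-1,0,0], []),
   (1051, 180, [1,1,0,0,0,0,-1,-1,1,1,-1,-1], [0,1,-1,-1,0,0,1,-1,0,0,-1,0]),
   (1063, 343, [1,0,1,1,0,0,-1,1,1,0,0,-1], []), (1069, 86, [], []),
   (1087, 257, [], [-2,-2,1,1,0,0,0,0,0,0,1,0]), (1093, 151, [], []), (1117, 120, [], []),
   (1123, 33, [], []), (1129, 387, [], [-1,0,0,-1,0,-1,1,0,2,1,-1,-1]),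
   (1153, 502, [], [-1,0,0,-1,-1,0,0,0,-1,-2,-1,-1]), (1171, 420, [], []), (1201, 570, [], []),
   (1213, 217, [], []), (1231, 126, [], []), (1237, 300, [], []),
   (1249, 93, [], [0,1,0,0,0,-1,0,-1,1,0,-1,-1]), (1279, 504, [], []),
   (1291, 346, [], [0,0,1,0,1,0,1,1,1,1,0,-2]), (1297, 365, [], []), (1303, 95, [], []),
   (1321, 297, [], []), (1327, 347, [], []), (1381, 354, [], []), (1399, 390, [], []),
   (1423, 643, [], []), (1429, 664, [], []), (1447, 704, [0,-1,-1,0,0,0,0,0,-1,-1,0,2], []),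
   (1453, 693, [], []), (1459, 339, [], []), (1471, 251, [], []),
   (1483, 38, [], [0,0,0,-1,1,1,-1,-1,0,1,-1,-1]), (1489, 483, [], []), (1531, 646, [], []),
   (1543, 681, [], []), (1549, 275, [], []), (1567, 535, [], []),
   (1579, 639, [], [-1,0,0,0,-1,0,1,-1,-1,-1,0,-1])]

set_option maxHeartbeats 1000000 in
set_option maxRecDepth 10000 in
/-- A part of `primeTable`. -/
def primeTable3 : List (ℕ × ℕ × List ℤ × List ℤ) :=
  [(1597, 222, [], []), (1609, 250, [], []), (1621, 184, [0,-1,0,0,0,0,0,0,0,-1,-1,-1], []),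
   (1627, 264, [], []), (1657, 70, [], [0,0,1,1,0,1,0,-1,0,0,2,1]),
   (1663, 318, [], [1,0,-1,0,0,0,-2,-2,-1,-1,0,1]), (1669, 248, [], []),
   (1693, 433, [], [1,1,0,-1,1,0,-1,1,1,1,-1,-1]), (1699, 397, [], []), (1723, 41, [], []),
   (1741, 356, [], [0,-1,1,0,0,0,0,1,-1,-1,0,-2]), (1747, 371, [], []), (1753, 182, [], []),
   (1759, 508, [], []), (1777, 629, [], []), (1783, 193, [], [0,-1,1,0,0,0,0,0,0,0,0,-2]),
   (1789, 152, [], []), (1801, 73, [], []), (1831, 672, [], []), (1861, 454, [], []),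
   (1867, 834, [], [0,1,0,0,-1,-1,-1,-2,0,0,0,0]), (1873, 114, [], []),
   (1879, 488, [0,-1,0,1,-1,-1,-1,-1,0,-1,1,2], []), (1933, 591, [], []), (1951, 76, [], []),
   (1987, 647, [], []), (1993, 312, [], []), (1999, 808, [], [0,0,0,0,1,1,1,0,0,0,-1,-1]),
   (2011, 205, [], []), (2017, 294, [], []), (2029, 975, [], [2,1,-1,0,-1,0,-1,0,-1,-1,0,1]),
   (2053, 197, [], []), (2083, 449, [], []), (2089, 826, [0,-1,1,1,1,1,0,1,0,2,2,0], []),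
   (2113, 438, [], []), (2131, 468, [], []), (2137, 201, [], []), (2143, 349, [], []),
   (2161, 593, [], []), (2179, 123, [], [-1,-1,0,-1,0,0,-1,0,0,0,-2,-2])]

set_option maxHeartbeats 1000000 in
set_option maxRecDepth 10000 in
/-- A part of `primeTable`. -/
def primeTable4 : List (ℕ × ℕ × List ℤ × List ℤ) :=
  [(2203, 285, [], []), (2221, 543, [], []), (2239, 295, [], []),
   (2251, 708, [-1,-1,0,-1,0,0,1,2,0,0,-2,-2], []), (2269, 82, [], []), (2281, 663, [], []),
   (2287, 804, [1,0,-1,-1,0,0,-2,-1,0,1,-2,-1], []),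
   (2293, 989, [], [2,0,0,0,-1,-1,0,1,0,-1,0,0]), (2311, 882, [], []),
   (2341, 1106, [-1,-1,0,-1,0,0,0,0,-1,-1,-1,-1], []), (2347, 1062, [], []), (2371, 464, [], []),
   (2377, 721, [], []), (2383, 1103, [], []), (2389, 689, [1,0,0,0,0,0,0,2,-1,0,-1,-1], []),
   (2437, 85, [2,2,0,0,0,0,-2,-2,0,1,0,-1], [-1,-1,0,-1,0,0,2,1,0,0,-2,-1]), (2467, 216, [], []),
   (2473, 1015, [], []), (2503, 1226, [], [-1,0,0,0,-1,0,1,-1,-1,-1,0,0]), (2521, 675, [], []),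
   (2539, 306, [], []), (2551, 50, [-1,-1,0,0,1,0,0,0,1,1,-1,-1], []),
   (2557, 835, [], [1,2,0,0,1,1,-1,-1,0,0,0,1]), (2593, 1137, [], []),
   (2617, 1064, [1,0,0,0,-1,0,-1,0,-1,-1,-1,-1], []), (2647, 185, [], []),
   (2659, 903, [0,0,-1,0,1,1,-1,0,0,0,1,2], []), (2671, 544, [], []), (2677, 1033, [], []),
   (2683, 636, [], [0,-1,-1,0,0,-1,0,0,1,0,0,2]), (2689, 391, [], []), (2707, 1327, [], []),
   (2713, 1211, [], []), (2719, 1265, [], [1,-1,0,0,1,1,-1,-1,0,0,1,1]),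
   (2731, 446, [0,-1,0,0,0,-1,0,1,0,0,0,-1], [-1,-1,0,0,0,-1,0,0,0,0,0,1]), (2749, 595, [], []),
   (2767, 328, [-1,0,0,-1,1,0,0,0,0,0,-1,-1], []), (2791, 91, [], [-1,-1,0,0,-1,-1,2,1,0,0,-1,0]),
   (2797, 1100, [], []), (2803, 413, [-1,0,0,0,0,1,1,0,-1,1,0,0], [])]

set_option maxHeartbeats 1000000 in
set_option maxRecDepth 10000 in
/-- A part of `primeTable`. -/
def primeTable5 : List (ℕ × ℕ × List ℤ × List ℤ) :=
  [(2833, 1300, [0,-1,-1,-1,-1,-1,0,1,0,-1,-1,-1], []), (2851, 1014, [], []),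
   (2857, 350, [-2,0,0,0,1,1,0,0,0,0,-1,-1], [0,0,0,0,-1,-1,-1,0,1,0,-1,-1]), (2887, 698, [], []),
   (2917, 247, [], []), (2953, 800, [], []), (2971, 54, [], []), (3001, 934, [], []),
   (3019, 239, [], []), (3037, 745, [], []), (3049, 532, [], []),
   (3061, 561, [], [1,0,0,0,-1,0,-1,0,-1,-1,0,-1]),
   (3067, 973, [0,-1,1,1,1,1,0,1,1,2,2,0], [1,1,0,1,0,1,-1,-2,0,0,2,2]), (3079, 546, [], []),
   (3109, 1085, [0,0,0,-1,-1,0,-1,0,-1,-1,-1,-1], [0,0,0,-1,1,1,-1,-1,0,1,-2,-1]),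
   (3121, 1121, [1,0,0,-1,0,0,-1,0,0,-1,-1,-1], []), (3163, 536, [], []),
   (3169, 97, [0,-1,0,-1,0,0,0,0,0,1,-1,-1], []), (3181, 440, [0,0,-1,-1,1,0,0,-1,1,1,-2,-1], []),
   (3187, 1315, [], []), (3217, 204, [], []), (3229, 914, [], [1,1,0,0,0,0,-1,-1,-1,-1,-1,-1]),
   (3253, 1439, [], []), (3259, 852, [], []), (3271, 842, [0,0,0,0,0,0,1,1,1,1,0,1], []),
   (3301, 1574, [], []), (3307, 57, [], []), (3313, 1123, [], []), (3319, 1527, [], []),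
   (3331, 1463, [], []), (3343, 1424, [0,0,0,1,-1,0,0,-1,-1,-1,1,2], []), (3361, 892, [], []),
   (3373, 654, [-1,0,1,0,0,0,1,-1,1,0,0,-1], []), (3391, 555, [], []),
   (3433, 268, [1,0,0,0,0,1,-2,-1,-1,0,1,0], []),
   (3457, 722, [], [-1,-2,-1,0,0,0,-1,0,-1,-1,1,2]), (3463, 367, [], []), (3469, 1683, [], []),
   (3499, 156, [], []), (3511, 756, [-2,-3,1,0,0,-1,1,1,0,0,-1,-2], [])]

set_option maxHeartbeats 1000000 in
set_option maxRecDepth 10000 in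
/-- A part of `primeTable`. -/
def primeTable6 : List (ℕ × ℕ × List ℤ × List ℤ) :=
  [(3517, 258, [], []), (3529, 448, [], []), (3541, 59, [], []), (3547, 1162, [], []),
   (3559, 1435, [], []), (3571, 103, [1,0,1,0,1,1,0,0,0,1,-1,-1], [-2,0,-1,0,0,0,0,-1,1,1,0,1]),
   (3583, 1038, [], []), (3607, 1399, [], []), (3613, 1675, [], []), (3631, 335, [], []),
   (3637, 695, [], [-1,-1,0,0,-1,0,1,1,-1,0,0,-1]), (3643, 422, [], []), (3673, 1151, [], []),
   (3691, 474, [], []), (3697, 519, [], []), (3709, 498, [], []), (3727, 1188, [], []),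
   (3733, 948, [], []), (3739, 694, [], []), (3769, 463, [], []), (3793, 1068, [], []),
   (3823, 1184, [], []), (3847, 1892, [], []), (3853, 1139, [], [0,0,0,0,0,0,0,1,0,1,-1,-1]),
   (3877, 224, [], []), (3889, 1890, [], []),
   (3907, 62, [-1,-1,-1,-1,0,1,-1,0,-1,0,-1,0], [-1,0,0,-1,0,0,-1,-2,0,0,-2,-2]),
   (3919, 1169, [], []), (3931, 617, [-1,0,0,1,0,0,0,0,-1,-1,1,0], []), (3943, 1135, [], []),
   (3967, 888, [-1,0,0,-1,0,0,0,0,1,0,-2,-1], []), (4003, 822, [], []),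
   (4021, 1812, [], [1,2,0,0,0,0,-1,-1,0,0,-1,-1]), (4027, 1820, [], []), (4051, 797, [], []),
   (4057, 1408, [1,0,1,1,0,1,0,2,-1,1,2,0], []), (4093, 902, [-1,-1,-1,0,1,1,0,0,1,2,0,2], []),
   (4099, 2017, [], []), (4111, 1055, [], []), (4129, 1979, [], [])]

set_option maxHeartbeats 1000000 in
set_option maxRecDepth 10000 in
/-- A part of `primeTable`. -/
def primeTable7 : List (ℕ × ℕ × List ℤ × List ℤ) :=
  [(4153, 170, [], []), (4159, 1604, [0,0,-1,-1,1,1,1,0,-1,1,-1,1], [-1,0,1,0,1,1,0,0,0,0,0,-1]),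
   (4177, 1102, [], []), (4201, 1124, [], []), (4219, 112, [], []),
   (4231, 620, [1,0,0,-1,0,-1,-1,0,0,-1,-1,-1], []),
   (4243, 298, [1,1,0,0,0,1,0,0,-2,-1,1,1], [-1,1,0,1,1,0,-1,0,2,2,1,1]), (4261, 1647, [], []),
   (4273, 1610, [], []), (4297, 1410, [], []), (4327, 627, [], []), (4339, 237, [], []),
   (4357, 1318, [], []), (4363, 412, [], []), (4423, 66, [], []), (4441, 901, [], []),
   (4447, 115, [], []), (4483, 505, [], []), (4507, 791, [], []), (4513, 814, [], []),
   (4519, 1056, [], []), (4549, 1744, [1,0,0,0,0,0,-1,0,-1,-1,1,-1], []),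
   (4561, 243, [1,0,1,1,0,0,-2,-1,-1,0,1,1], []),
   (4567, 1112, [], [1,1,-1,-1,1,0,-2,-1,2,2,-2,0]), (4591, 310, [], []), (4597, 377, [], []),
   (4603, 179, [], []), (4621, 1763, [], []), (4639, 1360, [], []), (4651, 786, [], []),
   (4657, 967, [], []), (4663, 2092, [], []), (4723, 717, [], []),
   (4729, 2036, [0,0,1,1,-1,-1,1,1,0,0,0,-1], []), (4759, 1525, [], []), (4783, 1745, [], []),
   (4789, 1679, [], []), (4801, 2340, [], [-1,-1,1,0,0,0,-2,-1,-1,-1,0,-1]), (4813, 1888, [], []),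
   (4831, 69, [], [])]

set_option maxHeartbeats 1000000 in
set_option maxRecDepth 10000 in
/-- A part of `primeTable`. -/
def primeTable8 : List (ℕ × ℕ × List ℤ × List ℤ) :=
  [(4861, 319, [], []), (4903, 2416, [], []), (4909, 573, [], []), (4933, 2131, [], []),
   (4951, 2261, [], []), (4957, 2282, [], []), (4969, 186, [], [-1,-1,1,0,1,0,0,0,1,1,1,-1]),
   (4987, 1136, [], []), (4993, 2342, [-1,-1,0,-1,0,-1,1,1,1,0,-1,-2], []), (4999, 2337, [], []),
   (5011, 2103, [], []), (5023, 953, [], [0,-1,0,0,1,0,2,1,1,1,0,-1]), (5059, 1912, [], []),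
   (5077, 1629, [1,1,0,0,0,-1,0,0,1,0,-1,-1], []), (5101, 1614, [], []), (5107, 311, [], []),
   (5113, 71, [], []), (5119, 1682, [], [0,0,0,1,-1,0,0,1,-1,-1,3,3]), (5167, 124, [], []),
   (5179, 1497, [], []), (5197, 1878, [], []), (5209, 1192, [], []), (5227, 451, [], []),
   (5233, 331, [], []), (5281, 1403, [], [1,2,0,0,0,0,-1,-1,0,0,0,2]), (5323, 1282, [], []),
   (5347, 479, [], []), (5407, 1042, [], []), (5413, 1224, [], []), (5419, 127, [], []),
   (5431, 1533, [-2,0,0,-1,-1,-1,0,0,0,-1,-2,-1], []), (5437, 2271, [], []), (5443, 2588, [], []),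
   (5449, 1474, [0,1,0,1,-1,-1,-1,-2,-1,-1,2,2], []), (5479, 2702, [], []),
   (5503, 929, [0,1,-1,0,0,0,0,0,-1,-1,1,2], [1,0,0,-1,-1,0,-1,1,-1,0,-2,-2]),
   (5521, 340, [], []), (5527, 876, [], []), (5557, 1827, [0,0,1,0,-1,0,-1,0,-1,-1,0,-2], []),
   (5563, 711, [], [2,0,0,-1,0,-1,0,0,0,0,-1,-1])]

set_option maxHeartbeats 1000000 in
set_option maxRecDepth 10000 in
/-- A part of `primeTable`. -/
def primeTable9 : List (ℕ × ℕ × List ℤ × List ℤ) :=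
  [(5569, 2242, [], []), (5581, 2458, [1,2,0,0,0,0,0,-2,-1,-1,0,0], []), (5623, 2013, [], []),
   (5641, 2044, [], []), (5647, 853, [], [1,1,-1,0,1,1,0,0,1,0,0,1]), (5653, 740, [], []),
   (5659, 1464, [], []), (5683, 1110, [], [0,0,0,0,0,0,0,1,0,1,0,-1]),
   (5689, 2419, [], [1,0,1,0,0,1,0,0,-1,0,0,-2]), (5701, 75, [], [-1,-1,1,0,0,-1,2,1,0,0,-1,-2]),
   (5737, 2469, [], []), (5743, 200, [], []), (5749, 330, [], []),
   (5779, 2851, [1,1,0,-1,0,-1,-1,1,0,0,-1,-1], []),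
   (5791, 1572, [], [-1,1,0,0,0,-1,1,1,1,0,-1,0]), (5821, 2148, [], []), (5827, 1350, [], []),
   (5839, 1854, [-1,-1,0,1,1,1,1,1,0,1,1,1], [0,-1,0,1,1,0,-1,-2,1,1,1,1]), (5851, 577, [], []),
   (5857, 1264, [], []), (5869, 777, [1,2,0,0,0,0,-1,-1,-1,-1,0,0], []), (5881, 276, [], []),
   (5923, 428, [], []), (5953, 869, [1,2,-1,-1,-1,0,-1,0,-2,-1,-1,0], []), (6007, 77, [], []),
   (6037, 509, [], [1,1,0,-1,1,0,-1,-2,0,1,-1,-1]), (6043, 1715, [-1,0,0,0,0,0,1,0,1,1,0,-1], []),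
   (6067, 665, [], []), (6073, 1842, [], []), (6079, 1553, [], []), (6091, 744, [], []),
   (6121, 1152, [], []), (6133, 949, [], []), (6151, 207, [], []),
   (6163, 78, [], [2,2,-1,0,0,0,0,-1,-1,-2,0,1]), (6199, 2645, [], [0,2,1,0,1,0,-1,-1,1,1,-1,-1]),
   (6211, 136, [], []), (6217, 2459, [], []), (6229, 930, [-1,1,1,1,0,0,0,-1,-1,-1,0,0], []),
   (6247, 2316, [], [])]

set_option maxHeartbeats 1000000 in
set_option maxRecDepth 10000 in
/-- A part of `primeTable`. -/
def primeTable10 : List (ℕ × ℕ × List ℤ × List ℤ) :=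
  [(6271, 2020, [2,0,0,0,-1,0,-1,-1,0,0,0,0], []), (6277, 2308, [1,-1,0,0,1,0,0,1,0,0,0,-1], []),
   (6301, 2977, [], []), (6337, 1512, [], [-1,1,-1,-1,0,0,1,1,-1,0,-1,-1]),
   (6343, 557, [1,-1,0,1,1,1,-1,2,0,1,2,1], [-1,-1,1,-1,0,-1,0,0,1,0,-1,-2]),
   (6361, 1858, [], [0,0,0,-1,0,0,1,1,0,0,-2,-1]), (6367, 769, [], []),
   (6373, 623, [], [-2,-2,-1,0,-1,-1,0,1,0,-1,0,0]), (6379, 3006, [], []), (6397, 2294, [], []),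
   (6421, 3104, [], [0,2,0,0,1,0,0,0,0,0,0,1]), (6427, 1084, [], []), (6451, 212, [], []),
   (6469, 1476, [0,-2,-2,-1,0,0,-1,1,1,1,-1,1], [0,0,0,0,-1,-1,1,1,0,-1,-1,-1]),
   (6481, 80, [], []), (6529, 491, [], [0,-1,0,0,1,0,1,2,0,0,0,1]), (6547, 2332, [], []),
   (6553, 1944, [], []), (6571, 2979, [], []), (6577, 353, [], []), (6607, 1518, [], []),
   (6619, 569, [], []), (6637, 1370, [], []), (6661, 1348, [0,0,0,0,0,0,0,1,1,1,0,-1], []),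
   (6673, 1393, [], []), (6679, 942, [], []), (6691, 2918, [], []),
   (6703, 1480, [], [0,-1,1,0,-1,-1,0,0,0,0,0,-2]),
   (6709, 1239, [], [-2,-2,0,0,0,0,0,1,-1,0,1,1]), (6733, 619, [], []), (6763, 2155, [], []),
   (6781, 2926, [], []), (6793, 1168, [], []), (6823, 2685, [1,1,0,0,0,1,-1,-1,-1,0,-1,-1], []),
   (6829, 734, [], []), (6841, 2808, [], []), (6871, 1466, [], []), (6883, 219, [], []),
   (6907, 1856, [], []), (6949, 1942, [], [])]

set_option maxHeartbeats 1000000 in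
set_option maxRecDepth 10000 in
/-- A part of `primeTable`. -/
def primeTable11 : List (ℕ × ℕ × List ℤ × List ℤ) :=
  [(6961, 507, [], []), (6967, 382, [], [-1,-1,1,0,0,0,1,1,1,2,0,-2]), (6991, 1381, [], []),
   (6997, 2908, [], []), (7027, 523, [0,0,0,-1,0,-1,-1,0,0,0,-2,-2], []), (7039, 302, [], []),
   (7057, 145, [], []), (7069, 2040, [], []), (7129, 1249, [], []),
   (7159, 2880, [-2,-1,0,1,1,1,2,0,0,1,2,2], []), (7177, 2038, [], []), (7207, 1838, [], []),
   (7213, 2602, [], [-1,-1,0,0,1,0,2,1,2,1,-1,-2]),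
   (7219, 2725, [], [0,0,1,0,1,1,-1,-1,-1,0,0,-1]),
   (7237, 1830, [1,0,1,0,0,1,-1,1,0,0,-1,-2], []), (7243, 3426, [0,-1,1,1,0,0,0,0,1,-1,2,1], []),
   (7297, 3535, [], []), (7309, 3416, [], []), (7321, 308, [], []), (7333, 3062, [], []),
   (7351, 148, [], []), (7369, 2559, [], []), (7393, 1717, [], []), (7411, 394, [], []),
   (7417, 2312, [], []), (7459, 228, [], []),
   (7477, 3468, [-2,0,1,0,1,1,2,1,0,1,0,-2], [0,1,1,0,0,0,-1,-2,0,0,0,0]), (7489, 2467, [], []),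
   (7507, 606, [], []), (7537, 1962, [1,1,-1,-1,-1,0,0,0,-1,-1,0,0], []), (7549, 528, [], []),
   (7561, 1298, [], []), (7573, 2057, [], []), (7591, 2453, [0,-1,0,0,0,-1,0,0,2,0,1,0], []),
   (7603, 2094, [1,2,-1,0,0,0,-1,0,0,0,0,1], [-1,0,0,-1,0,0,-1,-2,0,1,-2,-2]),
   (7621, 3124, [2,0,-1,0,0,0,-2,-1,0,0,1,3], []),
   (7639, 2975, [], [2,0,1,0,-1,-1,0,0,0,-1,0,-1]), (7669, 2070, [], []), (7681, 684, [], []),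
   (7687, 2274, [], [])]

set_option maxHeartbeats 1000000 in
set_option maxRecDepth 10000 in
/-- A part of `primeTable`. -/
def primeTable12 : List (ℕ × ℕ × List ℤ × List ℤ) :=
  [(7699, 2269, [], []), (7717, 3439, [], []), (7723, 917, [-1,2,1,1,0,0,1,-1,-1,-1,2,0], []),
   (7741, 2452, [], []), (7753, 403, [], []), (7759, 1759, [-1,0,1,0,-1,0,0,0,0,0,0,-1], []),
   (7789, 233, [], []), (7867, 1465, [], [1,2,1,0,-1,-1,-1,-1,-1,-1,0,-3]), (7873, 1394, [], []),
   (7879, 1366, [-2,0,-1,0,1,0,0,-1,0,0,0,1], []), (7927, 3759, [], []), (7933, 2005, [], []),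
   (7951, 321, [0,0,0,0,0,-1,0,-1,1,0,0,-1], []), (7963, 1623, [1,2,0,1,0,1,-1,-1,-2,-1,2,2], []),
   (7993, 3244, [], []), (8011, 89, [], []), (8017, 2642, [], []),
   (8053, 3497, [], [0,1,1,-1,1,0,-2,-2,0,0,-1,-2]), (8059, 2765, [], []), (8089, 1413, [], []),
   (8101, 2217, [], []), (8161, 2903, [], []), (8167, 3092, [], []), (8179, 1096, [], []),
   (8191, 90, [], []), (8209, 3265, [], []), (8221, 415, [], []),
   (8233, 2612, [0,1,-1,0,0,-1,0,0,2,1,0,2], [1,0,0,0,0,0,1,2,1,1,1,1]), (8263, 240, [], []),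
   (8269, 157, [], []), (8287, 568, [], []), (8293, 2050, [], []),
   (8311, 1266, [], [-1,-1,-1,0,0,0,1,1,0,1,0,2]), (8317, 1286, [], []), (8329, 1052, [], []),
   (8353, 1736, [], []), (8377, 813, [], []), (8389, 691, [], [0,-2,1,-1,-1,0,0,0,-1,-1,-2,-3]),
   (8419, 1961, [], [2,2,-1,-1,0,1,0,-1,0,0,-1,0]),
   (8431, 2147, [0,1,0,-1,0,0,1,-1,0,0,-1,-1], [])]

set_option maxHeartbeats 1000000 in
set_option maxRecDepth 10000 in
/-- A part of `primeTable`. -/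
def primeTable13 : List (ℕ × ℕ × List ℤ × List ℤ) :=
  [(8443, 1035, [], []), (8461, 1776, [], []), (8467, 4187, [], []),
   (8521, 2024, [], [0,-1,0,-1,0,0,-1,-2,0,1,-2,-2]),
   (8527, 2976, [-1,1,1,0,1,1,-1,-1,0,1,0,-1], [1,1,1,0,-1,0,0,0,0,0,-1,-1]),
   (8539, 2552, [], []), (8563, 2823, [], [-2,-2,-1,0,1,1,0,0,0,1,0,1]), (8581, 424, [], []),
   (8599, 1205, [], []), (8623, 1545, [], [-1,0,-1,-1,0,1,2,1,-1,0,-1,1]), (8629, 3306, [], []),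
   (8641, 3572, [], [1,0,1,0,0,1,0,0,0,0,-1,-2]), (8647, 794, [], []), (8677, 1378, [], []),
   (8689, 1903, [], []), (8707, 2413, [], []), (8713, 2537, [], [0,1,-1,0,0,1,0,-1,-1,0,0,2]),
   (8719, 2281, [], []), (8731, 3658, [], []), (8737, 2268, [], []), (8761, 1733, [], []),
   (8779, 1267, [], []), (8803, 988, [], []), (8821, 2436, [], []),
   (8839, 4372, [], [0,-2,0,0,0,-1,-1,0,0,0,0,1]),
   (8863, 1461, [1,0,-1,-1,0,0,-1,0,-1,-1,0,0], [-1,-1,1,0,0,-1,1,1,1,1,0,-2]),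
   (8887, 4227, [], []), (8893, 249, [], [-1,-1,-1,1,0,0,0,0,1,0,0,2]), (8923, 3847, [], []),
   (8929, 4339, [], [0,1,0,0,1,0,1,-1,1,1,0,-1]), (8941, 1640, [], []),
   (8971, 341, [1,0,0,0,1,1,0,0,1,1,0,1], []), (9001, 3798, [], []),
   (9007, 1094, [1,1,-1,0,0,1,0,0,-2,0,0,1], []), (9013, 3325, [], []), (9043, 3152, [], []),
   (9049, 845, [], []), (9067, 1081, [0,0,-2,-1,0,1,-2,0,0,0,-2,1], []), (9091, 3388, [], []),
   (9103, 4379, [], [])]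

/-- Certificates for all primes `p ≡ 1 mod 3` up to `9107`. -/
def primeTable : List (ℕ × ℕ × List ℤ × List ℤ) :=
  primeTable0 ++ primeTable1 ++ primeTable2 ++ primeTable3 ++ primeTable4 ++ primeTable5 ++ primeTable6 ++ primeTable7 ++ primeTable8 ++ primeTable9 ++ primeTable10 ++ primeTable11 ++ primeTable12 ++ primeTable13

set_option maxRecDepth 100000 in
lemma primeTable_chk : primeTable.all chkE = true := by decide +kernel

set_option maxRecDepth 100000 in
lemma primeTable_cover : cover 7 210 31 7 (primeTable.take 11) = true ∧
    cover 97 (primorial 97) 3003 100 (primeTable.drop 11) = true := by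
  have : primorial 97 = 2305567963945518424753102147331756070 := by decide +kernel
  rw [this]
  decide +kernel

lemma exists_mem_primeTable {p : ℕ} (hp : p.Prime) (h3 : p % 3 = 1) (hle : p ≤ 9107) :
    ∃ e ∈ primeTable, e.1 = p := by
  have h1 := hp.two_le
  have h7 : 7 ≤ p := by
    by_contra h
    have : p < 7 := by omega
    interval_cases p <;> revert h3 hp <;> decide
  by_cases h : p < 100
  · obtain ⟨e, he, h⟩ := cover_spec (b := 7) (M := 210) (by
      intro q hq hd
      have : q ∣ primorial 7 := by
        rwa [show primorial 7 = 210 by decide +kernel]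
      exact hq.dvd_primorial_iff.1 this) hp 31 7 _ primeTable_cover.1 h7 (by omega) (by omega)
    exact ⟨e, List.mem_of_mem_take he, h⟩
  · obtain ⟨e, he, h⟩ := cover_spec (b := 97) (M := primorial 97)
      (fun q hq hd => hq.dvd_primorial_iff.1 hd) hp 3003 100 _ primeTable_cover.2 (by omega)
      (by omega) (by omega)
    exact ⟨e, List.mem_of_mem_drop he, h⟩

end PrimeTable

end

section
open Polynomial WithZero NumberField
open scoped Pointwise nonZeroDivisors

lemma card_le_of_pow_eq {K : Type*} [CommRing K] [IsDomain K] [Finite K] {q : ℕ} (hq : 1 < q)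
    (h : ∀ x : K, x ^ q = x) : Nat.card K ≤ q := by
  classical
  haveI := Fintype.ofFinite K
  have hdeg : (X ^ q - X : K[X]).natDegree = q := by
    compute_degree!
    · rw [if_neg (by omega)]; simp
    · omega
  have hne : (X ^ q - X : K[X]) ≠ 0 := by
    intro h0
    rw [h0, natDegree_zero] at hdeg
    omega
  have hr : (Finset.univ : Finset K) ⊆ (X ^ q - X : K[X]).roots.toFinset := by
    intro x _
    rw [Multiset.mem_toFinset, mem_roots hne, IsRoot, eval_sub, eval_pow, eval_X, h, sub_self]
  rw [Nat.card_eq_fintype_card, ← Finset.card_univ]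
  calc _ ≤ _ := Finset.card_le_card hr
    _ ≤ _ := Multiset.toFinset_card_le _
    _ ≤ _ := card_roots' _
    _ = q := hdeg

namespace Setup
variable {F H : Type*} [Field F] [NumberField F] [Field H] [NumberField H] [Algebra F H]
  (S : Setup F H)

lemma frob_smul [IsGalois F H] (Q : Ideal (𝓞 H)) (hQ : Q.IsPrime) (hQ0 : Q ≠ ⊥) :
    S.τ ^ 2 • Q = Q ∨ S.τ ^ 3 • Q = Q ∨
      ∀ x : 𝓞 H, x ^ Nat.card (𝓞 F ⧸ Q.under (𝓞 F)) - x ∈ Q := by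
  haveI := Ideal.finiteQuotientOfFreeOfNeBot Q hQ0
  obtain ⟨g, hg⟩ := IsArithFrobAt.exists_of_isInvariant (𝓞 F) (H ≃ₐ[F] H) Q
  have hst : g • Q = Q := hg.mem_stabilizer
  have hpow : ∀ n : ℕ, g ^ n • Q = Q := by
    intro n
    induction n with
    | zero => rw [pow_zero, one_smul]
    | succ n ih => rw [pow_succ, mul_smul, hst, ih]
  obtain ⟨i, hi, rfl⟩ := S.exists_pow_τ g
  have h6 := S.τ_pow_six
  have hred : ∀ n j, S.τ ^ (i * n) = S.τ ^ j → S.τ ^ j • Q = Q := by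
    intro n j h
    rw [← h, pow_mul, hpow n]
  interval_cases i
  · right; right
    intro x
    have := hg x
    rw [← neg_mem_iff, neg_sub]
    simpa using this
  · exact Or.inl (hred 2 2 rfl)
  · exact Or.inl (hred 1 2 rfl)
  · exact Or.inr (Or.inl (hred 1 3 rfl))
  · exact Or.inl (hred 2 2 (by rw [show 4 * 2 = 6 + 2 from rfl, pow_add, h6, one_mul]))
  · exact Or.inl (hred 4 2 (by
      rw [show 5 * 4 = 6 * 3 + 2 from rfl, pow_add, pow_mul, h6, one_pow, one_mul]))

lemma exists_prime_mem {Q : Ideal (𝓞 H)} (hQ : Q.IsPrime) (hQ0 : Q ≠ ⊥) :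
    ∃ p : ℕ, p.Prime ∧ (p : 𝓞 H) ∈ Q ∧ ∀ n : ℤ, (n : 𝓞 H) ∈ Q → (p : ℤ) ∣ n := by
  haveI := Ideal.finiteQuotientOfFreeOfNeBot Q hQ0
  haveI : IsDomain (𝓞 H ⧸ Q) := Ideal.Quotient.isDomain Q
  obtain ⟨p, hc⟩ := CharP.exists (𝓞 H ⧸ Q)
  have hp : p.Prime := by
    rcases CharP.char_is_prime_or_zero (𝓞 H ⧸ Q) p with h | h
    · exact h
    · subst h
      exact absurd hc (fun hc => by
        haveI := CharP.charP_to_charZero (𝓞 H ⧸ Q)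
        exact not_finite (𝓞 H ⧸ Q))
  refine ⟨p, hp, ?_, fun n hn => ?_⟩
  · rw [← Ideal.Quotient.eq_zero_iff_mem, map_natCast, CharP.cast_eq_zero]
  · rw [← Ideal.Quotient.eq_zero_iff_mem, map_intCast] at hn
    exact (CharP.intCast_eq_zero_iff _ p n).1 hn

lemma exists_lin (x : 𝓞 F) : ∃ a b : ℤ, algebraMap (𝓞 F) (𝓞 H) x = ev S.ωi (a, b) := by
  obtain ⟨a, b, h⟩ := S.hInt x
  refine ⟨a, b, RingOfIntegers.ext ?_⟩
  have := congrArg (algebraMap F H) h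
  rw [map_add, map_mul, map_intCast, map_intCast] at this
  have e : ((ev S.ωi (a, b) : 𝓞 H) : H) = a + b * S.ω := by
    simp only [ev, map_add, map_mul, map_intCast]; rfl
  exact this.trans e.symm

/-- The three possibilities for a prime of `H`: two kinds of nontrivial decomposition group, or
split completely over `F`. -/
lemma frob_cases [IsGalois F H] (Q : Ideal (𝓞 H)) (hQ : Q.IsPrime) (hQ0 : Q ≠ ⊥) :
    S.τ ^ 2 • Q = Q ∨ S.τ ^ 3 • Q = Q ∨ ∃ p : ℕ, p.Prime ∧ (p : 𝓞 H) ∈ Q ∧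
      (∀ n : ℤ, (n : 𝓞 H) ∈ Q → (p : ℤ) ∣ n) ∧ ∃ q, Ideal.absNorm Q = q ∧ (∀ x, x ^ q - x ∈ Q) ∧
      ((q = p ∧ ∃ r : ℤ, S.ωi - r ∈ Q) ∨ (q = p ^ 2 ∧ ∀ r : ℤ, S.ωi - r ∉ Q)) := by
  rcases S.frob_smul Q hQ hQ0 with h | h | h
  · exact Or.inl h
  · exact Or.inr (Or.inl h)
  refine Or.inr (Or.inr ?_)
  obtain ⟨p, hp, hpQ, hdvd⟩ := exists_prime_mem hQ hQ0
  haveI := Ideal.finiteQuotientOfFreeOfNeBot Q hQ0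
  haveI : IsDomain (𝓞 H ⧸ Q) := Ideal.Quotient.isDomain Q
  haveI : Fact p.Prime := ⟨hp⟩
  haveI := Fintype.ofFinite (𝓞 H ⧸ Q)
  set P := Q.under (𝓞 F) with hP
  let f : 𝓞 F ⧸ P →+* 𝓞 H ⧸ Q := Ideal.quotientMap Q (algebraMap (𝓞 F) (𝓞 H)) le_rfl
  have hf : Function.Injective f := Ideal.quotientMap_injective
  haveI : Finite (𝓞 F ⧸ P) := Finite.of_injective f hf
  haveI : Nontrivial (𝓞 F ⧸ P) := f.domain_nontrivial
  have hq1 : 1 < Nat.card (𝓞 F ⧸ P) := Finite.one_lt_card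
  have hle : Nat.card (𝓞 F ⧸ P) ≤ Nat.card (𝓞 H ⧸ Q) := Nat.card_le_card_of_injective f hf
  have hge : Nat.card (𝓞 H ⧸ Q) ≤ Nat.card (𝓞 F ⧸ P) := by
    refine card_le_of_pow_eq hq1 fun x => ?_
    obtain ⟨x, rfl⟩ := Ideal.Quotient.mk_surjective x
    rw [← sub_eq_zero, ← map_pow, ← map_sub]
    exact Ideal.Quotient.eq_zero_iff_mem.2 (h x)
  have hQq : Ideal.absNorm Q = Nat.card (𝓞 F ⧸ P) := by
    rw [Ideal.absNorm_apply, Submodule.cardQuot_apply]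
    exact le_antisymm hge hle
  refine ⟨p, hp, hpQ, hdvd, _, hQq, h, ?_⟩
  have hdiv : Nat.card (𝓞 F ⧸ P) ∣ p ^ 2 := by
    have h1 : Ideal.span {(p : 𝓞 F)} ≤ P := by
      rw [Ideal.span_singleton_le_iff_mem, hP, Ideal.under_def, Ideal.mem_comap, map_natCast]
      exact hpQ
    have h2 := Ideal.absNorm_dvd_absNorm_of_le h1
    rw [Ideal.absNorm_span_natCast, RingOfIntegers.rank, S.hF] at h2
    rwa [Ideal.absNorm_apply, Submodule.cardQuot_apply] at h2
  -- the residue field `𝔽_p` inside the residue field of `F`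
  haveI : CharP (𝓞 F ⧸ P) p := by
    refine ⟨fun n => ?_⟩
    rw [← map_natCast (Ideal.Quotient.mk P), Ideal.Quotient.eq_zero_iff_mem, hP, Ideal.under_def,
      Ideal.mem_comap, map_natCast]
    refine ⟨fun hn => ?_, ?_⟩
    · exact_mod_cast hdvd n (by exact_mod_cast hn)
    · rintro ⟨m, rfl⟩
      push_cast
      exact Ideal.mul_mem_right _ _ hpQ
  have hinj : Function.Injective (ZMod.castHom (dvd_refl p) (𝓞 F ⧸ P)) := (ZMod.castHom _ _).injective
  have hpc : Nat.card (ZMod p) = p := Nat.card_zmod p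
  by_cases hr : ∃ r : ℤ, S.ωi - r ∈ Q
  · refine Or.inl ⟨?_, hr⟩
    obtain ⟨r, hr⟩ := hr
    have hsurj : Function.Surjective (ZMod.castHom (dvd_refl p) (𝓞 F ⧸ P)) := by
      intro x
      obtain ⟨x, rfl⟩ := Ideal.Quotient.mk_surjective x
      obtain ⟨a, b, hab⟩ := S.exists_lin x
      refine ⟨((a + b * r : ℤ) : ZMod p), ?_⟩
      rw [map_intCast, ← map_intCast (Ideal.Quotient.mk P), Ideal.Quotient.eq, hP, Ideal.under_def,
        Ideal.mem_comap, map_sub, map_intCast, hab, ← neg_mem_iff]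
      have : -(((a + b * r : ℤ) : 𝓞 H) - ev S.ωi (a, b)) = b * (S.ωi - r) := by
        simp only [ev]; push_cast; ring
      rw [this]
      exact Ideal.mul_mem_left _ _ hr
    rw [← hpc]
    exact (Nat.card_eq_of_bijective _ ⟨hinj, hsurj⟩).symm
  · push Not at hr
    refine Or.inr ⟨?_, hr⟩
    obtain ⟨k, hk, hk'⟩ := (Nat.dvd_prime_pow hp).1 hdiv
    interval_cases k
    · rw [pow_zero] at hk'; omega
    · exfalso
      rw [pow_one] at hk'
      have hbij := (Nat.bijective_iff_injective_and_card (ZMod.castHom (dvd_refl p) (𝓞 F ⧸ P))).2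
        ⟨hinj, by rw [hpc, hk']⟩
      have hwF : IsIntegral ℤ S.w := by
        refine IsIntegral.of_pow (n := 3) (by norm_num) ?_
        rw [S.w_cube]; exact isIntegral_one
      obtain ⟨W, hW⟩ : ∃ W : 𝓞 F, algebraMap (𝓞 F) (𝓞 H) W = S.ωi := ⟨⟨S.w, hwF⟩, rfl⟩
      obtain ⟨r, hr'⟩ := hbij.2 (Ideal.Quotient.mk P W)
      obtain ⟨r, rfl⟩ := ZMod.intCast_surjective r
      rw [map_intCast, ← map_intCast (Ideal.Quotient.mk P), eq_comm, Ideal.Quotient.eq, hP,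
        Ideal.under_def, Ideal.mem_comap, map_sub, map_intCast, hW] at hr'
      exact hr r hr'
    · exact hk'

section Cases
variable {Q : Ideal (𝓞 H)} (hQ : Q.IsPrime) {p : ℕ} (hp : p.Prime) (hpQ : (p : 𝓞 H) ∈ Q)
  (hdvd : ∀ n : ℤ, (n : 𝓞 H) ∈ Q → (p : ℤ) ∣ n)

lemma int_mem_iff (hpQ : (p : 𝓞 H) ∈ Q) (hdvd : ∀ n : ℤ, (n : 𝓞 H) ∈ Q → (p : ℤ) ∣ n) (n : ℤ) :
    (n : 𝓞 H) ∈ Q ↔ (p : ℤ) ∣ n := by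
  refine ⟨hdvd n, ?_⟩
  rintro ⟨m, rfl⟩
  push_cast
  exact Ideal.mul_mem_right _ _ hpQ

lemma two_notMem (hp2 : p ≠ 2) (hp : p.Prime) (hdvd : ∀ n : ℤ, (n : 𝓞 H) ∈ Q → (p : ℤ) ∣ n) :
    (2 : 𝓞 H) ∉ Q := by
  intro h
  have h1 := hdvd 2 (by exact_mod_cast h)
  have h2 : p ∣ 2 := by exact_mod_cast h1
  exact hp2 ((Nat.prime_dvd_prime_iff_eq hp Nat.prime_two).1 h2)

lemma ev_mem_norm {x : ℤ × ℤ} (h : ev S.ωi x ∈ Q)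
    (hdvd : ∀ n : ℤ, (n : 𝓞 H) ∈ Q → (p : ℤ) ∣ n) : (p : ℤ) ∣ x.1 ^ 2 - x.1 * x.2 + x.2 ^ 2 := by
  apply hdvd
  have : ((x.1 ^ 2 - x.1 * x.2 + x.2 ^ 2 : ℤ) : 𝓞 H) = ev S.ωi (x.1 - x.2, -x.2) * ev S.ωi x := by
    simp only [ev]; push_cast; linear_combination (x.2 : 𝓞 H) ^ 2 * S.ωi_sq
  rw [this]
  exact Ideal.mul_mem_left _ _ h

lemma ev_mem_of_root {r : ℤ} (hr : S.ωi - r ∈ Q) (x : ℤ × ℤ) :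
    ev S.ωi x ∈ Q ↔ ((x.1 + x.2 * r : ℤ) : 𝓞 H) ∈ Q := by
  have : ev S.ωi x = x.2 * (S.ωi - r) + ((x.1 + x.2 * r : ℤ) : 𝓞 H) := by
    simp only [ev]; push_cast; ring
  rw [this]
  exact Ideal.add_mem_iff_right _ (Ideal.mul_mem_left _ _ hr)

/-- `t` as an algebraic integer. -/
def ti : 𝓞 H := ⟨S.t, S.isIntegral_t⟩

lemma ti_pow : S.ti ^ 6 = S.ωi * (1 - S.ωi) * (2 + 3 * S.ωi) ^ 5 := RingOfIntegers.ext S.ht'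

lemma degree_one [IsGalois F H] (hQ : Q.IsPrime) (hQ0 : Q ≠ ⊥) (hp : p.Prime) (hp2 : p ≠ 2)
    (h6 : p % 6 = 1) (hn : Ideal.absNorm Q = p) (hfr : ∀ x, x ^ p - x ∈ Q)
    (hpQ : (p : 𝓞 H) ∈ Q) (hdvd : ∀ n : ℤ, (n : 𝓞 H) ∈ Q → (p : ℤ) ∣ n)
    {r : ℕ} (hrp : r < p) (hr : S.ωi - r ∈ Q) {v : List ℤ} (hv : chkR p r v = true) :
    ∃ α, Q = Ideal.span {α} := by
  have hr' : S.ωi - (r : ℤ) ∈ Q := by simpa using hr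
  unfold chkR at hv
  split at hv
  · exfalso
    simp only [Bool.and_eq_true, bne_iff_ne] at hv
    obtain ⟨h1, h2⟩ := hv
    apply h2
    set d := (r * (p + 1 - r) * (2 + 3 * r) ^ 5) % p with hd
    -- work in the residue field
    have hQt := Ideal.Quotient.isDomain Q
    have hchar : CharP (𝓞 H ⧸ Q) p := by
      refine ⟨fun n => ?_⟩
      rw [← map_natCast (Ideal.Quotient.mk Q), Ideal.Quotient.eq_zero_iff_mem]
      have := int_mem_iff hpQ hdvd n
      rw [Int.natCast_dvd_natCast] at this
      simpa using this
    have hω : Ideal.Quotient.mk Q S.ωi = (r : 𝓞 H ⧸ Q) := by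
      rw [← map_natCast (Ideal.Quotient.mk Q)]
      exact Ideal.Quotient.eq.2 hr
    have hdt : (Ideal.Quotient.mk Q S.ti) ^ 6 = (d : 𝓞 H ⧸ Q) := by
      rw [← map_pow, S.ti_pow, map_mul, map_mul, map_sub, map_pow, map_add, map_mul, hω, hd,
        map_ofNat, map_ofNat, map_one]
      have : (((r * (p + 1 - r) * (2 + 3 * r) ^ 5) % p : ℕ) : 𝓞 H ⧸ Q) =
          ((r * (p + 1 - r) * (2 + 3 * r) ^ 5 : ℕ) : 𝓞 H ⧸ Q) := by
        rw [CharP.cast_eq_mod (𝓞 H ⧸ Q) p (r * (p + 1 - r) * (2 + 3 * r) ^ 5)]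
      rw [this]
      push_cast [Nat.cast_sub (show r ≤ p + 1 by omega)]
      rw [CharP.cast_eq_zero (𝓞 H ⧸ Q) p, zero_add]
    have hd0 : (d : 𝓞 H ⧸ Q) ≠ 0 := by
      rw [Ne, CharP.cast_eq_zero_iff _ p]
      intro hdd
      exact h1 (Nat.eq_zero_of_dvd_of_lt hdd (Nat.mod_lt _ hp.pos))
    have ht0 : Ideal.Quotient.mk Q S.ti ≠ 0 := by
      intro h0
      rw [h0, zero_pow (by norm_num)] at hdt
      exact hd0 hdt.symm
    have htp : (Ideal.Quotient.mk Q S.ti) ^ (p - 1) = 1 := by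
      have h := Ideal.Quotient.eq_zero_iff_mem.2 (hfr S.ti)
      rw [map_sub, map_pow, sub_eq_zero] at h
      apply mul_right_cancel₀ ht0
      rw [← pow_succ, Nat.sub_add_cancel hp.one_le, h, one_mul]
    have hfin : ((d ^ ((p - 1) / 6) : ℕ) : 𝓞 H ⧸ Q) = ((1 : ℕ) : 𝓞 H ⧸ Q) := by
      push_cast
      rw [← hdt, ← pow_mul, show 6 * ((p - 1) / 6) = p - 1 by omega, htp]
    rw [CharP.natCast_eq_natCast (𝓞 H ⧸ Q) p] at hfin
    rw [Nat.ModEq] at hfin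
    rw [hfin]
    exact Nat.mod_eq_of_lt hp.one_lt
  · simp only [Bool.and_eq_true, beq_iff_eq] at hv
    refine S.principal_of_cert hQ (two_notMem hp2 hp hdvd) hQ0 v (by rw [hv.1, hn]) ?_
    rw [S.ev_mem_of_root hr', int_mem_iff hpQ hdvd]
    exact Int.dvd_of_emod_eq_zero hv.2

end Cases

end Setup

end

section
open Polynomial WithZero NumberField
open scoped Pointwise nonZeroDivisors

/-- Powers of an Eisenstein integer modulo `p`, computed with pairs. -/
def ppow (p : ℕ) (x : ℤ × ℤ) : ℕ → ℤ × ℤ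
  | 0 => (1, 0)
  | n + 1 => match pmul x (ppow p x n) with
    | (a, b) => (a % p, b % p)

/-- `δ = ω(1 - ω)(2 + 3ω)⁵` as a pair. -/
def deltaP : ℤ × ℤ := pmul (1, 2) (pmul (2, 3) (pmul (pmul (2, 3) (2, 3)) (pmul (2, 3) (2, 3))))

/-- Checks that neither `δ` nor `δᵉ - 1` vanishes in the field with `p²` elements. -/
def chkInert (p e : ℕ) : Bool :=
  (deltaP.1 ^ 2 - deltaP.1 * deltaP.2 + deltaP.2 ^ 2) % p != 0 &&
  (((ppow p deltaP e).1 - 1) ^ 2 - ((ppow p deltaP e).1 - 1) * (ppow p deltaP e).2 +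
    (ppow p deltaP e).2 ^ 2) % p != 0

namespace Setup
variable {F H : Type*} [Field F] [NumberField F] [Field H] [NumberField H] [Algebra F H]
  (S : Setup F H)

variable {Q : Ideal (𝓞 H)} {p : ℕ}

lemma ev_deltaP : ev S.ωi deltaP = S.ti ^ 6 := by
  have h := S.ωi_sq
  rw [deltaP, S.ti_pow]
  simp only [ev_pmul S.ωi_sq]
  simp only [ev]
  push_cast
  linear_combination (-2 * (2 + 3 * S.ωi) ^ 5) * h + (3 * (2 + 3 * S.ωi) ^ 5) * h

lemma ev_ppow (hpQ : (p : 𝓞 H) ∈ Q) (x : ℤ × ℤ) (n : ℕ) :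
    ev S.ωi (ppow p x n) - ev S.ωi x ^ n ∈ Q := by
  induction n with
  | zero => simp [ppow, ev]
  | succ n ih =>
    have h1 : ev S.ωi (ppow p x (n + 1)) - ev S.ωi (pmul x (ppow p x n)) ∈ Q := by
      have h : ∀ a : ℤ, ((a % p : ℤ) : 𝓞 H) - a ∈ Q := by
        intro a
        have : ((a % p : ℤ) : 𝓞 H) - a = (p : 𝓞 H) * ((-(a / p) : ℤ) : 𝓞 H) := by
          have := Int.emod_add_mul_ediv a p
          have h2 : ((a % p + p * (a / p) : ℤ) : 𝓞 H) = a := by rw [this]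
          push_cast at h2 ⊢
          linear_combination h2
        rw [this]
        exact Ideal.mul_mem_right _ _ hpQ
      have e : ev S.ωi (ppow p x (n + 1)) - ev S.ωi (pmul x (ppow p x n)) =
          ((((pmul x (ppow p x n)).1 % p : ℤ) : 𝓞 H) - (pmul x (ppow p x n)).1) +
          ((((pmul x (ppow p x n)).2 % p : ℤ) : 𝓞 H) - (pmul x (ppow p x n)).2) * S.ωi := by
        rw [ppow, ev, ev]
        ring
      rw [e]
      exact Ideal.add_mem _ (h _) (Ideal.mul_mem_right _ _ (h _))
    rw [ev_pmul S.ωi_sq] at h1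
    have h2 := Ideal.mul_mem_left _ (ev S.ωi x) ih
    have : ev S.ωi (ppow p x (n + 1)) - ev S.ωi x ^ (n + 1) =
      (ev S.ωi (ppow p x (n + 1)) - ev S.ωi x * ev S.ωi (ppow p x n)) +
        ev S.ωi x * (ev S.ωi (ppow p x n) - ev S.ωi x ^ n) := by ring
    rw [this]
    exact Ideal.add_mem _ h1 h2

/-- The residue field of a completely split prime over an inert `p` would contain a sixth root
of `δ`. -/
lemma inert_false (S : Setup F H) (hQ : Q.IsPrime) (hp : p.Prime) (hfr : ∀ x, x ^ p ^ 2 - x ∈ Q)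
    (hpQ : (p : 𝓞 H) ∈ Q) (hdvd : ∀ n : ℤ, (n : 𝓞 H) ∈ Q → (p : ℤ) ∣ n) {e m : ℕ}
    (he : 6 * e = m * (p ^ 2 - 1)) (hc : chkInert p e = true) : False := by
  simp only [chkInert, Bool.and_eq_true, bne_iff_ne] at hc
  have h0 : S.ti ∉ Q := by
    intro h
    have : ev S.ωi deltaP ∈ Q := by
      rw [ev_deltaP]; exact Ideal.pow_mem_of_mem _ h 6 (by norm_num)
    exact hc.1 (Int.emod_eq_zero_of_dvd (S.ev_mem_norm this hdvd))
  have h1 : S.ti ^ (p ^ 2 - 1) - 1 ∈ Q := by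
    have h := hfr S.ti
    have hpos : 1 ≤ p ^ 2 := Nat.one_le_pow _ _ hp.pos
    have : S.ti ^ p ^ 2 - S.ti = S.ti * (S.ti ^ (p ^ 2 - 1) - 1) := by
      conv_lhs => rw [← Nat.sub_add_cancel hpos, pow_succ]
      ring
    rw [this] at h
    exact (hQ.mem_or_mem h).resolve_left h0
  have h2 : ev S.ωi deltaP ^ e - 1 ∈ Q := by
    rw [ev_deltaP, ← pow_mul, he, mul_comm m, pow_mul]
    exact Q.mem_of_dvd (sub_one_dvd_pow_sub_one _ _) h1
  have h3 : ev S.ωi ((ppow p deltaP e).1 - 1, (ppow p deltaP e).2) ∈ Q := by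
    have := Ideal.add_mem _ (S.ev_ppow hpQ deltaP e) h2
    have e1 : ev S.ωi ((ppow p deltaP e).1 - 1, (ppow p deltaP e).2) =
      ev S.ωi (ppow p deltaP e) - ev S.ωi deltaP ^ e + (ev S.ωi deltaP ^ e - 1) := by
      simp only [ev]; push_cast; ring
    rwa [e1]
  exact hc.2 (Int.emod_eq_zero_of_dvd (S.ev_mem_norm h3 hdvd))

lemma root_cases (hQ : Q.IsPrime) (hpQ : (p : 𝓞 H) ∈ Q) {r : ℕ} (hr : (r ^ 2 + r + 1) % p = 0)
    (hrp : r < p) : S.ωi - r ∈ Q ∨ S.ωi - (p - 1 - r : ℕ) ∈ Q := by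
  have h : (S.ωi - r) * (S.ωi - (p - 1 - r : ℕ)) ∈ Q := by
    obtain ⟨m, hm⟩ := Nat.dvd_of_mod_eq_zero hr
    have hm' : (r : 𝓞 H) ^ 2 + r + 1 = p * m := by exact_mod_cast hm
    have : (S.ωi - r) * (S.ωi - (p - 1 - r : ℕ)) = (p : 𝓞 H) * (r - S.ωi - m) := by
      rw [Nat.sub_sub, Nat.cast_sub (by omega)]
      push_cast
      linear_combination S.ωi_sq - hm'
    rw [this]
    exact Ideal.mul_mem_right _ _ hpQ
  exact hQ.mem_or_mem h

lemma int_root (hdvd : ∀ n : ℤ, (n : 𝓞 H) ∈ Q → (p : ℤ) ∣ n) {r : ℤ} (hr : S.ωi - r ∈ Q) :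
    (p : ℤ) ∣ r ^ 2 + r + 1 := by
  apply hdvd
  have : ((r ^ 2 + r + 1 : ℤ) : 𝓞 H) = (S.ωi - r) * (-(S.ωi + r + 1)) := by
    push_cast; linear_combination S.ωi_sq
  rw [this]
  exact Ideal.mul_mem_right _ _ hr

lemma mod_three_of_root (hp : p.Prime) {r : ℤ} (h : (p : ℤ) ∣ r ^ 2 + r + 1) : p = 3 ∨ p % 3 = 1 := by
  haveI : Fact p.Prime := ⟨hp⟩
  have h1 : (r : ZMod p) ^ 2 + r + 1 = 0 := by
    have := (ZMod.intCast_zmod_eq_zero_iff_dvd (r ^ 2 + r + 1) p).2 h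
    exact_mod_cast this
  by_cases hr : (r : ZMod p) = 1
  · left
    rw [hr] at h1
    have h3 : ((3 : ℕ) : ZMod p) = 0 := by
      push_cast; linear_combination h1
    rw [ZMod.natCast_eq_zero_iff] at h3
    exact (Nat.prime_dvd_prime_iff_eq hp Nat.prime_three).1 h3
  · right
    have hc : (r : ZMod p) ^ 3 = 1 := by linear_combination ((r : ZMod p) - 1) * h1
    have ho : orderOf (r : ZMod p) = 3 := orderOf_eq_prime hc hr
    have h0 : (r : ZMod p) ≠ 0 := by
      intro h0; rw [h0] at h1; simp at h1
    have := ZMod.orderOf_dvd_card_sub_one h0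
    rw [ho] at this
    have := hp.two_le
    omega

lemma trichotomy [IsGalois F H] (Q : Ideal (𝓞 H)) (hQ : Q.IsPrime) (hQ0 : Q ≠ ⊥)
    (hb : Ideal.absNorm Q ≤ 9107) :
    S.τ ^ 2 • Q = Q ∨ S.τ ^ 3 • Q = Q ∨ ∃ α, Q = Ideal.span {α} := by
  rcases S.frob_cases Q hQ hQ0 with h | h | ⟨p, hp, hpQ, hdvd, q, hq, hfr, ⟨rfl, r, hr⟩ | ⟨rfl, hr⟩⟩
  · exact Or.inl h
  · exact Or.inr (Or.inl h)
  · refine Or.inr (Or.inr ?_)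
    rcases mod_three_of_root hp (S.int_root hdvd hr) with h3 | h3
    · subst h3
      refine S.principal_of_cert hQ (two_notMem (by norm_num) hp hdvd) hQ0
        [1, 1, 0, 0, 0, 0, 0, -1, 0, 1, 0, 0] (by rw [hq]; decide +kernel) ?_
      have : nfP [1, 1, 0, 0, 0, 0, 0, -1, 0, 1, 0, 0] = (-128, -64) := by decide +kernel
      rw [this, S.ev_mem_of_root hr, int_mem_iff hpQ hdvd]
      have h1 := S.int_root hdvd hr
      have h2 : r % 3 = 0 ∨ r % 3 = 1 ∨ r % 3 = 2 := by omega
      have hm : (r ^ 2 + r + 1) % 3 = 0 := Int.emod_eq_zero_of_dvd h1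
      rcases h2 with h2 | h2 | h2 <;> simp [pow_two, Int.add_emod, Int.mul_emod, h2] at hm
      push_cast
      omega
    · obtain ⟨e, he, hep⟩ := exists_mem_primeTable hp h3 (hq ▸ hb)
      have hc := List.all_eq_true.1 primeTable_chk e he
      obtain ⟨p', r₀, v, v'⟩ := e
      simp only at hep
      subst hep
      simp only [chkE, Bool.and_eq_true, beq_iff_eq, decide_eq_true_eq] at hc
      obtain ⟨⟨⟨⟨h1, h2⟩, h6⟩, hv⟩, hv'⟩ := hc
      rcases S.root_cases hQ hpQ h1 h2 with h | h
      · exact S.degree_one hQ hQ0 hp (by omega) h6 hq hfr hpQ hdvd h2 h hv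
      · exact S.degree_one hQ hQ0 hp (by omega) h6 hq hfr hpQ hdvd (by omega) h hv'
  · refine Or.inr (Or.inr ?_)
    rw [hq] at hb
    have hlt : p < 96 := by nlinarith
    have h3 : p ≠ 3 := by
      rintro rfl
      apply hr 1
      refine hQ.mem_of_pow_mem 2 ?_
      have : (S.ωi - ((1 : ℤ) : 𝓞 H)) ^ 2 = ((3 : ℕ) : 𝓞 H) * (-S.ωi) := by
        push_cast; linear_combination S.ωi_sq
      rw [this]
      exact Ideal.mul_mem_right _ _ hpQ
    have h1 : p % 3 ≠ 1 := by
      intro h1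
      obtain ⟨e, he, hep⟩ := exists_mem_primeTable hp h1 (by omega)
      have hc := List.all_eq_true.1 primeTable_chk e he
      obtain ⟨p', r₀, v, v'⟩ := e
      simp only at hep
      subst hep
      simp only [chkE, Bool.and_eq_true, beq_iff_eq, decide_eq_true_eq] at hc
      obtain ⟨⟨⟨⟨h1, h2⟩, h6⟩, hv⟩, hv'⟩ := hc
      rcases S.root_cases hQ hpQ h1 h2 with h | h
      · exact hr r₀ (by simpa using h)
      · exact hr (p' - 1 - r₀ : ℕ) (by simpa using h)
    have hcert : ∀ v : List ℤ, (nfP v).1 ^ 2 - (nfP v).1 * (nfP v).2 + (nfP v).2 ^ 2 = 4096 * (p ^ 2 : ℕ) →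
        (p : ℤ) ∣ (nfP v).1 → (p : ℤ) ∣ (nfP v).2 → p ≠ 2 → ∃ α, Q = Ideal.span {α} := by
      intro v hv ha hb' hp2
      refine S.principal_of_cert hQ (two_notMem hp2 hp hdvd) hQ0 v (by rw [hq, hv]) ?_
      exact Ideal.add_mem _ ((int_mem_iff hpQ hdvd _).2 ha)
        (Ideal.mul_mem_right _ _ ((int_mem_iff hpQ hdvd _).2 hb'))
    have hin : ∀ e m : ℕ, 6 * e = m * (p ^ 2 - 1) → chkInert p e = true → ∃ α, Q = Ideal.span {α} :=
      fun e m he hc => (S.inert_false hQ hp hfr hpQ hdvd he hc).elim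
    have hlist : p ∈ [2, 5, 11, 17, 23, 29, 41, 47, 53, 59, 71, 83, 89] := by
      have key : ∀ n ∈ Finset.range 96, n.Prime → n ≠ 3 → n % 3 ≠ 1 →
          n ∈ [2, 5, 11, 17, 23, 29, 41, 47, 53, 59, 71, 83, 89] := by decide +kernel
      exact key p (Finset.mem_range.2 hlt) hp h3 h1
    simp only [List.mem_cons, List.not_mem_nil, or_false] at hlist
    rcases hlist with rfl | rfl | rfl | rfl | rfl | rfl | rfl | rfl | rfl | rfl | rfl | rfl | rfl
    · exact hin 1 2 (by norm_num) (by decide +kernel)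
    · exact hin 4 1 (by norm_num) (by decide +kernel)
    · exact hin 20 1 (by norm_num) (by decide +kernel)
    · exact hin 48 1 (by norm_num) (by decide +kernel)
    · exact hin 88 1 (by norm_num) (by decide +kernel)
    · exact hin 140 1 (by norm_num) (by decide +kernel)
    · exact hcert [0, 0, 0, 0, 0, 1, -1, -1, 0, 0, 0, 0] (by decide +kernel) (by decide +kernel)
        (by decide +kernel) (by norm_num)
    · exact hin 368 1 (by norm_num) (by decide +kernel)
    · exact hin 468 1 (by norm_num) (by decide +kernel)
    · exact hin 580 1 (by norm_num) (by decide +kernel)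
    · exact hin 840 1 (by norm_num) (by decide +kernel)
    · exact hcert [-1, 0, 0, -1, 1, 1, 0, 0, 1, 2, -2, -2] (by decide +kernel) (by decide +kernel)
        (by decide +kernel) (by norm_num)
    · exact hin 1320 1 (by norm_num) (by decide +kernel)

/-- The relation between the classes of conjugates which cuts the `7`-part of the class group. -/
theorem rel [IsGalois F H] (I : Ideal (𝓞 H)) (hI : I ≠ ⊥) : S.Rel I :=
  S.rel_all S.trichotomy I hI

end Setup

end

/-! ### Units close to rational integers -/

section
open Polynomial WithZero NumberField IsDedekindDomain
open scoped Pointwise nonZeroDivisors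

/-- A prime of norm `7` has the residues `0, …, 6`. -/
lemma exists_int_sub_mem {H : Type*} [Field H] [NumberField H] {Q : Ideal (𝓞 H)}
    (h : Ideal.absNorm Q = 7) (x : 𝓞 H) : ∃ n : ℤ, x - n ∈ Q := by
  have hne : Q ≠ ⊤ := by
    rintro rfl
    rw [Ideal.absNorm_top] at h
    norm_num at h
  have hc : Nat.card (𝓞 H ⧸ Q) = 7 := h
  haveI : Finite (𝓞 H ⧸ Q) := Nat.finite_of_card_ne_zero (by omega)
  haveI : Nontrivial (𝓞 H ⧸ Q) := Ideal.Quotient.nontrivial_iff.2 hne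
  haveI : Fact (Nat.Prime 7) := ⟨by norm_num⟩
  have h7 : ((7 : ℕ) : 𝓞 H ⧸ Q) = 0 := by
    rw [← h, ← map_natCast (Ideal.Quotient.mk Q), Ideal.Quotient.eq_zero_iff_mem]
    exact Ideal.absNorm_mem Q
  haveI : CharP (𝓞 H ⧸ Q) 7 := by
    rcases CharP.exists (𝓞 H ⧸ Q) with ⟨c, hc⟩
    have := (CharP.cast_eq_zero_iff (𝓞 H ⧸ Q) c 7).1 h7
    rcases (Nat.dvd_prime (by norm_num)).1 this with h1 | h1
    · subst h1
      exact absurd (CharP.ringChar_ne_one (R := 𝓞 H ⧸ Q)) (by simp [ringChar.eq (𝓞 H ⧸ Q) 1])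
    · subst h1; exact hc
  have hinj : Function.Injective (ZMod.castHom (dvd_refl 7) (𝓞 H ⧸ Q)) := RingHom.injective _
  have hbij := hinj.bijective_of_nat_card_le (by rw [hc]; simp)
  obtain ⟨z, hz⟩ := hbij.2 (Ideal.Quotient.mk Q x)
  refine ⟨(z.val : ℤ), ?_⟩
  rw [← Ideal.Quotient.eq_zero_iff_mem, map_sub, ← hz]
  simp only [Int.cast_natCast, map_natCast]
  rw [sub_eq_zero]
  conv_lhs => rw [← ZMod.natCast_zmod_val z]
  rw [map_natCast]

namespace Setup
variable {F H : Type*} [Field F] [NumberField F] [Field H] [NumberField H] [Algebra F H]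
  (S : Setup F H) [IsGalois F H] {q : HeightOneSpectrum (𝓞 H)}

/-- `e₅` as an algebraic integer. -/
def e5i : 𝓞 H := ⟨S.e₅, S.isIntegral_e₅⟩

lemma e₅_pow : S.e₅ ^ 6 = S.ω ^ 2 * (1 - S.ω) ^ 5 * (2 + 3 * S.ω) := by
  have h := S.sextic
  have h1 : S.e₅ ^ 6 = (S.e₅ * S.e₅) * (S.e₅ * S.e₅) * (S.e₅ * S.e₅) := by ring
  rw [h1, h.h55]
  have h2 : (1 - S.ω) * S.e₄ * ((1 - S.ω) * S.e₄) * ((1 - S.ω) * S.e₄) =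
    (1 - S.ω) ^ 3 * (S.e₄ * S.e₄) * S.e₄ := by ring
  rw [h2, h.h44]
  linear_combination (1 - S.ω) ^ 4 * S.ω * h.h24

lemma seven_eq : (7 : H) = (2 + 3 * S.ω) * (-1 - 3 * S.ω) := by
  linear_combination 9 * S.hω

lemma absNorm_e5i : Ideal.absNorm (Ideal.span {S.e5i}) = 3 ^ 5 * 7 := by
  rw [Ideal.absNorm_span_singleton]
  have e1 : (Algebra.norm ℤ S.e5i : ℚ) = Algebra.norm ℚ S.e₅ := Algebra.coe_norm_int _
  have e2 := S.norm_elt_rat [0, 0, 1, 1, 0, 0, 0, 0, 0, 0, 2, 0]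
  have e3 : S.elt [0, 0, 1, 1, 0, 0, 0, 0, 0, 0, 2, 0] = S.e₅ := by
    simp only [elt, ev, h₅]
    push_cast
    linear_combination S.e₂ * S.hω
  have e4 : (nfP [0, 0, 1, 1, 0, 0, 0, 0, 0, 0, 2, 0]).1 ^ 2 - (nfP [0, 0, 1, 1, 0, 0, 0, 0, 0, 0, 2, 0]).1 *
      (nfP [0, 0, 1, 1, 0, 0, 0, 0, 0, 0, 2, 0]).2 + (nfP [0, 0, 1, 1, 0, 0, 0, 0, 0, 0, 2, 0]).2 ^ 2 =
      4096 * (3 ^ 5 * 7) := by decide +kernel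
  rw [e3, e4, ← e1] at e2
  have e5 : 4096 * Algebra.norm ℤ S.e5i = 4096 * (3 ^ 5 * 7) := by exact_mod_cast e2
  have e6 : Algebra.norm ℤ S.e5i = 3 ^ 5 * 7 := by linarith
  rw [e6]; rfl


lemma seven_mem (hq : (2 + 3 * S.ωi) ∈ q.asIdeal) : (7 : 𝓞 H) ∈ q.asIdeal := by
  have : (7 : 𝓞 H) = (2 + 3 * S.ωi) * (-1 - 3 * S.ωi) := by linear_combination 9 * S.ωi_sq
  rw [this]
  exact Ideal.mul_mem_right _ _ hq

lemma e5i_mem (hq : (2 + 3 * S.ωi) ∈ q.asIdeal) : S.e5i ∈ q.asIdeal := by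
  refine q.isPrime.mem_of_pow_mem 6 ?_
  have : S.e5i ^ 6 = S.ωi ^ 2 * (1 - S.ωi) ^ 5 * (2 + 3 * S.ωi) := RingOfIntegers.ext S.e₅_pow
  rw [this]
  exact Ideal.mul_mem_left _ _ hq

lemma absNorm_q (hq : (2 + 3 * S.ωi) ∈ q.asIdeal) : Ideal.absNorm q.asIdeal = 7 := by
  have h1 : Ideal.absNorm q.asIdeal ∣ 3 ^ 5 * 7 := by
    rw [← S.absNorm_e5i]
    exact Ideal.absNorm_dvd_absNorm_of_le ((Ideal.span_singleton_le_iff_mem _).2 (S.e5i_mem hq))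
  have h2 : Ideal.absNorm q.asIdeal ∣ 7 ^ 12 := by
    have := Ideal.absNorm_dvd_absNorm_of_le ((Ideal.span_singleton_le_iff_mem _).2 (S.seven_mem hq))
    rw [Ideal.absNorm_span_singleton] at this
    have e : Algebra.norm ℤ (7 : 𝓞 H) = 7 ^ 12 := by
      have h := Algebra.norm_algebraMap (S := 𝓞 H) (7 : ℤ)
      rw [RingOfIntegers.rank, S.finrank_H] at h
      rw [map_ofNat] at h
      exact_mod_cast h
    rw [e] at this
    exact this
  have h3 := Nat.dvd_gcd h1 h2
  have h4 : Nat.gcd (3 ^ 5 * 7) (7 ^ 12) = 7 := by decide +kernel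
  rw [h4] at h3
  rcases (Nat.dvd_prime (by norm_num)).1 h3 with h | h
  · exact absurd (Ideal.absNorm_eq_one_iff.1 h) q.isPrime.ne_top
  · exact h

lemma residue (hq : (2 + 3 * S.ωi) ∈ q.asIdeal) {x : H} (hx : q.valuation H x ≤ 1) :
    ∃ n : ℤ, q.valuation H (x - n) < 1 := by
  obtain ⟨a, ha⟩ := q.exists_valuation_sub_lt_of_integer hx 1
  obtain ⟨n, hn⟩ := exists_int_sub_mem (S.absNorm_q hq) a
  refine ⟨n, ?_⟩
  have h := (q.valuation_lt_one_iff_mem (K := H) (a - n)).2 hn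
  have : x - n = algebraMap (𝓞 H) H (a - n) - (algebraMap (𝓞 H) H a - x) := by
    rw [map_sub, map_intCast]; ring
  rw [this]
  exact Valuation.map_sub_lt _ h (by simpa using ha)

lemma val_e₅ (hq : (2 + 3 * S.ωi) ∈ q.asIdeal) : q.valuation H S.e₅ = exp (-1 : ℤ) := by
  have h1 : q.valuation H S.e₅ < 1 := (q.valuation_lt_one_iff_mem (K := H) S.e5i).2 (S.e5i_mem hq)
  refine le_antisymm (le_exp_neg_one h1) ?_
  by_contra! h
  have h2 : q.valuation H S.e₅ ≤ exp (-(2 : ℕ) : ℤ) := by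
    obtain ⟨n, hn⟩ := val_exp (q.valuation H) (x := S.e₅) (by
      intro h0
      have := S.e₅_pow
      rw [h0] at this
      simp [S.ω_ne_zero, S.μ_ne_zero, S.ρ_ne_zero] at this)
    rw [hn, exp_lt_exp] at h
    rw [hn, exp_le_exp]
    push_cast; omega
  have h3 : S.e5i ∈ q.asIdeal ^ 2 := by
    rw [← q.intValuation_le_pow_iff_mem]
    rwa [← q.valuation_of_algebraMap (K := H)]
  have h4 := Ideal.absNorm_dvd_absNorm_of_le ((Ideal.span_singleton_le_iff_mem _).2 h3)
  rw [map_pow, S.absNorm_q hq, S.absNorm_e5i] at h4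
  norm_num at h4

end Setup

end

section
open Polynomial WithZero NumberField IsDedekindDomain
open scoped Pointwise nonZeroDivisors

namespace Setup
variable {F H : Type*} [Field F] [NumberField F] [Field H] [NumberField H] [Algebra F H]
  (S : Setup F H) [IsGalois F H] {q : HeightOneSpectrum (𝓞 H)}

lemma val_seven_lt (hq : (2 + 3 * S.ωi) ∈ q.asIdeal) : q.valuation H 7 < 1 := by
  exact (q.valuation_lt_one_iff_mem (K := H) 7).2 (S.seven_mem hq)

lemma val_integral (q : HeightOneSpectrum (𝓞 H)) {x : H} (hx : IsIntegral ℤ x) :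
    q.valuation H x ≤ 1 := q.valuation_le_one (K := H) (⟨x, hx⟩ : 𝓞 H)

lemma val_μ (hq : (2 + 3 * S.ωi) ∈ q.asIdeal) : q.valuation H (1 - S.ω) = 1 := by
  have h3 : q.valuation H ((3 : ℤ) : H) = 1 :=
    val_unit_of_coprime _ (p := 7) (by exact_mod_cast S.val_seven_lt hq) (by norm_num)
  have h : q.valuation H (1 - S.ω) ^ 2 = 1 := by
    rw [← map_pow, show (1 - S.ω) ^ 2 = -(S.ω * ((3 : ℤ) : H)) by
      push_cast; linear_combination S.hω, Valuation.map_neg, map_mul, h3, val_omega _ S.hω, one_mul]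
  exact (pow_eq_one_iff.1 h).resolve_right (by norm_num)

lemma val_ρ (hq : (2 + 3 * S.ωi) ∈ q.asIdeal) : q.valuation H (2 + 3 * S.ω) = exp (-6 : ℤ) := by
  have h := congrArg (q.valuation H) S.e₅_pow
  rw [map_mul, map_mul, map_pow, map_pow, map_pow, S.val_μ hq, val_omega _ S.hω, S.val_e₅ hq] at h
  simpa [← exp_nsmul] using h.symm

lemma val_seven_le (hq : (2 + 3 * S.ωi) ∈ q.asIdeal) : q.valuation H 7 ≤ exp (-6 : ℤ) := by
  rw [S.seven_eq, map_mul, S.val_ρ hq]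
  refine mul_le_of_le_one_right' ?_
  have := val_integral q (S.isIntegral_lin (-1) (-3))
  convert this using 2
  push_cast; ring

lemma val_dvd (hq : (2 + 3 * S.ωi) ∈ q.asIdeal) {n : ℤ} (hn : 7 ∣ n) :
    q.valuation H n ≤ exp (-6 : ℤ) := by
  obtain ⟨c, rfl⟩ := hn
  push_cast
  rw [map_mul]
  exact (mul_le_of_le_one_right' (val_int _ c)).trans (S.val_seven_le hq)

lemma val_es (hq : (2 + 3 * S.ωi) ∈ q.asIdeal) : q.valuation H S.e₄ = exp (-2 : ℤ) ∧
    q.valuation H S.e₃ = exp (-3 : ℤ) ∧ q.valuation H S.e₂ = exp (-4 : ℤ) ∧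
    q.valuation H S.t = exp (-5 : ℤ) := by
  have h5 := S.val_e₅ hq
  have hμ := S.val_μ hq
  have hw := val_omega (q.valuation H) S.hω
  have hs := S.sextic
  have h4 : q.valuation H S.e₄ = exp (-2 : ℤ) := by
    have h := congrArg (q.valuation H) hs.h55
    rw [map_mul, map_mul, hμ, h5, ← exp_add, one_mul] at h
    exact h.symm
  have h3 : q.valuation H S.e₃ = exp (-3 : ℤ) := by
    have h := congrArg (q.valuation H) hs.h45
    rw [map_mul, map_mul, map_mul, hw, hμ, h5, h4, ← exp_add, one_mul, one_mul] at h
    exact h.symm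
  have h2 : q.valuation H S.e₂ = exp (-4 : ℤ) := by
    have h := congrArg (q.valuation H) hs.h35
    rw [map_mul, map_mul, hμ, h5, h3, ← exp_add, one_mul] at h
    exact h.symm
  refine ⟨h4, h3, h2, ?_⟩
  have h := congrArg (q.valuation H) hs.h25
  rw [map_mul, map_mul, hμ, h5, h2, ← exp_add, one_mul] at h
  exact h.symm

lemma val_ev_sub (hq : (2 + 3 * S.ωi) ∈ q.asIdeal) (x : ℤ × ℤ) :
    q.valuation H (ev S.ω x - (x.1 + 4 * x.2 : ℤ)) ≤ exp (-6 : ℤ) := by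
  have h4 : q.valuation H (S.ω - 4) ≤ exp (-6 : ℤ) := by
    have : S.ω - 4 = (5 * (2 + 3 * S.ω)) - 7 * (2 + 2 * S.ω) := by ring
    rw [this]
    refine Valuation.map_sub_le (v := q.valuation H) ?_ ?_
    · rw [map_mul, S.val_ρ hq]
      exact mul_le_of_le_one_left' (val_ofNat _ 5)
    · rw [map_mul]
      refine (mul_le_of_le_one_right' ?_).trans (S.val_seven_le hq)
      have := val_integral q (S.isIntegral_lin 2 2)
      exact_mod_cast this
  have : ev S.ω x - (x.1 + 4 * x.2 : ℤ) = x.2 * (S.ω - 4) := by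
    rw [ev]; push_cast; ring
  rw [this, map_mul]
  exact (mul_le_of_le_one_left' (val_int _ _)).trans h4

lemma val_ev_dvd (hq : (2 + 3 * S.ωi) ∈ q.asIdeal) {x : ℤ × ℤ} (h : 7 ∣ x.1 + 4 * x.2) :
    q.valuation H (ev S.ω x) ≤ exp (-6 : ℤ) := by
  have := Valuation.map_add_le _ (S.val_ev_sub hq x) (S.val_dvd hq h)
  simpa using this

lemma val_ev_unit (hq : (2 + 3 * S.ωi) ∈ q.asIdeal) {x : ℤ × ℤ} (h : ¬ 7 ∣ x.1 + 4 * x.2) :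
    q.valuation H (ev S.ω x) = 1 := by
  have h1 : q.valuation H ((x.1 + 4 * x.2 : ℤ) : H) = 1 := by
    refine val_unit_of_coprime _ (p := 7) (by exact_mod_cast S.val_seven_lt hq) ?_
    have : Prime (7 : ℤ) := by norm_num
    exact ((Prime.coprime_iff_not_dvd this).2 h).symm
  have h2 := S.val_ev_sub hq x
  have h3 : q.valuation H (ev S.ω x - (x.1 + 4 * x.2 : ℤ)) < q.valuation H ((x.1 + 4 * x.2 : ℤ) : H) := by
    rw [h1]
    exact h2.trans_lt (by rw [← exp_zero, exp_lt_exp]; norm_num)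
  have := Valuation.map_add_eq_of_lt_left _ h3
  rw [← h1, ← this]
  congr 1; ring

/-- Twice the coordinates of `elt v` with respect to `1, e₅, e₄, e₃, e₂, t`, in this order (which is
the order of increasing valuation at the prime over `2 + 3ω`). -/
def coords (v : List ℤ) : ℕ → ℤ × ℤ :=
  match v with
  | [a₀, b₀, a₁, b₁, a₂, b₂, a₃, b₃, a₄, b₄, a₅, b₅] => fun k =>
    match k with
    | 0 => (2 * a₀ + a₃, 2 * b₀ + b₃)
    | 1 => (a₅, b₅)
    | 2 => padd (2 * a₂, 2 * b₂) (pmul (0, 1) (a₄, b₄))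
    | 3 => (a₃, b₃)
    | 4 => padd (2 * a₁, 2 * b₁) (pmul (-1, -1) (a₅, b₅))
    | 5 => (a₄, b₄)
    | _ => (0, 0)
  | _ => fun _ => (0, 0)

/-- The elements `1, e₅, e₄, e₃, e₂, t`. -/
def ebase : ℕ → H
  | 0 => 1
  | 1 => S.e₅
  | 2 => S.e₄
  | 3 => S.e₃
  | 4 => S.e₂
  | _ => S.t

lemma two_mul_elt (v : List ℤ) :
    2 * S.elt v = ∑ k ∈ Finset.range 6, ev S.ω (coords v k) * S.ebase k := by
  simp only [Finset.sum_range_succ, Finset.sum_range_zero, ebase]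
  unfold elt coords
  split
  · rename_i a₀ b₀ a₁ b₁ a₂ b₂ a₃ b₃ a₄ b₄ a₅ b₅
    simp only [ev_padd, ev_pmul S.hω, h₃, h₁, h₅]
    simp only [ev]
    push_cast
    linear_combination S.e₂ * (a₅ + b₅ * S.ω) * S.hω
  · simp [ev]

lemma val_ebase (hq : (2 + 3 * S.ωi) ∈ q.asIdeal) {k : ℕ} (hk : k < 6) :
    q.valuation H (S.ebase k) = exp (-k : ℤ) := by
  obtain ⟨h4, h3, h2, h1⟩ := S.val_es hq
  have h5 := S.val_e₅ hq
  interval_cases k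
  · simp [ebase]
  all_goals assumption

lemma val_elt (hq : (2 + 3 * S.ωi) ∈ q.asIdeal) {v : List ℤ} {j : ℕ} (hj0 : 0 < j) (hj : j < 6)
    (h1 : ¬ 7 ∣ (coords v j).1 + 4 * (coords v j).2)
    (h2 : ∀ k ∈ Finset.range j, k ≠ 0 → 7 ∣ (coords v k).1 + 4 * (coords v k).2) :
    ∃ n : ℤ, q.valuation H (S.elt v - n) = exp (-j : ℤ) := by
  set V := q.valuation H
  have hVint : ∀ x : ℤ × ℤ, V (ev S.ω x) ≤ 1 := fun x => val_integral q (S.isIntegral_ev x)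
  set n := (coords v 0).1 + 4 * (coords v 0).2 with hn
  have hterm : V (ev S.ω (coords v j) * S.ebase j) = exp (-j : ℤ) := by
    rw [map_mul, S.val_ev_unit hq h1, S.val_ebase hq hj, one_mul]
  have hle6 : exp (-6 : ℤ) ≤ exp (-(j : ℤ) - 1) := by rw [exp_le_exp]; omega
  have hrest : V (2 * S.elt v - n - ev S.ω (coords v j) * S.ebase j) ≤ exp (-(j : ℤ) - 1) := by
    rw [S.two_mul_elt, ← Finset.add_sum_erase _ _ (Finset.mem_range.2 hj),
      ← Finset.add_sum_erase _ _ (Finset.mem_erase.2 ⟨hj0.ne, Finset.mem_range.2 (by norm_num : 0 < 6)⟩)]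
    have e : ∀ s : H, ev S.ω (coords v j) * S.ebase j + (ev S.ω (coords v 0) * S.ebase 0 + s) - n -
      ev S.ω (coords v j) * S.ebase j = (ev S.ω (coords v 0) - n) + s := by
      intro s; rw [ebase]; ring
    rw [e]
    refine Valuation.map_add_le V ((S.val_ev_sub hq _).trans hle6) (Valuation.map_sum_le V ?_)
    intro k hk
    simp only [Finset.mem_erase, Finset.mem_range] at hk
    rw [map_mul, S.val_ebase hq hk.2.2]
    rcases lt_or_gt_of_ne hk.2.1 with h | h
    · refine (mul_le_mul' (S.val_ev_dvd hq (h2 k (Finset.mem_range.2 h) hk.1)) le_rfl).trans ?_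
      rw [← exp_add, exp_le_exp]; omega
    · refine (mul_le_of_le_one_left' (hVint _)).trans ?_
      rw [exp_le_exp]; omega
  have h2n : V (2 * S.elt v - n) = exp (-j : ℤ) := by
    rw [← hterm]
    have := Valuation.map_add_eq_of_lt_right V (x := 2 * S.elt v - n - ev S.ω (coords v j) * S.ebase j)
      (y := ev S.ω (coords v j) * S.ebase j)
      (hrest.trans_lt (by rw [hterm, exp_lt_exp]; omega))
    rw [← this]; congr 1; ring
  refine ⟨4 * n, ?_⟩
  have hd : V (7 * n) < exp (-j : ℤ) := by
    rw [map_mul]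
    refine ((mul_le_of_le_one_right' (val_int _ n)).trans (S.val_seven_le hq)).trans_lt ?_
    rw [exp_lt_exp]; omega
  have h2u : V ((2 : ℤ) : H) = 1 :=
    val_unit_of_coprime _ (p := 7) (by exact_mod_cast S.val_seven_lt hq) (by norm_num)
  have e : V (2 * (S.elt v - (4 * n : ℤ))) = exp (-j : ℤ) := by
    rw [← h2n]
    have := Valuation.map_add_eq_of_lt_left V (x := 2 * S.elt v - n) (y := -(7 * n))
      (by rwa [Valuation.map_neg, h2n])
    rw [← this]; congr 1; push_cast; ring
  rw [map_mul] at e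
  have h2u' : V (2 : H) = 1 := by exact_mod_cast h2u
  rwa [h2u', one_mul] at e

lemma exists_unit_elt (v : List ℤ) (hv : (nfP v).1 ^ 2 - (nfP v).1 * (nfP v).2 + (nfP v).2 ^ 2 = 4096) :
    ∃ u : (𝓞 H)ˣ, ((u : 𝓞 H) : H) = S.elt v := by
  let α : 𝓞 H := ⟨S.elt v, S.isIntegral_elt v⟩
  have e1 : (Algebra.norm ℤ α : ℚ) = Algebra.norm ℚ (S.elt v) := Algebra.coe_norm_int _
  have e2 := S.norm_elt_rat v
  rw [hv, ← e1] at e2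
  have e3 : 4096 * Algebra.norm ℤ α = 4096 := by exact_mod_cast e2
  have e4 : Algebra.norm ℤ α = 1 := by linarith
  have e5 : Ideal.absNorm (Ideal.span {α}) = 1 := by rw [Ideal.absNorm_span_singleton, e4]; rfl
  rw [Ideal.absNorm_eq_one_iff, Ideal.span_singleton_eq_top] at e5
  exact ⟨e5.unit, rfl⟩

end Setup

end

section
open Polynomial WithZero NumberField IsDedekindDomain
open scoped Pointwise nonZeroDivisors

namespace Setup
variable {F H : Type*} [Field F] [NumberField F] [Field H] [NumberField H] [Algebra F H]
  (S : Setup F H) [IsGalois F H] {q : HeightOneSpectrum (𝓞 H)}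

lemma val_unit (q : HeightOneSpectrum (𝓞 H)) (u : (𝓞 H)ˣ) : q.valuation H (u : 𝓞 H) = 1 := by
  rw [q.valuation_eq_one_iff_notMem]
  exact fun h => q.isPrime.ne_top (Ideal.eq_top_of_isUnit_mem _ h u.isUnit)

lemma val_pow_seven (hq : (2 + 3 * S.ωi) ∈ q.asIdeal) {x : H} (hx : q.valuation H x ≤ 1) :
    ∃ n : ℤ, q.valuation H (x ^ 7 - n) ≤ exp (-6 : ℤ) := by
  obtain ⟨n, hn⟩ := S.residue hq hx
  set V := q.valuation H
  refine ⟨n ^ 7, ?_⟩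
  set d := x - n with hd
  have e : x ^ 7 - (n ^ 7 : ℤ) = 7 * (d * (n ^ 6 + 3 * n ^ 5 * d + 5 * n ^ 4 * d ^ 2 +
      5 * n ^ 3 * d ^ 3 + 3 * n ^ 2 * d ^ 4 + n * d ^ 5)) + d ^ 7 := by
    rw [hd]; push_cast; ring
  rw [e]
  have hdi : d ∈ V.integer := hn.le
  have hni : (n : H) ∈ V.integer := intCast_mem _ n
  refine Valuation.map_add_le V ?_ ?_
  · rw [map_mul]
    refine (mul_le_of_le_one_right' ?_).trans (S.val_seven_le hq)
    have h3 : (3 : H) ∈ V.integer := ofNat_mem _ 3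
    have h5 : (5 : H) ∈ V.integer := ofNat_mem _ 5
    change _ ∈ V.integer
    refine mul_mem hdi (add_mem (add_mem (add_mem (add_mem (add_mem ?_ ?_) ?_) ?_) ?_) ?_)
    · exact pow_mem hni _
    · exact mul_mem (mul_mem h3 (pow_mem hni 5)) hdi
    · exact mul_mem (mul_mem h5 (pow_mem hni 4)) (pow_mem hdi 2)
    · exact mul_mem (mul_mem h5 (pow_mem hni 3)) (pow_mem hdi 3)
    · exact mul_mem (mul_mem h3 (pow_mem hni 2)) (pow_mem hdi 4)
    · exact mul_mem hni (pow_mem hdi 5)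
  · rw [map_pow]
    refine (pow_le_pow_left' (le_exp_neg_one hn) 7).trans ?_
    rw [← exp_nsmul, exp_le_exp]; norm_num

/-- The units of `𝓞 H` congruent to a rational integer modulo the `j`-th power of the prime `q`
over `2 + 3ω` (for `j ≤ 6`). -/
def unitFilt (hq : (2 + 3 * S.ωi) ∈ q.asIdeal) (j : ℕ) (hj : j ≤ 6) : Subgroup (𝓞 H)ˣ where
  carrier := {u | ∃ n : ℤ, q.valuation H (((u : 𝓞 H) : H) - n) ≤ exp (-j : ℤ)}
  one_mem' := ⟨1, by simp⟩
  mul_mem' := by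
    rintro u u' ⟨n, hn⟩ ⟨n', hn'⟩
    refine ⟨n * n', ?_⟩
    have e : (((u * u' : (𝓞 H)ˣ) : 𝓞 H) : H) - (n * n' : ℤ) =
      ((u : 𝓞 H) : H) * (((u' : 𝓞 H) : H) - n') + n' * (((u : 𝓞 H) : H) - n) := by
      push_cast; ring
    rw [e]
    refine Valuation.map_add_le _ ?_ ?_ <;> rw [map_mul]
    · rw [val_unit, one_mul]; exact hn'
    · exact (mul_le_of_le_one_left' (val_int _ _)).trans hn
  inv_mem' := by
    rintro u ⟨n, hn⟩
    rcases Nat.eq_zero_or_pos j with rfl | hj0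
    · refine ⟨0, ?_⟩
      simpa using (val_unit q u⁻¹).le
    refine ⟨n ^ 5, ?_⟩
    have h7 : ¬ 7 ∣ n := by
      intro h
      have h1 := Valuation.map_add_lt (v := q.valuation H)
        (hn.trans_lt (show exp (-j : ℤ) < 1 by rw [← exp_zero, exp_lt_exp]; omega))
        ((S.val_dvd hq h).trans_lt (by rw [← exp_zero, exp_lt_exp]; norm_num))
      rw [sub_add_cancel, val_unit] at h1
      exact lt_irrefl _ h1
    have hfer : (7 : ℤ) ∣ 1 - n ^ 6 := by
      have h1 : n % 7 = 1 ∨ n % 7 = 2 ∨ n % 7 = 3 ∨ n % 7 = 4 ∨ n % 7 = 5 ∨ n % 7 = 6 := by omega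
      apply Int.dvd_of_emod_eq_zero
      rcases h1 with h | h | h | h | h | h <;> simp [Int.sub_emod, pow_succ, Int.mul_emod, h]
    have e : (((u⁻¹ : (𝓞 H)ˣ) : 𝓞 H) : H) - (n ^ 5 : ℤ) =
      (((u⁻¹ : (𝓞 H)ˣ) : 𝓞 H) : H) * ((1 - n ^ 6 : ℤ) - n ^ 5 * (((u : 𝓞 H) : H) - n)) := by
      have h : (((u⁻¹ : (𝓞 H)ˣ) : 𝓞 H) : H) * ((u : 𝓞 H) : H) = 1 := by
        rw [← map_mul, Units.inv_mul, map_one]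
      push_cast
      linear_combination n ^ 5 * h
    rw [e, map_mul, val_unit, one_mul]
    refine Valuation.map_sub_le (v := q.valuation H) ?_ ?_
    · refine (S.val_dvd hq hfer).trans ?_
      rw [exp_le_exp]; omega
    · rw [map_mul]
      refine (mul_le_of_le_one_left' ?_).trans hn
      rw [map_pow]
      exact pow_le_one' (val_int _ _) _

lemma unitFilt_le (hq : (2 + 3 * S.ωi) ∈ q.asIdeal) {i j : ℕ} (hi : i ≤ 6) (hj : j ≤ 6) (h : i ≤ j) :
    S.unitFilt hq j hj ≤ S.unitFilt hq i hi := by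
  rintro u ⟨n, hn⟩
  refine ⟨n, hn.trans ?_⟩
  rw [exp_le_exp]; omega

lemma unitFilt_ne (hq : (2 + 3 * S.ωi) ∈ q.asIdeal) {j : ℕ} (hj0 : 0 < j) (hj : j < 6) (v : List ℤ)
    (hv : (nfP v).1 ^ 2 - (nfP v).1 * (nfP v).2 + (nfP v).2 ^ 2 = 4096)
    (h1 : ¬ 7 ∣ (coords v j).1 + 4 * (coords v j).2)
    (h2 : ∀ k ∈ Finset.range j, k ≠ 0 → 7 ∣ (coords v k).1 + 4 * (coords v k).2) :
    ¬ S.unitFilt hq j hj.le ≤ S.unitFilt hq (j + 1) hj := by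
  obtain ⟨u, hu⟩ := S.exists_unit_elt v hv
  obtain ⟨n, hn⟩ := S.val_elt hq hj0 hj h1 h2
  rw [← hu] at hn
  intro h
  obtain ⟨n', hn'⟩ := h ⟨n, hn.le⟩
  have hlt : q.valuation H (((u : 𝓞 H) : H) - n') < q.valuation H (((u : 𝓞 H) : H) - n) := by
    rw [hn]
    refine hn'.trans_lt ?_
    rw [exp_lt_exp]; push_cast; omega
  have h3 := Valuation.map_sub_eq_of_lt_right _ hlt
  rw [hn] at h3
  have e : (((u : 𝓞 H) : H) - n') - (((u : 𝓞 H) : H) - n) = ((n - n' : ℤ) : H) := by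
    push_cast; ring
  rw [e] at h3
  have hlt1 : q.valuation H ((n - n' : ℤ) : H) < 1 := by
    rw [h3, ← exp_zero, exp_lt_exp]; omega
  have h4 := S.val_dvd hq (dvd_of_val_lt _ (S.val_seven_lt hq) hlt1)
  rw [h3, exp_le_exp] at h4
  omega

lemma unit_seventh_torsion (hq : (2 + 3 * S.ωi) ∈ q.asIdeal) {u : (𝓞 H)ˣ} (h : u ^ 7 = 1) : u = 1 := by
  have h1 : ((u : 𝓞 H) : H) ^ 7 = 1 := by
    rw [← map_pow, ← Units.val_pow_eq_pow_val, h]; simp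
  have := seventh_root (q.valuation H) S.hω (by
    rw [S.val_ρ hq, ← exp_zero, exp_lt_exp]; norm_num) (fun x hx => S.residue hq hx) S.e₅_pow
    (ε := ((u : 𝓞 H) : H)) (by rw [h1]; simp)
  rw [h1, sub_self, map_zero, le_zero_iff, mul_eq_zero] at this
  rcases this with h | h
  · rw [map_eq_zero, sub_eq_zero] at h
    apply Units.ext
    apply RingOfIntegers.ext
    simpa using h
  · rw [map_eq_zero] at h
    norm_num at h

lemma rank_units (S : Setup F H) : Units.rank H = 5 := by
  rw [Units.rank, InfinitePlace.card_eq_nrRealPlaces_add_nrComplexPlaces, S.nrRealPlaces,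
    S.nrComplexPlaces]

/-- The seventh powers of units. -/
def sevenths (H : Type*) [Field H] [NumberField H] : Subgroup (𝓞 H)ˣ := (powMonoidHom 7).range

lemma torsion_le_sevenths (hq : (2 + 3 * S.ωi) ∈ q.asIdeal) : Units.torsion H ≤ sevenths H := by
  have hinj : Function.Injective (fun u : Units.torsion H => u ^ 7) := by
    intro a b hab
    have : ((a / b : Units.torsion H) : (𝓞 H)ˣ) ^ 7 = 1 := by
      rw [← Subgroup.coe_pow, div_pow]
      simp only at hab
      rw [hab, div_self']; rfl
    have := S.unit_seventh_torsion hq this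
    rw [← Subgroup.coe_one, Subtype.coe_inj, div_eq_one] at this
    exact this
  have hsurj := Finite.surjective_of_injective hinj
  intro u hu
  obtain ⟨⟨a, ha⟩, h⟩ := hsurj ⟨u, hu⟩
  exact ⟨a, congrArg Subtype.val h⟩

lemma card_sevenths (hq : (2 + 3 * S.ωi) ∈ q.asIdeal) :
    ∃ k ≤ 5, (sevenths H).index = 7 ^ k := by
  classical
  let f : (Fin (Units.rank H) → ZMod 7) → (𝓞 H)ˣ ⧸ sevenths H := fun e =>
    ((∏ i, Units.fundSystem H i ^ (e i).val : (𝓞 H)ˣ) : (𝓞 H)ˣ ⧸ sevenths H)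
  have hf : Function.Surjective f := by
    intro y
    obtain ⟨x, rfl⟩ := QuotientGroup.mk_surjective y
    obtain ⟨⟨ζ, e⟩, he, -⟩ := Units.exist_unique_eq_mul_prod H x
    refine ⟨fun i => (e i : ZMod 7), ?_⟩
    obtain ⟨z, hz⟩ := S.torsion_le_sevenths hq ζ.2
    rw [QuotientGroup.eq]
    refine ⟨z * ∏ i, Units.fundSystem H i ^ (e i / 7), ?_⟩
    rw [eq_inv_mul_iff_mul_eq, he]
    simp only [powMonoidHom_apply] at hz ⊢
    rw [mul_pow, hz, mul_left_comm]
    congr 1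
    rw [← Finset.prod_pow, ← Finset.prod_mul_distrib]
    refine Finset.prod_congr rfl fun i _ => ?_
    rw [← zpow_natCast, ← zpow_natCast, ← zpow_mul, ← zpow_add, ZMod.val_intCast]
    congr 1
    have := Int.emod_add_mul_ediv (e i) 7
    push_cast
    omega
  haveI : Finite ((𝓞 H)ˣ ⧸ sevenths H) := Finite.of_surjective f hf
  have hcard : (sevenths H).index ≤ 7 ^ 5 := by
    have := Nat.card_le_card_of_surjective f hf
    rw [Nat.card_fun, Nat.card_eq_fintype_card (α := Fin _), Fintype.card_fin, S.rank_units] at this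
    simpa [Subgroup.index] using this
  haveI : Fact (Nat.Prime 7) := ⟨by norm_num⟩
  have hp : IsPGroup 7 ((𝓞 H)ˣ ⧸ sevenths H) := by
    intro g
    obtain ⟨x, rfl⟩ := QuotientGroup.mk_surjective g
    refine ⟨1, ?_⟩
    rw [← QuotientGroup.mk_pow, QuotientGroup.eq_one_iff]
    exact ⟨x, by simp⟩
  obtain ⟨k, hk⟩ := IsPGroup.iff_card.1 hp
  have hk' : (sevenths H).index = 7 ^ k := hk
  refine ⟨k, ?_, hk'⟩
  rw [hk'] at hcard
  exact (Nat.pow_le_pow_iff_right (by norm_num)).1 hcard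

lemma sevenths_le (hq : (2 + 3 * S.ωi) ∈ q.asIdeal) : sevenths H ≤ S.unitFilt hq 6 le_rfl := by
  rintro _ ⟨u, rfl⟩
  obtain ⟨n, hn⟩ := S.val_pow_seven hq (val_unit q u).le
  exact ⟨n, by simpa using hn⟩

/-- A unit congruent to a rational integer modulo `q⁶` is a seventh power: the filtration by the
`unitFilt j` has five proper steps, which exhausts the index of the seventh powers. -/
lemma unit_eq_pow (hq : (2 + 3 * S.ωi) ∈ q.asIdeal) : S.unitFilt hq 6 le_rfl ≤ sevenths H := by
  obtain ⟨k, hk5, hk⟩ := S.card_sevenths hq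
  have hstep : ∀ (A B : Subgroup (𝓞 H)ˣ), sevenths H ≤ A → A ≤ B → ¬ B ≤ A →
      7 * (sevenths H).relIndex A ∣ (sevenths H).relIndex B := by
    intro A B h1 h2 h3
    rw [← Subgroup.relIndex_mul_relIndex _ _ _ h1 h2, mul_comm]
    refine Nat.mul_dvd_mul_left _ ?_
    have hd : A.relIndex B ∣ 7 ^ k := by
      rw [← hk]
      exact (Dvd.intro_left _ (Subgroup.relIndex_mul_relIndex _ _ _ h1 h2)).trans
        (Subgroup.relIndex_dvd_index_of_normal _ _)
    obtain ⟨i, -, hi⟩ := (Nat.dvd_prime_pow (by norm_num)).1 hd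
    rcases i with _ | i
    · exact absurd (Subgroup.relIndex_eq_one.1 (by simpa using hi)) h3
    · rw [hi, pow_succ]; exact Dvd.intro_left _ rfl
  have s1 := hstep _ _ ((S.sevenths_le hq).trans (S.unitFilt_le hq _ _ (by norm_num : 2 ≤ 6)))
    (S.unitFilt_le hq (by norm_num) (by norm_num) (by norm_num))
    (S.unitFilt_ne hq (j := 1) (by norm_num) (by norm_num) [0, 0, 0, 0, 0, 0, 0, -2, 0, 1, 1, 0]
      (by decide +kernel) (by decide +kernel) (by decide +kernel))
  have s2 := hstep _ _ ((S.sevenths_le hq).trans (S.unitFilt_le hq _ _ (by norm_num : 3 ≤ 6)))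
    (S.unitFilt_le hq (by norm_num) (by norm_num) (by norm_num))
    (S.unitFilt_ne hq (j := 2) (by norm_num) (by norm_num) [0, 1, 0, 3, -3, 0, 0, 0, 0, 0, 0, 0]
      (by decide +kernel) (by decide +kernel) (by decide +kernel))
  have s3 := hstep _ _ ((S.sevenths_le hq).trans (S.unitFilt_le hq _ _ (by norm_num : 4 ≤ 6)))
    (S.unitFilt_le hq (by norm_num) (by norm_num) (by norm_num))
    (S.unitFilt_ne hq (j := 3) (by norm_num) (by norm_num) [0, 0, 0, 0, 0, 0, 0, 1, 0, 0, 0, 0]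
      (by decide +kernel) (by decide +kernel) (by decide +kernel))
  have s4 := hstep _ _ ((S.sevenths_le hq).trans (S.unitFilt_le hq _ _ (by norm_num : 5 ≤ 6)))
    (S.unitFilt_le hq (by norm_num) (by norm_num) (by norm_num))
    (S.unitFilt_ne hq (j := 4) (by norm_num) (by norm_num) [4, -4, -4, 0, 0, -4, -3, -8, -2, -8, -8, 2]
      (by decide +kernel) (by decide +kernel) (by decide +kernel))
  have s5 := hstep _ _ (S.sevenths_le hq)
    (S.unitFilt_le hq (by norm_num) (by norm_num) (by norm_num))
    (S.unitFilt_ne hq (j := 5) (by norm_num) (by norm_num)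
      [-25, -25, -28, -42, -6, 4, 25, -71, -54, 28, 2, -32]
      (by decide +kernel) (by decide +kernel) (by decide +kernel))
  have s0 : (sevenths H).relIndex (S.unitFilt hq 1 (by norm_num)) ∣ 7 ^ 5 :=
    (Subgroup.relIndex_dvd_index_of_normal _ _).trans (hk ▸ pow_dvd_pow 7 hk5)
  have hfin : 7 ^ 5 * (sevenths H).relIndex (S.unitFilt hq 6 le_rfl) ∣ 7 ^ 5 * 1 := by
    refine dvd_trans ?_ s0
    refine dvd_trans ?_ s1
    rw [pow_succ', mul_assoc]
    refine Nat.mul_dvd_mul_left _ (dvd_trans ?_ s2)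
    rw [pow_succ', mul_assoc]
    refine Nat.mul_dvd_mul_left _ (dvd_trans ?_ s3)
    rw [pow_succ', mul_assoc]
    refine Nat.mul_dvd_mul_left _ (dvd_trans ?_ s4)
    rw [pow_succ', mul_assoc]
    refine Nat.mul_dvd_mul_left _ (dvd_trans ?_ s5)
    rw [pow_succ', mul_assoc, pow_zero, one_mul]
  have := Nat.dvd_one.1 (Nat.dvd_of_mul_dvd_mul_left (by norm_num) hfin)
  exact Subgroup.relIndex_eq_one.1 this

end Setup

end

section
open Polynomial WithZero NumberField IsDedekindDomain
open scoped Pointwise nonZeroDivisors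

section Dedekind
variable {R : Type*} [CommRing R] [IsDedekindDomain R]
open UniqueFactorizationMonoid

lemma ideal_pow_inj {I J : Ideal R} (hI : I ≠ ⊥) (hJ : J ≠ ⊥) (h : I ^ 7 = J ^ 7) : I = J := by
  classical
  have h1 := congrArg normalizedFactors h
  rw [normalizedFactors_pow, normalizedFactors_pow] at h1
  have h2 : normalizedFactors I = normalizedFactors J := by
    ext p
    have := congrArg (Multiset.count p) h1
    rw [Multiset.count_nsmul, Multiset.count_nsmul] at this
    omega
  rw [← Ideal.prod_normalizedFactors_eq_self hI, h2, Ideal.prod_normalizedFactors_eq_self hJ]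

/-- An element whose valuations are all divisible by `7` generates the seventh power of an ideal. -/
lemma exists_ideal_pow {a : R} (ha : a ≠ 0) (h : ∀ p : HeightOneSpectrum R, ∃ n : ℤ,
    p.intValuation a = exp (7 * n)) : ∃ J : Ideal R, J ≠ ⊥ ∧ Ideal.span {a} = J ^ 7 := by
  classical
  have hI : Ideal.span {a} ≠ ⊥ := by simpa using ha
  have hk : ∀ P ∈ normalizedFactors (Ideal.span {a}),
      7 * ((normalizedFactors (Ideal.span {a})).count P / 7) =
        (normalizedFactors (Ideal.span {a})).count P := by
    intro P hP
    have hPp := prime_of_normalized_factor P hP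
    obtain ⟨n, hn⟩ := h ⟨P, Ideal.isPrime_of_prime hPp, hPp.ne_zero⟩
    rw [HeightOneSpectrum.intValuation_eq_exp_neg_multiplicity _ ha, exp_inj,
      multiplicity_eq_count_normalizedFactors hPp.irreducible hI, normalize_eq] at hn
    omega
  refine ⟨∏ P ∈ (normalizedFactors (Ideal.span {a})).toFinset,
    P ^ ((normalizedFactors (Ideal.span {a})).count P / 7), ?_, ?_⟩
  · refine Finset.prod_ne_zero_iff.2 fun P hP => pow_ne_zero _ ?_
    exact (prime_of_normalized_factor P (Multiset.mem_toFinset.1 hP)).ne_zero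
  · conv_lhs => rw [← Ideal.prod_normalizedFactors_eq_self hI, Finset.prod_multiset_count]
    rw [← Finset.prod_pow]
    refine Finset.prod_congr rfl fun P hP => ?_
    rw [← pow_mul, mul_comm, hk P (Multiset.mem_toFinset.1 hP)]

end Dedekind

namespace Setup
variable {F H : Type*} [Field F] [NumberField F] [Field H] [NumberField H] [Algebra F H]
  (S : Setup F H) [IsGalois F H] {q : HeightOneSpectrum (𝓞 H)}

lemma exists_integer_of_pow {x : 𝓞 H} {c : H} (h : (x : H) = c ^ 7) : ∃ c' : 𝓞 H, x = c' ^ 7 := by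
  have hc : IsIntegral ℤ c := IsIntegral.of_pow (n := 7) (by norm_num) (h ▸ x.2)
  exact ⟨⟨c, hc⟩, RingOfIntegers.ext h⟩

/-- The class group step, for integers. -/
lemma eq_unit_mul_pow_int {a : 𝓞 H} (ha : a ≠ 0) (h3 : ∃ c, a * S.τ ^ 3 • a = c ^ 7)
    (h2 : ∃ c, a * S.τ ^ 2 • a * S.τ ^ 4 • a = c ^ 7)
    (hval : ∀ p : HeightOneSpectrum (𝓞 H), ∃ n : ℤ, p.intValuation a = exp (7 * n)) :
    ∃ (u : (𝓞 H)ˣ) (b : 𝓞 H), a = u * b ^ 7 := by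
  obtain ⟨J, hJ0, hJ⟩ := exists_ideal_pow ha hval
  have hn := fun g : H ≃ₐ[F] H => smul_ne_bot g hJ0
  have key : ∀ (I : Ideal (𝓞 H)) (c x : 𝓞 H), I ≠ ⊥ → I ^ 7 = Ideal.span {x} → x = c ^ 7 → cl I = 1 := by
    intro I c x hI h hx
    rw [hx, ← Ideal.span_singleton_pow] at h
    have hc : Ideal.span {c} ≠ ⊥ := by
      intro h0
      rw [h0] at h
      exact pow_ne_zero 7 hI (by rw [h]; exact zero_pow (by norm_num))
    rw [ideal_pow_inj hI hc h, cl_span]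
  have h7 : cl J ^ 7 = 1 := by rw [← cl_pow hJ0, ← hJ, cl_span]
  obtain ⟨c3, hc3⟩ := h3
  obtain ⟨c2, hc2⟩ := h2
  obtain ⟨x, hx⟩ := S.principal_of_rel hJ0 (S.rel J hJ0) h7
    (key _ c3 _ (mul_ne_zero hJ0 (hn _)) (by
      rw [mul_pow, ← smul_pow_ideal, ← hJ, smul_span, Ideal.span_singleton_mul_span_singleton]) hc3)
    (key _ c2 _ (mul_ne_zero (mul_ne_zero hJ0 (hn _)) (hn _)) (by
      rw [mul_pow, mul_pow, ← smul_pow_ideal, ← smul_pow_ideal, ← hJ, smul_span, smul_span,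
        Ideal.span_singleton_mul_span_singleton, Ideal.span_singleton_mul_span_singleton]) hc2)
  rw [hx, Ideal.span_singleton_pow, Ideal.span_singleton_eq_span_singleton] at hJ
  obtain ⟨u, hu⟩ := hJ.symm
  exact ⟨u, x, by rw [← hu, mul_comm]⟩

/-- Elements of `H` which are seventh powers up to the class group and the units, and close to a
seventh power at the prime over `2 + 3ω`, are seventh powers. -/
theorem arith (hq : (2 + 3 * S.ωi) ∈ q.asIdeal) {a : H} (ha : a ≠ 0)
    (h3 : ∃ c, a * (S.τ ^ 3) a = c ^ 7) (h2 : ∃ c, a * (S.τ ^ 2) a * (S.τ ^ 4) a = c ^ 7)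
    (hval : ∀ p : HeightOneSpectrum (𝓞 H), ∃ n : ℤ, p.valuation H a = exp (7 * n))
    {r : H} (hr : q.valuation H (a * r ^ 7 - 1) ≤ exp (-6 : ℤ)) : ∃ b, a = b ^ 7 := by
  obtain ⟨x, y, hy, rfl⟩ := IsFractionRing.div_surjective (A := 𝓞 H) a
  have hy0 : y ≠ 0 := nonZeroDivisors.ne_zero hy
  have hyH : (algebraMap (𝓞 H) H y) ≠ 0 := by simpa using hy0
  have hx0 : x ≠ 0 := by rintro rfl; simp at ha
  set A := algebraMap (𝓞 H) H x / algebraMap (𝓞 H) H y with hA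
  have hxy : algebraMap (𝓞 H) H (x * y ^ 6) = A * algebraMap (𝓞 H) H y ^ 7 := by
    rw [hA, map_mul, map_pow]; field_simp
  have hsm : ∀ (g : H ≃ₐ[F] H) (z : 𝓞 H), algebraMap (𝓞 H) H (g • z) = g (algebraMap (𝓞 H) H z) :=
    fun g z => rfl
  obtain ⟨u, b, hub⟩ := S.eq_unit_mul_pow_int (a := x * y ^ 6) (mul_ne_zero hx0 (pow_ne_zero _ hy0))
    (by
      obtain ⟨c, hc⟩ := h3
      refine exists_integer_of_pow (c := c * algebraMap (𝓞 H) H y * (S.τ ^ 3) (algebraMap (𝓞 H) H y)) ?_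
      change algebraMap (𝓞 H) H _ = _
      rw [map_mul, hsm, hxy, map_mul, map_pow, mul_pow, mul_pow, ← hc]
      ring)
    (by
      obtain ⟨c, hc⟩ := h2
      refine exists_integer_of_pow (c := c * algebraMap (𝓞 H) H y * (S.τ ^ 2) (algebraMap (𝓞 H) H y) *
        (S.τ ^ 4) (algebraMap (𝓞 H) H y)) ?_
      change algebraMap (𝓞 H) H _ = _
      rw [map_mul, map_mul, hsm, hsm, hxy, map_mul, map_mul, map_pow, map_pow, mul_pow, mul_pow, mul_pow,
        ← hc]
      ring)
    (by
      intro p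
      obtain ⟨n, hn⟩ := hval p
      obtain ⟨k, hk⟩ := val_exp (p.valuation H) hyH
      refine ⟨n + k, ?_⟩
      rw [← p.valuation_of_algebraMap (K := H)]
      change p.valuation H (algebraMap (𝓞 H) H (x * y ^ 6)) = _
      rw [hxy, map_mul, map_pow, hn, hk, ← exp_nsmul, ← exp_add]
      congr 1
      simp; ring)
  have hu1 := val_unit q u
  set c := algebraMap (𝓞 H) H b / algebraMap (𝓞 H) H y with hc
  have hAu : A = algebraMap (𝓞 H) H u * c ^ 7 := by
    rw [hub, map_mul, map_pow] at hxy
    rw [hc, div_pow]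
    field_simp
    linear_combination -hxy
  have hmem : u ∈ S.unitFilt hq 6 le_rfl := by
    set V := q.valuation H
    have hcr : V (c * r) = 1 := by
      have h1 : V (A * r ^ 7) = 1 := by
        have := Valuation.map_add_eq_of_lt_right V (x := A * r ^ 7 - 1) (y := 1) (by
          rw [map_one]; exact hr.trans_lt (by rw [← exp_zero, exp_lt_exp]; norm_num))
        rwa [sub_add_cancel, map_one] at this
      rw [hAu, mul_assoc, ← mul_pow, map_mul, map_pow] at h1
      rw [show V (algebraMap (𝓞 H) H u) = 1 from hu1, one_mul] at h1
      exact (pow_eq_one_iff.1 h1).resolve_right (by norm_num)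
    have hcr0 : c * r ≠ 0 := by rintro h; rw [h] at hcr; simp at hcr
    obtain ⟨n, hn⟩ := S.val_pow_seven hq (x := (c * r)⁻¹) (by
      change V (c * r)⁻¹ ≤ 1
      rw [map_inv₀, hcr, inv_one])
    refine ⟨n, ?_⟩
    have e : algebraMap (𝓞 H) H u - n = (c * r)⁻¹ ^ 7 * (A * r ^ 7 - 1) + ((c * r)⁻¹ ^ 7 - n) := by
      have hi : (c * r)⁻¹ ^ 7 * (c * r) ^ 7 = 1 := by
        rw [← mul_pow, inv_mul_cancel₀ hcr0, one_pow]
      rw [hAu]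
      linear_combination -(algebraMap (𝓞 H) H u) * hi
    change V (algebraMap (𝓞 H) H u - n) ≤ _
    rw [e]
    refine Valuation.map_add_le V ?_ hn
    rw [map_mul, map_pow, map_inv₀, hcr]
    simpa using hr
  obtain ⟨z, hz⟩ := S.unit_eq_pow hq hmem
  refine ⟨algebraMap (𝓞 H) H z * c, ?_⟩
  rw [hAu, mul_pow, ← hz]
  simp

end Setup

end

/-! ### The descent in a cyclic tower -/

section
open Polynomial WithZero NumberField IsDedekindDomain

section Unipotent
variable {A : Type*} [AddCommGroup A]

/-- A `7`-power order automorphism acts unipotently on a group killed by `7`, so it has a nonzero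
fixed vector on `M / B` as soon as `M ≠ B`. -/
lemma exists_fixed_mod {M B : AddSubgroup A} (s : AddMonoid.End A) (hsM : ∀ P ∈ M, s P ∈ M)
    (h7 : ∀ P ∈ M, (7 : ℤ) • P ∈ B) {m : ℕ} (hs : s ^ 7 ^ m = 1) {P : A} (hP : P ∈ M) (hPB : P ∉ B) :
    ∃ P ∈ M, P ∉ B ∧ s P - P ∈ B := by
  classical
  have hag : ∀ (g : ℤ[X]), ∀ P ∈ M, aeval s g P ∈ M := by
    intro g P hP
    induction g using Polynomial.induction_on with
    | C a => 
      rw [aeval_C]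
      simpa using M.zsmul_mem hP a
    | add p q hp hq =>
      rw [map_add]
      exact M.add_mem hp hq
    | monomial n a h =>
      have : aeval s (C a * X ^ (n + 1)) = s * aeval s (C a * X ^ n) := by
        rw [pow_succ', mul_left_comm, map_mul, aeval_X]
      rw [this]
      exact hsM _ h
  have hD : (((s - 1) ^ 7 ^ m : AddMonoid.End A)) P ∈ B := by
    obtain ⟨r, hr⟩ := exists_add_pow_prime_pow_eq (R := ℤ[X]) (p := 7) (by norm_num) X (-1) m
    rw [mul_assoc, mul_assoc] at hr
    set r' : ℤ[X] := X * (-1 * r)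
    have hr' := congrArg (aeval s) hr
    have hodd : (-1 : ℤ[X]) ^ 7 ^ m = -1 := Odd.neg_one_pow (Odd.pow (by decide))
    rw [hodd] at hr'
    rw [map_add, map_mul, map_add, map_pow, map_add, map_pow, aeval_X, map_neg, map_one, hs] at hr'
    rw [← sub_eq_add_neg] at hr'
    rw [hr']
    have : ((1 + -1 + aeval s ((7 : ℕ) : ℤ[X]) * aeval s r' : AddMonoid.End A)) P = (7 : ℤ) • (aeval s r' P) := by
      rw [add_neg_cancel, zero_add, map_natCast]
      simp [ofNat_zsmul]
    rw [this]
    exact h7 _ (hag r' P hP)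
  have hex : ∃ n, (((s - 1) ^ n : AddMonoid.End A)) P ∈ B := ⟨_, hD⟩
  set n := Nat.find hex with hn
  have hn0 : n ≠ 0 := by
    intro h
    have := Nat.find_spec hex
    rw [← hn, h] at this
    exact hPB this
  obtain ⟨k, hk⟩ := Nat.exists_eq_succ_of_ne_zero hn0
  refine ⟨(((s - 1) ^ k : AddMonoid.End A)) P, ?_, Nat.find_min hex (by omega), ?_⟩
  · have := hag ((X - 1) ^ k) P hP
    simpa using this
  · have := Nat.find_spec hex
    rw [← hn, hk, pow_succ'] at this
    exact this

end Unipotent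

/-- A cyclic extension `N / H` of degree `7^m` with the properties at its places needed for the
descent: an extension `T` of the automorphism `τ` of `H` commuting with `Gal(N/H)`, a place `V`
above `2 + 3ω` invariant under `Gal(N/H)` with residue field `𝔽₇`, a place `v` above `2 - ω` at which
the field fixed by `T` has residue field `𝔽₇`, and places above the primes of `H` not dividing `7`
which are unramified and, above `3`, ramified prime to `3` on the field fixed by `T`. -/
structure Tower {F H : Type*} [Field F] [NumberField F] [Field H] [NumberField H] [Algebra F H]
    (S : Setup F H) (N : Type*) [Field N] [Algebra H N] where
  m : ℕ
  card : Module.finrank H N = 7 ^ m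
  σ : N ≃ₐ[H] N
  hσ : ∀ g : N ≃ₐ[H] N, g ∈ Subgroup.zpowers σ
  T : N ≃+* N
  T_alg : ∀ x, T (algebraMap H N x) = algebraMap H N (S.τ x)
  T_σ : ∀ x, T (σ x) = σ (T x)
  T_six : ∀ x, T (T (T (T (T (T x))))) = x
  q : HeightOneSpectrum (𝓞 H)
  hq : (2 + 3 * S.ωi) ∈ q.asIdeal
  V : Valuation N ℤᵐ⁰
  e : ℕ
  he : e ≠ 0
  V_alg : ∀ x, V (algebraMap H N x) = q.valuation H x ^ e
  V_inv : ∀ (g : N ≃ₐ[H] N) x, V (g x) = V x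
  V_res : ∀ x, V x ≤ 1 → ∃ n : ℤ, V (x - n) < 1
  v : Valuation N ℤᵐ⁰
  hv : v (2 - algebraMap H N S.ω) < 1
  v_res : ∀ x, T x = x → v x ≤ 1 → ∃ n : ℤ, v (x - n) < 1
  unram : ∀ p : HeightOneSpectrum (𝓞 H), (7 : 𝓞 H) ∉ p.asIdeal → ∃ v : Valuation N ℤᵐ⁰,
    (∀ x, v (algebraMap H N x) = p.valuation H x) ∧
    (v (1 - algebraMap H N S.ω) < 1 → ∀ x, T x = x → v x ^ 3 ≠ v (1 - algebraMap H N S.ω) ^ 4)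

namespace Tower
variable {F H : Type*} [Field F] [NumberField F] [Field H] [NumberField H] [Algebra F H]
  {S : Setup F H} {N : Type*} [Field N] [Algebra H N] [CharZero N] (U : Tower S N)

/-- The cube root of unity `ω` in `N`. -/
def w (_ : Tower S N) : N := algebraMap H N S.ω

lemma hw : U.w ^ 2 + U.w + 1 = 0 := by
  have := congrArg (algebraMap H N) S.hω
  simpa [w] using this

lemma T_w : U.T U.w = U.w := by rw [w, U.T_alg, S.τ_ω]

lemma σ_w : U.σ U.w = U.w := U.σ.commutes _

lemma hb : bE U.w ≠ 0 := bE_ne_zero U.hw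

/-- The parameter `D` of the twist, `D⁶ = ωμ/ρ`, which turns `E'` into `y² = x³ + 9/4`. -/
def D : N := -U.w * algebraMap H N S.t / (2 + 3 * U.w)

lemma ρ_ne : 2 + 3 * U.w ≠ 0 := rho_ne_zero U.hw

lemma t_pow : (algebraMap H N S.t) ^ 6 = U.w * (1 - U.w) * (2 + 3 * U.w) ^ 5 := by
  rw [← map_pow, S.ht']; simp only [w, map_mul, map_sub, map_add, map_pow, map_one, map_ofNat]

lemma D_pow : U.D ^ 6 * (2 + 3 * U.w) = U.w * (1 - U.w) := by
  have h := U.ρ_ne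
  have h3 := omega_cube U.hw
  rw [D, div_pow, mul_pow, U.t_pow, div_mul_eq_mul_div, div_eq_iff (pow_ne_zero 6 h)]
  linear_combination U.w * (1 - U.w) * (U.w ^ 3 + 1) * (2 + 3 * U.w) ^ 6 * h3

lemma D_ne : U.D ≠ 0 := by
  intro h
  have := U.D_pow
  rw [h] at this
  have h2 := omega_ne_one U.hw
  have h3 := omega_ne_zero U.hw
  simp [h2, h3] at this

lemma D_bE : U.D ^ 6 * bE U.w = 9 / 4 := by
  have h := U.ρ_ne
  have h4 := four_bE U.hw
  have h1 := U.D_pow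
  have hw := U.hw
  have : 4 * (U.D ^ 6 * bE U.w) = 9 := by
    have : 4 * (U.D ^ 6 * bE U.w) = (U.D ^ 6 * (2 + 3 * U.w)) * (1 - U.w) ^ 3 := by
      linear_combination U.D ^ 6 * h4
    rw [this, h1]
    grind
  linear_combination this / 4

lemma T_D : U.T U.D = -U.w ^ 2 * U.D := by
  rw [D, map_div₀, map_mul, map_neg, map_add, map_mul, T_w, U.T_alg, S.τ_t]
  simp only [map_ofNat, map_mul, map_neg, map_pow]
  rw [← w]
  ring

variable [DecidableEq N]

/-- The semilinear action of `T` on `E'(N)` whose fixed points are the points of `E` over the field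
fixed by `T`. -/
def tw : AddMonoid.End (mordell (bE U.w)).Point :=
  twist U.hb (U.T : N →+* N) (-U.w ^ 2) (neg_ne_zero.2 (pow_ne_zero 2 (omega_ne_zero U.hw))) (by
    have h3 := omega_cube U.hw
    have e : (-U.w ^ 2) ^ 6 = 1 := by linear_combination (U.w ^ 9 + U.w ^ 6 + U.w ^ 3 + 1) * h3
    rw [map_bE, e, one_mul]
    change _ = bE (U.T U.w)
    rw [T_w])

/-- The action of `σ` on `E'(N)`. -/
def sg : AddMonoid.End (mordell (bE U.w)).Point :=
  twist U.hb (U.σ : N →+* N) 1 one_ne_zero (by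
    rw [map_bE, one_pow, one_mul]
    change _ = bE (U.σ U.w)
    rw [σ_w])

lemma eq_T {x y : N} (h : y ^ 2 = x ^ 3 + bE U.w) : (-U.T y) ^ 2 = (U.w * U.T x) ^ 3 + bE U.w := by
  have h3 := omega_cube U.hw
  have := congrArg U.T h
  rw [map_add, map_pow, map_pow, show U.T (bE U.w) = bE (U.T U.w) from map_bE (U.T : N →+* N) _, T_w] at this
  rw [neg_sq, this, mul_pow, h3, one_mul]

lemma tw_mpt {x y : N} (h : y ^ 2 = x ^ 3 + bE U.w) :
    U.tw (mpt U.hb x y h) = mpt U.hb (U.w * U.T x) (-U.T y) (U.eq_T h) := by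
  have h3 := omega_cube U.hw
  have e1 : (-U.w ^ 2) ^ 2 * U.T x = U.w * U.T x := by linear_combination U.w * U.T x * h3
  have e2 : (-U.w ^ 2) ^ 3 * U.T y = -U.T y := by linear_combination -U.T y * (U.w ^ 3 + 1) * h3
  refine (twist_mpt U.hb U.hb (U.T : N →+* N) (-U.w ^ 2) _ _ h ?_).trans ?_
  · change ((-U.w ^ 2) ^ 3 * U.T y) ^ 2 = ((-U.w ^ 2) ^ 2 * U.T x) ^ 3 + _
    rw [e1, e2, U.eq_T h]
  · rw [mpt_inj]
    exact ⟨e1, e2⟩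

lemma eq_σ {x y : N} (h : y ^ 2 = x ^ 3 + bE U.w) : (U.σ y) ^ 2 = (U.σ x) ^ 3 + bE U.w := by
  have := congrArg U.σ h
  rwa [map_add, map_pow, map_pow, show U.σ (bE U.w) = bE (U.σ U.w) from map_bE (U.σ : N →+* N) _, σ_w] at this

lemma sg_mpt {x y : N} (h : y ^ 2 = x ^ 3 + bE U.w) :
    U.sg (mpt U.hb x y h) = mpt U.hb (U.σ x) (U.σ y) (U.eq_σ h) := by
  refine (twist_mpt U.hb U.hb (U.σ : N →+* N) 1 _ _ h ?_).trans ?_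
  · simpa using U.eq_σ h
  · rw [mpt_inj]
    simp

lemma omul_eq {x y : N} (h : y ^ 2 = x ^ 3 + bE U.w) : y ^ 2 = (U.w * x) ^ 3 + bE U.w := by
  rw [mul_pow, omega_cube U.hw, one_mul, h]

/-- Multiplication by `ω`. -/
def om : AddMonoid.End (mordell (bE U.w)).Point := omul U.hb U.hw
/-- Multiplication by `2 - ω`. -/
def pi : AddMonoid.End (mordell (bE U.w)).Point := pimul U.hb U.hw
/-- Multiplication by `2 - ω²`. -/
def rh : AddMonoid.End (mordell (bE U.w)).Point := pimul U.hb (omega_sq U.hw)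
/-- Multiplication by `1 - ω`. -/
def mu : AddMonoid.End (mordell (bE U.w)).Point := mumul U.hb U.hw

lemma om_mpt {x y : N} (h : y ^ 2 = x ^ 3 + bE U.w) :
    U.om (mpt U.hb x y h) = mpt U.hb (U.w * x) y (U.omul_eq h) := omul_mpt _ _ _ _

lemma pi_apply (P) : U.pi P = P + P - U.om P := by
  change P + (P - U.om P) = _
  abel

lemma mu_apply (P) : U.mu P = P - U.om P := rfl

lemma om_cube (P) : P + U.om P + U.om (U.om P) = 0 := omul_cube _ _ P

lemma rh_apply (P) : U.rh P = (3 : ℤ) • P + U.om P := by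
  have h := U.om_cube P
  change P + (P - omul U.hb (omega_sq U.hw) P) = _
  rw [omul_sq U.hb U.hw]
  change P + (P - U.om (U.om P)) = _
  rw [show U.om (U.om P) = -(P + U.om P) by rw [eq_neg_iff_add_eq_zero, ← h]; abel]
  abel

lemma tw_om (P) : U.tw (U.om P) = U.om (U.tw P) := by
  rcases mpt_cases U.hb P with rfl | ⟨x, y, h, rfl⟩
  · simp
  rw [om_mpt, tw_mpt, tw_mpt, om_mpt, mpt_inj, map_mul, T_w]
  exact ⟨rfl, rfl⟩

lemma sg_om (P) : U.sg (U.om P) = U.om (U.sg P) := by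
  rcases mpt_cases U.hb P with rfl | ⟨x, y, h, rfl⟩
  · simp
  rw [om_mpt, sg_mpt, sg_mpt, om_mpt, mpt_inj, map_mul, σ_w]
  exact ⟨rfl, rfl⟩

lemma tw_sg (P) : U.tw (U.sg P) = U.sg (U.tw P) := by
  rcases mpt_cases U.hb P with rfl | ⟨x, y, h, rfl⟩
  · simp
  rw [sg_mpt, tw_mpt, tw_mpt, sg_mpt, mpt_inj, map_mul, map_neg, U.T_σ, U.T_σ, σ_w]
  exact ⟨rfl, rfl⟩

lemma tw_six (P) : U.tw (U.tw (U.tw (U.tw (U.tw (U.tw P))))) = P := by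
  rcases mpt_cases U.hb P with rfl | ⟨x, y, h, rfl⟩
  · simp
  have h3 := omega_cube U.hw
  rw [tw_mpt, tw_mpt, tw_mpt, tw_mpt,
    tw_mpt, tw_mpt, mpt_inj]
  simp only [map_mul, map_neg, T_w, U.T_six, neg_neg, and_true]
  linear_combination x * (U.w ^ 3 + 1) * h3

/-- The points of `E'(N)` which come from points of `E` over the field fixed by `T`. -/
def M : AddSubgroup (mordell (bE U.w)).Point where
  carrier := {P | U.tw P = P}
  add_mem' {P Q} hP hQ := by
    change U.tw _ = _
    rw [map_add, hP, hQ]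
  zero_mem' := map_zero _
  neg_mem' {P} hP := by
    change U.tw _ = _
    rw [map_neg, hP]

lemma mem_M {P} : P ∈ U.M ↔ U.tw P = P := Iff.rfl

lemma mem_M_mpt {x y : N} (h : y ^ 2 = x ^ 3 + bE U.w) :
    mpt U.hb x y h ∈ U.M ↔ U.T x = U.w ^ 2 * x ∧ U.T y = -y := by
  have h3 := omega_cube U.hw
  rw [mem_M, tw_mpt, mpt_inj]
  constructor
  · rintro ⟨h1, h2⟩
    exact ⟨by linear_combination U.w ^ 2 * h1 - U.T x * h3, by linear_combination -h2⟩
  · rintro ⟨h1, h2⟩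
    exact ⟨by linear_combination U.w * h1 + x * h3, by linear_combination -h2⟩

/-- The subgroup `πM`. -/
def B : AddSubgroup (mordell (bE U.w)).Point := U.M.map U.pi

lemma om_mem {P} (hP : P ∈ U.M) : U.om P ∈ U.M := by rw [mem_M, tw_om, U.mem_M.1 hP]
lemma sg_mem {P} (hP : P ∈ U.M) : U.sg P ∈ U.M := by rw [mem_M, tw_sg, U.mem_M.1 hP]
lemma pi_mem {P} (hP : P ∈ U.M) : U.pi P ∈ U.M := by
  rw [pi_apply]; exact sub_mem (add_mem hP hP) (U.om_mem hP)
lemma mu_mem {P} (hP : P ∈ U.M) : U.mu P ∈ U.M := by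
  rw [mu_apply]; exact sub_mem hP (U.om_mem hP)
lemma rh_mem {P} (hP : P ∈ U.M) : U.rh P ∈ U.M := by
  rw [rh_apply]; exact add_mem (zsmul_mem hP _) (U.om_mem hP)

lemma mem_B {P} : P ∈ U.B ↔ ∃ R ∈ U.M, U.pi R = P := Iff.rfl

lemma pi_om (P) : U.pi (U.om P) = U.om (U.pi P) := by simp only [pi_apply, map_add, map_sub]
lemma om_mem_B {P} (hP : P ∈ U.B) : U.om P ∈ U.B := by
  obtain ⟨R, hR, rfl⟩ := U.mem_B.1 hP
  exact ⟨U.om R, U.om_mem hR, U.pi_om R⟩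
lemma mu_mem_B {P} (hP : P ∈ U.B) : U.mu P ∈ U.B := by
  rw [mu_apply]; exact sub_mem hP (U.om_mem_B hP)
lemma rh_mem_B {P} (hP : P ∈ U.B) : U.rh P ∈ U.B := by
  rw [rh_apply]; exact add_mem (zsmul_mem hP _) (U.om_mem_B hP)

lemma pi_rh (P) : U.pi (U.rh P) = (7 : ℤ) • P := by
  have h := U.om_cube P
  rw [pi_apply, rh_apply, map_add, map_zsmul,
    show U.om (U.om P) = -(P + U.om P) by rw [eq_neg_iff_add_eq_zero, ← h]; abel]
  abel

lemma seven_mem {P} (hP : P ∈ U.M) : (7 : ℤ) • P ∈ U.B := ⟨U.rh P, U.rh_mem hP, U.pi_rh P⟩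

/-- Points of `M` outside `πM` on which `σ` acts trivially modulo `πM`. -/
def Good (P : (mordell (bE U.w)).Point) : Prop := P ∈ U.M ∧ P ∉ U.B ∧ U.sg P - P ∈ U.B

lemma Good.mu {P} (h : U.Good P) : U.Good (U.mu P) := by
  refine ⟨U.mu_mem h.1, fun hm => h.2.1 ?_, ?_⟩
  · have : P = U.pi P - U.mu P := by rw [pi_apply, mu_apply]; abel
    rw [this]
    exact sub_mem ⟨P, h.1, rfl⟩ hm
  · have : U.sg (U.mu P) - U.mu P = U.mu (U.sg P - P) := by
      rw [mu_apply, mu_apply, map_sub, map_sub, sg_om]; abel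
    rw [this]
    exact U.mu_mem_B h.2.2

lemma Good.rh {P} (h : U.Good P) : U.Good (U.rh P) := by
  refine ⟨U.rh_mem h.1, fun hm => h.2.1 ?_, ?_⟩
  · have : P = (3 : ℤ) • (U.rh P + U.pi P) - (2 : ℤ) • ((7 : ℤ) • P) := by
      rw [rh_apply, pi_apply]; abel
    rw [this]
    exact sub_mem (zsmul_mem (add_mem hm ⟨P, h.1, rfl⟩) _) (zsmul_mem (U.seven_mem h.1) _)
  · have : U.sg (U.rh P) - U.rh P = U.rh (U.sg P - P) := by
      rw [rh_apply, rh_apply, map_add, map_sub, sg_om, map_zsmul, zsmul_sub]; abel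
    rw [this]
    exact U.rh_mem_B h.2.2

lemma σ_pow [IsGalois H N] [FiniteDimensional H N] : U.σ ^ 7 ^ U.m = 1 := by
  rw [← U.card, ← IsGalois.card_aut_eq_finrank H N]
  exact pow_card_eq_one'

lemma sg_pow_mpt (n : ℕ) {x y : N} (h : y ^ 2 = x ^ 3 + bE U.w) :
    ∃ h', (U.sg ^ n) (mpt U.hb x y h) = mpt U.hb ((U.σ ^ n) x) ((U.σ ^ n) y) h' := by
  induction n with
  | zero => exact ⟨h, rfl⟩
  | succ n ih =>
    obtain ⟨h', ih⟩ := ih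
    have e : ∀ x, (U.σ ^ (n + 1)) x = U.σ ((U.σ ^ n) x) := fun x => by rw [pow_succ']; rfl
    refine ⟨by rw [e, e]; exact U.eq_σ h', ?_⟩
    rw [pow_succ']
    change U.sg ((U.sg ^ n) _) = _
    rw [ih, sg_mpt, mpt_inj, e, e]
    exact ⟨rfl, rfl⟩

lemma exists_good [IsGalois H N] [FiniteDimensional H N] {P} (hP : P ∈ U.M) (hPB : P ∉ U.B) :
    ∃ P, U.Good P := by
  obtain ⟨P, h1, h2, h3⟩ := exists_fixed_mod U.sg (fun P hP => U.sg_mem hP)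
    (fun P hP => U.seven_mem hP) (m := U.m) (by
      ext P
      rcases mpt_cases U.hb P with rfl | ⟨x, y, h, rfl⟩
      · simp
      obtain ⟨h', e⟩ := U.sg_pow_mpt (7 ^ U.m) h
      rw [e]
      change _ = mpt U.hb x y h
      rw [mpt_inj, U.σ_pow]
      exact ⟨rfl, rfl⟩) hP hPB
  exact ⟨P, h1, h2, h3⟩

end Tower

end

section
open Polynomial WithZero NumberField IsDedekindDomain

namespace Tower
variable {F H : Type*} [Field F] [NumberField F] [Field H] [NumberField H] [Algebra F H]
  {S : Setup F H} {N : Type*} [Field N] [Algebra H N] [CharZero N] (U : Tower S N) [IsGalois F H]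

lemma seven_eq : (7 : N) = -U.w * (2 + 3 * U.w) * (2 - U.w) := by
  have := U.hw
  grind

lemma val_seven (v : Valuation N ℤᵐ⁰) : v 7 = v (2 + 3 * U.w) * v (2 - U.w) := by
  rw [U.seven_eq, map_mul, map_mul, Valuation.map_neg, val_omega v U.hw, one_mul]

lemma val_lin (v : Valuation N ℤᵐ⁰) (a b : ℤ) : v (a + b * U.w) ≤ 1 :=
  Valuation.map_add_le v (val_int v a) (by
    rw [map_mul, val_omega v U.hw, mul_one]; exact val_int v b)

lemma val_two_sub_le (v : Valuation N ℤᵐ⁰) : v (2 - U.w) ≤ 1 := by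
  have := U.val_lin v 2 (-1)
  push_cast at this
  rwa [neg_one_mul, ← sub_eq_add_neg] at this

lemma val_ρ_le (v : Valuation N ℤᵐ⁰) : v (2 + 3 * U.w) ≤ 1 := by
  have := U.val_lin v 2 3
  push_cast at this
  exact this

lemma V_ρ : U.V (2 + 3 * U.w) < 1 := by
  have := U.V_alg (2 + 3 * S.ω)
  rw [S.val_ρ U.hq, map_add, map_mul, map_ofNat, map_ofNat] at this
  change U.V (2 + 3 * algebraMap H N S.ω) < 1
  rw [this]
  exact pow_lt_one' (by rw [← exp_zero, exp_lt_exp]; norm_num) U.he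

lemma V_seven : U.V 7 < 1 := by
  rw [U.val_seven]
  exact (mul_le_mul' le_rfl (U.val_two_sub_le _)).trans_lt (by rw [mul_one]; exact U.V_ρ)

lemma v_seven : U.v 7 < 1 := by
  rw [U.val_seven]
  exact (mul_le_mul' (U.val_ρ_le _) le_rfl).trans_lt (by rw [one_mul]; exact U.hv)

lemma V_two_sub_sq : U.V (2 - U.w ^ 2) < 1 := by
  have : 2 - U.w ^ 2 = -U.w * (2 + 3 * U.w) := by have := U.hw; grind
  rw [this, map_mul, Valuation.map_neg, val_omega _ U.hw, one_mul]
  exact U.V_ρ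

variable {U}

lemma scale_eq {x y : N} (h : y ^ 2 = x ^ 3 + bE U.w) :
    (U.D ^ 3 * y) ^ 2 = (U.D ^ 2 * x) ^ 3 + 9 / 4 := by
  rw [← U.D_bE]; linear_combination U.D ^ 6 * h

/-- `μ` moves points into the formal group at a place of residue field `𝔽₇`. -/
lemma mu_big {v : Valuation N ℤᵐ⁰} (h7 : v 7 < 1) {x y x' : N} (h : y ^ 2 = x ^ 3 + bE U.w)
    (hx : v (U.D ^ 2 * x) ≤ 1 → ∃ n : ℤ, v (U.D ^ 2 * x - n) < 1)
    (hy : v (U.D ^ 3 * y) ≤ 1 → ∃ n : ℤ, v (U.D ^ 3 * y - n) < 1) (hx0 : x ≠ 0)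
    (h' : 3 * x ^ 2 * x' = -U.w ^ 2 * (x ^ 3 + 4 * bE U.w)) : 1 < v (U.D ^ 2 * x') := by
  refine mu_seven v h7 U.hw (x := U.D ^ 2 * x) (mul_ne_zero (pow_ne_zero 2 U.D_ne) hx0)
    (red_seven v h7 (scale_eq h) hx hy) ?_
  linear_combination U.D ^ 6 * h' - 4 * U.w ^ 2 * U.D_bE

lemma pi_big {v : Valuation N ℤᵐ⁰} (h7 : v 7 < 1) {w x X : N} (hw : w ^ 2 + w + 1 = 0)
    (hpi : v (2 - w) < 1) (hx : 1 < v (U.D ^ 2 * x)) (h0 : (2 - w) * x ^ 3 + 4 * w ^ 2 * bE U.w ≠ 0)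
    (h : X * ((2 - w) * x ^ 3 + 4 * w ^ 2 * bE U.w) ^ 2 =
        x ^ 7 + (44 + 48 * w) * bE U.w * x ^ 4 + (16 + 48 * w) * bE U.w ^ 2 * x) :
    v (U.D ^ 2 * x) * exp 1 ≤ v (U.D ^ 2 * X) := by
  have hD := U.D_bE
  have e : (2 - w) * (U.D ^ 2 * x) ^ 3 + 9 * w ^ 2 =
      U.D ^ 6 * ((2 - w) * x ^ 3 + 4 * w ^ 2 * bE U.w) := by linear_combination -4 * w ^ 2 * hD
  refine pi_growth v h7 hpi hw hx ?_ ?_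
  · rw [e]; exact mul_ne_zero (pow_ne_zero 6 U.D_ne) h0
  · rw [e]
    linear_combination U.D ^ 14 * h + ((44 + 48 * w) * U.D ^ 8 * x ^ 4 +
      (16 + 48 * w) * U.D ^ 2 * x * (U.D ^ 6 * bE U.w + 9 / 4)) * hD

/-- The condition satisfied by the places above `3`. -/
def Three (U : Tower S N) (v : Valuation N ℤᵐ⁰) : Prop :=
  v (1 - U.w) < 1 ∧ ∀ x, U.T x = x → v x ^ 3 ≠ v (1 - U.w) ^ 4

lemma three_facts {v : Valuation N ℤᵐ⁰} (h : v (1 - U.w) < 1) :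
    v (2 + 3 * U.w) = 1 ∧ v (2 - U.w ^ 2) = 1 ∧ v (bE U.w) ≤ 1 := by
  have hw := U.hw
  have h3 : v 3 < 1 := by
    have : (3 : N) = -U.w ^ 2 * (1 - U.w) * (1 - U.w) := by grind
    rw [this, map_mul, map_mul, Valuation.map_neg, map_pow, val_omega v hw, one_pow, one_mul]
    exact (mul_le_mul' h.le le_rfl).trans_lt (by rw [one_mul]; exact h)
  have h2 : v 2 = 1 := by
    have := val_unit_of_coprime v (p := 3) (by exact_mod_cast h3) (n := 2) (by decide)
    exact_mod_cast this
  have h1 : v (2 + 3 * U.w) = 1 := by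
    rw [Valuation.map_add_eq_of_lt_left, h2]
    rw [h2, map_mul, val_omega v hw, mul_one]; exact h3
  refine ⟨h1, ?_, ?_⟩
  · have : 2 - U.w ^ 2 = -U.w * (2 + 3 * U.w) := by grind
    rw [this, map_mul, Valuation.map_neg, val_omega v hw, one_mul, h1]
  · have h4 := congrArg v (four_bE hw)
    rw [show (4 : N) * bE U.w = 2 * 2 * bE U.w by ring, map_mul, map_mul, h2, one_mul, one_mul,
      map_mul, h1, mul_one, map_pow] at h4
    rw [h4]
    exact pow_le_one' h.le 3

lemma three_ne {v : Valuation N ℤᵐ⁰} (h : U.Three v) {x : N} (hx : U.T x = U.w ^ 2 * x) :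
    v x ≠ v (1 - U.w) := by
  intro he
  obtain ⟨h1, h2, h3⟩ := three_facts h.1
  refine h.2 (U.D ^ 2 * x) ?_ ?_
  · rw [map_mul, map_pow, U.T_D, hx]
    have := omega_cube U.hw
    linear_combination U.D ^ 2 * x * (U.w ^ 3 + 1) * this
  · have hD := congrArg v U.D_pow
    rw [map_mul, h1, mul_one, map_mul, val_omega v U.hw, one_mul, map_pow] at hD
    rw [map_mul, map_pow, mul_pow, ← pow_mul, he, hD, pow_succ' _ 3]

lemma T_x {x : N} (h : U.T x = U.w ^ 2 * x) : U.T (U.D ^ 2 * x) = U.D ^ 2 * x := by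
  have h3 := omega_cube U.hw
  rw [map_mul, map_pow, U.T_D, h]
  linear_combination U.D ^ 2 * x * (U.w ^ 3 + 1) * h3

lemma T_y {y : N} (h : U.T y = -y) : U.T (U.D ^ 3 * y) = U.D ^ 3 * y := by
  have h3 := omega_cube U.hw
  rw [map_mul, map_pow, U.T_D, h]
  linear_combination U.D ^ 3 * y * (U.w ^ 3 + 1) * h3

variable [DecidableEq N]

lemma B_le {P} (h : P ∉ U.B) : P ≠ 0 := by
  rintro rfl
  exact h (zero_mem _)

/-- There are good points arbitrarily close to the origin at `V`, and in the formal group at all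
places above `3`. -/
lemma exists_deep {P} (hP : U.Good P) (k : ℕ) : ∃ (x y : N) (h : y ^ 2 = x ^ 3 + bE U.w),
    U.Good (mpt U.hb x y h) ∧ exp ((k : ℤ) + 1) ≤ U.V (U.D ^ 2 * x) ∧
      ∀ v, U.Three v → 1 < v x := by
  induction k with
  | zero =>
    obtain rfl | ⟨x, y, h, rfl⟩ := mpt_cases U.hb P
    · exact absurd rfl (B_le hP.2.1)
    have hm := hP.mu
    have hx0 : x ≠ 0 := by
      rintro rfl
      exact B_le hm.2.1 (mumul_mpt_zero U.hb U.hw h)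
    obtain ⟨x', y', h', e, e1, -⟩ := mumul_mpt U.hb U.hw h hx0
    refine ⟨x', y', h', ?_, ?_, ?_⟩
    · rw [← e]; exact hm
    · have := mu_big U.V_seven h (U.V_res _) (U.V_res _) hx0 e1
      by_contra hlt
      rw [not_le] at hlt
      obtain ⟨n, hn⟩ := exists_exp (ne_of_gt (zero_lt_one.trans this))
      rw [hn, ← exp_zero, exp_lt_exp] at this
      rw [hn, exp_lt_exp] at hlt
      push_cast at hlt
      omega
    · intro v hv
      exact mu_three v U.hw hv.1 hx0 (three_ne hv ((U.mem_M_mpt h).1 hP.1).1) e1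
  | succ k ih =>
    obtain ⟨x, y, h, hg, hV, h3⟩ := ih
    have hr := hg.rh
    rcases pimul_mpt U.hb (omega_sq U.hw) h with ⟨-, h0⟩ | ⟨h0, X, Y, hE, e, e1, -⟩
    · exact absurd h0 (B_le hr.2.1)
    refine ⟨X, Y, hE, ?_, ?_, ?_⟩
    · rw [← e]; exact hr
    · have h1 : 1 < U.V (U.D ^ 2 * x) := by
        refine lt_of_lt_of_le ?_ hV
        rw [← exp_zero, exp_lt_exp]; positivity
      have := pi_big U.V_seven (omega_sq U.hw) U.V_two_sub_sq h1 h0 e1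
      refine le_trans ?_ this
      refine le_trans ?_ (mul_le_mul' hV le_rfl)
      rw [← exp_add, exp_le_exp]
      push_cast
      rfl
    · intro v hv
      obtain ⟨-, h2, hb⟩ := three_facts hv.1
      exact pi_keep v (omega_sq U.hw) h2 hb (h3 v hv) e1

/-- If `M = πM`, repeated division by `π` at `v` shows that `M` consists of points with `x = 0`. -/
lemma x_eq_zero (hMB : ∀ P ∈ U.M, P ∈ U.B) {x y : N} {h : y ^ 2 = x ^ 3 + bE U.w}
    (hP : mpt U.hb x y h ∈ U.M) : x = 0 := by
  by_contra hx0
  have key : ∀ (n : ℕ) (P), P ∈ U.M → ∀ (x y : N) (h : y ^ 2 = x ^ 3 + bE U.w),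
      U.mu P = mpt U.hb x y h → ¬ U.v (U.D ^ 2 * x) ≤ exp (n : ℤ) := by
    have hbig : ∀ (P), P ∈ U.M → ∀ (x y : N) (h : y ^ 2 = x ^ 3 + bE U.w),
      U.mu P = mpt U.hb x y h → 1 < U.v (U.D ^ 2 * x) := by
      intro P hP x y h hmu
      obtain rfl | ⟨x₁, y₁, h₁, rfl⟩ := mpt_cases U.hb P
      · rw [map_zero] at hmu; exact absurd hmu.symm (mpt_ne_zero _ _)
      have hx0 : x₁ ≠ 0 := by
        rintro rfl
        exact mpt_ne_zero _ _ (hmu.symm.trans (mumul_mpt_zero U.hb U.hw h₁))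
      obtain ⟨x', y', h', e, e1, -⟩ := mumul_mpt U.hb U.hw h₁ hx0
      obtain ⟨rfl, rfl⟩ := (mpt_inj U.hb).1 (e.symm.trans hmu)
      have hT := (U.mem_M_mpt h₁).1 hP
      exact mu_big U.v_seven h₁ (U.v_res _ (T_x hT.1)) (U.v_res _ (T_y hT.2)) hx0 e1
    intro n
    induction n with
    | zero =>
      intro P hP x y h hmu hle
      exact absurd (hbig P hP x y h hmu) (not_lt.2 (by simpa using hle))
    | succ n ih =>
      intro P hP x y h hmu hle
      obtain ⟨R, hR, rfl⟩ := U.mem_B.1 (hMB P hP)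
      have hc : U.mu (U.pi R) = U.pi (U.mu R) := by
        rw [mu_apply, mu_apply, map_sub, pi_om]
      rw [hc] at hmu
      obtain h0 | ⟨x₁, y₁, h₁, e₁⟩ := mpt_cases U.hb (U.mu R)
      · rw [h0, map_zero] at hmu; exact mpt_ne_zero _ _ hmu.symm
      refine ih R hR x₁ y₁ h₁ e₁ ?_
      rw [e₁] at hmu
      rcases pimul_mpt U.hb U.hw h₁ with ⟨-, h0⟩ | ⟨h0, X, Y, hE, e, e1, -⟩
      · exact absurd (hmu.symm.trans h0) (mpt_ne_zero _ _)
      obtain ⟨rfl, rfl⟩ := (mpt_inj U.hb).1 (e.symm.trans hmu)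
      have h2 := (pi_big U.v_seven U.hw U.hv (hbig R hR _ _ _ e₁) h0 e1).trans hle
      have h3 : exp ((n + 1 : ℕ) : ℤ) = exp (n : ℤ) * exp 1 := by rw [← exp_add]; push_cast; rfl
      rw [h3] at h2
      exact le_of_mul_le_mul_right h2 exp_pos
  obtain ⟨x', y', h', e, e1, -⟩ := mumul_mpt U.hb U.hw h hx0
  have : ∃ n : ℕ, U.v (U.D ^ 2 * x') ≤ exp (n : ℤ) := by
    by_cases h0 : U.v (U.D ^ 2 * x') = 0
    · exact ⟨0, by rw [h0]; exact zero_le⟩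
    obtain ⟨n, hn⟩ := exists_exp h0
    exact ⟨n.toNat, by rw [hn, exp_le_exp]; exact Int.self_le_toNat n⟩
  obtain ⟨n, hn⟩ := this
  exact key n _ hP x' y' h' e hn

end Tower

end

section
open Polynomial WithZero NumberField IsDedekindDomain
open scoped Pointwise nonZeroDivisors

section
variable {K L : Type*} [Field K] [Field L] [NumberField L] [Algebra K L]

lemma intVal_le_of_smul_le (p : HeightOneSpectrum (𝓞 L)) (g : L ≃ₐ[K] L)
    (h : g • p.asIdeal = p.asIdeal) (x : 𝓞 L) : p.intValuation (g • x) ≤ p.intValuation x := by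
  rcases eq_or_ne x 0 with rfl | hx
  · rw [smul_zero]
  obtain ⟨n, hn⟩ : ∃ n : ℕ, p.intValuation x = exp (-(n : ℤ)) :=
    ⟨_, p.intValuation_eq_exp_neg_multiplicity hx⟩
  have h1 := (p.intValuation_le_pow_iff_mem x n).1 hn.le
  rw [hn, p.intValuation_le_pow_iff_mem]
  have : g • x ∈ g • (p.asIdeal ^ n) := Ideal.smul_mem_pointwise_smul g x _ h1
  rwa [Ideal.pointwise_smul_def, Ideal.map_pow, ← Ideal.pointwise_smul_def, h] at this

/-- An automorphism stabilising a prime preserves its valuation. -/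
lemma val_smul (p : HeightOneSpectrum (𝓞 L)) (g : L ≃ₐ[K] L)
    (h : g • p.asIdeal = p.asIdeal) (x : L) : p.valuation L (g x) = p.valuation L x := by
  have key : ∀ x : 𝓞 L, p.intValuation (g • x) = p.intValuation x := fun x => by
    refine le_antisymm (intVal_le_of_smul_le p g h x) ?_
    have h' : g⁻¹ • p.asIdeal = p.asIdeal := by rw [inv_smul_eq_iff, h]
    simpa using intVal_le_of_smul_le p g⁻¹ h' (g • x)
  obtain ⟨a, b, hb, rfl⟩ := IsFractionRing.div_surjective (𝓞 L) x
  have e (c : 𝓞 L) : g (algebraMap (𝓞 L) L c) = algebraMap (𝓞 L) L (g • c) := rfl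
  rw [map_div₀, map_div₀, map_div₀, e, e, p.valuation_of_algebraMap, p.valuation_of_algebraMap,
    p.valuation_of_algebraMap, p.valuation_of_algebraMap, key, key]
end

namespace Setup
variable {F H : Type*} [Field F] [NumberField F] [Field H] [NumberField H] [Algebra F H]
  (S : Setup F H) [IsGalois F H]

lemma e₃_sq : S.e₃ ^ 2 = (1 - S.ω) * (2 + 3 * S.ω) := by
  have h0 := S.ω_ne_zero
  have hr := S.ρ_ne_zero
  have h3 := omega_cube S.hω
  rw [e₃, div_pow, div_eq_iff (by positivity)]
  have := S.ht'
  calc (S.t ^ 3) ^ 2 = S.t ^ 6 := by ring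
    _ = S.ω * (1 - S.ω) * (2 + 3 * S.ω) ^ 5 := this
    _ = _ := by linear_combination (-(1 - S.ω) * (2 + 3 * S.ω) ^ 5 * S.ω) * h3

lemma q_unique {q p : HeightOneSpectrum (𝓞 H)} (hq : (2 + 3 * S.ωi) ∈ q.asIdeal)
    (hp : (2 + 3 * S.ωi) ∈ p.asIdeal) : p = q := by
  by_contra hne
  have hcop : IsCoprime p.asIdeal q.asIdeal :=
    Ideal.isCoprime_iff_sup_eq.2 (p.isMaximal.coprime_of_ne q.isMaximal
      fun h => hne (HeightOneSpectrum.ext h))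
  have hle : Ideal.span {S.e5i} ≤ p.asIdeal * q.asIdeal := by
    rw [Ideal.mul_eq_inf_of_isCoprime hcop, Ideal.span_singleton_le_iff_mem]
    exact ⟨S.e5i_mem hp, S.e5i_mem hq⟩
  have := Ideal.absNorm_dvd_absNorm_of_le hle
  rw [map_mul, S.absNorm_q hp, S.absNorm_q hq, S.absNorm_e5i] at this
  omega

/-- At a prime above `7` where the sextic extension is unramified, valuations of `a` are controlled
by the norm relations, since the Frobenius is nontrivial there. -/
lemma val_at_seven {a : H} (ha : a ≠ 0) (h3 : ∃ c, a * (S.τ ^ 3) a = c ^ 7)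
    (h2 : ∃ c, a * (S.τ ^ 2) a * (S.τ ^ 4) a = c ^ 7) {p : HeightOneSpectrum (𝓞 H)}
    (h7 : (7 : 𝓞 H) ∈ p.asIdeal) (hρ : (2 + 3 * S.ωi) ∉ p.asIdeal) :
    ∃ n : ℤ, p.valuation H a = exp (7 * n) := by
  obtain ⟨k, hk⟩ := val_exp (p.valuation H) ha
  rcases S.frob_cases p.asIdeal p.isPrime p.ne_bot with
    h | h | ⟨l, hl, hlQ, hdvd, q, hq, hfr, ⟨hql, r, hr⟩ | ⟨hql, hr⟩⟩
  · obtain ⟨c, hc⟩ := h2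
    have hc0 : c ≠ 0 := by
      rintro rfl
      rw [zero_pow (by norm_num)] at hc
      simp [ha] at hc
    obtain ⟨l, hl⟩ := val_exp (p.valuation H) hc0
    have h' : S.τ ^ 4 • p.asIdeal = p.asIdeal := by
      rw [show S.τ ^ 4 = S.τ ^ 2 * S.τ ^ 2 by group, mul_smul, h, h]
    have := congrArg (p.valuation H) hc
    rw [map_mul, map_mul, map_pow, val_smul p _ h, val_smul p _ h', hk, hl, ← exp_add, ← exp_add,
      ← exp_nsmul, exp_inj, nsmul_eq_mul] at this
    push_cast at this
    exact ⟨k / 7, by rw [hk, exp_inj]; omega⟩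
  · obtain ⟨c, hc⟩ := h3
    have hc0 : c ≠ 0 := by
      rintro rfl
      rw [zero_pow (by norm_num)] at hc
      simp [ha] at hc
    obtain ⟨l, hl⟩ := val_exp (p.valuation H) hc0
    have := congrArg (p.valuation H) hc
    rw [map_mul, map_pow, val_smul p _ h, hk, hl, ← exp_add,
      ← exp_nsmul, exp_inj, nsmul_eq_mul] at this
    push_cast at this
    exact ⟨k / 7, by rw [hk, exp_inj]; omega⟩
  all_goals
    exfalso
    have h2 : S.ωi - 2 ∈ p.asIdeal := by
      have e : (7 : 𝓞 H) = S.ωi * (2 + 3 * S.ωi) * (S.ωi - 2) := by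
        have := S.ωi_sq
        grind
      rw [e] at h7
      rcases p.isPrime.mem_or_mem h7 with h | h
      · exfalso
        rcases p.isPrime.mem_or_mem h with h | h
        · refine p.isPrime.one_notMem ?_
          have : (1 : 𝓞 H) = S.ωi * (-1 - S.ωi) := by linear_combination S.ωi_sq
          rw [this]
          exact Ideal.mul_mem_right _ _ h
        · exact hρ h
      · exact h
  · have hl7 : l = 7 := by
      have := hdvd 7 (by exact_mod_cast h7)
      have : l ∣ 7 := by exact_mod_cast this
      exact (Nat.prime_dvd_prime_iff_eq hl (by norm_num)).1 this
    subst hl7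
    subst hql
    let φ := Ideal.Quotient.mk p.asIdeal
    have e1 : φ S.ωi = 2 := by
      have := Ideal.Quotient.eq_zero_iff_mem.2 h2
      rw [map_sub, map_ofNat, sub_eq_zero] at this
      exact this
    have e2 : (7 : 𝓞 H ⧸ p.asIdeal) = 0 := by
      have := Ideal.Quotient.eq_zero_iff_mem.2 h7
      rwa [map_ofNat] at this
    have e3 : φ S.ti ^ 7 = φ S.ti := by
      have := Ideal.Quotient.eq_zero_iff_mem.2 (hfr S.ti)
      rw [map_sub, map_pow, sub_eq_zero] at this
      exact this
    have e4 := congrArg φ S.ti_pow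
    simp only [map_mul, map_sub, map_add, map_pow, map_one, map_ofNat, e1] at e4
    haveI : IsDomain (𝓞 H ⧸ p.asIdeal) := Ideal.Quotient.isDomain _
    have e5 : φ S.ti ^ 6 = 5 := by
      rw [e4]; linear_combination (-9363) * e2
    have e6 : φ S.ti * 4 = 0 := by linear_combination e3 - φ S.ti * e5
    have h0 : (φ S.ti * 4) ^ 6 = 0 := by rw [e6]; norm_num
    have h1 : (1 : 𝓞 H ⧸ p.asIdeal) = 0 := by
      rw [mul_pow, e5] at h0
      linear_combination 3 * h0 - 8777 * e2
    exact one_ne_zero h1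
  · exact hr 2 (by exact_mod_cast h2)

end Setup

end

section
open Polynomial WithZero NumberField IsDedekindDomain

namespace Tower
variable {F H : Type*} [Field F] [NumberField F] [Field H] [NumberField H] [Algebra F H]
  {S : Setup F H} {N : Type*} [Field N] [Algebra H N] [CharZero N] (U : Tower S N) [IsGalois F H]

lemma cube_ne {x : N} (hx : U.T x = U.w ^ 2 * x) : x ^ 3 ≠ (1 - U.w) ^ 3 := by
  intro h
  have h1 := omega_ne_one U.hw
  have h0 := omega_ne_zero U.hw
  have hx0 : x ≠ 0 := by
    rintro rfl
    rw [zero_pow (by norm_num)] at h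
    exact pow_ne_zero 3 h1 h.symm
  have hf : (x - (1 - U.w)) * (x - U.w * (1 - U.w)) * (x - U.w ^ 2 * (1 - U.w)) = 0 := by
    have := U.hw
    grind
  have fin : U.T x = x → False := fun e => by
    rw [e] at hx
    have : x * ((1 - U.w) * (1 + U.w)) = 0 := by linear_combination hx
    have h2 : 1 + U.w = -U.w ^ 2 := by linear_combination U.hw
    rw [h2] at this
    exact mul_ne_zero hx0 (mul_ne_zero h1 (neg_ne_zero.2 (pow_ne_zero 2 h0))) this
  rcases mul_eq_zero.1 hf with hf | hf
  · rcases mul_eq_zero.1 hf with hf | hf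
    all_goals
      rw [sub_eq_zero] at hf
      refine fin ?_
      rw [hf]; simp only [map_sub, map_mul, map_one, U.T_w]
  · rw [sub_eq_zero] at hf
    refine fin ?_
    rw [hf]; simp only [map_sub, map_mul, map_pow, map_one, U.T_w]

lemma ne_of_T {x : N} (hx : U.T x = U.w ^ 2 * x) : x ≠ 1 - U.w := fun h =>
  U.cube_ne hx (by rw [h])

lemma f_ne {x y : N} (h : y ^ 2 = x ^ 3 + bE U.w) (hx : U.T x = U.w ^ 2 * x) : fE U.w x y ≠ 0 := by
  intro h0
  have := fE_neg U.hw h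
  rw [h0, zero_mul] at this
  exact pow_ne_zero 7 (sub_ne_zero.2 (U.ne_of_T hx)) (neg_eq_zero.1 this.symm)

lemma seventh {ε : N} (hε : U.V (ε ^ 7 - 1) < 1) : U.V (ε - 1) * U.V 7 ≤ U.V (ε ^ 7 - 1) := by
  refine seventh_root U.V U.hw U.V_ρ U.V_res (e := algebraMap H N S.e₅) ?_ hε
  rw [← map_pow, S.e₅_pow]
  simp [w, map_ofNat]

lemma root_one (U : Tower S N) {ε : N} (h : ε ^ 7 = 1) : ε = 1 := by
  have := U.seventh (ε := ε) (by rw [h, sub_self, map_zero]; exact zero_lt_one)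
  rw [h, sub_self, map_zero, ← map_mul] at this
  have := (Valuation.zero_iff U.V).1 (le_antisymm this zero_le)
  rcases mul_eq_zero.1 this with h | h
  · exact sub_eq_zero.1 h
  · norm_num at h

variable [IsGalois H N] [FiniteDimensional H N]

lemma exists_of_fixed {x : N} (h : U.σ x = x) : ∃ a, algebraMap H N a = x := by
  have h1 : ∀ g : N ≃ₐ[H] N, g x = x := fun g => by
    have : Subgroup.zpowers U.σ ≤ MulAction.stabilizer (N ≃ₐ[H] N) x := by
      rw [Subgroup.zpowers_le]; exact h
    exact this (U.hσ g)
  exact (IsGalois.mem_range_algebraMap_iff_fixed x).2 h1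

/-- Seventh powers descend, as there are no nontrivial seventh roots of unity in `N`. -/
lemma descend (U : Tower S N) {a : H} {d : N} (h : algebraMap H N a = d ^ 7) : ∃ c, a = c ^ 7 := by
  rcases eq_or_ne d 0 with rfl | hd
  · refine ⟨0, (algebraMap H N).injective ?_⟩
    rw [h, map_pow, map_zero]
  have h1 := congrArg U.σ h
  rw [U.σ.commutes, h, map_pow] at h1
  have h2 : U.σ d / d = 1 := U.root_one (by rw [div_pow, ← h1, div_self (pow_ne_zero 7 hd)])
  obtain ⟨c, rfl⟩ := U.exists_of_fixed ((div_eq_one_iff_eq hd).1 h2)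
  exact ⟨c, (algebraMap H N).injective (by rw [h, map_pow])⟩

variable [DecidableEq N] {U}

/-- The class of `f(P)` modulo seventh powers is invariant under `Gal(N/H)`. -/
lemma cocycle {x y : N} {h : y ^ 2 = x ^ 3 + bE U.w} (hP : U.Good (mpt U.hb x y h)) :
    ∃ c, c ≠ 0 ∧ U.σ (fE U.w x y) = fE U.w x y * c ^ 7 := by
  obtain ⟨hM, -, hB⟩ := hP
  obtain ⟨hTx, hTy⟩ := (U.mem_M_mpt h).1 hM
  obtain ⟨R, hR, hRe⟩ := U.mem_B.1 hB
  have hσ : U.σ (fE U.w x y) = fE U.w (U.σ x) (U.σ y) := by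
    have := map_fE (U.σ : N →+* N) U.w x y
    rwa [show (U.σ : N →+* N) U.w = U.w from U.σ_w] at this
  have hf := U.f_ne h hTx
  have hf' : fE U.w (U.σ x) (U.σ y) ≠ 0 := by rw [← hσ]; simpa using hf
  have hxσ : U.σ x ≠ 1 - U.w := by
    intro e
    refine U.ne_of_T hTx (U.σ.injective ?_)
    rw [e, map_sub, map_one, U.σ_w]
  rw [U.sg_mpt h] at hRe
  obtain rfl | ⟨x₀, y₀, h₀, rfl⟩ := mpt_cases U.hb R
  · rw [map_zero, eq_comm, sub_eq_zero, mpt_inj] at hRe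
    exact ⟨1, one_ne_zero, by rw [hσ, hRe.1, hRe.2]; ring⟩
  obtain h0 | ⟨X, Y, H, hQ⟩ := mpt_cases U.hb (U.pi (mpt U.hb x₀ y₀ h₀))
  · rw [h0, eq_comm, sub_eq_zero, mpt_inj] at hRe
    exact ⟨1, one_ne_zero, by rw [hσ, hRe.1, hRe.2]; ring⟩
  have hX := ((U.mem_M_mpt H).1 (hQ ▸ U.pi_mem hR)).1
  have hfib := onFibre_of_pimul U.hw U.hb h₀ H hQ
  have hg := hfib.gE_ne U.hw (U.ne_of_T hX)
  have hg7 := hfib.gE_pow U.hw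
  rw [hQ, eq_sub_iff_add_eq, add_comm] at hRe
  by_cases hne : x = X ∧ y = -Y
  · obtain ⟨rfl, rfl⟩ := hne
    rw [mpt_add_neg U.hb h H (by ring)] at hRe
    exact absurd hRe.symm (mpt_ne_zero _ _)
  obtain ⟨m, n, x₃, h₃, hadd, e₁, e₂, s₁, s₂, s₃, -⟩ := mpt_add_line U.hb h H hne
  rw [hadd, mpt_inj] at hRe
  obtain ⟨rfl, hy⟩ := hRe
  have hl := fE_line U.hw s₁ s₂ s₃
  rw [← e₁, ← e₂, ← hg7] at hl
  have hn := fE_neg U.hw h₃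
  rw [neg_neg, hy, ← hσ] at hn
  set L := 3 * (1 - U.w) / 2 - m * (1 - U.w) - n
  set g := gE U.w x₀ y₀
  set f := fE U.w x y
  set f' := fE U.w (U.σ x) (m * U.σ x + n)
  have hf'0 : f' ≠ 0 := by
    intro h0
    rw [h0, mul_zero] at hn
    exact pow_ne_zero 7 (sub_ne_zero.2 hxσ) (neg_eq_zero.1 hn.symm)
  have hL : L ≠ 0 := by
    intro h0
    rw [h0, zero_pow (by norm_num), neg_zero] at hl
    exact mul_ne_zero (mul_ne_zero hf (pow_ne_zero 7 hg)) hf'0 hl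
  refine ⟨(U.σ x - (1 - U.w)) * g / L, div_ne_zero (mul_ne_zero (sub_ne_zero.2 hxσ) hg) hL, ?_⟩
  rw [div_pow, mul_pow, mul_div_assoc', eq_div_iff (pow_ne_zero 7 hL)]
  apply mul_right_cancel₀ hf'0
  linear_combination (L ^ 7) * hn - (U.σ x - (1 - U.w)) ^ 7 * hl

end Tower

namespace Tower
variable {F H : Type} [Field F] [NumberField F] [Field H] [NumberField H] [Algebra F H]
  {S : Setup F H} {N : Type} [Field N] [Algebra H N] [CharZero N] {U : Tower S N} [IsGalois F H]
  [IsGalois H N] [FiniteDimensional H N] [DecidableEq N]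

/-- Hilbert 90: up to seventh powers, `f(P)` lies in `H`. -/
lemma exists_base {x y : N} {h : y ^ 2 = x ^ 3 + bE U.w} (hP : U.Good (mpt U.hb x y h)) :
    ∃ (β : N) (a : H), β ≠ 0 ∧ algebraMap H N a = fE U.w x y * β ^ 7 := by
  obtain ⟨c, hc0, hc⟩ := cocycle hP
  have hf := U.f_ne h ((U.mem_M_mpt h).1 hP.1).1
  have hn := congrArg (Algebra.norm H) hc
  rw [Algebra.norm_eq_of_algEquiv, map_mul, map_pow] at hn
  have hn1 : Algebra.norm H c ^ 7 = 1 := by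
    have h0 : Algebra.norm H (fE U.w x y) ≠ 0 := Algebra.norm_ne_zero_iff.2 hf
    exact mul_left_cancel₀ h0 (by rw [← hn, mul_one])
  have hn2 : Algebra.norm H c = 1 := by
    apply (algebraMap H N).injective
    rw [map_one]
    exact U.root_one (by rw [← map_pow, hn1, map_one])
  haveI : IsCyclic (N ≃ₐ[H] N) := ⟨U.σ, U.hσ⟩
  obtain ⟨u, hu⟩ := groupCohomology.exists_div_of_norm_eq_one U.hσ hn2
  have hσu : U.σ (u : N) ≠ 0 := by simp
  rw [div_eq_iff hσu] at hu
  obtain ⟨a, ha⟩ := U.exists_of_fixed (x := fE U.w x y * (u : N) ^ 7) (by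
    rw [map_mul, map_pow, hc]
    nth_rewrite 2 [hu]
    ring)
  exact ⟨u, a, u.ne_zero, ha⟩

end Tower

end

section
open Polynomial WithZero NumberField IsDedekindDomain

namespace Tower
variable {F H : Type} [Field F] [NumberField F] [Field H] [NumberField H] [Algebra F H]
  {S : Setup F H} {N : Type} [Field N] [Algebra H N] [CharZero N] {U : Tower S N} [IsGalois F H]
  [IsGalois H N] [FiniteDimensional H N]

lemma T_f (x y : N) : U.T (fE U.w x y) = fE U.w (U.T x) (U.T y) := by
  have := map_fE (U.T : N →+* N) U.w x y
  rwa [show (U.T : N →+* N) U.w = U.w from U.T_w] at this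

lemma rel_three {x y β : N} {a : H} (h : y ^ 2 = x ^ 3 + bE U.w) (hx : U.T x = U.w ^ 2 * x)
    (hy : U.T y = -y) (ha : algebraMap H N a = fE U.w x y * β ^ 7) :
    ∃ c, a * (S.τ ^ 3) a = c ^ 7 := by
  have e : algebraMap H N ((S.τ ^ 3) a) = U.T (U.T (U.T (algebraMap H N a))) := by
    rw [U.T_alg, U.T_alg, U.T_alg]; rfl
  have hx3 : U.T (U.T (U.T x)) = x := by
    have h6 : U.w ^ 6 = 1 := by rw [show 6 = 3 * 2 by norm_num, pow_mul, omega_cube U.hw, one_pow]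
    simp only [hx, map_mul, map_pow, U.T_w]
    linear_combination x * h6
  have hy3 : U.T (U.T (U.T y)) = -y := by simp only [hy, map_neg, neg_neg]
  refine U.descend (d := ((1 - U.w) - x) * β * U.T (U.T (U.T β))) ?_
  rw [map_mul, e, ha]
  simp only [map_mul, map_pow, T_f, hx3, hy3]
  have := fE_neg U.hw h
  linear_combination (β * U.T (U.T (U.T β))) ^ 7 * this

lemma rel_two {x y β : N} {a : H} (h : y ^ 2 = x ^ 3 + bE U.w) (hx : U.T x = U.w ^ 2 * x)
    (hy : U.T y = -y) (ha : algebraMap H N a = fE U.w x y * β ^ 7) :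
    ∃ c, a * (S.τ ^ 2) a * (S.τ ^ 4) a = c ^ 7 := by
  have h3 := omega_cube U.hw
  have e2 : algebraMap H N ((S.τ ^ 2) a) = U.T (U.T (algebraMap H N a)) := by
    rw [U.T_alg, U.T_alg]; rfl
  have e4 : algebraMap H N ((S.τ ^ 4) a) = U.T (U.T (U.T (U.T (algebraMap H N a)))) := by
    rw [U.T_alg, U.T_alg, U.T_alg, U.T_alg]; rfl
  have hx2 : U.T (U.T x) = U.w * x := by
    simp only [hx, map_mul, map_pow, U.T_w]
    linear_combination x * U.w * h3
  have hy2 : U.T (U.T y) = y := by simp only [hy, map_neg, neg_neg]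
  have hl := fE_line (x₁ := x) (x₂ := U.w * x) (x₃ := U.w ^ 2 * x) (m := 0) (n := y) U.hw
    (by linear_combination x * U.hw) (by linear_combination U.w * x ^ 2 * U.hw)
    (by linear_combination x ^ 3 * h3 - h)
  simp only [zero_mul, zero_add, sub_zero] at hl
  refine U.descend (d := (y - 3 * (1 - U.w) / 2) * β * U.T (U.T β) * U.T (U.T (U.T (U.T β)))) ?_
  rw [map_mul, map_mul, e2, e4, ha]
  simp only [map_mul, map_pow, T_f, hx2, hy2, U.T_w]
  rw [show U.w * (U.w * x) = U.w ^ 2 * x by ring]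
  linear_combination (β * U.T (U.T β) * U.T (U.T (U.T (U.T β)))) ^ 7 * hl

lemma kappa : (algebraMap H N S.e₃) ^ 2 = (1 - U.w) * (2 + 3 * U.w) := by
  rw [← map_pow, S.e₃_sq]
  simp [w, map_ofNat]

lemma val_away {x y β : N} {a : H} (h : y ^ 2 = x ^ 3 + bE U.w) (ha0 : a ≠ 0)
    (ha : algebraMap H N a = fE U.w x y * β ^ 7) (h3 : ∀ v, U.Three v → 1 < v x)
    {p : HeightOneSpectrum (𝓞 H)} (hp : (7 : 𝓞 H) ∉ p.asIdeal) :
    ∃ n : ℤ, p.valuation H a = exp (7 * n) := by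
  obtain ⟨v, hv, hT⟩ := U.unram p hp
  have hs : ∃ s, v (fE U.w x y) = v s ^ 7 := by
    rcases lt_or_ge 1 (v x) with h1 | h1
    · exact f_val_big v U.hw U.kappa h h1
    · have hle : v (1 - U.w) ≤ 1 := by
        have := U.val_lin v 1 (-1)
        push_cast at this
        rwa [neg_one_mul, ← sub_eq_add_neg] at this
      rcases hle.lt_or_eq with h2 | h2
      · exact absurd (h3 v ⟨h2, hT h2⟩) (not_lt.2 h1)
      · exact f_val_small v U.hw U.kappa h h1 h2
  obtain ⟨s, hs⟩ := hs
  have e : p.valuation H a = v (s * β) ^ 7 := by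
    rw [← hv, ha, map_mul, map_pow, hs, map_mul, mul_pow]
  have h0 : s * β ≠ 0 := by
    intro h0
    rw [h0, map_zero, zero_pow (by norm_num), Valuation.zero_iff] at e
    exact ha0 e
  obtain ⟨n, hn⟩ := val_exp v h0
  refine ⟨n, ?_⟩
  rw [e, hn, ← exp_nsmul, nsmul_eq_mul]; rfl

/-- A Galois-invariant element which is close to a seventh power in `N` is close to a seventh power
in `H`: average the seventh root. -/
lemma exists_approx {a : H} {γ : N} {z : ℤᵐ⁰} (hz : z ≤ U.V 7 ^ (U.m + 2))
    (h : U.V (algebraMap H N a * γ ^ 7 - 1) ≤ z) :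
    ∃ r, U.q.valuation H (a * r ^ 7 - 1) ≤ exp (-6) := by
  classical
  have h7 := U.V_seven
  have h70 : U.V 7 ≠ 0 := by simp
  have hz7 : z ≤ U.V 7 := hz.trans (pow_le_of_le_one zero_le h7.le (by omega))
  set A := algebraMap H N a with hA
  have hone : U.V (A * γ ^ 7) = 1 := by
    have e : A * γ ^ 7 = 1 + (A * γ ^ 7 - 1) := by ring
    have hlt : U.V (A * γ ^ 7 - 1) < U.V 1 := by
      rw [map_one]; exact (h.trans hz7).trans_lt h7
    rw [e, Valuation.map_add_eq_of_lt_left _ hlt, map_one]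
  have hAγ : A * γ ^ 7 ≠ 0 := by
    intro h0; rw [h0, map_zero] at hone; exact zero_ne_one hone
  have hγ : γ ≠ 0 := by rintro rfl; simp at hAγ
  have hA0 : A ≠ 0 := left_ne_zero_of_mul hAγ
  have hg : ∀ g : N ≃ₐ[H] N, U.V (g γ / γ - 1) * U.V 7 ≤ z := by
    intro g
    have h1 : U.V (A * g γ ^ 7 - 1) ≤ z := by
      have : A * g γ ^ 7 - 1 = g (A * γ ^ 7 - 1) := by
        rw [map_sub, map_mul, map_pow, map_one, hA, g.commutes]
      rw [this, U.V_inv]; exact h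
    have h2 : U.V ((g γ / γ) ^ 7 - 1) ≤ z := by
      have e : (g γ / γ) ^ 7 - 1 = ((A * g γ ^ 7 - 1) - (A * γ ^ 7 - 1)) / (A * γ ^ 7) := by
        field_simp; ring
      rw [e, map_div₀, hone, div_one]
      exact Valuation.map_sub_le U.V h1 h
    exact (U.seventh ((h2.trans hz7).trans_lt h7)).trans h2
  obtain ⟨r, hr⟩ : ∃ r : H, algebraMap H N r * 7 ^ U.m = ∑ g : N ≃ₐ[H] N, g γ := by
    refine ⟨Algebra.trace H N γ / 7 ^ U.m, ?_⟩
    rw [← trace_eq_sum_automorphisms, map_div₀, map_pow, map_ofNat, div_mul_cancel₀]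
    exact pow_ne_zero _ (by norm_num)
  have hcard : (Fintype.card (N ≃ₐ[H] N) : N) = 7 ^ U.m := by
    rw [← Nat.card_eq_fintype_card, IsGalois.card_aut_eq_finrank, U.card]; norm_num
  have hd : U.V (algebraMap H N r / γ - 1) ≤ U.V 7 := by
    have e : (algebraMap H N r / γ - 1) * 7 ^ U.m = ∑ g : N ≃ₐ[H] N, (g γ / γ - 1) := by
      rw [Finset.sum_sub_distrib, ← Finset.sum_div, ← hr, Finset.sum_const, Finset.card_univ,
        nsmul_eq_mul, mul_one, hcard]
      field_simp
    have h1 : U.V ((algebraMap H N r / γ - 1) * 7 ^ U.m) ≤ U.V 7 * U.V 7 ^ U.m := by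
      rw [e]
      refine Valuation.map_sum_le _ fun g _ => ?_
      have := (hg g).trans hz
      rw [show U.m + 2 = (U.m + 1) + 1 by ring, pow_succ] at this
      rw [← pow_succ']
      exact le_of_mul_le_mul_right this (zero_lt_iff.2 h70)
    rw [map_mul, map_pow] at h1
    exact le_of_mul_le_mul_right h1 (zero_lt_iff.2 (pow_ne_zero _ h70))
  set ε := algebraMap H N r / γ with hε
  have hε1 : ε ∈ U.V.integer := by
    have : ε = 1 + (ε - 1) := by ring
    rw [this]
    exact add_mem (one_mem _) (show U.V (ε - 1) ≤ 1 from hd.trans h7.le)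
  have hp : U.V (ε ^ 7 - 1) ≤ U.V 7 := by
    have e : ε ^ 7 - 1 = (ε - 1) * (1 + ε + ε ^ 2 + ε ^ 3 + ε ^ 4 + ε ^ 5 + ε ^ 6) := by ring
    have hi : (1 + ε + ε ^ 2 + ε ^ 3 + ε ^ 4 + ε ^ 5 + ε ^ 6) ∈ U.V.integer := by
      refine add_mem (add_mem (add_mem (add_mem (add_mem (add_mem (one_mem _) hε1) ?_) ?_) ?_) ?_) ?_
      all_goals exact pow_mem hε1 _
    rw [e, map_mul]
    exact (mul_le_of_le_one_right' hi).trans hd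
  have hfin : U.V (algebraMap H N (a * r ^ 7 - 1)) ≤ U.V (algebraMap H N 7) := by
    have e : algebraMap H N (a * r ^ 7 - 1) = A * γ ^ 7 * (ε ^ 7 - 1) + (A * γ ^ 7 - 1) := by
      rw [map_sub, map_mul, map_pow, map_one, hε]
      field_simp; ring
    rw [e, map_ofNat]
    refine Valuation.map_add_le U.V ?_ (h.trans hz7)
    rw [map_mul, hone, one_mul]; exact hp
  refine ⟨r, le_trans ?_ (S.val_seven_le U.hq)⟩
  rw [U.V_alg, U.V_alg] at hfin
  by_contra! hlt
  exact absurd hfin (not_le.2 (pow_lt_pow_left₀ hlt zero_le U.he))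

end Tower

end

section
open Polynomial WithZero NumberField IsDedekindDomain

namespace Tower
variable {F H : Type} [Field F] [NumberField F] [Field H] [NumberField H] [Algebra F H]
  {S : Setup F H} {N : Type} [Field N] [Algebra H N] [CharZero N] (U : Tower S N) [IsGalois F H]
  [IsGalois H N] [FiniteDimensional H N] [DecidableEq N]

/-- A point of `M` divisible by `π` over `N` is divisible by `π` in `M`: sum the conjugates. -/
lemma mem_B_of_pi {P Q} (hP : P ∈ U.M) (hQ : U.pi Q = P) : P ∈ U.B := by
  have tp : ∀ R, U.tw (U.pi R) = U.pi (U.tw R) := fun R => by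
    simp only [pi_apply, map_add, map_sub, tw_om]
  have h1 : U.pi (U.tw Q) = P := by rw [← tp, hQ]; exact hP
  have h2 : U.pi (U.tw (U.tw Q)) = P := by rw [← tp, h1]; exact hP
  have h3 : U.pi (U.tw (U.tw (U.tw Q))) = P := by rw [← tp, h2]; exact hP
  have h4 : U.pi (U.tw (U.tw (U.tw (U.tw Q)))) = P := by rw [← tp, h3]; exact hP
  have h5 : U.pi (U.tw (U.tw (U.tw (U.tw (U.tw Q))))) = P := by rw [← tp, h4]; exact hP
  have h6 : (6 : ℤ) • P ∈ U.B := by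
    refine ⟨Q + U.tw Q + U.tw (U.tw Q) + U.tw (U.tw (U.tw Q)) + U.tw (U.tw (U.tw (U.tw Q))) +
      U.tw (U.tw (U.tw (U.tw (U.tw Q)))), ?_, ?_⟩
    · refine U.mem_M.2 ?_
      rw [map_add, map_add, map_add, map_add, map_add, tw_six]
      abel
    · change U.pi _ = _
      simp only [map_add, hQ, h1, h2, h3, h4, h5]
      abel
  have : P = (7 : ℤ) • P - (6 : ℤ) • P := by abel
  rw [this]
  exact sub_mem (U.seven_mem hP) h6

/-- Every point of `M` is divisible by `π` in `M`. -/
theorem M_le_B (P) (hP : P ∈ U.M) : P ∈ U.B := by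
  by_contra hPB
  obtain ⟨P₁, hP₁⟩ := U.exists_good hP hPB
  have h7 := U.V_seven
  obtain ⟨j, hj⟩ := val_exp U.V (x := 7) (by norm_num)
  obtain ⟨d, hd⟩ := val_exp U.V (pow_ne_zero 2 U.D_ne)
  have hj0 : j < 0 := by rw [hj, ← exp_zero, exp_lt_exp] at h7; exact h7
  obtain ⟨x, y, h, hg, hV, h3⟩ := exists_deep hP₁ (2 * (-j).toNat * (U.m + 2) + d.natAbs)
  obtain ⟨hTx, hTy⟩ := (U.mem_M_mpt h).1 hg.1
  have hx0 : x ≠ 0 := by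
    rintro rfl
    rw [mul_zero, map_zero] at hV
    exact absurd hV (not_le.2 (exp_pos))
  obtain ⟨n, hn⟩ := val_exp U.V hx0
  rw [map_mul, hd, hn, ← exp_add, exp_le_exp] at hV
  push_cast at hV
  rw [Int.toNat_of_nonneg (by omega)] at hV
  have hn1 : 2 * (-j) * (U.m + 2) + 1 ≤ n := by
    have := le_abs_self d
    linarith
  have hx1 : 1 < U.V x := by
    rw [hn, ← exp_zero, exp_lt_exp]
    have : 0 ≤ (-j) * ((U.m : ℤ) + 2) := mul_nonneg (by omega) (by positivity)
    nlinarith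
  have hV2 : U.V 2 = 1 := by exact_mod_cast val_small U.V h7 (n := 2) (by norm_num)
  obtain ⟨hz1, hz2⟩ := f_near U.V U.hw hV2 h hx1
  have hy0 : y ≠ 0 := by
    rintro rfl
    simp at hz2
  have hz0 : x / y ≠ 0 := div_ne_zero hx0 hy0
  obtain ⟨l, hl⟩ := val_exp U.V hz0
  have hzb : U.V (x / y) ≤ U.V 7 ^ (U.m + 2) := by
    rw [hl, hn, ← exp_nsmul, ← exp_add, ← exp_zero, exp_inj, nsmul_eq_mul] at hz2
    push_cast at hz2
    rw [hl, hj, ← exp_nsmul, exp_le_exp, nsmul_eq_mul]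
    push_cast
    nlinarith
  obtain ⟨β, a, hβ, ha⟩ := exists_base hg
  have ha0 : a ≠ 0 := by
    rintro rfl
    rw [map_zero] at ha
    exact mul_ne_zero (U.f_ne h hTx) (pow_ne_zero 7 hβ) ha.symm
  obtain ⟨r, hr⟩ := exists_approx (U := U) (a := a) (γ := x / y / β) hzb (by
    convert hz1 using 3
    rw [ha]
    field_simp)
  have r3 := rel_three h hTx hTy ha
  have r2 := rel_two h hTx hTy ha
  have hval : ∀ p : HeightOneSpectrum (𝓞 H), ∃ n : ℤ, p.valuation H a = exp (7 * n) := by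
    intro p
    by_cases hp : (7 : 𝓞 H) ∈ p.asIdeal
    · by_cases hρ : (2 + 3 * S.ωi) ∈ p.asIdeal
      · obtain rfl := S.q_unique U.hq hρ
        have hone : U.q.valuation H (a * r ^ 7) = 1 := by
          have hlt : U.q.valuation H (a * r ^ 7 - 1) < U.q.valuation H 1 := by
            rw [map_one]
            exact hr.trans_lt (by rw [← exp_zero, exp_lt_exp]; norm_num)
          have e : a * r ^ 7 = 1 + (a * r ^ 7 - 1) := by ring
          rw [e, Valuation.map_add_eq_of_lt_left _ hlt, map_one]
        have hr0 : r ≠ 0 := by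
          rintro rfl
          simp at hone
        obtain ⟨s, hs⟩ := val_exp (U.q.valuation H) hr0
        obtain ⟨t, ht⟩ := val_exp (U.q.valuation H) ha0
        rw [map_mul, map_pow, hs, ht, ← exp_nsmul, ← exp_add, ← exp_zero, exp_inj,
          nsmul_eq_mul] at hone
        push_cast at hone
        exact ⟨-s, by rw [ht, exp_inj]; omega⟩
      · exact S.val_at_seven ha0 r3 r2 hp hρ
    · exact val_away h ha0 ha h3 hp
  obtain ⟨b, rfl⟩ := S.arith U.hq ha0 r3 r2 hval hr
  obtain ⟨Q, hQ⟩ := exists_pimul_eq (g := algebraMap H N b / β) U.hw U.hb h (U.cube_ne hTx) hy0 (by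
    rw [div_pow, div_eq_iff (pow_ne_zero 7 hβ), ← ha, map_pow])
  exact hg.2.1 (U.mem_B_of_pi hg.1 hQ)

/-- The equation `a³ + b³ = 3` has no solutions in the field fixed by `T`. -/
theorem no_solution {a b : N} (ha : U.T a = a) (hb : U.T b = b) : a ^ 3 + b ^ 3 ≠ 3 := by
  intro h
  have hw := U.hw
  have hD := U.D_ne
  have hu : a + b ≠ 0 := by
    intro hu
    have : a ^ 3 + b ^ 3 = 0 := by linear_combination (a ^ 2 - a * b + b ^ 2) * hu
    rw [this] at h
    norm_num at h
  set u := a + b with hu'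
  set v := U.w * a + U.w ^ 2 * b with hv'
  have hTu : U.T u = u := by rw [hu', map_add, ha, hb]
  have hTv : U.T v = v := by rw [hv']; simp only [map_add, map_mul, map_pow, U.T_w, ha, hb]
  have e : u * v * (-u - v) = 3 := by rw [hu', hv', ← h]; grind
  set x := -3 / u with hx
  set y := 3 / 2 + 3 * v / u with hy
  have hc : y ^ 2 = x ^ 3 + 9 / 4 := by
    rw [hx, hy]
    field_simp
    linear_combination (-144) * e
  have hTx : U.T x = x := by rw [hx, map_div₀, map_neg, map_ofNat, hTu]
  have hTy : U.T y = y := by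
    rw [hy]; simp only [map_add, map_div₀, map_mul, map_ofNat, hTu, hTv]
  have h' : (y / U.D ^ 3) ^ 2 = (x / U.D ^ 2) ^ 3 + bE U.w := by
    have := U.D_bE
    field_simp
    linear_combination hc - this
  have hx0 : x ≠ 0 := div_ne_zero (by norm_num) hu
  clear_value x y
  have h3 := omega_cube hw
  have hw0 := omega_ne_zero hw
  have hM : mpt U.hb _ _ h' ∈ U.M := by
    rw [U.mem_M_mpt]
    constructor
    · rw [map_div₀, map_pow, U.T_D, hTx]
      field_simp
      linear_combination (-(U.w ^ 3 + 1)) * h3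
    · rw [map_div₀, map_pow, U.T_D, hTy]
      field_simp
      linear_combination y * (U.w ^ 3 + 1) * h3
  have := x_eq_zero U.M_le_B hM
  rw [div_eq_zero_iff, or_iff_left (pow_ne_zero 2 hD)] at this
  exact hx0 this

end Tower

end

/-! ### Ramification in the cyclotomic tower -/

section
open Polynomial WithZero NumberField IsDedekindDomain
open scoped Pointwise nonZeroDivisors

section
variable {A B : Type*} [Field A] [NumberField A] [Field B] [NumberField B] [Algebra A B]

lemma exists_over (p : HeightOneSpectrum (𝓞 A)) :
    ∃ P : HeightOneSpectrum (𝓞 B), P.asIdeal.LiesOver p.asIdeal := by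
  obtain ⟨⟨P, h1, h2⟩⟩ := (inferInstance : Nonempty (p.asIdeal.primesOver (𝓞 B)))
  refine ⟨⟨P, h1, ?_⟩, h2⟩
  exact Ideal.ne_bot_of_liesOver_of_ne_bot p.ne_bot P

lemma exists_under (P : HeightOneSpectrum (𝓞 B)) :
    ∃ p : HeightOneSpectrum (𝓞 A), P.asIdeal.LiesOver p.asIdeal :=
  ⟨⟨P.asIdeal.under (𝓞 A), inferInstance, Ideal.IsIntegral.comap_ne_bot _ P.ne_bot⟩, ⟨rfl⟩⟩

/-- Ramification in a Galois extension, read off from valuations. -/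
lemma ram [IsGalois A B] (p : HeightOneSpectrum (𝓞 A)) (P : HeightOneSpectrum (𝓞 B))
    [P.asIdeal.LiesOver p.asIdeal] :
    ∃ e : ℕ, e ∣ Module.finrank A B ∧ (∀ x, P.valuation B (algebraMap A B x) = p.valuation A x ^ e) ∧
      (e = Module.finrank A B → (∀ g : B ≃ₐ[A] B, g • P.asIdeal = P.asIdeal) ∧
        Ideal.absNorm P.asIdeal = Ideal.absNorm p.asIdeal) ∧
      ((∀ g ∈ P.asIdeal.inertia (B ≃ₐ[A] B), g = 1) → e = 1) := by
  have hp := p.isMaximal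
  have hP := P.isMaximal
  have hmain := Ideal.ncard_primesOver_mul_ramificationIdxIn_mul_inertiaDegIn p.asIdeal (𝓞 B)
    (B ≃ₐ[A] B)
  have hin := Ideal.card_inertia_eq_ramificationIdxIn (G := B ≃ₐ[A] B) p.asIdeal P.asIdeal
  have he := Ideal.ramificationIdxIn_eq_ramificationIdx p.asIdeal P.asIdeal (B ≃ₐ[A] B)
  have hf := Ideal.inertiaDegIn_eq_inertiaDeg p.asIdeal P.asIdeal (B ≃ₐ[A] B)
  have he' := Ideal.ramificationIdx'_eq_ramificationIdx p.asIdeal P.asIdeal p.ne_bot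
  rw [IsGalois.card_aut_eq_finrank] at hmain
  rw [hf, he] at hmain
  have hpos := Module.finrank_pos (R := A) (M := B)
  refine ⟨P.asIdeal.ramificationIdx (𝓞 A), ⟨P.asIdeal.inertiaDeg (𝓞 A) *
    (p.asIdeal.primesOver (𝓞 B)).ncard, ?_⟩, fun x => ?_, fun h => ?_, fun h => ?_⟩
  · rw [← hmain]; ring
  · rw [← he', HeightOneSpectrum.valuation_liesOver B p P]
  · rw [h] at hmain
    have h1 : (p.asIdeal.primesOver (𝓞 B)).ncard * P.asIdeal.inertiaDeg (𝓞 A) = 1 := by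
      refine Nat.eq_of_mul_eq_mul_left hpos ?_
      rw [mul_one]; conv_rhs => rw [← hmain]
      ring
    obtain ⟨h2, h3⟩ := mul_eq_one.1 h1
    constructor
    · intro g
      obtain ⟨Q, hQ⟩ := Set.ncard_eq_one.1 h2
      have e1 : P.asIdeal ∈ p.asIdeal.primesOver (𝓞 B) := ⟨inferInstance, inferInstance⟩
      have e2 : g • P.asIdeal ∈ p.asIdeal.primesOver (𝓞 B) := ⟨inferInstance, inferInstance⟩
      rw [hQ, Set.mem_singleton_iff] at e1 e2
      exact e2.trans e1.symm
    · rw [← Ideal.absNorm_pow_inertiaDeg p.asIdeal P.asIdeal, h3, pow_one]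
  · rw [← he, ← hin, Nat.card_eq_one_iff_unique]
    exact ⟨⟨fun a b => Subtype.ext ((h _ a.2).trans (h _ b.2).symm)⟩, ⟨1⟩⟩
end

section
variable {A B M : Type*} [Field A] [NumberField A] [Field B] [NumberField B] [Algebra A B]
  [Field M] [NumberField M] [Algebra B M] [Algebra A M] [IsScalarTower A B M]

/-- `7` is a unit times `(1 - ζ) ^ (6 * 7 ^ m)`. -/
lemma val_seven (m : ℕ) {ζ : M} (hζ : IsPrimitiveRoot ζ (7 ^ (m + 1)))
    (P : HeightOneSpectrum (𝓞 M)) : P.valuation M 7 = P.valuation M (1 - ζ) ^ (6 * 7 ^ m) := by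
  have h7 : Nat.Prime 7 := by norm_num
  have : Fact (Nat.Prime 7) := ⟨h7⟩
  have hn : 0 < 7 ^ (m + 1) := by positivity
  have hev := eval_one_cyclotomic_prime_pow (R := M) (p := 7) m
  rw [cyclotomic_eq_prod_X_sub_primitiveRoots hζ, eval_prod, Nat.cast_ofNat] at hev
  rw [← hev, map_prod]
  rw [Finset.prod_eq_pow_card (b := P.valuation M (1 - ζ)), hζ.card_primitiveRoots,
    Nat.totient_prime_pow h7 (by omega)]
  · congr 1; simp [mul_comm]
  · intro a ha
    simp only [eval_sub, eval_X, eval_C]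
    have key : ∀ {z y : M}, IsPrimitiveRoot z (7 ^ (m + 1)) → IsPrimitiveRoot y (7 ^ (m + 1)) →
        P.valuation M (1 - y) ≤ P.valuation M (1 - z) := by
      intro z y hz hy
      obtain ⟨i, -, rfl⟩ := hz.eq_pow_of_pow_eq_one hy.pow_eq_one
      have : 1 - z ^ i = (1 - z) * ∑ j ∈ Finset.range i, z ^ j := by
        rw [mul_comm, geom_sum_mul_neg]
      rw [this, map_mul]
      refine mul_le_of_le_one_right' (Valuation.map_sum_le _ fun j _ => ?_)
      have hi : IsIntegral ℤ z := hz.isIntegral hn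
      rw [map_pow]
      exact pow_le_one' (P.valuation_le_one (⟨z, hi⟩ : 𝓞 M)) _
    have ha' := isPrimitiveRoot_of_mem_primitiveRoots ha
    exact le_antisymm (key hζ ha') (key ha' hζ)

/-- A Galois extension of `7`-power degree sitting with prime-to-`7` index inside a field with a
root of unity of order `7 ^ (m + 1)` is totally ramified at a prime whose ramification over `7` is
prime to `7`. -/
lemma totally_ramified [IsGalois A B] [IsGalois B M] (m : ℕ) (hAB : Module.finrank A B = 7 ^ m)
    (hBM : ¬ 7 ∣ Module.finrank B M) {ζ : M} (hζ : IsPrimitiveRoot ζ (7 ^ (m + 1)))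
    (p : HeightOneSpectrum (𝓞 A)) {k : ℕ} (hk : ¬ 7 ∣ k) (hp : p.valuation A 7 = exp (-(k : ℤ)))
    (P : HeightOneSpectrum (𝓞 B)) [P.asIdeal.LiesOver p.asIdeal] :
    (∀ x, P.valuation B (algebraMap A B x) = p.valuation A x ^ (7 ^ m)) ∧
      (∀ g : B ≃ₐ[A] B, g • P.asIdeal = P.asIdeal) ∧
        Ideal.absNorm P.asIdeal = Ideal.absNorm p.asIdeal := by
  obtain ⟨Q, hQ⟩ := exists_over (B := M) P
  obtain ⟨e, he, h1, h2, -⟩ := ram p P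
  obtain ⟨e', he', h1', -⟩ := ram P Q
  have h3 := h1' (algebraMap A B 7)
  rw [h1, hp, ← IsScalarTower.algebraMap_apply, map_ofNat, val_seven m hζ Q] at h3
  have hne : Q.valuation M (1 - ζ) ≠ 0 := by
    intro h0
    rw [h0, zero_pow (by positivity)] at h3
    exact pow_ne_zero _ (pow_ne_zero _ exp_ne_zero) h3.symm
  obtain ⟨j, hj⟩ : ∃ j : ℤ, Q.valuation M (1 - ζ) = exp j := ⟨_, (exp_log hne).symm⟩
  rw [hj, ← exp_nsmul, ← exp_nsmul, ← exp_nsmul, exp_inj] at h3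
  simp only [nsmul_eq_mul, Nat.cast_mul, Nat.cast_pow, Nat.cast_ofNat] at h3
  have h4 : ((7 ^ m : ℕ) : ℤ) ∣ ((e * (k * e') : ℕ) : ℤ) := ⟨-6 * j, by push_cast; linarith⟩
  rw [Int.natCast_dvd_natCast] at h4
  have h7 : Nat.Prime 7 := by norm_num
  have hc : Nat.Coprime (7 ^ m) (k * e') := Nat.Coprime.pow_left _ <|
    Nat.Coprime.mul_right ((Nat.Prime.coprime_iff_not_dvd h7).2 hk)
      ((Nat.Prime.coprime_iff_not_dvd h7).2 fun h => hBM (h.trans he'))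
  have h5 : e = 7 ^ m := Nat.dvd_antisymm (hAB ▸ he) (hc.dvd_of_dvd_mul_right h4)
  subst h5
  exact ⟨h1, h2 hAB.symm⟩
end

section
variable {A M : Type*} [Field A] [NumberField A] [Field M] [NumberField M] [Algebra A M]

/-- A `7`-power cyclotomic extension is unramified away from `7`: an inertia element moving `ζ`
would make `1 - η` non-invertible for a nontrivial `7`-power root of unity `η`. -/
lemma unramified_away (m : ℕ) [IsCyclotomicExtension {7 ^ (m + 1)} A M] [IsGalois A M]
    (p : HeightOneSpectrum (𝓞 A)) (hp : (7 : 𝓞 A) ∉ p.asIdeal) (P : HeightOneSpectrum (𝓞 M))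
    [hPp : P.asIdeal.LiesOver p.asIdeal] (x : A) :
    P.valuation M (algebraMap A M x) = p.valuation A x := by
  obtain ⟨e, -, h1, -, h2⟩ := ram p P
  suffices h : e = 1 by rw [h1, h, pow_one]
  refine h2 fun g hg => ?_
  have : NeZero ((7 ^ (m + 1) : ℕ) : M) := ⟨by simp⟩
  have hζ := IsCyclotomicExtension.zeta_spec (7 ^ (m + 1)) A M
  set ζ := IsCyclotomicExtension.zeta (7 ^ (m + 1)) A M
  have hn : 0 < 7 ^ (m + 1) := by positivity
  have hInt := hζ.isIntegral hn
  obtain ⟨z, hz⟩ : ∃ z : 𝓞 M, (z : M) = ζ := ⟨⟨ζ, hInt⟩, rfl⟩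
  by_contra hne
  have hgz : g ζ ≠ ζ := by
    intro h
    refine hne (AlgEquiv.coe_toAlgHom_injective ?_)
    refine (hζ.powerBasis A).algHom_ext ?_
    simpa using h
  obtain ⟨i, -, hi⟩ := hζ.eq_pow_of_pow_eq_one (ξ := g ζ / ζ) (by
    rw [div_pow, ← map_pow, hζ.pow_eq_one, map_one, div_one])
  have hz0 : ζ ≠ 0 := hζ.ne_zero hn.ne'
  have hη1 : (ζ ^ i) ^ (7 ^ (m + 1)) = 1 := by
    rw [← pow_mul, mul_comm, pow_mul, hζ.pow_eq_one, one_pow]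
  have hη : ζ ^ i ≠ 1 := by
    rw [hi]; exact fun h => hgz ((div_eq_one_iff_eq hz0).1 h)
  have hval : P.valuation M (1 - ζ ^ i) < 1 := by
    have h3 : g • z - z ∈ P.asIdeal := hg z
    have h4 := (P.valuation_lt_one_iff_mem (K := M) _).2 h3
    have h5 : ((g • z - z : 𝓞 M) : M) = -(ζ * (1 - ζ ^ i)) := by
      change g (z : M) - (z : M) = _
      rw [hz]
      rw [hi]; field_simp; ring
    have h6 : P.valuation M ζ = 1 := by
      refine (pow_eq_one_iff_of_nonneg zero_le hn.ne').1 ?_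
      rw [← map_pow, hζ.pow_eq_one, map_one]
    have h7 : P.valuation M (-(ζ * (1 - ζ ^ i))) < 1 := by rw [← h5]; exact h4
    rwa [Valuation.map_neg, map_mul, h6, one_mul] at h7
  obtain ⟨j, hj, hord⟩ := (Nat.dvd_prime_pow (by norm_num : Nat.Prime 7)).1
    (orderOf_dvd_of_pow_eq_one hη1)
  have hprim := IsPrimitiveRoot.orderOf (ζ ^ i)
  rw [hord] at hprim
  obtain _ | j := j
  · exact hη (by simpa using hprim)
  have h7 := val_seven j hprim P
  have h8 : P.valuation M 7 < 1 := h7 ▸ pow_lt_one' hval (by positivity)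
  refine hp ?_
  rw [hPp.over, Ideal.mem_comap, map_ofNat, ← P.valuation_lt_one_iff_mem (K := M)]
  change P.valuation M (algebraMap (𝓞 M) M 7) < 1
  rwa [map_ofNat]
end

end

section
open Polynomial WithZero NumberField IsDedekindDomain
open scoped Pointwise nonZeroDivisors

/-- In `ℤ[ω]`, a prime containing an element `π` dividing both `ω - r` and a rational prime is
generated by `π`. -/
lemma eis_prime {F : Type*} [Field F] [NumberField F] {w : 𝓞 F}
    (hInt : ∀ x : 𝓞 F, ∃ a b : ℤ, x = a + b * w) (P : HeightOneSpectrum (𝓞 F)) {π : 𝓞 F} {l : ℕ}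
    (r : ℤ) (hl : l.Prime) (hπ : π ∈ P.asIdeal) (h1 : π ∣ w - r) (h2 : π ∣ (l : 𝓞 F)) :
    P.valuation F (algebraMap (𝓞 F) F π) = exp (-1 : ℤ) := by
  have hspan : P.asIdeal = Ideal.span {π} := by
    refine le_antisymm (fun x hx => ?_) ((Ideal.span_singleton_le_iff_mem _).2 hπ)
    rw [Ideal.mem_span_singleton]
    obtain ⟨a, b, rfl⟩ := hInt x
    have e : (a : 𝓞 F) + b * w = b * (w - r) + ((a + b * r : ℤ) : 𝓞 F) := by push_cast; ring
    rw [e] at hx ⊢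
    have hl' : (l : 𝓞 F) ∈ P.asIdeal := Ideal.mem_of_dvd _ h2 hπ
    have hi : ((a + b * r : ℤ) : 𝓞 F) ∈ P.asIdeal :=
      (Ideal.add_mem_iff_right _ (Ideal.mul_mem_left _ _ (Ideal.mem_of_dvd _ h1 hπ))).1 hx
    have hd : (l : ℤ) ∣ a + b * r := by
      by_contra hnd
      obtain ⟨u, v, huv⟩ := (Nat.prime_iff_prime_int.1 hl).coprime_iff_not_dvd.2 hnd
      refine P.isPrime.ne_top ((Ideal.eq_top_iff_one _).2 ?_)
      have := congrArg (Int.cast : ℤ → 𝓞 F) huv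
      rw [Int.cast_add, Int.cast_mul, Int.cast_mul, Int.cast_one] at this
      rw [← this]
      exact Ideal.add_mem _ (Ideal.mul_mem_left _ _ (by exact_mod_cast hl'))
        (Ideal.mul_mem_left _ _ hi)
    refine dvd_add (Dvd.dvd.mul_left h1 _) (h2.trans ?_)
    obtain ⟨c, hc⟩ := hd
    exact ⟨(c : 𝓞 F), by rw [hc]; push_cast; ring⟩
  have h0 : π ≠ 0 := by
    rintro rfl
    rw [zero_dvd_iff, Nat.cast_eq_zero] at h2
    exact hl.ne_zero h2
  rw [P.valuation_of_algebraMap, P.intValuation_singleton h0 hspan]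

lemma omega_isIntegral {F : Type*} [Field F] {w : F} (hw : w ^ 2 + w + 1 = 0) : IsIntegral ℤ w :=
  ⟨X ^ 2 + X + 1, by monicity!, by simpa using hw⟩

lemma eis_indep {R : Type*} [CommRing R] [CharZero R] {w : R} (hw : w ^ 2 + w + 1 = 0) {a b : ℤ}
    (h : (a : R) + b * w = 0) : a ^ 2 - a * b + b ^ 2 = 0 := by
  have : ((a ^ 2 - a * b + b ^ 2 : ℤ) : R) = 0 := by
    push_cast
    linear_combination (a - b - b * w) * h + b ^ 2 * hw
  exact_mod_cast this

/-- Elements of `ℤ[ω]` of norm `> 1` lie in a prime. -/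
lemma eis_exists {F : Type*} [Field F] [NumberField F] {w : 𝓞 F} (hw : w ^ 2 + w + 1 = 0)
    (hInt : ∀ x : 𝓞 F, ∃ a b : ℤ, x = a + b * w) (a b : ℤ) (h0 : a ^ 2 - a * b + b ^ 2 ≠ 0)
    (h1 : ¬ a ^ 2 - a * b + b ^ 2 ∣ 1) :
    ∃ P : HeightOneSpectrum (𝓞 F), (a : 𝓞 F) + b * w ∈ P.asIdeal := by
  obtain ⟨P, hP, hx⟩ := Ideal.exists_le_maximal (Ideal.span {(a : 𝓞 F) + b * w}) (by
    rw [Ne, Ideal.span_singleton_eq_top]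
    intro hu
    obtain ⟨y, hy⟩ := isUnit_iff_exists_inv.1 hu
    obtain ⟨c, d, rfl⟩ := hInt y
    have := eis_indep hw (a := a * c - b * d - 1) (b := a * d + b * c - b * d) (by
      push_cast
      linear_combination hy - b * d * hw)
    have key : ∀ x y : ℤ, x ^ 2 - x * y + y ^ 2 = 0 → x = 0 ∧ y = 0 := fun x y h => by
      constructor <;> refine pow_eq_zero_iff two_ne_zero |>.1 (le_antisymm ?_ (sq_nonneg _)) <;>
        nlinarith [sq_nonneg (2 * x - y), sq_nonneg (2 * y - x)]
    have e := key _ _ this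
    refine h1 ⟨c ^ 2 - c * d + d ^ 2, ?_⟩
    linear_combination (-(a * c - b * d) - 1 + (a * d + b * c - b * d)) * e.1 -
      (a * d + b * c - b * d - 1) * e.2)
  rw [Ideal.span_singleton_le_iff_mem] at hx
  refine ⟨⟨P, hP.isPrime, ?_⟩, hx⟩
  rintro rfl
  exact h0 (eis_indep hw (Ideal.mem_bot.1 hx))

end

section
open Polynomial WithZero NumberField IsDedekindDomain
open scoped Pointwise nonZeroDivisors

namespace Setup
section
variable {F H K N : Type} [Field F] [NumberField F] [Field H] [NumberField H] [Algebra F H]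
  (S : Setup F H) [Field K] [NumberField K] [Field N] [NumberField N]
  [Algebra H N] [Algebra F N] [IsScalarTower F H N] [Algebra K N] [IsGalois F H] [IsGalois F N]
  [IsGalois ℚ K]

/-- The lift `T` of `τ` of order `6`, obtained by raising any lift to a suitable power; it fixes
the field `K` of degree prime to `6`. -/
lemma exists_T {m : ℕ} (hK : Module.finrank ℚ K = 7 ^ m) (hN : Module.finrank H N = 7 ^ m) :
    ∃ T : N ≃ₐ[F] N, (∀ x : H, T (algebraMap H N x) = algebraMap H N (S.τ x)) ∧ T ^ 6 = 1 ∧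
      ∀ x : K, T (algebraMap K N x) = algebraMap K N x := by
  obtain ⟨g, hg⟩ := AlgEquiv.restrictNormalHom_surjective (F := F) (K₁ := H) N S.τ
  have hc : Nat.Coprime 6 (7 ^ m) := Nat.Coprime.pow_right _ (by norm_num)
  obtain ⟨k, hk1, hk2⟩ := Nat.chineseRemainder hc 1 0
  have hk2' : 7 ^ m ∣ k := (Nat.modEq_zero_iff_dvd).1 hk2
  have hcard : Nat.card (N ≃ₐ[F] N) = 6 * 7 ^ m := by
    rw [IsGalois.card_aut_eq_finrank, ← Module.finrank_mul_finrank F H N, S.hH, hN]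
  refine ⟨g ^ k, fun x => ?_, ?_, fun x => ?_⟩
  · have h1 : AlgEquiv.restrictNormalHom H (g ^ k) = S.τ := by
      rw [map_pow, hg]
      conv_rhs => rw [← pow_one S.τ]
      rw [pow_eq_pow_iff_modEq, S.orderOf_τ]
      exact hk1
    rw [← AlgEquiv.restrictNormal_commutes (g ^ k) H x]
    congr 1
    exact DFunLike.congr_fun h1 x
  · rw [← pow_mul, ← orderOf_dvd_iff_pow_eq_one]
    refine (orderOf_dvd_natCard g).trans ?_
    rw [hcard, mul_comm]
    exact mul_dvd_mul_right hk2' 6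
  · have h1 : AlgEquiv.restrictNormalHom K ((g.restrictScalars ℚ) ^ k) = 1 := by
      rw [map_pow, ← orderOf_dvd_iff_pow_eq_one]
      refine (orderOf_dvd_natCard _).trans ?_
      rwa [IsGalois.card_aut_eq_finrank, hK]
    have h2 := AlgEquiv.restrictNormal_commutes ((g.restrictScalars ℚ) ^ k) K x
    have h3 : ((g.restrictScalars ℚ) ^ k).restrictNormal K x = x := DFunLike.congr_fun h1 x
    rw [h3] at h2
    have h4 : ∀ (n : ℕ) (y : N), ((g.restrictScalars ℚ) ^ n) y = (g ^ n) y := by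
      intro n
      induction n with
      | zero => intro y; rfl
      | succ n ih => intro y; rw [pow_succ, pow_succ, AlgEquiv.mul_apply, AlgEquiv.mul_apply, ih]; rfl
    rw [← h4, ← h2]

/-- The field fixed by `T` has degree `7 ^ m`. -/
lemma finrank_fixed {m : ℕ} (hN : Module.finrank H N = 7 ^ m) {T : N ≃ₐ[F] N}
    (hT : ∀ x : H, T (algebraMap H N x) = algebraMap H N (S.τ x)) (h6 : T ^ 6 = 1) :
    Module.finrank F (IntermediateField.fixedField (Subgroup.zpowers T)) = 7 ^ m ∧
      Module.finrank (IntermediateField.fixedField (Subgroup.zpowers T)) N = 6 := by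
  have h1 : AlgEquiv.restrictNormalHom H T = S.τ := by
    ext x
    apply (algebraMap H N).injective
    rw [← hT]
    exact AlgEquiv.restrictNormal_commutes T H x
  have h2 : orderOf T = 6 := by
    refine Nat.dvd_antisymm (orderOf_dvd_of_pow_eq_one h6) ?_
    rw [← S.orderOf_τ, ← h1]
    exact orderOf_map_dvd _ T
  have h3 := IntermediateField.finrank_fixedField_eq_card (Subgroup.zpowers T)
  rw [Nat.card_zpowers, h2] at h3
  refine ⟨?_, h3⟩
  have h4 := Module.finrank_mul_finrank F (IntermediateField.fixedField (Subgroup.zpowers T)) N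
  rw [h3, ← Module.finrank_mul_finrank F H N, S.hH, hN] at h4
  omega
end
end Setup

end

section
open Polynomial WithZero NumberField IsDedekindDomain
open scoped Pointwise nonZeroDivisors

lemma cyclotomic_cyclic (m : ℕ) (H M : Type*) [Field H] [CharZero H] [Field M] [Algebra H M]
    [IsCyclotomicExtension {7 ^ (m + 1)} H M] [IsGalois H M] [FiniteDimensional H M] :
    IsCyclic (M ≃ₐ[H] M) ∧ Module.finrank H M ∣ 6 * 7 ^ m := by
  have : CharZero M := charZero_of_injective_algebraMap (algebraMap H M).injective
  have : NeZero ((7 ^ (m + 1) : ℕ) : M) := ⟨by simp⟩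
  have hζ := IsCyclotomicExtension.zeta_spec (7 ^ (m + 1)) H M
  have hinj := hζ.autToPow_injective H
  have hc : IsCyclic (ZMod (7 ^ (m + 1)))ˣ :=
    ZMod.isCyclic_units_of_prime_pow 7 (by norm_num) (by norm_num) _
  refine ⟨isCyclic_of_injective _ hinj, ?_⟩
  have h1 := Subgroup.card_dvd_of_injective _ hinj
  rw [IsGalois.card_aut_eq_finrank] at h1
  refine h1.trans (dvd_of_eq ?_)
  rw [Nat.card_eq_fintype_card, ZMod.card_units_eq_totient, Nat.totient_prime_pow (by norm_num) (by omega)]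
  simp [mul_comm]

namespace Setup
section
variable {F H : Type} [Field F] [NumberField F] [Field H] [NumberField H] [Algebra F H]
  (S : Setup F H)

/-- `ω` in the ring of integers of `F`. -/
noncomputable def wi : 𝓞 F := ⟨S.w, omega_isIntegral S.hw⟩

lemma wi_sq : S.wi ^ 2 + S.wi + 1 = 0 := RingOfIntegers.ext S.hw

lemma hInt' (x : 𝓞 F) : ∃ a b : ℤ, x = a + b * S.wi := by
  obtain ⟨a, b, h⟩ := S.hInt x
  exact ⟨a, b, RingOfIntegers.ext (h.trans (by simp only [map_add, map_mul, map_intCast]; rfl))⟩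

/-- There is a prime of `F` containing `2 - ω`; it is unramified of degree one over `7`. -/
lemma exists_two_sub : ∃ p : HeightOneSpectrum (𝓞 F), p.valuation F (2 - S.w) = exp (-1 : ℤ) ∧
    p.valuation F 7 = exp (-1 : ℤ) ∧ Ideal.absNorm p.asIdeal = 7 := by
  obtain ⟨p, hp⟩ := eis_exists S.wi_sq S.hInt' 2 (-1) (by norm_num) (by norm_num)
  have e : ((2 : ℤ) : 𝓞 F) + ((-1 : ℤ) : 𝓞 F) * S.wi = 2 - S.wi := by push_cast; ring
  rw [e] at hp
  have h7 : (2 - S.wi) * (3 + S.wi) = 7 := by linear_combination -S.wi_sq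
  have h1 := eis_prime S.hInt' p 2 (by norm_num : Nat.Prime 7) hp ⟨-1, by push_cast; ring⟩
    ⟨3 + S.wi, by rw [h7]; norm_num⟩
  have h1' : p.valuation F (2 - S.w) = exp (-1 : ℤ) := by
    rw [← h1]; rfl
  have hn : 3 + S.wi ∉ p.asIdeal := by
    intro h
    refine p.isPrime.ne_top ((Ideal.eq_top_iff_one _).2 ?_)
    have e2 : (1 : 𝓞 F) = ((2 - S.wi) * 3 + (3 + S.wi) * 3) - (2 - S.wi) * (3 + S.wi) * 2 := by
      rw [h7]; ring
    rw [e2]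
    exact Ideal.sub_mem _ (Ideal.add_mem _ (Ideal.mul_mem_right _ _ hp) (Ideal.mul_mem_right _ _ h))
      (Ideal.mul_mem_right _ _ (Ideal.mul_mem_right _ _ hp))
  refine ⟨p, h1', ?_, ?_⟩
  · have h2 : p.valuation F (3 + S.w) = 1 := by
      have h3 := (p.valuation_lt_one_iff_mem (K := F) (3 + S.wi)).not.2 hn
      exact le_antisymm (p.valuation_le_one (3 + S.wi)) (not_lt.1 h3)
    have : (7 : F) = (2 - S.w) * (3 + S.w) := by linear_combination S.hw
    rw [this, map_mul, h1', h2, mul_one]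
  · have h2 := Ideal.absNorm_dvd_absNorm_of_le ((Ideal.span_singleton_le_iff_mem _).2 hp)
    have h3 : Algebra.norm ℤ (2 - S.wi) = 7 := by
      have h4 := Algebra.coe_norm_int (2 - S.wi)
      have h5 : ((2 - S.wi : 𝓞 F) : F) = ((2 : ℚ) : F) + ((-1 : ℚ) : F) * S.w := by
        push_cast
        change (2 : F) - S.w = _
        ring
      rw [h5, S.norm_F] at h4
      norm_num at h4
      exact_mod_cast h4
    rw [Ideal.absNorm_span_singleton, h3] at h2
    rcases (Nat.dvd_prime (by norm_num : Nat.Prime 7)).1 h2 with h | h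
    · exact absurd (Ideal.absNorm_eq_one_iff.1 h) p.isPrime.ne_top
    · exact h

lemma val_one_sub (p : HeightOneSpectrum (𝓞 F)) (hp : p.valuation F (1 - S.w) < 1) :
    p.valuation F (1 - S.w) = exp (-1 : ℤ) := by
  have hm : 1 - S.wi ∈ p.asIdeal := (p.valuation_lt_one_iff_mem (K := F) _).1 hp
  have h := eis_prime S.hInt' p 1 (by norm_num : Nat.Prime 3) hm ⟨-1, by push_cast; ring⟩
    ⟨2 + S.wi, by push_cast; linear_combination S.wi_sq⟩
  rw [← h]; rfl

lemma exists_q : ∃ q : HeightOneSpectrum (𝓞 H), (2 + 3 * S.ωi) ∈ q.asIdeal := by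
  obtain ⟨p, hp⟩ := eis_exists S.wi_sq S.hInt' 2 3 (by norm_num) (by norm_num)
  obtain ⟨q, hq⟩ := exists_over (B := H) p
  refine ⟨q, ?_⟩
  rw [hq.over, Ideal.mem_comap] at hp
  convert hp using 1
  apply RingOfIntegers.ext
  push_cast
  simp only [map_add, map_mul, map_ofNat]
  rfl

lemma val_seven_q [IsGalois F H] {q : HeightOneSpectrum (𝓞 H)} (hq : (2 + 3 * S.ωi) ∈ q.asIdeal) :
    q.valuation H 7 = exp (-6 : ℤ) := by
  have h1 : q.valuation H (-1 - 3 * S.ω) = 1 := by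
    have hle : q.valuation H (-1 - 3 * S.ω) ≤ 1 := q.valuation_le_one (-1 - 3 * S.ωi)
    refine le_antisymm hle (not_lt.1 fun h => ?_)
    have h2 : q.valuation H (2 + 3 * S.ω) < 1 := by
      rw [S.val_ρ hq, ← exp_zero, exp_lt_exp]; norm_num
    have h3 := Valuation.map_add_lt _ h h2
    ring_nf at h3
    simp at h3
  have : (7 : H) = (2 + 3 * S.ω) * (-1 - 3 * S.ω) := by linear_combination 9 * S.hω
  rw [this, map_mul, h1, S.val_ρ hq, mul_one]
end
end Setup

end

section
open Polynomial WithZero NumberField IsDedekindDomain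
open scoped Pointwise nonZeroDivisors

lemma residue_of_absNorm {B : Type*} [Field B] [NumberField B] (P : HeightOneSpectrum (𝓞 B))
    (hP : Ideal.absNorm P.asIdeal = 7) {x : B} (hx : P.valuation B x ≤ 1) :
    ∃ n : ℤ, P.valuation B (x - n) < 1 := by
  obtain ⟨a, ha⟩ := P.exists_valuation_sub_lt_of_integer hx 1
  obtain ⟨n, hn⟩ := exists_int_sub_mem hP a
  refine ⟨n, ?_⟩
  have h := (P.valuation_lt_one_iff_mem (K := B) (a - n)).2 hn
  have : x - n = algebraMap (𝓞 B) B (a - n) - (algebraMap (𝓞 B) B a - x) := by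
    rw [map_sub, map_intCast]; ring
  rw [this]
  exact Valuation.map_sub_lt _ h (by simpa using ha)

namespace Setup
section
variable {F H L N M : Type} [Field F] [NumberField F] [Field H] [NumberField H] [Algebra F H]
  (S : Setup F H) [Field L] [NumberField L] [Field N] [NumberField N] [Field M] [NumberField M]
  [Algebra F L] [Algebra F N] [Algebra F M] [Algebra H N] [Algebra H M] [Algebra L N] [Algebra L M]
  [Algebra N M] [IsScalarTower F H N] [IsScalarTower F L N] [IsScalarTower F N M]
  [IsScalarTower F L M] [IsScalarTower H N M] [IsScalarTower L N M] [IsScalarTower F H M]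

/-- A `T`-fixed element has valuation at a prime above `3` that is incompatible with
`v(x)³ = v(1 - ω)⁴`, because the ramification over `F` of the fixed field is prime to `3`. -/
lemma val_fixed_ne [IsGalois F L] {m : ℕ} (hL : Module.finrank F L = 7 ^ m)
    (P : HeightOneSpectrum (𝓞 M)) (y : L)
    (hP : P.valuation M (algebraMap F M (1 - S.w)) < 1) :
    P.valuation M (algebraMap L M y) ^ 3 ≠ P.valuation M (algebraMap F M (1 - S.w)) ^ 4 := by
  intro h
  obtain ⟨Q, hQ⟩ := exists_under (A := L) P
  obtain ⟨p, hp⟩ := exists_under (A := F) Q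
  obtain ⟨e, he, h1, -⟩ := ram p Q
  have h2 := fun x : L => (HeightOneSpectrum.valuation_liesOver M Q P x).symm
  have hf0 := Ideal.IsDedekindDomain.ramificationIdx'_ne_zero_of_liesOver P.asIdeal Q.ne_bot
  set f := Q.asIdeal.ramificationIdx' P.asIdeal
  rw [IsScalarTower.algebraMap_apply F L M, h2, h1] at hP
  rw [IsScalarTower.algebraMap_apply F L M, h2, h2, h1] at h
  have hp1 : p.valuation F (1 - S.w) < 1 := by
    by_contra hc
    exact absurd hP (not_lt.2 (one_le_pow₀ (one_le_pow₀ (not_lt.1 hc))))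
  rw [S.val_one_sub p hp1] at h
  have hne : Q.valuation L y ≠ 0 := by
    intro h0
    rw [h0, zero_pow hf0, zero_pow (by norm_num)] at h
    exact pow_ne_zero _ (pow_ne_zero _ (pow_ne_zero _ exp_ne_zero)) h.symm
  obtain ⟨j, hj⟩ : ∃ j : ℤ, Q.valuation L y = exp j := ⟨_, (exp_log hne).symm⟩
  rw [hj] at h
  simp only [← exp_nsmul, exp_inj, nsmul_eq_mul, Nat.cast_ofNat] at h
  have h3 : (f : ℤ) * (3 * j + 4 * e) = 0 := by linear_combination h
  have h4 : 3 * j + 4 * e = 0 := by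
    rcases mul_eq_zero.1 h3 with h | h
    · exact absurd (by exact_mod_cast h) hf0
    · exact h
  have h5 : 3 ∣ e := by omega
  have h6 := (Nat.Prime.dvd_of_dvd_pow (by norm_num) ((h5.trans he).trans (dvd_of_eq hL)) : 3 ∣ 7)
  norm_num at h6

theorem exists_tower [IsGalois F H] [IsAbelianGalois F M] {m : ℕ}
    [IsCyclotomicExtension {7 ^ (m + 1)} H M] (hN : Module.finrank H N = 7 ^ m)
    (hL : Module.finrank F L = 7 ^ m) (hLN : Module.finrank L N = 6) (T : N ≃ₐ[F] N)
    (hT : ∀ x : H, T (algebraMap H N x) = algebraMap H N (S.τ x)) (h6 : T ^ 6 = 1)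
    (hfix : ∀ x : N, T x = x → ∃ y : L, algebraMap L N y = x) :
    ∃ U : Tower S N, ∀ x, U.T x = T x := by
  have : IsAbelianGalois F N := .tower_bot F N M
  have : IsAbelianGalois F L := .tower_bot F L M
  have : IsAbelianGalois H M := .tower_top F H M
  have : IsAbelianGalois L M := .tower_top F L M
  have : IsAbelianGalois N M := .tower_top F N M
  have : IsAbelianGalois H N := .tower_bot H N M
  have : NeZero ((7 ^ (m + 1) : ℕ) : M) := ⟨by simp⟩
  have hζ := IsCyclotomicExtension.zeta_spec (7 ^ (m + 1)) H M
  obtain ⟨hcyc, hdvd⟩ := cyclotomic_cyclic m H M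
  have hNM : Module.finrank N M ∣ 6 := by
    rw [← Module.finrank_mul_finrank H N M, hN, mul_comm] at hdvd
    exact Nat.dvd_of_mul_dvd_mul_right (by positivity) hdvd
  have hNM' : ¬ 7 ∣ Module.finrank N M := fun h => by
    have := h.trans hNM
    norm_num at this
  have hLM : ¬ 7 ∣ Module.finrank L M := fun h => by
    rw [← Module.finrank_mul_finrank L N M, hLN] at h
    rcases (Nat.Prime.dvd_mul (by norm_num)).1 h with h | h
    · norm_num at h
    · exact hNM' h
  have hcyc' : IsCyclic (N ≃ₐ[H] N) :=
    isCyclic_of_surjective _ (AlgEquiv.restrictNormalHom_surjective (F := H) (K₁ := N) M)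
  obtain ⟨σ, hσ⟩ := hcyc'.exists_generator
  obtain ⟨q, hq⟩ := S.exists_q
  obtain ⟨Q, hQ⟩ := exists_over (B := N) q
  obtain ⟨hQ1, hQ2, hQ3⟩ := totally_ramified m hN hNM' hζ q (k := 6) (by norm_num)
    (S.val_seven_q hq) Q
  obtain ⟨p, hp1, hp2, hp3⟩ := S.exists_two_sub
  obtain ⟨R, hR⟩ := exists_over (B := M) p
  obtain ⟨P, hP⟩ := exists_under (A := L) R
  have hPp : P.asIdeal.LiesOver p.asIdeal := by
    constructor
    rw [hR.over, hP.over, Ideal.under_under]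
  obtain ⟨hP1, -, hP3⟩ := totally_ramified m hL hLM hζ p (k := 1) (by norm_num) hp2 P
  have hPR := fun x : L => (HeightOneSpectrum.valuation_liesOver M P R x).symm
  have hf0 := Ideal.IsDedekindDomain.ramificationIdx'_ne_zero_of_liesOver R.asIdeal P.ne_bot
  have hωM : ∀ x : F, algebraMap N M (algebraMap H N (algebraMap F H x)) = algebraMap F M x := by
    intro x
    rw [← IsScalarTower.algebraMap_apply, ← IsScalarTower.algebraMap_apply]
  have hLNM : ∀ x : L, algebraMap N M (algebraMap L N x) = algebraMap L M x := fun x =>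
    (IsScalarTower.algebraMap_apply L N M x).symm
  have hTσ : ∀ x, T (σ x) = σ (T x) := by
    intro x
    have := mul_comm' (M := N ≃ₐ[F] N) T (σ.restrictScalars F)
    exact DFunLike.congr_fun this x
  have hT6 : ∀ x, T (T (T (T (T (T x))))) = x := fun x => DFunLike.congr_fun h6 x
  refine ⟨{
    m := m, card := hN, σ := σ, hσ := hσ, T := T.toRingEquiv, T_alg := hT,
    T_σ := hTσ, T_six := hT6, q := q, hq := hq, V := Q.valuation N, e := 7 ^ m, he := (by positivity)
    V_alg := hQ1, V_inv := fun g => val_smul Q g (hQ2 g),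
    V_res := fun x => residue_of_absNorm Q (hQ3.trans (S.absNorm_q hq)),
    v := (R.valuation M).comap (algebraMap N M), hv := ?_, v_res := ?_, unram := ?_ }, fun x => rfl⟩
  · have h : algebraMap N M (2 - algebraMap H N S.ω) = algebraMap L M (algebraMap F L (2 - S.w)) := by
      rw [← IsScalarTower.algebraMap_apply F L M, ← hωM]
      simp only [Setup.ω, map_sub, map_ofNat]
    rw [Valuation.comap_apply, h, hPR, hP1, hp1]
    exact pow_lt_one₀ zero_le (pow_lt_one₀ zero_le (by rw [← exp_zero, exp_lt_exp]; norm_num) (by positivity)) hf0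
  · intro x hx hx1
    obtain ⟨y, rfl⟩ := hfix x hx
    rw [Valuation.comap_apply, hLNM, hPR] at hx1
    have hy : P.valuation L y ≤ 1 := by
      by_contra hc
      exact absurd hx1 (not_le.2 (one_lt_pow₀ (not_le.1 hc) hf0))
    obtain ⟨n, hn⟩ := residue_of_absNorm P (hP3.trans hp3) hy
    refine ⟨n, ?_⟩
    have : algebraMap L N y - n = algebraMap L N (y - n) := by simp
    rw [this, Valuation.comap_apply, hLNM, hPR]
    exact pow_lt_one₀ zero_le hn hf0
  · intro p' hp'
    obtain ⟨P', hP'⟩ := exists_over (B := M) p'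
    have h : algebraMap N M (1 - algebraMap H N S.ω) = algebraMap F M (1 - S.w) := by
      rw [← hωM]
      simp [Setup.ω]
    refine ⟨(P'.valuation M).comap (algebraMap N M), fun x => ?_, fun h1 x hx => ?_⟩
    · rw [Valuation.comap_apply, ← IsScalarTower.algebraMap_apply]
      exact unramified_away m p' hp' P' x
    · obtain ⟨y, rfl⟩ := hfix x hx
      rw [Valuation.comap_apply, h] at h1
      rw [Valuation.comap_apply, Valuation.comap_apply, h, hLNM]
      exact S.val_fixed_ne hL P' y h1
end
end Setup

end

/-! ### The fields of the theorem -/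

section
open Polynomial WithZero NumberField IsDedekindDomain

namespace Setup

/-- The descent for a field `K` of degree `7 ^ m` inside the `7 ^ (m + 1)`-th cyclotomic extension
of `H`: apply the tower result to the compositum `N = H K`. -/
theorem no_solution_of_cyclotomic {F H K M : Type} [Field F] [NumberField F] [Field H]
    [NumberField H] [Algebra F H] (S : Setup F H) [Field K] [NumberField K] [Field M]
    [NumberField M] [Algebra H M] [Algebra F M] [Algebra K M] [IsScalarTower F H M] [IsGalois F H]
    [IsAbelianGalois F M] [IsGalois ℚ K] {m : ℕ} [IsCyclotomicExtension {7 ^ (m + 1)} H M]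
    (hK : Module.finrank ℚ K = 7 ^ m) (x y : K) : x ^ 3 + y ^ 3 ≠ 3 := by
  obtain ⟨α, hα⟩ := Field.exists_primitive_element ℚ K
  let N := IntermediateField.adjoin H {algebraMap K M α}
  have hKN : ∀ z : K, algebraMap K M z ∈ N := by
    intro z
    have hz : z ∈ Algebra.adjoin ℚ {α} := by
      rw [← IntermediateField.adjoin_simple_toSubalgebra_of_isAlgebraic
        (Algebra.IsAlgebraic.isAlgebraic α), hα]
      trivial
    induction hz using Algebra.adjoin_induction with
    | mem z hz => rw [hz]; exact IntermediateField.mem_adjoin_simple_self H _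
    | algebraMap r =>
      have : algebraMap K M (algebraMap ℚ K r) = algebraMap H M (algebraMap ℚ H r) := by simp
      rw [this]
      exact N.algebraMap_mem _
    | add a b _ _ ha hb => rw [map_add]; exact add_mem ha hb
    | mul a b _ _ ha hb => rw [map_mul]; exact mul_mem ha hb
  let i : K →+* N := (algebraMap K M).codRestrict N.toSubfield hKN
  letI : Algebra K N := i.toAlgebra
  have : CharZero N := charZero_of_injective_algebraMap (algebraMap H N).injective
  have : FiniteDimensional ℚ N := Module.Finite.trans H N
  have : NumberField N := ⟨⟩
  have : FiniteDimensional K N := Module.Finite.of_restrictScalars_finite ℚ K N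
  have hN : Module.finrank H N = 7 ^ m := by
    have hInt : IsIntegral ℚ α := Algebra.IsIntegral.isIntegral α
    have hle : Module.finrank H N ≤ 7 ^ m := by
      rw [IntermediateField.adjoin.finrank (Algebra.IsIntegral.isIntegral _), ← hK,
        ← IntermediateField.finrank_top', ← hα, IntermediateField.adjoin.finrank hInt,
        ← (minpoly.monic hInt).natDegree_map (algebraMap ℚ H)]
      refine natDegree_le_of_dvd (minpoly.dvd _ _ ?_)
        (((minpoly.monic hInt).map _).ne_zero)
      rw [aeval_def, eval₂_map]
      have : (algebraMap H M).comp (algebraMap ℚ H) = (algebraMap K M).comp (algebraMap ℚ K) :=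
        Subsingleton.elim _ _
      rw [this, ← hom_eval₂, ← aeval_def, minpoly.aeval, map_zero]
    have hd : 7 ^ m ∣ 12 * Module.finrank H N := by
      have h1 := Module.finrank_mul_finrank ℚ K N
      rw [← Module.finrank_mul_finrank ℚ H N, ← Module.finrank_mul_finrank ℚ F H, S.hF, S.hH,
        hK] at h1
      exact ⟨_, h1.symm⟩
    exact le_antisymm hle (Nat.le_of_dvd Module.finrank_pos
      (Nat.Coprime.dvd_of_dvd_mul_left (Nat.Coprime.pow_left m (by norm_num)) hd))
  have : IsScalarTower F N M := .of_algebraMap_eq fun z => by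
    rw [IsScalarTower.algebraMap_apply F H M, IsScalarTower.algebraMap_apply F H N]
    rfl
  have : IsAbelianGalois F N := .tower_bot F N M
  obtain ⟨T, hT, h6, hTK⟩ := S.exists_T (K := K) hK hN
  obtain ⟨hL, hLN⟩ := S.finrank_fixed hN hT h6
  let L := IntermediateField.fixedField (Subgroup.zpowers T)
  have : CharZero L := charZero_of_injective_algebraMap (algebraMap F L).injective
  have : FiniteDimensional ℚ L := Module.Finite.trans F L
  have : NumberField L := ⟨⟩
  obtain ⟨U, hU⟩ := S.exists_tower (L := L) (M := M) hN hL hLN T hT h6 (fun z hz => by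
    refine ⟨⟨z, ?_⟩, rfl⟩
    rw [IntermediateField.mem_fixedField_iff]
    intro f hf
    have : Subgroup.zpowers T ≤ MulAction.stabilizer (N ≃ₐ[F] N) z := by
      rw [Subgroup.zpowers_le]
      exact hz
    exact this hf)
  have : IsAbelianGalois H M := .tower_top F H M
  have : IsAbelianGalois H N := .tower_bot H N M
  classical
  intro h
  refine U.no_solution (a := algebraMap K N x) (b := algebraMap K N y) ?_ ?_ ?_
  · rw [hU, hTK]
  · rw [hU, hTK]
  · rw [← map_pow, ← map_pow, ← map_add, h, map_ofNat]
end Setup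

end

section
open Polynomial WithZero NumberField IsDedekindDomain

/-- Adjoining to `F ∋ √[6]{1}` first a sixth root `s` of `c ∈ F` and then roots of unity yields an
abelian extension: automorphisms multiply `s` by elements of `F` and raise roots of unity to
powers. -/
lemma abelian_of_kummer_cyclotomic {F H M : Type} [Field F] [CharZero F] [Field H] [Field M]
    [Algebra F H] [Algebra F M] [Algebra H M] [IsScalarTower F H M] {η c : F}
    (hη : IsPrimitiveRoot η 6) (hc : Irreducible (X ^ 6 - C c)) [IsSplittingField F H (X ^ 6 - C c)]
    {s : H} (hs : s ^ 6 = algebraMap F H c) (n : ℕ) [NeZero n] [IsCyclotomicExtension {n} H M] :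
    IsAbelianGalois F M := by
  have : CharZero H := charZero_of_injective_algebraMap (algebraMap F H).injective
  have : CharZero M := charZero_of_injective_algebraMap (algebraMap F M).injective
  have hp : (primitiveRoots 6 F).Nonempty := ⟨η, (mem_primitiveRoots (by norm_num)).2 hη⟩
  have htop := Algebra.adjoin_root_eq_top_of_isSplittingField hp hc hs
  have hg : IsGalois F M := by
    have h1 : IsSplittingField H M ((X ^ n - 1 : F[X]).map (algebraMap F H)) := by
      rw [Polynomial.map_sub, Polynomial.map_pow, map_X, Polynomial.map_one]
      exact IsCyclotomicExtension.isSplittingField_X_pow_sub_one n H M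
    have h2 := IsSplittingField.mul (K := H) M (X ^ 6 - C c) (X ^ n - 1 : F[X]) hc.ne_zero
      (X_pow_sub_C_ne_zero (NeZero.pos n) 1)
    have := Normal.of_isSplittingField (F := F) (E := M) ((X ^ 6 - C c) * (X ^ n - 1 : F[X]))
    exact ⟨⟩
  have hζ := IsCyclotomicExtension.zeta_spec n H M
  set ζ := IsCyclotomicExtension.zeta n H M
  have hηM : IsPrimitiveRoot (algebraMap F M η) 6 := hη.map_of_injective (algebraMap F M).injective
  have hc0 : c ≠ 0 := by
    rintro rfl
    rw [C_0, sub_zero] at hc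
    exact absurd hc (not_irreducible_pow (by norm_num))
  have hs0 : algebraMap H M s ≠ 0 := by
    intro h0
    rw [map_eq_zero] at h0
    rw [h0, zero_pow (by norm_num), eq_comm, map_eq_zero] at hs
    exact hc0 hs
  have hsM : algebraMap H M s ^ 6 = algebraMap F M c := by
    rw [← map_pow, hs, ← IsScalarTower.algebraMap_apply]
  have key1 : ∀ g : M ≃ₐ[F] M, ∃ a : F, g (algebraMap H M s) = algebraMap F M a * algebraMap H M s := by
    intro g
    have : (g (algebraMap H M s) / algebraMap H M s) ^ 6 = 1 := by
      rw [div_pow, ← map_pow, hsM, g.commutes, div_self]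
      rwa [Ne, map_eq_zero]
    obtain ⟨i, -, hi⟩ := hηM.eq_pow_of_pow_eq_one this
    refine ⟨η ^ i, ?_⟩
    rw [map_pow, hi, div_mul_cancel₀ _ hs0]
  have key2 : ∀ g : M ≃ₐ[F] M, ∃ i : ℕ, g ζ = ζ ^ i := by
    intro g
    have : g ζ ^ n = 1 := by rw [← map_pow, hζ.pow_eq_one, map_one]
    obtain ⟨i, -, hi⟩ := hζ.eq_pow_of_pow_eq_one this
    exact ⟨i, hi.symm⟩
  refine { hg with is_comm := ⟨fun g h => ?_⟩ }
  have hH : ∀ x : H, g (h (algebraMap H M x)) = h (g (algebraMap H M x)) := by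
    intro x
    have hx : x ∈ Algebra.adjoin F {s} := htop ▸ trivial
    induction hx using Algebra.adjoin_induction with
    | mem z hz =>
      obtain ⟨a, ha⟩ := key1 g
      obtain ⟨b, hb⟩ := key1 h
      rw [hz, ha, hb, map_mul, map_mul, g.commutes, h.commutes, ha, hb]
      ring
    | algebraMap r => rw [← IsScalarTower.algebraMap_apply, g.commutes, h.commutes, g.commutes]
    | add a b _ _ ha hb => simp only [map_add, ha, hb]
    | mul a b _ _ ha hb => simp only [map_mul, ha, hb]
  ext x
  change g (h x) = h (g x)
  have hx : x ∈ Algebra.adjoin H {ζ} :=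
    (IsCyclotomicExtension.adjoin_primitive_root_eq_top (A := H) hζ) ▸ trivial
  induction hx using Algebra.adjoin_induction with
  | mem z hz =>
    obtain ⟨a, ha⟩ := key2 g
    obtain ⟨b, hb⟩ := key2 h
    rw [hz, ha, hb, map_pow, map_pow, ha, hb, ← pow_mul, ← pow_mul, mul_comm]
  | algebraMap r => exact hH r
  | add a b _ _ ha hb => simp only [map_add, ha, hb]
  | mul a b _ _ ha hb => simp only [map_mul, ha, hb]

/-- `𝓞 F = ℤ[ω]` for the third cyclotomic field `F`. -/
lemma eisenstein_integers {F : Type} [Field F] [NumberField F] [IsCyclotomicExtension {3} ℚ F]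
    {w : F} (hζ : IsPrimitiveRoot w 3) (hw : w ^ 2 + w + 1 = 0) (x : 𝓞 F) :
    ∃ a b : ℤ, (x : F) = a + b * w := by
  have : Fact (Nat.Prime 3) := ⟨by norm_num⟩
  have h := IsCyclotomicExtension.Rat.isIntegralClosure_adjoin_singleton_of_prime hζ
  have hx : (x : F) ∈ Algebra.adjoin ℤ {w} := by
    obtain ⟨y, hy⟩ := h.isIntegral_iff.1 x.2
    have hy : (y : F) = x := hy
    exact hy ▸ y.2
  generalize (x : F) = y at hx
  induction hx using Algebra.adjoin_induction with
  | mem z hz => exact ⟨0, 1, by rw [hz]; simp⟩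
  | algebraMap r => exact ⟨r, 0, by simp⟩
  | add y z _ _ hy hz =>
    obtain ⟨a, b, rfl⟩ := hy
    obtain ⟨c, d, rfl⟩ := hz
    exact ⟨a + c, b + d, by push_cast; ring⟩
  | mul y z _ _ hy hz =>
    obtain ⟨a, b, rfl⟩ := hy
    obtain ⟨c, d, rfl⟩ := hz
    exact ⟨a * c - b * d, a * d + b * c - b * d, by push_cast; linear_combination b * d * hw⟩

/-- `X⁶ - ω²(1-ω)⁵(2+3ω)` is Eisenstein at the prime generated by `2 + 3ω`. -/
lemma sextic_irreducible {F : Type} [Field F] [NumberField F] {w : F} (hw : w ^ 2 + w + 1 = 0)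
    (hInt : ∀ x : 𝓞 F, ∃ a b : ℤ, (x : F) = a + b * w) :
    Irreducible (X ^ 6 - C (w ^ 2 * (1 - w) ^ 5 * (2 + 3 * w)) : F[X]) := by
  obtain ⟨u, rfl⟩ : ∃ u : 𝓞 F, (u : F) = w := ⟨⟨w, omega_isIntegral hw⟩, rfl⟩
  have hu : u ^ 2 + u + 1 = 0 := RingOfIntegers.coe_injective (by simpa using hw)
  have hInt' : ∀ x : 𝓞 F, ∃ a b : ℤ, x = a + b * u := fun x => by
    obtain ⟨a, b, h⟩ := hInt x
    exact ⟨a, b, RingOfIntegers.coe_injective (by simpa using h)⟩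
  obtain ⟨P, hP⟩ := eis_exists hu hInt' 2 3 (by norm_num) (by norm_num)
  have hP : 2 + 3 * u ∈ P.asIdeal := by simpa using hP
  have h1 := eis_prime hInt' P 4 (by norm_num : Nat.Prime 7) hP
    ⟨1 + 2 * u, by push_cast; linear_combination -6 * hu⟩
    ⟨-1 - 3 * u, by push_cast; linear_combination 9 * hu⟩
  have h7 : (7 : 𝓞 F) ∈ P.asIdeal := by
    have e : (7 : 𝓞 F) = (2 + 3 * u) * (-1 - 3 * u) := by linear_combination 9 * hu
    rw [e]
    exact Ideal.mul_mem_right _ _ hP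
  have h2 : P.intValuation (1 - u) = 1 := by
    refine le_antisymm (P.intValuation_le_one _) (not_lt.1 fun hlt => ?_)
    rw [P.intValuation_lt_one_iff_mem] at hlt
    refine P.isPrime.ne_top ((Ideal.eq_top_iff_one _).2 ?_)
    have e : (1 : 𝓞 F) = 3 * ((2 + 3 * u) + 3 * (1 - u)) - 2 * 7 := by ring
    rw [e]
    exact Ideal.sub_mem _ (Ideal.mul_mem_left _ _ (Ideal.add_mem _ hP (Ideal.mul_mem_left _ _ hlt)))
      (Ideal.mul_mem_left _ _ h7)
  have h3 : P.intValuation u = 1 := by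
    have e : u ^ 3 = 1 := by linear_combination (u - 1) * hu
    have := congrArg P.intValuation e
    rw [map_pow, map_one] at this
    simpa [pow_eq_one_iff] using this
  rw [P.valuation_of_algebraMap] at h1
  set c : 𝓞 F := u ^ 2 * (1 - u) ^ 5 * (2 + 3 * u) with hc
  have hE : (X ^ 6 - C c : (𝓞 F)[X]).IsEisensteinAt P.asIdeal := by
    refine ⟨?_, fun {n} hn => ?_, ?_⟩
    · rw [(monic_X_pow_sub_C c (by norm_num)).leadingCoeff]
      exact fun h => P.isPrime.ne_top ((Ideal.eq_top_iff_one _).2 h)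
    · rw [natDegree_X_pow_sub_C] at hn
      rw [coeff_sub, coeff_X_pow, if_neg hn.ne, coeff_C, zero_sub]
      split_ifs
      · exact neg_mem (Ideal.mul_mem_left _ _ hP)
      · simp
    · rw [coeff_sub, coeff_X_pow, if_neg (by norm_num), coeff_C_zero, zero_sub, neg_mem_iff,
        ← P.intValuation_le_pow_iff_mem, hc, map_mul, map_mul, map_pow, map_pow, h1, h2, h3, one_pow, one_pow,
        one_mul, one_mul, exp_le_exp]
      norm_num
  have hI := hE.irreducible P.isPrime (monic_X_pow_sub_C c (by norm_num)).isPrimitive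
    (by rw [natDegree_X_pow_sub_C]; norm_num)
  rw [Polynomial.Monic.irreducible_iff_irreducible_map_fraction_map (K := F)
    (monic_X_pow_sub_C c (by norm_num))] at hI
  convert hI using 1
  rw [Polynomial.map_sub, Polynomial.map_pow, map_X, map_C, hc]
  simp only [map_mul, map_pow, map_sub, map_add, map_one, map_ofNat]

end

section
open Polynomial WithZero NumberField IsDedekindDomain

/-- The sextic extension `H = F(s)`, `s⁶ = ω²(1-ω)⁵(2+3ω)`, with `t = ω(1-ω)(2+3ω)/s` and the
automorphism `s ↦ -ωs`. -/
lemma exists_setup {F H : Type} [Field F] [NumberField F] [IsCyclotomicExtension {3} ℚ F]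
    [Field H] [NumberField H] [Algebra F H] {w : F} (hζ : IsPrimitiveRoot w 3)
    (hw : w ^ 2 + w + 1 = 0) {c : F} (hc : c = w ^ 2 * (1 - w) ^ 5 * (2 + 3 * w))
    (hirr : Irreducible (X ^ 6 - C c)) (hη : IsPrimitiveRoot (-w) 6)
    [IsSplittingField F H (X ^ 6 - C c)] {s : H} (hs : s ^ 6 = algebraMap F H c) :
    Nonempty (Setup F H) := by
  have hp : (primitiveRoots 6 F).Nonempty := ⟨_, (mem_primitiveRoots (by norm_num)).2 hη⟩
  have hη1 : (-w) ^ 6 = 1 := hη.pow_eq_one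
  have hc0 : c ≠ 0 := by
    rintro rfl
    rw [C_0, sub_zero] at hirr
    exact absurd hirr (not_irreducible_pow (by norm_num))
  have hs0 : s ≠ 0 := by
    rintro rfl
    rw [zero_pow (by norm_num), eq_comm, map_eq_zero] at hs
    exact hc0 hs
  obtain ⟨τ, hτ⟩ : ∃ τ : H ≃ₐ[F] H, τ s = algebraMap F H (-w) * s := by
    let u := rootsOfUnity.mkOfPowEq (-w) hη1
    let e := adjoinRootXPowSubCEquiv hp hirr hs
    refine ⟨e.symm.trans ((autAdjoinRootXPowSubC 6 c u).trans e), ?_⟩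
    change e (autAdjoinRootXPowSubC 6 c u (e.symm s)) = _
    rw [adjoinRootXPowSubCEquiv_symm_eq_root, autAdjoinRootXPowSubC_root, map_smul,
      adjoinRootXPowSubCEquiv_root, Algebra.smul_def]
    rfl
  have hd : Module.finrank F H = 6 := finrank_of_isSplittingField_X_pow_sub_C hp hirr H
  have hF : Module.finrank ℚ F = 2 := by
    rw [IsCyclotomicExtension.finrank (n := 3) F (cyclotomic.irreducible_rat (by norm_num))]
    decide
  have hw3 : algebraMap F H w ^ 3 = 1 := by rw [← map_pow, hζ.pow_eq_one, map_one]
  refine ⟨{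
    w := w
    t := algebraMap F H (w * (1 - w) * (2 + 3 * w)) / s
    τ := τ
    hw := hw
    ht := ?_
    hτ := ?_
    hF := hF
    hH := hd
    hInt := eisenstein_integers hζ hw }⟩
  · rw [div_pow, hs, ← map_pow, ← map_div₀, hc]
    congr 1
    rw [div_eq_iff (hc ▸ hc0)]
    linear_combination (w ^ 3 * (1 - w) ^ 6 * (2 + 3 * w) ^ 6 * (w - 1)) * hw
  · have hw0 : algebraMap F H w ≠ 0 := by
      rw [Ne, map_eq_zero]
      exact hζ.ne_zero (by norm_num)
    rw [map_div₀, τ.commutes, hτ, map_neg, div_eq_iff (by simp [hs0, hw0]), mul_div_assoc']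
    rw [div_mul_eq_mul_div, eq_div_iff hs0]
    linear_combination -(algebraMap F H (w * (1 - w) * (2 + 3 * w)) * s) * hw3

theorem no_cubes_aux (m : ℕ) (Cy : Type) [Field Cy] [NumberField Cy]
    [IsCyclotomicExtension {7 ^ (m + 1)} ℚ Cy] (F : Type) [Field F] [NumberField F]
    [IsCyclotomicExtension {3} ℚ F] (K : IntermediateField ℚ Cy)
    (hK : Module.finrank ℚ K = 7 ^ m) (x y : K) : x ^ 3 + y ^ 3 ≠ 3 := by
  obtain ⟨w, hζ⟩ : ∃ w : F, IsPrimitiveRoot w 3 := ⟨_, IsCyclotomicExtension.zeta_spec 3 ℚ F⟩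
  have hw : w ^ 2 + w + 1 = 0 := by
    have := hζ.isRoot_cyclotomic (by norm_num)
    rw [cyclotomic_three] at this
    simpa using this
  have hη : IsPrimitiveRoot (-w) 6 := by
    have h2 : IsPrimitiveRoot (-1 : F) 2 := IsPrimitiveRoot.neg_one 0 (by norm_num)
    have := (Commute.all (-1) w).orderOf_mul_eq_mul_orderOf_of_coprime
      (by rw [← h2.eq_orderOf, ← hζ.eq_orderOf]; norm_num)
    rw [← h2.eq_orderOf, ← hζ.eq_orderOf, neg_one_mul] at this
    exact IsPrimitiveRoot.iff_orderOf.2 this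
  have hirr := sextic_irreducible hw (eisenstein_integers hζ hw)
  obtain ⟨c, hc⟩ : ∃ c, c = w ^ 2 * (1 - w) ^ 5 * (2 + 3 * w) := ⟨_, rfl⟩
  rw [← hc] at hirr
  have := Fact.mk hirr
  let H := AdjoinRoot (X ^ 6 - C c)
  have hp : (primitiveRoots 6 F).Nonempty := ⟨_, (mem_primitiveRoots (by norm_num)).2 hη⟩
  have hsplit : IsSplittingField F H (X ^ 6 - C c) := isSplittingField_AdjoinRoot_X_pow_sub_C hp hirr
  have : FiniteDimensional F H := IsSplittingField.finiteDimensional H (X ^ 6 - C c)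
  have : CharZero H := charZero_of_injective_algebraMap (algebraMap F H).injective
  have : FiniteDimensional ℚ H := Module.Finite.trans F H
  have : NumberField H := ⟨⟩
  have hs : (AdjoinRoot.root (X ^ 6 - C c) : H) ^ 6 = algebraMap F H c := by
    have := AdjoinRoot.eval₂_root (X ^ 6 - C c)
    rw [eval₂_sub, eval₂_X_pow, eval₂_C, sub_eq_zero] at this
    exact this
  obtain ⟨S⟩ := exists_setup hζ hw hc hirr hη hs
  have : IsGalois F H := isGalois_of_isSplittingField_X_pow_sub_C hp hirr H
  let M := CyclotomicField (7 ^ (m + 1)) H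
  have : IsScalarTower F H M := inferInstance
  have : IsAbelianGalois F M := abelian_of_kummer_cyclotomic hη hirr hs (7 ^ (m + 1))
  have hsC := IsCyclotomicExtension.isSplittingField_X_pow_sub_one (7 ^ (m + 1)) ℚ Cy
  let φ : Cy →ₐ[ℚ] M := IsSplittingField.lift Cy (X ^ 7 ^ (m + 1) - 1 : ℚ[X]) (by
    have := (IsCyclotomicExtension.isSplittingField_X_pow_sub_one (7 ^ (m + 1)) H M).splits
    simpa using this)
  letI : Algebra K M := (φ.toRingHom.comp (algebraMap K Cy)).toAlgebra
  have : IsAbelianGalois ℚ Cy := IsCyclotomicExtension.isAbelianGalois {7 ^ (m + 1)} ℚ Cy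
  -- `K` carries two (equal, but not definitionally equal) `ℚ`-algebra structures.
  have hKg : IsAbelianGalois ℚ K := IsAbelianGalois.tower_bot ℚ K Cy
  have : @IsGalois ℚ _ K _ DivisionRing.toRatAlgebra := by
    convert! hKg.toIsGalois
  exact S.no_solution_of_cyclotomic (M := M) hK x y

end

/-- For every `m ≥ 0`, if `K` is the (unique) subfield of `ℚ(ζ_{7^{m+1}})` with
`[K : ℚ] = 7^m` (the `m`-th layer of the cyclotomic `ℤ_7`-extension of `ℚ`), then `3` is not
a sum of two cubes in `K`. -/
theorem three_not_sum_of_two_cubes_in_Z7_extension (m : ℕ)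
    (K : IntermediateField ℚ
      (CyclotomicField (⟨7 ^ (m + 1), pow_pos (by norm_num) (m + 1)⟩ : ℕ+) ℚ))
    (hK : Module.finrank ℚ K = 7 ^ m) :
    ¬ ∃ x y : K, x ^ 3 + y ^ 3 = (3 : K) := by
  rintro ⟨x, y, h⟩
  have : NeZero ((3 : ℕ) : ℚ) := ⟨by norm_num⟩
  have : IsCyclotomicExtension {3} ℚ (CyclotomicField 3 ℚ) :=
    CyclotomicField.isCyclotomicExtension 3 ℚ
  have : NeZero (((⟨7 ^ (m + 1), pow_pos (by norm_num) (m + 1)⟩ : ℕ+) : ℕ) : ℚ) := ⟨by simp⟩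
  have : IsCyclotomicExtension {7 ^ (m + 1)} ℚ
      (CyclotomicField (⟨7 ^ (m + 1), pow_pos (by norm_num) (m + 1)⟩ : ℕ+) ℚ) :=
    CyclotomicField.isCyclotomicExtension _ ℚ
  exact no_cubes_aux m _ (CyclotomicField 3 ℚ) K hK x y h
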